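/- For every n ≥ 2 there is an algorithm solving the twisted conjugacy problem in the braid group B_n. Precisely: there exists a computable function f taking as input a list T = (t_1,…,t_{n−1}) of signed words together with two signed words u, v and returning a Boolean, such that for every group automorphism φ of B_n satisfying φ(σ_i) = π(t_i) for all i = 1,…,n−1, one has f(T,u,v) = true if and only if there exists x ∈ B_n with π(v) = φ(x)⁻¹ · π(u) · x. -/

import Mathlib

/-!
The algorithm is a bounded search, and its correctness rests on three facts.

**Automorphisms** (Dyer–Grossman, `aut_all`). Every automorphism of `B n` is inner, possibly composed with the
automorphism `ζ` inverting all generators. So `φ(x) = c ζ(x) c⁻¹` with `ζ` the identity or the inversion, and the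
equation `v = φ(x)⁻¹ u x` becomes `v⁻¹ c = x⁻¹ (u⁻¹ c) ζ(x)`, a conjugacy equation twisted by `ζ` only.

**Bounded conjugators** (`bounded_conj`). The braid monoid is a cancellative lattice with a central Garside element `Ω`,
so it embeds in `B n` and makes `B n` a lattice-ordered set. The distance `bd x y`, the least `k` such that each
of `x`, `y` precedes the other one times `Ω ^ k`, is left invariant and has the integral Helly property, and `ζ` is an
isometry. In a Helly space two points are joined by a path with bounded steps along which isometries are displaced
essentially no more than at its ends (`helly_path`, obtained by averaging radius functions of ball families). Applied
to a conjugator of two tuples, possibly twisted by `ζ`, the path stays in a finite set of tuples; cutting out repetitions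
leaves a conjugator whose length is bounded by an explicit primitive recursive function (`cbound`) of the lengths of the
input. This bounds both the search for `c`, from `φ(σ_i) = c σ_i^{±1} c⁻¹`, and the search for `x`.

**Word problem** (`ρA_faithful`). The Artin action of `B n` on a free group is faithful, so equality of braid words is
primitive recursive.

The first fact takes the largest part of the file. For at least four strands:
* an inner automorphism brings the permutation of the image of the rotation `σ_0 ⋯ σ_{n-2}` into standard form
  (`norm_rot`). Combinatorics of braid relations among permutations (`RotRep.main`), and for `n = 4` linking numbers
  (`no_four`), show that `φ` then preserves the permutation of every braid;
* such a `φ` preserves the subgroup `Kh` of pushes of the last strand around the other strands, extended by the centre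
  (`aut_Kh_le`). Indeed `Kh` is recognised by commutators and linking numbers (`le_Kh`), thanks to
  `relation_lemma`: a normal subgroup `R` of a nonabelian free group `F` with `[R, F] ≤ [R, R]` is trivial or `F`;
* hence `φ` induces an endomorphism `θ` of the free group on the loops of that push. Linking numbers determine its
  abelianisation, and invariance of `θ(x_0)` up to conjugacy under pure braids forces it to be conjugate to `x_0`,
  when `φ` preserves orientation (`theta_x0`, by normal forms in free products). By Artin's characterisation of braid
  automorphisms (`artin`), `θ` is induced by a braid, and `φ` is conjugation by a braid (`aut_of_perm`).

For three strands the quotient of `B 3` by its centre is the free product of cyclic groups of orders two and three, whose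
automorphisms are found from torsion and normal forms (`inner3`). `B 2` is infinite cyclic.
-/

def braidRels (m : ℕ) : Set (FreeGroup (Fin m)) :=
  { r | (∃ i j : Fin m, (i : ℕ) + 1 < (j : ℕ) ∧
          r = FreeGroup.of i * FreeGroup.of j * (FreeGroup.of i)⁻¹ * (FreeGroup.of j)⁻¹) ∨
        (∃ i j : Fin m, (i : ℕ) + 1 = (j : ℕ) ∧
          r = FreeGroup.of i * FreeGroup.of j * FreeGroup.of i *
              (FreeGroup.of j)⁻¹ * (FreeGroup.of i)⁻¹ * (FreeGroup.of j)⁻¹) }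

/-- The braid group on `n` strands. -/
abbrev B (n : ℕ) := PresentedGroup (braidRels (n - 1))

/-- The Artin generators. -/
def σ {n : ℕ} (i : Fin (n - 1)) : B n := PresentedGroup.of i

/-- Evaluation of a signed word in the generators. -/
def π {n : ℕ} (w : List (Fin (n - 1) × Bool)) : B n :=
  (w.map (fun p => if p.2 then σ p.1 else (σ p.1)⁻¹)).prod

/-- The submonoid of positive braids. -/
def P (n : ℕ) : Submonoid (B n) := Submonoid.closure (Set.range (σ (n := n)))

def σ' {n : ℕ} (j : ℕ) : B n := if h : j < n - 1 then σ ⟨j, h⟩ else 1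

/-- The Garside half-twist element Δ. -/
def Δ (n : ℕ) : B n :=
  ((List.range (n - 1)).map
    (fun k => (((List.range (k + 1)).reverse).map (σ' (n := n))).prod)).prod

/-- Simple elements: positive prefixes of Δ. -/
def Simple {n : ℕ} (s : B n) : Prop := s ∈ P n ∧ s⁻¹ * Δ n ∈ P n

/-- Palindromic-free positive braids. -/
def PalFree {n : ℕ} (x : B n) : Prop :=
  ∀ i : Fin (n - 1), (σ i)⁻¹ * x * (σ i)⁻¹ ∉ P n

/-- Canonical length at most `m`. -/
def lenLE {n : ℕ} (x : B n) (m : ℕ) : Prop :=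
  ∃ p : ℤ, (Δ n) ^ (-p) * x ∈ P n ∧ x⁻¹ * (Δ n) ^ (p + (m : ℤ)) ∈ P n

/-- Canonical length exactly `m`. -/
def lenEQ {n : ℕ} (x : B n) (m : ℕ) : Prop :=
  lenLE x m ∧ (1 ≤ m → ¬ lenLE x (m - 1))

/-- Left normal form (as a list of simple factors). -/
def IsLeftNF {n : ℕ} (x : B n) (L : List (B n)) : Prop :=
  (∀ s ∈ L, Simple s ∧ s ≠ 1) ∧ L.prod = x ∧
  ∀ i : ℕ, i + 1 < L.length → ∀ u : B n, Simple u →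
    u⁻¹ * (L.getD i 1 * L.getD (i + 1) 1) ∈ P n → u⁻¹ * L.getD i 1 ∈ P n

/-- Right normal form (as a list of simple factors). -/
def IsRightNF {n : ℕ} (x : B n) (L : List (B n)) : Prop :=
  (∀ s ∈ L, Simple s ∧ s ≠ 1) ∧ L.prod = x ∧
  ∀ i : ℕ, i + 1 < L.length → ∀ u : B n, Simple u →
    (L.getD i 1 * L.getD (i + 1) 1) * u⁻¹ ∈ P n → L.getD (i + 1) 1 * u⁻¹ ∈ P n

/-! ### The braid monoid -/

/-- Distance at least two in the Dynkin diagram: the generators commute. -/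
def Far {m : ℕ} (i j : Fin m) : Prop := (i : ℕ) + 1 < j ∨ (j : ℕ) + 1 < i

/-- Neighbours in the Dynkin diagram: the generators braid. -/
def Adj {m : ℕ} (i j : Fin m) : Prop := (i : ℕ) + 1 = j ∨ (j : ℕ) + 1 = i

lemma Far.symm {m : ℕ} {i j : Fin m} (h : Far i j) : Far j i := Or.symm h

lemma Adj.symm {m : ℕ} {i j : Fin m} (h : Adj i j) : Adj j i := Or.symm h

lemma eq_or_far_or_adj {m : ℕ} (i j : Fin m) : i = j ∨ Far i j ∨ Adj i j := by
  unfold Far Adj; rw [Fin.ext_iff]; omega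

/-- One application of a defining relation inside a positive word. -/
inductive BStep {m : ℕ} : List (Fin m) → List (Fin m) → Prop
  | far {i j : Fin m} (h : Far i j) (w : List (Fin m)) : BStep (i :: j :: w) (j :: i :: w)
  | adj {i j : Fin m} (h : Adj i j) (w : List (Fin m)) :
      BStep (i :: j :: i :: w) (j :: i :: j :: w)
  | cons (i : Fin m) {u v : List (Fin m)} (h : BStep u v) : BStep (i :: u) (i :: v)

lemma BStep.symm {m : ℕ} {u v : List (Fin m)} (h : BStep u v) : BStep v u := by
  induction h with
  | far h w => exact .far h.symm w
  | adj h w => exact .adj h.symm w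
  | cons i _ ih => exact .cons i ih

lemma BStep.length {m : ℕ} {u v : List (Fin m)} (h : BStep u v) : u.length = v.length := by
  induction h with
  | far h w => rfl
  | adj h w => rfl
  | cons i _ ih => simp [ih]

lemma BStep.append {m : ℕ} {u v : List (Fin m)} (h : BStep u v) (w : List (Fin m)) :
    BStep (u ++ w) (v ++ w) := by
  induction h with
  | far h w => exact .far h _
  | adj h w => exact .adj h _
  | cons i _ ih => exact .cons i ih

lemma BStep.append_left {m : ℕ} {u v : List (Fin m)} (h : BStep u v) (w : List (Fin m)) :
    BStep (w ++ u) (w ++ v) := by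
  induction w with
  | nil => exact h
  | cons i w ih => exact .cons i ih

lemma BStep.reverse {m : ℕ} {u v : List (Fin m)} (h : BStep u v) :
    BStep u.reverse v.reverse := by
  induction h with
  | far h w => simpa using BStep.append_left (.far h.symm []) w.reverse
  | adj h w => simpa using BStep.append_left (.adj h []) w.reverse
  | cons i _ ih => simpa using ih.append [i]

lemma BStep.eqv_symm {m : ℕ} {u v : List (Fin m)} (h : Relation.ReflTransGen BStep u v) :
    Relation.ReflTransGen BStep v u := by
  induction h with
  | refl => exact .refl
  | tail _ h ih => exact .head h.symm ih

lemma BStep.eqv_length {m : ℕ} {u v : List (Fin m)} (h : Relation.ReflTransGen BStep u v) :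
    u.length = v.length := by
  induction h with
  | refl => rfl
  | tail _ h ih => exact ih.trans h.length

/-- Equality of positive words in the braid monoid. -/
def brCon (m : ℕ) : Con (FreeMonoid (Fin m)) where
  r u v := Relation.ReflTransGen BStep u.toList v.toList
  iseqv := ⟨fun _ => .refl, fun h => BStep.eqv_symm h, fun h h' => h.trans h'⟩
  mul' {a b c d} h h' := by
    simp only [FreeMonoid.toList_mul]
    exact (h.lift (· ++ c.toList) fun _ _ s => s.append _).trans
      (h'.lift (b.toList ++ ·) fun _ _ s => s.append_left _)

/-- The braid monoid with `m` generators. -/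
abbrev BM (m : ℕ) := (brCon m).Quotient

namespace BM

/-- The class of a positive word. -/
def mk {m : ℕ} (w : List (Fin m)) : BM m := ((FreeMonoid.ofList w : FreeMonoid (Fin m)) : (brCon m).Quotient)

/-- The generators of the braid monoid. -/
def g {m : ℕ} (i : Fin m) : BM m := mk [i]

variable {m : ℕ}

lemma mk_cons (i : Fin m) (w : List (Fin m)) : mk (i :: w) = g i * mk w := rfl

lemma mk_append (v w : List (Fin m)) : mk (v ++ w) = mk v * mk w := rfl

lemma mk_nil : mk ([] : List (Fin m)) = 1 := rfl

lemma mk_eq {v w : List (Fin m)} : mk v = mk w ↔ Relation.ReflTransGen BStep v w :=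
  (brCon m).eq

lemma exists_rep (a : BM m) : ∃ w, mk w = a := by
  induction a using Con.induction_on with | _ w => exact ⟨w.toList, rfl⟩

/-- Induction on the first letter. -/
lemma ind {p : BM m → Prop} (h1 : p 1) (hm : ∀ i a, p a → p (g i * a)) (a : BM m) : p a := by
  obtain ⟨w, rfl⟩ := exists_rep a
  induction w with
  | nil => exact h1
  | cons i w ih => exact hm i _ ih

/-- The length homomorphism. -/
def len (a : BM m) : ℕ := Con.liftOn a (fun w => w.toList.length) (fun _ _ h => BStep.eqv_length h)

@[simp] lemma len_mk (w : List (Fin m)) : len (mk w) = w.length := rfl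

@[simp] lemma len_mul (a b : BM m) : len (a * b) = len a + len b := by
  obtain ⟨v, rfl⟩ := exists_rep a
  obtain ⟨w, rfl⟩ := exists_rep b
  rw [← mk_append]; simp

@[simp] lemma len_one : len (1 : BM m) = 0 := rfl

@[simp] lemma len_g (i : Fin m) : len (g i) = 1 := rfl

lemma eq_one_of_len {a : BM m} (h : len a = 0) : a = 1 := by
  obtain ⟨w, rfl⟩ := exists_rep a
  rw [len_mk, List.length_eq_zero_iff] at h
  subst h; rfl

lemma eq_one_or (a : BM m) : a = 1 ∨ ∃ i b, a = g i * b := by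
  obtain ⟨w, rfl⟩ := exists_rep a
  cases w with
  | nil => exact .inl rfl
  | cons i w => exact .inr ⟨i, mk w, rfl⟩

/-- Reversal of words, an anti-automorphism of the braid monoid. -/
def rev (a : BM m) : BM m := Con.liftOn a (fun w => mk w.toList.reverse) (by
  intro a b h
  exact mk_eq.2 (h.lift _ fun _ _ s => s.reverse))

@[simp] lemma rev_mk (w : List (Fin m)) : rev (mk w) = mk w.reverse := rfl

@[simp] lemma rev_mul (a b : BM m) : rev (a * b) = rev b * rev a := by
  obtain ⟨v, rfl⟩ := exists_rep a
  obtain ⟨w, rfl⟩ := exists_rep b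
  rw [← mk_append, rev_mk, List.reverse_append, mk_append]; rfl

@[simp] lemma rev_rev (a : BM m) : rev (rev a) = a := by
  obtain ⟨v, rfl⟩ := exists_rep a
  simp

@[simp] lemma rev_one : rev (1 : BM m) = 1 := rfl

@[simp] lemma rev_g (i : Fin m) : rev (g i) = g i := rfl

lemma g_far {i j : Fin m} (h : Far i j) : g i * g j = g j * g i :=
  mk_eq.2 (.single (.far h []))

lemma g_adj {i j : Fin m} (h : Adj i j) : g i * (g j * g i) = g j * (g i * g j) :=
  mk_eq.2 (.single (.adj h []))

lemma far_mul {i j : Fin m} (h : Far i j) (x : BM m) : g i * (g j * x) = g j * (g i * x) := by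
  rw [← mul_assoc, g_far h, mul_assoc]

lemma adj_mul {i j : Fin m} (h : Adj i j) (x : BM m) :
    g i * (g j * (g i * x)) = g j * (g i * (g j * x)) := by
  have := congrArg (· * x) (g_adj h)
  simpa only [mul_assoc] using this

/-- The conclusion of Garside's key lemma for an equality `g i * a = g j * b`: both sides
factor through the least common multiple of `g i` and `g j`. -/
def Concl (i : Fin m) (a : BM m) (j : Fin m) (b : BM m) : Prop :=
  (i = j ∧ a = b) ∨ (Far i j ∧ ∃ w, a = g j * w ∧ b = g i * w) ∨
    (Adj i j ∧ ∃ w, a = g j * (g i * w) ∧ b = g i * (g j * w))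

lemma Concl.symm {i j : Fin m} {a b : BM m} (h : Concl i a j b) : Concl j b i a := by
  rcases h with ⟨rfl, rfl⟩ | ⟨h, w, rfl, rfl⟩ | ⟨h, w, rfl, rfl⟩
  · exact .inl ⟨rfl, rfl⟩
  · exact .inr (.inl ⟨h.symm, w, rfl, rfl⟩)
  · exact .inr (.inr ⟨h.symm, w, rfl, rfl⟩)

lemma Concl.eq {i : Fin m} {a b : BM m} (h : Concl i a i b) : a = b := by
  rcases h with ⟨_, h⟩ | ⟨h, _⟩ | ⟨h, _⟩
  · exact h
  · unfold Far at h; omega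
  · unfold Adj at h; omega

lemma Concl.far {i j : Fin m} {a b : BM m} (h : Concl i a j b) (hij : Far i j) :
    ∃ w, a = g j * w ∧ b = g i * w := by
  rcases h with ⟨rfl, _⟩ | ⟨_, h⟩ | ⟨h, _⟩
  · unfold Far at hij; omega
  · exact h
  · unfold Far at hij; unfold Adj at h; omega

lemma Concl.adj {i j : Fin m} {a b : BM m} (h : Concl i a j b) (hij : Adj i j) :
    ∃ w, a = g j * (g i * w) ∧ b = g i * (g j * w) := by
  rcases h with ⟨rfl, _⟩ | ⟨h, _⟩ | ⟨_, h⟩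
  · unfold Adj at hij; omega
  · unfold Adj at hij; unfold Far at h; omega
  · exact h

lemma concl_far_adj {l : ℕ}
    (IH : ∀ (i j : Fin m) (a b : BM m), len a < l → g i * a = g j * b → Concl i a j b)
    {i j k : Fin m} {a b c : BM m} (ha : len a = l) (hik : Far i k) (hkj : Adj k j)
    (h1 : ∃ w, a = g k * w ∧ c = g i * w)
    (h2 : ∃ w, c = g j * (g k * w) ∧ b = g k * (g j * w)) : Concl i a j b := by
  obtain ⟨w, rfl, rfl⟩ := h1
  obtain ⟨w', h, rfl⟩ := h2
  have hl := congrArg len h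
  simp only [len_mul, len_g] at hl ha
  rcases IH _ _ _ _ (by omega) h with ⟨rfl, _⟩ | ⟨hij, t, rfl, ht⟩ | ⟨hij, t, rfl, ht⟩
  · unfold Far at hik; unfold Adj at hkj; omega
  · obtain ⟨s, rfl, rfl⟩ := (IH _ _ _ _ (by simp at ha hl ⊢; omega) ht).far hik.symm
    refine .inr (.inl ⟨hij, g k * (g j * s), ?_, ?_⟩)
    · rw [adj_mul hkj]
    · rw [far_mul hij.symm, far_mul hik.symm]
  · obtain ⟨s, rfl, hs⟩ := (IH _ _ _ _ (by simp at ha hl ⊢; omega) ht).far hik.symm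
    obtain ⟨r, rfl, rfl⟩ := (IH _ _ _ _ (by simp at ha hl ⊢; omega) hs).adj hkj.symm
    refine .inr (.inr ⟨hij, g k * (g j * (g i * r)), ?_, ?_⟩)
    · rw [far_mul hik (g j * r), adj_mul hkj, adj_mul hij.symm, far_mul hik.symm]
    · rw [adj_mul hij.symm, far_mul hik.symm, far_mul hik r, adj_mul hkj]

lemma concl_trans {l : ℕ}
    (IH : ∀ (i j : Fin m) (a b : BM m), len a < l → g i * a = g j * b → Concl i a j b)
    {i j k : Fin m} {a b c : BM m} (ha : len a = l) (hb : len b = l)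
    (h1 : Concl i a k c) (h2 : Concl k c j b) : Concl i a j b := by
  rcases h1 with ⟨rfl, rfl⟩ | ⟨hik, h1⟩ | ⟨hik, h1⟩
  · exact h2
  · rcases h2 with ⟨rfl, rfl⟩ | ⟨hkj, h2⟩ | ⟨hkj, h2⟩
    · exact .inr (.inl ⟨hik, h1⟩)
    · obtain ⟨w, rfl, rfl⟩ := h1
      obtain ⟨w', h, rfl⟩ := h2
      simp only [len_mul, len_g] at ha
      rcases IH _ _ _ _ (by omega) h with ⟨rfl, rfl⟩ | ⟨hij, t, rfl, rfl⟩ | ⟨hij, t, rfl, rfl⟩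
      · exact .inl ⟨rfl, rfl⟩
      · exact .inr (.inl ⟨hij, g k * t, far_mul hkj _, far_mul hik.symm _⟩)
      · refine .inr (.inr ⟨hij, g k * t, ?_, ?_⟩)
        · rw [far_mul hkj, far_mul hik.symm]
        · rw [far_mul hik.symm, far_mul hkj]
    · exact concl_far_adj IH ha hik hkj h1 h2
  · rcases h2 with ⟨rfl, rfl⟩ | ⟨hkj, h2⟩ | ⟨hkj, h2⟩
    · exact .inr (.inr ⟨hik, h1⟩)
    · obtain ⟨w, h1⟩ := h1
      obtain ⟨w', h2⟩ := h2
      exact (concl_far_adj IH hb hkj.symm hik.symm ⟨w', h2.symm⟩ ⟨w, h1.symm⟩).symm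
    · obtain ⟨w, rfl, rfl⟩ := h1
      obtain ⟨w', h, rfl⟩ := h2
      simp only [len_mul, len_g] at ha hb
      rcases IH _ _ _ _ (by simp; omega) h with ⟨rfl, h5⟩ | ⟨hij, t, h1, h2⟩ | ⟨hij, _⟩
      · obtain rfl := (IH _ _ _ _ (by omega) h5).eq
        exact .inl ⟨rfl, rfl⟩
      · obtain ⟨s, rfl, hs⟩ := (IH _ _ _ _ (by omega) h1).adj hkj
        obtain ⟨r, rfl, rfl⟩ := (IH _ _ _ _ (by omega) h2).adj hik.symm
        have hl := congrArg len hs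
        simp only [len_mul, len_g] at hl ha hb
        have h3 := (IH _ _ _ _ (by simp; omega) hs).eq
        obtain ⟨q, rfl, rfl⟩ := (IH _ _ _ _ (by omega) h3).far hij
        refine .inr (.inl ⟨hij, g k * (g j * (g i * (g k * q))), ?_, ?_⟩)
        · rw [far_mul hij, adj_mul hik, adj_mul hkj]
        · rw [far_mul hij.symm, adj_mul hkj.symm, adj_mul hik.symm, far_mul hij]
      · unfold Adj at *; omega

lemma concl_step {i : Fin m} {u : List (Fin m)} {x : List (Fin m)} (h : BStep (i :: u) x) :
    ∃ k v, x = k :: v ∧ Concl i (mk u) k (mk v) := by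
  cases h with
  | far h w => exact ⟨_, _, rfl, .inr (.inl ⟨h, mk w, rfl, rfl⟩)⟩
  | adj h w => exact ⟨_, _, rfl, .inr (.inr ⟨h, mk w, rfl, rfl⟩)⟩
  | cons i h => exact ⟨_, _, rfl, .inl ⟨rfl, mk_eq.2 (.single h)⟩⟩

/-- Garside's key lemma. -/
theorem key (i j : Fin m) (a b : BM m) (h : g i * a = g j * b) : Concl i a j b := by
  induction hl : len a using Nat.strong_induction_on generalizing i j a b with | _ l IH =>
  have IH' : ∀ (i j : Fin m) (a b : BM m), len a < l → g i * a = g j * b → Concl i a j b :=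
    fun i j a b hlt h => IH _ hlt i j a b h rfl
  obtain ⟨u, rfl⟩ := exists_rep a
  obtain ⟨v, rfl⟩ := exists_rep b
  rw [← mk_cons, ← mk_cons, mk_eq] at h
  generalize hx : i :: u = x at h
  clear IH
  induction h using Relation.ReflTransGen.head_induction_on generalizing i u with
  | refl => simp only [List.cons.injEq] at hx; obtain ⟨rfl, rfl⟩ := hx; exact .inl ⟨rfl, rfl⟩
  | @head x y hxy hyv ih =>
    subst hx
    obtain ⟨k, u', rfl, hc⟩ := concl_step hxy
    have h1 : len (mk u') = l := by
      have := hxy.length; simp at this hl ⊢; omega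
    have h2 : len (mk v) = l := by
      have := congrArg len (mk_eq.2 hyv); simp at this h1 ⊢; omega
    exact concl_trans IH' hl h2 hc (ih k u' h1 rfl)

lemma g_cancel {i : Fin m} {a b : BM m} (h : g i * a = g i * b) : a = b := (key i i a b h).eq

instance : IsLeftCancelMul (BM m) where
  mul_left_cancel a := by
    induction a using ind with
    | h1 => intro b c h; simpa using h
    | hm i a ih => intro b c h; simp only [mul_assoc] at h; exact ih (g_cancel h)

instance : IsRightCancelMul (BM m) where
  mul_right_cancel a b c h := by
    have := congrArg rev h
    simp only [rev_mul] at this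
    have := mul_left_cancel this
    simpa using congrArg rev this

/-- Two elements with a common right multiple have a least one. -/
theorem exists_lcm (l : ℕ) (a b c d : BM m) (h : a * c = b * d) (hl : len (a * c) ≤ l) :
    ∃ p q, a * p = b * q ∧ ∀ x y, a * x = b * y → ∃ z, x = p * z := by
  induction l generalizing a b c d with
  | zero =>
    have h2 := congrArg len h
    simp only [len_mul] at hl h2
    obtain rfl := eq_one_of_len (a := a) (by omega)
    obtain rfl := eq_one_of_len (a := b) (by omega)
    exact ⟨1, 1, rfl, fun x y _ => ⟨x, by simp⟩⟩
  | succ l IH =>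
    rcases eq_one_or a with rfl | ⟨i, a, rfl⟩
    · exact ⟨b, 1, by simp, fun x y h => ⟨y, by simpa using h⟩⟩
    rcases eq_one_or b with rfl | ⟨j, b, rfl⟩
    · exact ⟨1, g i * a, by simp, fun x y h => ⟨x, by simp⟩⟩
    simp only [mul_assoc, len_mul, len_g] at h hl
    have h2 := congrArg len h
    simp only [len_mul, len_g] at h2
    -- `g i * p = g j * q` is the least common multiple of the two first letters
    obtain ⟨p, q, hpq, hmin⟩ : ∃ p q, g i * p = g j * q ∧
        ∀ x y, g i * x = g j * y → ∃ z, x = p * z ∧ y = q * z := by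
      rcases eq_or_far_or_adj i j with rfl | hij | hij
      · exact ⟨1, 1, rfl, fun x y h => ⟨x, by simp, by simpa using (g_cancel h).symm⟩⟩
      · exact ⟨g j, g i, g_far hij, fun x y h => (key _ _ _ _ h).far hij⟩
      · refine ⟨g j * g i, g i * g j, g_adj hij, fun x y h => ?_⟩
        simpa only [mul_assoc] using (key _ _ _ _ h).adj hij
    obtain ⟨z, hz1, hz2⟩ := hmin _ _ h
    obtain ⟨s, r, hs, hsmin⟩ := IH a p c z hz1 (by simp; omega)
    obtain ⟨s', r', hs', hsmin'⟩ := IH b q d z hz2 (by simp; omega)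
    obtain ⟨t, ht⟩ := hsmin _ _ hz1
    obtain ⟨t', ht'⟩ := hsmin' _ _ hz2
    have e1 : z = r * t := by
      rw [ht, ← mul_assoc, hs, mul_assoc] at hz1; exact (mul_left_cancel hz1).symm
    have e2 : z = r' * t' := by
      rw [ht', ← mul_assoc, hs', mul_assoc] at hz2; exact (mul_left_cancel hz2).symm
    obtain ⟨k, k', hk, hkmin⟩ := IH r r' t t' (e1.symm.trans e2) (by
      rw [← e1]; have := congrArg len hz1; simp at this; omega)
    refine ⟨s * k, s' * k', ?_, fun x y hxy => ?_⟩
    · calc g i * a * (s * k) = g i * (a * s) * k := by simp only [mul_assoc]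
        _ = (g i * p) * (r * k) := by rw [hs]; simp only [mul_assoc]
        _ = g j * (q * r') * k' := by rw [hpq, hk]; simp only [mul_assoc]
        _ = _ := by rw [← hs']; simp only [mul_assoc]
    · simp only [mul_assoc] at hxy
      obtain ⟨z, hz1, hz2⟩ := hmin _ _ hxy
      obtain ⟨t, rfl⟩ := hsmin _ _ hz1
      obtain ⟨t', rfl⟩ := hsmin' _ _ hz2
      have e1 : z = r * t := by
        rw [← mul_assoc, hs, mul_assoc] at hz1; exact (mul_left_cancel hz1).symm
      have e2 : z = r' * t' := by
        rw [← mul_assoc, hs', mul_assoc] at hz2; exact (mul_left_cancel hz2).symm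
      obtain ⟨w, rfl⟩ := hkmin _ _ (e1.symm.trans e2)
      exact ⟨w, by simp only [mul_assoc]⟩

end BM

/-! ### A central Garside element of the braid monoid -/

namespace BM

variable {m : ℕ}

/-- Generators indexed by natural numbers, trivial out of range. -/
def g' (m : ℕ) (j : ℕ) : BM m := if h : j < m then g ⟨j, h⟩ else 1

lemma g'_far {i j : ℕ} (h : i + 1 < j) : g' m i * g' m j = g' m j * g' m i := by
  unfold g'
  split_ifs with h1 h2
  · exact g_far (.inl h)
  all_goals simp

lemma g'_adj {i : ℕ} (h : i + 1 < m) :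
    g' m i * g' m (i + 1) * g' m i = g' m (i + 1) * g' m i * g' m (i + 1) := by
  unfold g'
  rw [dif_pos h, dif_pos (by omega : i < m)]
  have : Adj (⟨i, by omega⟩ : Fin m) ⟨i + 1, h⟩ := .inl rfl
  simpa only [mul_assoc] using g_adj this

/-- The product `g 0 * ⋯ * g (k - 1)`. -/
def dl (m k : ℕ) : BM m := ((List.range k).map (g' m)).prod

lemma dl_succ (k : ℕ) : dl m (k + 1) = dl m k * g' m k := by simp [dl, List.range_succ]

lemma dl_far {k j : ℕ} (h : k < j) : dl m k * g' m j = g' m j * dl m k := by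
  induction k with
  | zero => simp [dl]
  | succ k ih => rw [dl_succ, mul_assoc, g'_far h, ← mul_assoc, ih (by omega), mul_assoc]

lemma dl_shift {k i : ℕ} (hk : k ≤ m) (hi : i + 1 < k) :
    dl m k * g' m i = g' m (i + 1) * dl m k := by
  induction k with
  | zero => omega
  | succ k ih =>
    rcases Nat.lt_or_ge (i + 1) k with h | h
    · rw [dl_succ, mul_assoc, ← g'_far h, ← mul_assoc, ih (by omega) h, mul_assoc]
    · obtain rfl : k = i + 1 := by omega
      rw [dl_succ, dl_succ]
      calc dl m i * g' m i * g' m (i + 1) * g' m i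
          = dl m i * (g' m i * g' m (i + 1) * g' m i) := by simp only [mul_assoc]
        _ = dl m i * g' m (i + 1) * g' m i * g' m (i + 1) := by
          rw [g'_adj (by omega)]; simp only [mul_assoc]
        _ = _ := by rw [dl_far (by omega)]; simp only [mul_assoc]

/-- Conjugation by `dl m m` applied to the last generator twice gives the first one. -/
lemma dl_last : dl (m + 1) (m + 1) ^ 2 * g' (m + 1) m = g' (m + 1) 0 * dl (m + 1) (m + 1) ^ 2 := by
  set D := dl (m + 1) (m + 1) with hD
  have key : ∀ k ≤ m, ∃ e, D * dl (m + 1) k = e * D ∧ dl (m + 1) (k + 1) = g' (m + 1) 0 * e := by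
    intro k hk
    induction k with
    | zero => exact ⟨1, by simp [dl], by simp [dl]⟩
    | succ k ih =>
      obtain ⟨e, h1, h2⟩ := ih (by omega)
      refine ⟨e * g' (m + 1) (k + 1), ?_, ?_⟩
      · rw [dl_succ, ← mul_assoc, h1, mul_assoc, hD, dl_shift le_rfl (by omega), mul_assoc]
      · rw [dl_succ, h2, mul_assoc]
  obtain ⟨e, h1, h2⟩ := key m le_rfl
  have h3 : D = dl (m + 1) m * g' (m + 1) m := dl_succ m
  have h4 : D ^ 2 = e * D * g' (m + 1) m := by
    rw [pow_two]; nth_rw 2 [h3]; rw [← mul_assoc, h1]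
  rw [h4]
  calc _ = (e * D * g' (m + 1) m) * g' (m + 1) m := rfl
    _ = D ^ 2 * g' (m + 1) m := by rw [h4]
    _ = (g' (m + 1) 0 * e) * D * g' (m + 1) m := by rw [← h2, pow_two]
    _ = _ := by simp only [mul_assoc]

lemma dl_pow_shift (i k : ℕ) (h : i + k < m) :
    dl m m ^ k * g' m i = g' m (i + k) * dl m m ^ k := by
  induction k with
  | zero => simp
  | succ k ih =>
    rw [pow_succ', mul_assoc, ih (by omega), ← mul_assoc, dl_shift le_rfl (by omega), mul_assoc,
      ← add_assoc]

lemma dl_pow_central (i : ℕ) (hi : i < m) :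
    dl m m ^ (m + 1) * g' m i = g' m i * dl m m ^ (m + 1) := by
  obtain ⟨m, rfl⟩ : ∃ k, m = k + 1 := ⟨m - 1, by omega⟩
  have e : m + 1 + 1 = i + (2 + (m - i)) := by omega
  rw [e, pow_add, pow_add, mul_assoc, mul_assoc, dl_pow_shift i (m - i) (by omega),
    show i + (m - i) = m by omega, ← mul_assoc (_ ^ 2), dl_last, ← mul_assoc, ← mul_assoc,
    dl_pow_shift 0 i (by omega), zero_add]
  simp only [mul_assoc]

lemma g_eq_g' (i : Fin m) : g i = g' m i := by simp [g']

lemma dl_comm (a : BM m) : dl m m ^ (m + 1) * a = a * dl m m ^ (m + 1) := by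
  induction a using ind with
  | h1 => simp
  | hm i a ih => rw [← mul_assoc, g_eq_g', dl_pow_central _ i.2, mul_assoc, ih, mul_assoc]

lemma g_dvd_dl (i : Fin m) : ∃ a, dl m m ^ (m + 1) = g i * a := by
  have h0 : ∀ k, ∃ e, dl m (k + 1) = g' m 0 * e := by
    intro k
    induction k with
    | zero => exact ⟨1, by simp [dl]⟩
    | succ k ih => obtain ⟨e, h⟩ := ih; exact ⟨e * g' m (k + 1), by rw [dl_succ, h, mul_assoc]⟩
  obtain ⟨e, he⟩ := h0 (m - 1)
  have hi := i.2
  rw [show m - 1 + 1 = m by omega] at he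
  refine ⟨dl m m ^ (i : ℕ) * e * dl m m ^ (m - i), ?_⟩
  have : dl m m ^ (m + 1) = dl m m ^ (i : ℕ) * (dl m m * dl m m ^ (m - i)) := by
    rw [← pow_succ', ← pow_add]; congr 1; omega
  rw [this]
  nth_rw 2 [he]
  have h2 := dl_pow_shift (m := m) 0 i (by omega)
  rw [zero_add, ← g_eq_g'] at h2
  calc _ = dl m m ^ (i : ℕ) * g' m 0 * (e * dl m m ^ (m - i)) := by simp only [mul_assoc]
    _ = _ := by rw [h2]; simp only [mul_assoc]

/-- A central, reversal-invariant element of the braid monoid divisible by every generator. -/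
def Om (m : ℕ) : BM m := dl m m ^ (m + 1) * rev (dl m m ^ (m + 1))

lemma rev_Om : rev (Om m) = Om m := by simp [Om]

lemma Om_comm (a : BM m) : Om m * a = a * Om m := by
  have h := congrArg rev (dl_comm (rev a))
  simp only [rev_mul, rev_rev] at h
  rw [Om, mul_assoc, ← h, ← mul_assoc, dl_comm, mul_assoc]

lemma g_dvd_Om (i : Fin m) : ∃ a, Om m = g i * a := by
  obtain ⟨a, h⟩ := g_dvd_dl i
  exact ⟨a * rev (dl m m ^ (m + 1)), by rw [Om, ← mul_assoc, ← h]⟩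

lemma dvd_Om_pow (a : BM m) : ∃ b, Om m ^ (len a) = a * b := by
  induction a using ind with
  | h1 => exact ⟨1, by simp⟩
  | hm i a ih =>
    obtain ⟨b, hb⟩ := ih
    obtain ⟨c, hc⟩ := g_dvd_Om i
    refine ⟨b * c, ?_⟩
    have : ∀ x, Om m ^ len a * x = x * Om m ^ len a := fun x =>
      (show Commute (Om m) x from Om_comm x).pow_left _
    calc Om m ^ len (g i * a) = Om m ^ len a * Om m := by
          rw [len_mul, len_g, add_comm, pow_succ]
      _ = Om m ^ len a * (g i * c) := by rw [← hc]
      _ = g i * (a * b) * c := by rw [← mul_assoc, this, hb]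
      _ = _ := by simp only [mul_assoc]

/-! ### Embedding the braid monoid in the braid group -/

/-- Powers of the central element form an Ore set. -/
@[reducible] def oreOm (m : ℕ) : OreLocalization.OreSet (Submonoid.powers (Om m)) where
  ore_right_cancel r₁ r₂ s h := ⟨1, by rw [mul_right_cancel h]⟩
  oreNum r _ := r
  oreDenom _ s := s
  ore_eq := by
    rintro r ⟨_, k, rfl⟩
    exact (show Commute (Om m) r from Om_comm r).pow_left _

attribute [local instance] oreOm

lemma numerator_inj : Function.Injective
    (OreLocalization.numeratorHom : BM m →* OreLocalization (Submonoid.powers (Om m)) (BM m)) := by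
  intro a b h
  rw [OreLocalization.numeratorHom_apply, OreLocalization.numeratorHom_apply,
    OreLocalization.oreDiv_eq_iff] at h
  obtain ⟨u, v, h1, h2⟩ := h
  have h3 : (u : BM m) = v := by simpa [Submonoid.smul_def] using h2
  rw [Submonoid.smul_def, smul_eq_mul, smul_eq_mul, h3] at h1
  exact (mul_left_cancel h1).symm

lemma numerator_unit (i : Fin m) : IsUnit (OreLocalization.numeratorHom (g i) :
    OreLocalization (Submonoid.powers (Om m)) (BM m)) := by
  obtain ⟨a, ha⟩ := g_dvd_Om i
  have ha' : Om m = a * g i := by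
    have : g i * (a * g i) = g i * Om m := by rw [← mul_assoc, ← ha, Om_comm]
    exact (mul_left_cancel this).symm
  have hu := OreLocalization.numerator_isUnit (⟨Om m, Submonoid.mem_powers _⟩ : Submonoid.powers (Om m))
  obtain ⟨u, hu⟩ := hu
  refine isUnit_iff_exists_and_exists.2 ⟨⟨OreLocalization.numeratorHom a * u⁻¹.val, ?_⟩,
    ⟨u⁻¹.val * OreLocalization.numeratorHom a, ?_⟩⟩
  · rw [← mul_assoc, ← map_mul, ← ha]; simp only at hu; rw [← hu]; simp
  · rw [mul_assoc, ← map_mul, ← ha']; simp only at hu; rw [← hu]; simp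

end BM

lemma σ_far {n : ℕ} {i j : Fin (n - 1)} (h : (i : ℕ) + 1 < j) :
    (σ i * σ j : B n) = σ j * σ i := by
  have h1 : (PresentedGroup.mk (braidRels (n - 1)))
      (FreeGroup.of i * FreeGroup.of j * (FreeGroup.of i)⁻¹ * (FreeGroup.of j)⁻¹) = 1 :=
    PresentedGroup.one_of_mem (.inl ⟨i, j, h, rfl⟩)
  simp only [map_mul, map_inv] at h1
  rw [mul_inv_eq_one, mul_inv_eq_iff_eq_mul] at h1
  exact h1

lemma σ_adj {n : ℕ} {i j : Fin (n - 1)} (h : (i : ℕ) + 1 = j) :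
    (σ i * σ j * σ i : B n) = σ j * σ i * σ j := by
  have h1 : (PresentedGroup.mk (braidRels (n - 1)))
      (FreeGroup.of i * FreeGroup.of j * FreeGroup.of i *
              (FreeGroup.of j)⁻¹ * (FreeGroup.of i)⁻¹ * (FreeGroup.of j)⁻¹) = 1 :=
    PresentedGroup.one_of_mem (.inr ⟨i, j, h, rfl⟩)
  simp only [map_mul, map_inv] at h1
  rw [mul_inv_eq_one, mul_inv_eq_iff_eq_mul, mul_inv_eq_iff_eq_mul] at h1
  exact h1

/-- Homomorphisms out of the braid group, from images of the generators that satisfy the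
braid relations. -/
def BrLift {n : ℕ} {H : Type*} [Group H] (f : Fin (n - 1) → H)
    (hf : ∀ i j : Fin (n - 1), (i : ℕ) + 1 < j → f i * f j = f j * f i)
    (ha : ∀ i j : Fin (n - 1), (i : ℕ) + 1 = j → f i * f j * f i = f j * f i * f j) : B n →* H :=
  PresentedGroup.toGroup (f := f) (by
    rintro r (⟨i, j, h, rfl⟩ | ⟨i, j, h, rfl⟩)
    · simp only [map_mul, map_inv, FreeGroup.lift_apply_of]
      rw [hf i j h]; group
    · simp only [map_mul, map_inv, FreeGroup.lift_apply_of]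
      rw [ha i j h]; group)

@[simp] lemma BrLift_σ {n : ℕ} {H : Type*} [Group H] (f : Fin (n - 1) → H) (hf) (ha)
    (i : Fin (n - 1)) : BrLift f hf ha (σ i) = f i := PresentedGroup.toGroup.of _

/-- Two homomorphisms agreeing on the generators are equal. -/
lemma Bhom_ext {n : ℕ} {H : Type*} [Group H] {f f' : B n →* H}
    (h : ∀ i, f (σ i) = f' (σ i)) : f = f' := PresentedGroup.ext h

/-- The canonical map from the braid monoid to the braid group. -/
def BM.toB (n : ℕ) : BM (n - 1) →* B n :=
  (brCon (n - 1)).lift (FreeMonoid.lift σ) (by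
    intro a b h
    have key : ∀ {u v : List (Fin (n - 1))}, BStep u v →
        (u.map (σ (n := n))).prod = (v.map (σ (n := n))).prod := by
      intro u v h
      induction h with
      | far h w =>
        simp only [List.map_cons, List.prod_cons, ← mul_assoc]
        rcases h with h | h
        · rw [σ_far h]
        · rw [σ_far h]
      | adj h w =>
        simp only [List.map_cons, List.prod_cons, ← mul_assoc]
        rcases h with h | h
        · rw [σ_adj h]
        · rw [σ_adj h]
      | cons i _ ih => simp [ih]
    have key2 : ∀ {u v : List (Fin (n - 1))}, Relation.ReflTransGen BStep u v →
        (u.map (σ (n := n))).prod = (v.map (σ (n := n))).prod := by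
      intro u v h
      induction h with
      | refl => rfl
      | tail _ h ih => exact ih.trans (key h)
    simpa [Con.ker_rel, FreeMonoid.lift_apply] using key2 h)

@[simp] lemma BM.toB_g {n : ℕ} (i : Fin (n - 1)) : BM.toB n (BM.g i) = σ i := by
  change (FreeMonoid.lift σ) (FreeMonoid.of i) = _
  simp

attribute [local instance] BM.oreOm in
theorem BM.toB_injective (n : ℕ) : Function.Injective (BM.toB n) := by
  let u : Fin (n - 1) → (OreLocalization (Submonoid.powers (Om (n - 1))) (BM (n - 1)))ˣ :=
    fun i => (numerator_unit i).unit
  let ψ : B n →* (OreLocalization (Submonoid.powers (Om (n - 1))) (BM (n - 1)))ˣ := BrLift u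
    (by
      intro i j h
      ext
      simp only [u, Units.val_mul, IsUnit.unit_spec, ← map_mul]
      rw [g_far (.inl h)])
    (by
      intro i j h
      ext
      simp only [u, Units.val_mul, IsUnit.unit_spec, ← map_mul, mul_assoc]
      rw [g_adj (.inl h)])
  have key : ∀ a, ((ψ (BM.toB n a) : _ˣ) : OreLocalization (Submonoid.powers (Om (n - 1))) (BM (n - 1)))
      = OreLocalization.numeratorHom a := by
    intro a
    induction a using BM.ind with
    | h1 => rw [map_one, map_one, map_one, Units.val_one]
    | hm i a ih => rw [map_mul, map_mul, Units.val_mul, ih, map_mul]; simp [ψ, u]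
  intro a b h
  apply numerator_inj
  rw [← key, ← key, h]

lemma mem_P_iff {n : ℕ} {x : B n} : x ∈ P n ↔ ∃ a, BM.toB n a = x := by
  constructor
  · intro h
    induction h using Submonoid.closure_induction with
    | mem x hx => obtain ⟨i, rfl⟩ := hx; exact ⟨BM.g i, BM.toB_g i⟩
    | one => exact ⟨1, map_one _⟩
    | mul x y _ _ hx hy =>
      obtain ⟨a, rfl⟩ := hx
      obtain ⟨b, rfl⟩ := hy
      exact ⟨a * b, map_mul _ _ _⟩
  · rintro ⟨a, rfl⟩
    induction a using BM.ind with
    | h1 => simp [one_mem]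
    | hm i a ih =>
      rw [map_mul, BM.toB_g]
      exact mul_mem (Submonoid.subset_closure ⟨i, rfl⟩) ih

/-! ### The lattice order on the braid group -/

/-- The exponent sum. -/
def ee (n : ℕ) : B n →* Multiplicative ℤ :=
  BrLift (fun _ => Multiplicative.ofAdd 1) (by intros; rfl) (by intros; rfl)

@[simp] lemma ee_σ {n : ℕ} (i : Fin (n - 1)) : ee n (σ i) = Multiplicative.ofAdd 1 := by simp [ee]

/-- The exponent sum as an integer. -/
def es {n : ℕ} (x : B n) : ℤ := (ee n x).toAdd

@[simp] lemma es_mul {n : ℕ} (x y : B n) : es (x * y) = es x + es y := by simp [es]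
@[simp] lemma es_inv {n : ℕ} (x : B n) : es x⁻¹ = - es x := by simp [es]
@[simp] lemma es_one {n : ℕ} : es (1 : B n) = 0 := by simp [es]
@[simp] lemma es_σ {n : ℕ} (i : Fin (n - 1)) : es (σ i) = 1 := by simp [es]
@[simp] lemma es_pow {n : ℕ} (x : B n) (k : ℕ) : es (x ^ k) = k * es x := by simp [es]

lemma es_toB {n : ℕ} (a : BM (n - 1)) : es (BM.toB n a) = a.len := by
  induction a using BM.ind with
  | h1 => simp
  | hm i a ih => simp [ih]

/-- Words in the generators, by induction. -/
lemma B_ind {n : ℕ} {p : B n → Prop} (h1 : p 1) (hm : ∀ i a, p a → p (σ i * a))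
    (hi : ∀ i a, p a → p ((σ i)⁻¹ * a)) (x : B n) : p x := by
  have hx : x ∈ Subgroup.closure (Set.range (σ (n := n))) := by
    have : Subgroup.closure (Set.range (σ (n := n))) = ⊤ :=
      PresentedGroup.closure_range_of (braidRels (n - 1))
    rw [this]; trivial
  induction hx using Subgroup.closure_induction_left with
  | one => exact h1
  | mul_left x hx y _ ih => obtain ⟨i, rfl⟩ := hx; exact hm i y ih
  | inv_mul_cancel x hx y _ ih => obtain ⟨i, rfl⟩ := hx; exact hi i y ih

/-- The automorphism inverting each Artin generator, as an endomorphism. -/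
def eps (n : ℕ) : B n →* B n :=
  BrLift (fun i => (σ i)⁻¹)
    (fun i j h => by rw [← mul_inv_rev, ← mul_inv_rev, σ_far h])
    (fun i j h => by
      rw [← mul_inv_rev, ← mul_inv_rev, ← mul_inv_rev, ← mul_inv_rev, ← mul_assoc, ← mul_assoc,
        σ_adj h])

@[simp] lemma eps_σ {n : ℕ} (i : Fin (n - 1)) : eps n (σ i) = (σ i)⁻¹ := by simp [eps]

@[simp] lemma eps_eps {n : ℕ} (x : B n) : eps n (eps n x) = x := by
  have : (eps n).comp (eps n) = MonoidHom.id _ := Bhom_ext (by simp)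
  exact DFunLike.congr_fun this x

lemma eps_toB {n : ℕ} (a : BM (n - 1)) : eps n (BM.toB n a) = (BM.toB n a.rev)⁻¹ := by
  induction a using BM.ind with
  | h1 => simp
  | hm i a ih => simp [ih]

lemma eps_P {n : ℕ} {x : B n} (h : x ∈ P n) : (eps n x)⁻¹ ∈ P n := by
  obtain ⟨a, rfl⟩ := mem_P_iff.1 h
  exact mem_P_iff.2 ⟨a.rev, by rw [eps_toB, inv_inv]⟩

/-- The central Garside element, in the braid group. -/
def Og (n : ℕ) : B n := BM.toB n (BM.Om (n - 1))

lemma Og_mem (n : ℕ) : Og n ∈ P n := mem_P_iff.2 ⟨_, rfl⟩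

lemma Og_pow_mem (n k : ℕ) : Og n ^ k ∈ P n := pow_mem (Og_mem n) k

lemma Og_comm {n : ℕ} (x : B n) : Og n * x = x * Og n := by
  induction x using B_ind with
  | h1 => simp
  | hm i a ih =>
    have : Og n * σ i = σ i * Og n := by
      rw [Og, ← BM.toB_g, ← map_mul, BM.Om_comm, map_mul]
    rw [← mul_assoc, this, mul_assoc, ih, mul_assoc]
  | hi i a ih =>
    have : Og n * σ i = σ i * Og n := by
      rw [Og, ← BM.toB_g, ← map_mul, BM.Om_comm, map_mul]
    have : Og n * (σ i)⁻¹ = (σ i)⁻¹ * Og n :=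
      (show Commute (Og n) (σ i) from this).inv_right
    rw [← mul_assoc, this, mul_assoc, ih, mul_assoc]

lemma Og_pow_comm {n : ℕ} (k : ℕ) (x : B n) : Og n ^ k * x = x * Og n ^ k :=
  (show Commute (Og n) x from Og_comm x).pow_left k

lemma eps_Og (n : ℕ) : eps n (Og n) = (Og n)⁻¹ := by rw [Og, eps_toB, BM.rev_Om]

lemma exists_mul_Og_mem {n : ℕ} (x : B n) : ∃ k, x * Og n ^ k ∈ P n := by
  induction x using B_ind with
  | h1 => exact ⟨0, by simp [one_mem]⟩
  | hm i a ih =>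
    obtain ⟨k, hk⟩ := ih
    exact ⟨k, by rw [mul_assoc]; exact mul_mem (Submonoid.subset_closure ⟨i, rfl⟩) hk⟩
  | hi i a ih =>
    obtain ⟨k, hk⟩ := ih
    obtain ⟨b, hb⟩ := BM.g_dvd_Om i
    refine ⟨k + 1, ?_⟩
    have h2 : (σ i)⁻¹ * Og n = BM.toB n b := by rw [Og, hb, map_mul, BM.toB_g]; group
    have : (σ i)⁻¹ * a * Og n ^ (k + 1) = BM.toB n b * (a * Og n ^ k) := by
      rw [← h2, pow_succ']
      rw [mul_assoc, mul_assoc, ← mul_assoc a, ← Og_comm a]; simp only [mul_assoc]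
    rw [this]
    exact mul_mem (mem_P_iff.2 ⟨b, rfl⟩) hk

/-- The left divisibility order. -/
def Ple {n : ℕ} (x y : B n) : Prop := x⁻¹ * y ∈ P n

lemma Ple.refl {n : ℕ} (x : B n) : Ple x x := by simp [Ple, one_mem]

lemma Ple.trans {n : ℕ} {x y z : B n} (h : Ple x y) (h' : Ple y z) : Ple x z := by
  have := mul_mem h h'
  unfold Ple
  rwa [show x⁻¹ * y * (y⁻¹ * z) = x⁻¹ * z by group] at this

lemma Ple.es_le {n : ℕ} {x y : B n} (h : Ple x y) : es x ≤ es y := by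
  obtain ⟨a, ha⟩ := mem_P_iff.1 h
  have := es_toB a
  rw [ha] at this
  simp only [es_mul, es_inv] at this
  omega

lemma Ple.eq_of_es {n : ℕ} {x y : B n} (h : Ple x y) (he : es x = es y) : x = y := by
  obtain ⟨a, ha⟩ := mem_P_iff.1 h
  have := es_toB a
  rw [ha] at this
  simp only [es_mul, es_inv] at this
  have : a = 1 := BM.eq_one_of_len (by omega)
  rw [this, map_one] at ha
  exact (inv_mul_eq_one.1 ha.symm)

lemma Ple.mul_left {n : ℕ} {x y : B n} (h : Ple x y) (z : B n) : Ple (z * x) (z * y) := by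
  unfold Ple at *
  rwa [show (z * x)⁻¹ * (z * y) = x⁻¹ * y by group]

lemma exists_sup {n : ℕ} (x y : B n) : ∃ s, Ple x s ∧ Ple y s ∧ ∀ z, Ple x z → Ple y z → Ple s z := by
  obtain ⟨k, hk⟩ := exists_mul_Og_mem x
  obtain ⟨l, hl⟩ := exists_mul_Og_mem y
  have hx : x * Og n ^ (k + l) ∈ P n := by
    rw [pow_add, ← mul_assoc]; exact mul_mem hk (Og_pow_mem _ _)
  have hy : y * Og n ^ (k + l) ∈ P n := by
    rw [add_comm, pow_add, ← mul_assoc]; exact mul_mem hl (Og_pow_mem _ _)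
  obtain ⟨a, ha⟩ := mem_P_iff.1 hx
  obtain ⟨b, hb⟩ := mem_P_iff.1 hy
  -- both positive parts divide a power of the central element
  obtain ⟨c, hc⟩ := BM.dvd_Om_pow a
  obtain ⟨d, hd⟩ := BM.dvd_Om_pow b
  have hcomm : BM.Om (n - 1) ^ a.len * BM.Om (n - 1) ^ b.len =
      BM.Om (n - 1) ^ b.len * BM.Om (n - 1) ^ a.len := (pow_mul_comm _ _ _)
  obtain ⟨p, q, hpq, hmin⟩ := BM.exists_lcm _ a b (c * BM.Om (n - 1) ^ b.len)
    (d * BM.Om (n - 1) ^ a.len) (by rw [← mul_assoc, ← mul_assoc, ← hc, ← hd, hcomm]) le_rfl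
  have hpq' : x * BM.toB n p = y * BM.toB n q := by
    have := congrArg (BM.toB n) hpq
    rw [map_mul, map_mul, ha, hb, mul_assoc, mul_assoc, Og_pow_comm, Og_pow_comm, ← mul_assoc,
      ← mul_assoc] at this
    exact mul_right_cancel this
  refine ⟨x * BM.toB n p, ?_, ?_, ?_⟩
  · unfold Ple; rw [inv_mul_cancel_left]; exact mem_P_iff.2 ⟨p, rfl⟩
  · unfold Ple; rw [hpq', inv_mul_cancel_left]; exact mem_P_iff.2 ⟨q, rfl⟩
  · intro z hxz hyz
    obtain ⟨r, hr⟩ := mem_P_iff.1 hxz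
    obtain ⟨t, ht⟩ := mem_P_iff.1 hyz
    obtain ⟨w, hw⟩ := hmin r t (BM.toB_injective n (by
      rw [map_mul, map_mul, ha, hb, hr, ht, mul_assoc, mul_assoc, Og_pow_comm, Og_pow_comm]; group))
    refine mem_P_iff.2 ⟨w, ?_⟩
    rw [hw, map_mul] at hr
    rw [mul_inv_rev, mul_assoc, ← hr, inv_mul_cancel_left]

/-- Every nonempty bounded family has a supremum. -/
lemma exists_sSup {n : ℕ} (S : Set (B n)) (hS : S.Nonempty) (hb : ∃ b, ∀ x ∈ S, Ple x b) :
    ∃ s, (∀ x ∈ S, Ple x s) ∧ ∀ z, (∀ x ∈ S, Ple x z) → Ple s z := by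
  obtain ⟨b, hb⟩ := hb
  obtain ⟨s0, hs0⟩ := hS
  -- an element of maximal exponent sum among those below every upper bound
  let T : Set (B n) := {s | ∀ z, (∀ x ∈ S, Ple x z) → Ple s z}
  have hbd : ∀ k : ℤ, (∃ s ∈ T, es s = k) → k ≤ es b := by
    rintro _ ⟨s, hs, rfl⟩; exact (hs b hb).es_le
  obtain ⟨k, ⟨s, hs, rfl⟩, hmax⟩ := Int.exists_greatest_of_bdd
    ⟨es b, hbd⟩ ⟨_, s0, fun z hz => hz s0 hs0, rfl⟩
  refine ⟨s, fun x hx => ?_, hs⟩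
  obtain ⟨t, h1, h2, h3⟩ := exists_sup s x
  have ht : t ∈ T := fun z hz => h3 z (hs z hz) (hz x hx)
  have := hmax _ ⟨t, ht, rfl⟩
  rwa [h1.eq_of_es (le_antisymm h1.es_le this)]

/-! ### Convex paths in Helly metric spaces -/

/-- The least function `k` with `h x + k y ≥ d x y`. -/
noncomputable def hstar {X : Type*} (d : X → X → ℕ) (h : X → ℝ) (x : X) : ℝ := ⨆ z, ((d x z : ℝ) - h z)

/-- The averaging step towards the injective hull. -/
noncomputable def hq {X : Type*} (d : X → X → ℕ) (h : X → ℝ) (x : X) : ℝ := (h x + hstar d h x) / 2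

section Helly

variable {X : Type*} [Nonempty X] {d : X → X → ℕ}

/-- Radius functions of pairwise intersecting families of balls. -/
def HAdm (d : X → X → ℕ) (h : X → ℝ) : Prop := ∀ x y, (d x y : ℝ) ≤ h x + h y

lemma HAdm.bdd {h : X → ℝ} (H : HAdm d h) (x : X) :
    BddAbove (Set.range fun z => (d x z : ℝ) - h z) :=
  ⟨h x, by rintro _ ⟨z, rfl⟩; have := H x z; simp only; linarith⟩

lemma HAdm.le_star {h : X → ℝ} (H : HAdm d h) (x z : X) : (d x z : ℝ) - h z ≤ hstar d h x :=
  le_ciSup (H.bdd x) z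

lemma hstar_le {h : X → ℝ} {x : X} {c : ℝ} (H : ∀ z, (d x z : ℝ) ≤ h z + c) : hstar d h x ≤ c :=
  ciSup_le fun z => by have := H z; linarith

lemma HAdm.star_le {h : X → ℝ} (H : HAdm d h) (x : X) : hstar d h x ≤ h x :=
  hstar_le fun z => by have := H x z; linarith

lemma HAdm.q (hsymm : ∀ x y, d x y = d y x) {h : X → ℝ} (H : HAdm d h) : HAdm d (hq d h) := by
  intro x y
  have h1 := H.le_star x y
  have h2 := H.le_star y x
  rw [hsymm y x] at h2
  unfold hq; linarith

lemma hstar_lip {h h' : X → ℝ} (H : HAdm d h) (H' : HAdm d h') {c : ℝ}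
    (hc : ∀ x, h x ≤ h' x + c) (x : X) : hstar d h' x ≤ hstar d h x + c :=
  hstar_le fun z => by have := H.le_star x z; have := hc z; linarith

lemma hq_gap (hsymm : ∀ x y, d x y = d y x) {h : X → ℝ} (H : HAdm d h) {c : ℝ}
    (hc : ∀ x, h x ≤ hstar d h x + c) (x : X) : hq d h x ≤ hstar d (hq d h) x + c / 2 := by
  have h1 := hstar_lip (H.q hsymm) H (c := 0) (fun x => by
    have := H.star_le x; unfold hq; linarith) x
  have := hc x
  unfold hq at *; linarith

lemma hq_lip {h h' : X → ℝ} (H : HAdm d h) (H' : HAdm d h') {c : ℝ}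
    (hc : ∀ x, h x ≤ h' x + c) (hc' : ∀ x, h' x ≤ h x + c) (x : X) : hq d h x ≤ hq d h' x + c := by
  have h1 := hstar_lip H' H hc' x
  have := hc x
  unfold hq; linarith

lemma hstar_equiv (f : X ≃ X) (hf : ∀ x y, d (f x) (f y) = d x y) (h : X → ℝ) (x : X) :
    hstar d (h ∘ f) x = hstar d h (f x) := by
  unfold hstar
  rw [← f.iSup_comp (g := fun z => (d (f x) z : ℝ) - h z)]
  simp [hf]

lemma hq_equiv (f : X ≃ X) (hf : ∀ x y, d (f x) (f y) = d x y) (h : X → ℝ) :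
    hq d (h ∘ f) = hq d h ∘ f := by
  ext x; simp [hq, hstar_equiv f hf]

lemma hq_iter_equiv (f : X ≃ X) (hf : ∀ x y, d (f x) (f y) = d x y) (h : X → ℝ) (K : ℕ) :
    (hq d)^[K] (h ∘ f) = (hq d)^[K] h ∘ f := by
  induction K generalizing h with
  | zero => rfl
  | succ K ih => rw [Function.iterate_succ_apply, Function.iterate_succ_apply, hq_equiv f hf, ih]

lemma HAdm.iter (hsymm : ∀ x y, d x y = d y x) {h : X → ℝ} (H : HAdm d h) (K : ℕ) :
    HAdm d ((hq d)^[K] h) := by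
  induction K generalizing h with
  | zero => exact H
  | succ K ih => exact ih (H.q hsymm)

lemma hq_iter_gap (hsymm : ∀ x y, d x y = d y x) {h : X → ℝ} (H : HAdm d h) {c : ℝ}
    (hc : ∀ x, h x ≤ hstar d h x + c) (K : ℕ) (x : X) :
    (hq d)^[K] h x ≤ hstar d ((hq d)^[K] h) x + c / 2 ^ K := by
  induction K generalizing h c with
  | zero => simpa using hc x
  | succ K ih =>
    have := ih (H.q hsymm) (hq_gap hsymm H hc)
    rwa [div_div, ← pow_succ'] at this

lemma hq_iter_lip (hsymm : ∀ x y, d x y = d y x) {h h' : X → ℝ} (H : HAdm d h) (H' : HAdm d h')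
    {c : ℝ} (hc : ∀ x, h x ≤ h' x + c) (hc' : ∀ x, h' x ≤ h x + c) (K : ℕ) (x : X) :
    (hq d)^[K] h x ≤ (hq d)^[K] h' x + c := by
  induction K generalizing h h' with
  | zero => exact hc x
  | succ K ih => exact ih (H.q hsymm) (H'.q hsymm) (hq_lip H H' hc hc') (hq_lip H' H hc' hc)

/-- In a metric space with the integral Helly property, any two points are joined by a path with
bounded steps along which every isometry is displaced by essentially no more than at the two
ends. -/
theorem helly_path (hself : ∀ x, d x x = 0) (hsymm : ∀ x y, d x y = d y x)
    (htri : ∀ x y z, d x z ≤ d x y + d y z)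
    (hhelly : ∀ r : X → ℕ, (∀ x y, d x y ≤ r x + r y) → ∃ p, ∀ z, d p z ≤ r z) (x y : X) :
    ∃ (N : ℕ) (p : ℕ → X), p 0 = x ∧ p N = y ∧ (∀ j < N, d (p j) (p (j + 1)) ≤ 4) ∧
      ∀ (f : X ≃ X) (b : ℕ), (∀ z w, d (f z) (f w) = d z w) → d x (f x) ≤ b → d y (f y) ≤ b →
        ∀ j ≤ N, d (p j) (f (p j)) ≤ b + 3 := by
  set M := d x y with hM
  obtain ⟨K, hK⟩ := pow_unbounded_of_one_lt (2 * M : ℝ) (one_lt_two)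
  have htri' : ∀ a b c, (d a c : ℝ) ≤ d a b + d b c := fun a b c => by exact_mod_cast htri a b c
  have hMr : (d x y : ℝ) = M := by rw [hM]
  let h : ℝ → X → ℝ := fun t z => (1 - t) * d x z + t * d y z
  let H : ℝ → X → ℝ := fun t => (hq d)^[K] (h t)
  have hadm : ∀ t, 0 ≤ t → t ≤ 1 → HAdm d (h t) := by
    intro t h0 h1 z w
    have e1 := htri' z x w
    have e2 := htri' z y w
    rw [hsymm z x] at e1
    rw [hsymm z y] at e2
    have := mul_le_mul_of_nonneg_left e1 (by linarith : 0 ≤ 1 - t)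
    have := mul_le_mul_of_nonneg_left e2 h0
    simp only [h]; nlinarith
  have hgap : ∀ t, 0 ≤ t → t ≤ 1 → ∀ z, h t z ≤ hstar d (h t) z + 2 * M := by
    intro t h0 h1 z
    have e1 := (hadm t h0 h1).le_star z x
    have e2 := htri' y x z
    have e3 : h t x = t * M := by simp only [h, hself]; rw [hsymm y x, ← hM]; simp
    rw [hsymm y x, hMr] at e2
    rw [e3, hsymm z x] at e1
    have := mul_le_mul_of_nonneg_left e2 h0
    have hM0 : (0 : ℝ) ≤ M := Nat.cast_nonneg _
    have : t * (M : ℝ) ≤ M := by nlinarith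
    have : h t z = (1 - t) * d x z + t * d y z := rfl
    nlinarith
  have Hadm : ∀ t, 0 ≤ t → t ≤ 1 → HAdm d (H t) := fun t h0 h1 => (hadm t h0 h1).iter hsymm K
  have Hgap : ∀ t, 0 ≤ t → t ≤ 1 → ∀ z, H t z ≤ hstar d (H t) z + 1 := by
    intro t h0 h1 z
    have := hq_iter_gap hsymm (hadm t h0 h1) (hgap t h0 h1) K z
    have h2 : (2 * M : ℝ) / 2 ^ K ≤ 1 := by rw [div_le_one (by positivity)]; exact hK.le
    simp only [H]; linarith
  -- the distance functions are fixed by the averaging step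
  have hfix : ∀ a : X, hq d (fun z => (d a z : ℝ)) = fun z => (d a z : ℝ) := by
    intro a
    have ha : HAdm d (fun z => (d a z : ℝ)) := fun z w => by
      have := htri' z a w; rw [hsymm z a] at this; simpa using this
    ext z
    have h1 := ha.star_le z
    have h2 := ha.le_star z a
    simp only [hself, hsymm z a] at h2
    unfold hq; simp at h1 h2 ⊢; linarith
  have H0 : ∀ z, H 0 z = d x z := by
    intro z
    have : h 0 = fun z => (d x z : ℝ) := by ext; simp [h]
    simp only [H, this]
    rw [Function.iterate_fixed (hfix x)]
  have H1 : ∀ z, H 1 z = d y z := by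
    intro z
    have : h 1 = fun z => (d y z : ℝ) := by ext; simp [h]
    simp only [H, this]
    rw [Function.iterate_fixed (hfix y)]
  have hround : ∀ t, 0 ≤ t → t ≤ 1 → ∃ p, (∀ z, (d p z : ℝ) ≤ H t z + 1) ∧
      (t = 0 → p = x) ∧ (t = 1 → p = y) := by
    intro t h0 h1
    rcases eq_or_ne t 0 with rfl | ht
    · exact ⟨x, fun z => by rw [H0]; linarith, fun _ => rfl, fun h => by norm_num at h⟩
    rcases eq_or_ne t 1 with rfl | ht'
    · exact ⟨y, fun z => by rw [H1]; linarith, fun h => by norm_num at h, fun _ => rfl⟩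
    obtain ⟨p, hp⟩ := hhelly (fun z => ⌈H t z⌉₊) (by
      intro z w
      have h1 := Hadm t h0 h1 z w
      have h2 := Nat.le_ceil (H t z)
      have h3 := Nat.le_ceil (H t w)
      exact_mod_cast h1.trans (add_le_add h2 h3))
    refine ⟨p, fun z => ?_, fun h => absurd h ht, fun h => absurd h ht'⟩
    have hnn : 0 ≤ H t z := by
      have := Hadm t h0 h1 z z; rw [hself] at this; push_cast at this; linarith
    have h2 : (d p z : ℝ) ≤ (⌈H t z⌉₊ : ℝ) := by exact_mod_cast hp z
    exact h2.trans (Nat.ceil_lt_add_one hnn).le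
  have huniq : ∀ t, 0 ≤ t → t ≤ 1 → ∀ p p' (c : ℝ), (∀ z, (d p z : ℝ) ≤ H t z + 1) →
      (∀ z, (d p' z : ℝ) ≤ H t z + c) → (d p p' : ℝ) ≤ c + 2 := by
    intro t h0 h1 p p' c hp hp'
    have e1 := hp p'
    have e2 := Hgap t h0 h1 p'
    have e3 := hstar_le (d := d) (h := H t) (x := p') hp'
    linarith
  choose! P hP hP0 hP1 using hround
  have hN : (0 : ℝ) < (M + 1 : ℕ) := by positivity
  let τ : ℕ → ℝ := fun j => (j : ℝ) / (M + 1 : ℕ)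
  have τ0 : ∀ j, 0 ≤ τ j := fun j => by positivity
  have τ1 : ∀ j ≤ M + 1, τ j ≤ 1 := fun j hj => by
    simp only [τ]; rw [div_le_one hN]; exact_mod_cast hj
  refine ⟨M + 1, fun j => P (τ j), hP0 _ (τ0 _) (τ1 _ (by omega)) (by simp [τ]),
    hP1 _ (τ0 _) (τ1 _ le_rfl) (by simp only [τ]; exact div_self hN.ne'), ?_, ?_⟩
  · intro j hj
    have hd : ∀ z, |h (τ (j + 1)) z - h (τ j) z| ≤ 1 := by
      intro z
      have e : h (τ (j + 1)) z - h (τ j) z = (1 / (M + 1 : ℕ)) * ((d y z : ℝ) - d x z) := by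
        simp only [h, τ]; push_cast; field_simp; ring
      have e1 := htri' y x z
      have e2 := htri' x y z
      rw [hsymm y x, hMr] at e1
      rw [hMr] at e2
      rw [e, abs_mul, abs_of_pos (by positivity), one_div, inv_mul_le_one₀ hN, abs_le]
      push_cast
      constructor <;> linarith
    have h2 := huniq (τ j) (τ0 _) (τ1 _ (by omega)) (P (τ j)) (P (τ (j + 1))) 2
      (hP _ (τ0 _) (τ1 _ (by omega))) (fun z => by
        have e1 := hP _ (τ0 (j + 1)) (τ1 _ (by omega)) z
        have e2 := hq_iter_lip hsymm (hadm _ (τ0 (j + 1)) (τ1 _ (by omega)))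
          (hadm _ (τ0 j) (τ1 _ (by omega))) (c := 1) (fun z => by have := (abs_le.1 (hd z)).2; linarith)
          (fun z => by have := (abs_le.1 (hd z)).1; linarith) K z
        simp only [H] at *; linarith)
    have : (d (P (τ j)) (P (τ (j + 1))) : ℝ) ≤ (4 : ℕ) := by push_cast; linarith
    exact_mod_cast this
  · intro f b hf hx hy j hj
    have hx' : (d x (f x) : ℝ) ≤ b := by exact_mod_cast hx
    have hy' : (d y (f y) : ℝ) ≤ b := by exact_mod_cast hy
    have hf' : ∀ z w, d (f.symm z) (f.symm w) = d z w := fun z w => by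
      rw [← hf]; simp
    set t := τ j
    have t0 := τ0 j
    have t1 := τ1 j hj
    have hfz : ∀ a z, d a (f.symm z) = d (f a) z := fun a z => by rw [← hf]; simp
    have hadm2 : HAdm d (h t ∘ f.symm) := fun z w => by
      have := hadm t t0 t1 (f.symm z) (f.symm w)
      rwa [hf'] at this
    have hle : ∀ a, (d a (f a) : ℝ) ≤ b → ∀ z, (d (f a) z : ℝ) ≤ d a z + b ∧
        (d a z : ℝ) ≤ d (f a) z + b := by
      intro a ha z
      have e1 := htri' (f a) a z
      have e2 := htri' a (f a) z
      rw [hsymm (f a) a] at e1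
      constructor <;> linarith
    have h2 := huniq t t0 t1 (P t) (f (P t)) (b + 1) (hP _ t0 t1) (fun z => by
      have e1 := hP _ t0 t1 (f.symm z)
      rw [hfz] at e1
      have e2 := hq_iter_lip hsymm hadm2 (hadm _ t0 t1) (c := b) (fun z => by
          simp only [h, Function.comp, hfz]
          have := mul_le_mul_of_nonneg_left (hle x hx' z).1 (by linarith : 0 ≤ 1 - t)
          have := mul_le_mul_of_nonneg_left (hle y hy' z).1 t0
          linarith)
        (fun z => by
          simp only [h, Function.comp, hfz]
          have := mul_le_mul_of_nonneg_left (hle x hx' z).2 (by linarith : 0 ≤ 1 - t)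
          have := mul_le_mul_of_nonneg_left (hle y hy' z).2 t0
          linarith) K z
      rw [hq_iter_equiv f.symm hf'] at e2
      simp only [H, Function.comp] at *; linarith)
    have : (d (P t) (f (P t)) : ℝ) ≤ (b + 3 : ℕ) := by push_cast; linarith
    exact_mod_cast this

end Helly

/-! ### Bounded conjugators in the braid group -/

section BdConj

variable {n : ℕ}

/-- Each of `x`, `y` precedes the other one times the `k`-th power of the Garside element. -/
def BDk (k : ℕ) (x y : B n) : Prop := x⁻¹ * y * Og n ^ k ∈ P n ∧ y⁻¹ * x * Og n ^ k ∈ P n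

lemma BDk.mono {k l : ℕ} {x y : B n} (h : BDk k x y) (hkl : k ≤ l) : BDk l x y := by
  obtain ⟨c, rfl⟩ := Nat.exists_eq_add_of_le hkl
  unfold BDk
  rw [pow_add, ← mul_assoc, ← mul_assoc]
  exact ⟨mul_mem h.1 (Og_pow_mem _ _), mul_mem h.2 (Og_pow_mem _ _)⟩

lemma BDk.symm {k : ℕ} {x y : B n} (h : BDk k x y) : BDk k y x := ⟨h.2, h.1⟩

lemma BDk.trans {k l : ℕ} {x y z : B n} (h : BDk k x y) (h' : BDk l y z) : BDk (k + l) x z := by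
  constructor
  · have := mul_mem h.1 h'.1
    rw [mul_assoc, Og_pow_comm, mul_assoc, mul_assoc, ← pow_add] at this
    convert this using 1
    rw [add_comm]; group
  · have := mul_mem h'.2 h.2
    rw [mul_assoc, Og_pow_comm, mul_assoc, mul_assoc, ← pow_add] at this
    convert this using 1
    group

lemma BDk.exists (x y : B n) : ∃ k, BDk k x y := by
  obtain ⟨k, hk⟩ := exists_mul_Og_mem (x⁻¹ * y)
  obtain ⟨l, hl⟩ := exists_mul_Og_mem (y⁻¹ * x)
  refine ⟨k + l, ?_, ?_⟩
  · rw [pow_add, ← mul_assoc]; exact mul_mem hk (Og_pow_mem _ _)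
  · rw [add_comm, pow_add, ← mul_assoc]; exact mul_mem hl (Og_pow_mem _ _)

open Classical in
/-- The distance defined by the central Garside element. -/
noncomputable def bd (x y : B n) : ℕ := Nat.find (BDk.exists x y)

lemma bd_le_iff {k : ℕ} {x y : B n} : bd x y ≤ k ↔ BDk k x y := by
  classical
  exact ⟨fun h => (Nat.find_spec (BDk.exists x y)).mono h, fun h => Nat.find_min' _ h⟩

lemma bd_spec (x y : B n) : BDk (bd x y) x y := bd_le_iff.1 le_rfl

lemma bd_self (x : B n) : bd x x = 0 :=
  Nat.le_zero.1 (bd_le_iff.2 (by simp [BDk, one_mem]))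

lemma bd_symm (x y : B n) : bd x y = bd y x :=
  le_antisymm (bd_le_iff.2 (bd_spec _ _).symm) (bd_le_iff.2 (bd_spec _ _).symm)

lemma bd_tri (x y z : B n) : bd x z ≤ bd x y + bd y z :=
  bd_le_iff.2 ((bd_spec _ _).trans (bd_spec _ _))

lemma BDk.mul_left_iff {k : ℕ} (g x y : B n) : BDk k (g * x) (g * y) ↔ BDk k x y := by
  unfold BDk
  rw [show (g * x)⁻¹ * (g * y) = x⁻¹ * y by group, show (g * y)⁻¹ * (g * x) = y⁻¹ * x by group]

lemma bd_mul_left (g x y : B n) : bd (g * x) (g * y) = bd x y :=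
  le_antisymm (bd_le_iff.2 ((BDk.mul_left_iff g x y).2 (bd_spec _ _)))
    (bd_le_iff.2 ((BDk.mul_left_iff g x y).1 (bd_spec _ _)))

lemma BDk.eps {k : ℕ} {x y : B n} (h : BDk k x y) : BDk k (eps n x) (eps n y) := by
  have key : ∀ x y : B n, x⁻¹ * y * Og n ^ k ∈ P n →
      (_root_.eps n y)⁻¹ * _root_.eps n x * Og n ^ k ∈ P n := by
    intro x y h
    have := eps_P h
    simp only [map_mul, map_inv, map_pow, eps_Og, mul_inv_rev, inv_pow, inv_inv] at this
    rwa [Og_pow_comm] at this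
  exact ⟨key _ _ h.2, key _ _ h.1⟩

lemma bd_eps (x y : B n) : bd (eps n x) (eps n y) = bd x y :=
  le_antisymm (bd_le_iff.2 (bd_spec _ _).eps)
    (bd_le_iff.2 (by simpa using (bd_spec (eps n x) (eps n y)).eps))

lemma bd_helly (r : B n → ℕ) (hr : ∀ x y, bd x y ≤ r x + r y) : ∃ p, ∀ z, bd p z ≤ r z := by
  have h1 : ∀ z w : B n, Ple (z * (Og n ^ r z)⁻¹) (w * Og n ^ r w) := by
    intro z w
    have := (bd_le_iff.1 (hr z w)).1
    unfold Ple
    rw [mul_inv_rev, inv_inv, ← mul_assoc, mul_assoc (Og n ^ r z), Og_pow_comm, mul_assoc,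
      ← pow_add, add_comm]
    simpa [mul_assoc, add_comm] using this
  obtain ⟨p, hp1, hp2⟩ := exists_sSup (Set.range fun z => z * (Og n ^ r z)⁻¹)
    ⟨_, 1, rfl⟩ ⟨1 * Og n ^ r 1, by rintro _ ⟨z, rfl⟩; exact h1 z 1⟩
  refine ⟨p, fun z => bd_le_iff.2 ⟨?_, ?_⟩⟩
  · have := hp2 (z * Og n ^ r z) (by rintro _ ⟨w, rfl⟩; exact h1 w z)
    unfold Ple at this
    rwa [mul_assoc]
  · have := hp1 _ ⟨z, rfl⟩
    unfold Ple at this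
    rwa [mul_inv_rev, inv_inv, mul_assoc, Og_pow_comm] at this

/-- Signed words. -/
abbrev SW (n : ℕ) := List (Fin (n - 1) × Bool)

lemma π_nil : π ([] : SW n) = 1 := rfl

lemma π_cons (p : Fin (n - 1) × Bool) (w : SW n) :
    π (p :: w) = (if p.2 then σ p.1 else (σ p.1)⁻¹) * π w := by simp [π]

lemma π_append (v w : SW n) : π (v ++ w) = π v * π w := by simp [π]

/-- The formal inverse of a signed word. -/
def winv (w : SW n) : SW n := (w.map fun p => (p.1, !p.2)).reverse

lemma π_winv (w : SW n) : π (winv w) = (π w)⁻¹ := by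
  induction w with
  | nil => simp [winv, π_nil]
  | cons p w ih =>
    have : winv (p :: w) = winv w ++ [(p.1, !p.2)] := by simp [winv]
    rw [this, π_append, ih, π_cons, π_cons, π_nil, mul_one, mul_inv_rev]
    cases p.2 <;> simp

lemma winv_length (w : SW n) : (winv w).length = w.length := by simp [winv]

lemma bd_one_σ (i : Fin (n - 1)) : bd 1 (σ i) ≤ 1 := by
  obtain ⟨b, hb⟩ := BM.g_dvd_Om i
  refine bd_le_iff.2 ⟨?_, ?_⟩
  · rw [inv_one, one_mul]
    exact mul_mem (Submonoid.subset_closure ⟨i, rfl⟩) (Og_pow_mem _ _)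
  · refine mem_P_iff.2 ⟨b, ?_⟩
    rw [pow_one, Og, hb, map_mul, BM.toB_g]; group

lemma bd_one_π (w : SW n) : bd 1 (π w) ≤ w.length := by
  induction w with
  | nil => simp [π_nil, bd_self]
  | cons p w ih =>
    rw [π_cons]
    have h1 : bd 1 (if p.2 then σ p.1 else (σ p.1)⁻¹) ≤ 1 := by
      split_ifs
      · exact bd_one_σ _
      · have := bd_mul_left (σ p.1)⁻¹ 1 (σ p.1)
        rw [inv_mul_cancel, mul_one, bd_symm] at this
        rw [this]; exact bd_one_σ _
    have h2 := bd_tri 1 (if p.2 then σ p.1 else (σ p.1)⁻¹) ((if p.2 then σ p.1 else (σ p.1)⁻¹) * π w)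
    have h3 := bd_mul_left (if p.2 then σ p.1 else (σ p.1)⁻¹) 1 (π w)
    rw [mul_one] at h3
    rw [h3] at h2
    simp only [List.length_cons]; omega

lemma toB_mk (w : List (Fin (n - 1))) : BM.toB n (BM.mk w) = π (w.map fun i => (i, true)) := by
  induction w with
  | nil => simp [BM.mk_nil, π_nil]
  | cons i w ih => rw [BM.mk_cons, map_mul, BM.toB_g, ih, List.map_cons, π_cons]; simp

/-- The length of the Garside element. -/
def eO (n : ℕ) : ℕ := (BM.Om (n - 1)).len

lemma es_Og : es (Og n) = eO n := es_toB _

lemma BDk.positive {k : ℕ} {x : B n} (h : BDk k 1 x) :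
    ∃ w : List (Fin (n - 1)), w.length ≤ 2 * k * eO n ∧ x = BM.toB n (BM.mk w) * (Og n ^ k)⁻¹ := by
  obtain ⟨a, ha⟩ := mem_P_iff.1 h.1
  obtain ⟨b, hb⟩ := mem_P_iff.1 h.2
  have h1 := es_toB a
  have h2 := es_toB b
  rw [ha] at h1
  rw [hb] at h2
  simp only [es_mul, es_inv, es_pow, es_one, es_Og] at h1 h2
  obtain ⟨w, rfl⟩ := BM.exists_rep a
  refine ⟨w, ?_, ?_⟩
  · rw [BM.len_mk] at h1
    have : (w.length : ℤ) ≤ 2 * k * eO n := by nlinarith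
    exact_mod_cast this
  · rw [ha]; group

/-- Elements near the identity are represented by short words. -/
lemma BDk.short {k : ℕ} {x : B n} (h : BDk k 1 x) :
    ∃ w : SW n, w.length ≤ 3 * k * eO n ∧ x = π w := by
  obtain ⟨w, hw, hx⟩ := h.positive
  obtain ⟨v, hv⟩ := BM.exists_rep (BM.Om (n - 1) ^ k)
  have hvl : v.length = k * eO n := by
    rw [← BM.len_mk, hv]
    have : ∀ j, (BM.Om (n - 1) ^ j).len = j * eO n := by
      intro j
      induction j with
      | zero => simp
      | succ j ih => rw [pow_succ, BM.len_mul, ih, eO]; ring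
    exact this k
  refine ⟨w.map (fun i => (i, true)) ++ winv (v.map fun i => (i, true)), ?_, ?_⟩
  · simp only [List.length_append, List.length_map, winv_length]; nlinarith
  · rw [π_append, π_winv, ← toB_mk, ← toB_mk, hv, hx, map_pow]; rfl

lemma ball_finite (k : ℕ) : {x : B n | BDk k 1 x}.Finite ∧
    {x : B n | BDk k 1 x}.ncard ≤ n ^ (2 * k * eO n) := by
  rcases Nat.eq_zero_or_pos n with rfl | hn
  · have hsub : ∀ x : B 0, x = 1 := by
      intro x
      induction x using B_ind with
      | h1 => rfl
      | hm i => exact i.elim0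
      | hi i => exact i.elim0
    have : {x : B 0 | BDk k 1 x} ⊆ {1} := fun x _ => hsub x
    have h1 : eO 0 = 0 := by
      have := es_Og (n := 0)
      rw [hsub (Og 0), es_one] at this
      exact_mod_cast this.symm
    refine ⟨(Set.finite_singleton _).subset this, ?_⟩
    rw [h1]
    simpa using Set.ncard_le_ncard this (Set.finite_singleton _)
  set L := 2 * k * eO n
  let F : (Fin L → Option (Fin (n - 1))) → B n := fun f =>
    BM.toB n (BM.mk ((List.ofFn f).filterMap id)) * (Og n ^ k)⁻¹
  have hsub : {x : B n | BDk k 1 x} ⊆ Set.range F := by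
    intro x hx
    obtain ⟨w, hw, rfl⟩ := BDk.positive hx
    refine ⟨fun i => w[(i : ℕ)]?, ?_⟩
    have : (List.ofFn fun i : Fin L => w[(i : ℕ)]?) =
        w.map some ++ List.replicate (L - w.length) none := by
      apply List.ext_getElem
      · simp; omega
      · intro j h1 h2
        simp only [List.getElem_ofFn]
        rcases Nat.lt_or_ge j w.length with h | h
        · rw [List.getElem_append_left (by simpa)]; simp [h]
        · rw [List.getElem_append_right (by simpa)]; simp [h]
    simp only [F]
    rw [this, List.filterMap_append]
    simp [List.filterMap_map]
  have hfin := Set.finite_range F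
  refine ⟨hfin.subset hsub, (Set.ncard_le_ncard hsub hfin).trans ?_⟩
  have := Finite.card_range_le F
  rw [Nat.card_coe_set_eq] at this
  refine this.trans ?_
  simp only [Nat.card_eq_fintype_card, Fintype.card_fun, Fintype.card_fin, Fintype.card_option]
  rw [show n - 1 + 1 = n by omega]

/-- The bound on the length of conjugators of tuples of `c` braids of length at most `b`. -/
def cbound (n c b : ℕ) : ℕ := 12 * eO n * (n ^ (2 * (b + 3) * eO n)) ^ c

/-- If two tuples of braids are conjugate (twisted by an isometric automorphism), they are
conjugate by a braid of bounded length. -/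
theorem bounded_conj {ι : Type*} [Fintype ι] (ζ : B n ≃* B n)
    (hζ : ∀ x y, bd (ζ x) (ζ y) = bd x y) (u v : ι → B n) (b : ℕ)
    (hu : ∀ i, bd 1 (u i) ≤ b) (hv : ∀ i, bd 1 (v i) ≤ b) (x : B n)
    (hx : ∀ i, v i = x⁻¹ * u i * ζ x) :
    ∃ w : SW n, w.length ≤ cbound n (Fintype.card ι) b ∧ ∀ i, v i = (π w)⁻¹ * u i * ζ (π w) := by
  classical
  obtain ⟨N, p, hp0, hpN, hstep, hdisp⟩ := helly_path bd_self bd_symm bd_tri bd_helly (1 : B n) x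
  let Q : Set (B n) := {y : B n | BDk (b + 3) 1 y}
  have hQ : Q.Finite := (ball_finite (b + 3)).1
  have : Finite Q := hQ
  have : Fintype Q := Fintype.ofFinite Q
  let T : ℕ → ι → B n := fun j i => (p j)⁻¹ * u i * ζ (p j)
  have hT : ∀ j ≤ N, ∀ i, T j i ∈ Q := by
    intro j hj i
    let f : B n ≃ B n := ζ.toEquiv.trans (Equiv.mulLeft (u i))
    have hf : ∀ z, f z = u i * ζ z := fun z => rfl
    have h1 := hdisp f b (fun z w => by rw [hf, hf, bd_mul_left, hζ])
      (by rw [hf, map_one, mul_one]; exact hu i)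
      (by
        have := bd_mul_left x 1 (v i)
        rw [hf, ← (show x * v i = u i * ζ x by rw [hx i]; group)]
        rw [mul_one] at this; rw [this]; exact hv i) j hj
    have h2 := bd_mul_left (p j) 1 (T j i)
    rw [mul_one, show p j * T j i = f (p j) by rw [hf]; simp only [T]; group] at h2
    exact bd_le_iff.1 (h2 ▸ h1)
  -- the graph of tuples of short braids, with edges given by short conjugators
  let Gr : SimpleGraph (ι → Q) := SimpleGraph.fromRel fun a a' =>
    ∃ s : B n, BDk 4 1 s ∧ ∀ i, (a' i : B n) = s⁻¹ * a i * ζ s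
  have hζ1 : ∀ s : B n, BDk 4 1 s → BDk 4 1 s⁻¹ := by
    intro s hs
    have := (BDk.mul_left_iff s⁻¹ 1 s).2 hs
    rw [mul_one, inv_mul_cancel] at this
    exact this.symm
  have hadj : ∀ a a', Gr.Adj a a' → ∃ s : B n, BDk 4 1 s ∧ ∀ i, (a' i : B n) = s⁻¹ * a i * ζ s := by
    rintro a a' ⟨_, h | h⟩
    · exact h
    · obtain ⟨s, hs, h⟩ := h
      refine ⟨s⁻¹, hζ1 s hs, fun i => ?_⟩
      rw [h i, map_inv]; group
  let t : ℕ → ι → Q := fun j i => if h : j ≤ N then ⟨T j i, hT j h i⟩ else ⟨T 0 i, hT 0 (by omega) i⟩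
  have ht : ∀ j ≤ N, ∀ i, (t j i : B n) = T j i := fun j hj i => by simp [t, hj]
  have hreach : ∀ j ≤ N, Gr.Reachable (t 0) (t j) := by
    intro j hj
    induction j with
    | zero => exact .refl _
    | succ j ih =>
      refine (ih (by omega)).trans ?_
      by_cases he : t j = t (j + 1)
      · rw [he]
      · refine SimpleGraph.Adj.reachable ⟨he, .inl ⟨(p j)⁻¹ * p (j + 1), ?_, fun i => ?_⟩⟩
        · have := bd_le_iff.1 (hstep j (by omega))
          rwa [← BDk.mul_left_iff (p j)⁻¹, inv_mul_cancel] at this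
        · rw [ht _ hj, ht _ (by omega)]
          simp only [T, map_mul, map_inv]; group
  obtain ⟨W⟩ := hreach N le_rfl
  have hlen := W.toPath.2.length_lt
  have key : ∀ (a a' : ι → Q) (W : Gr.Walk a a'), ∃ w : SW n, w.length ≤ 12 * eO n * W.length ∧
      ∀ i, (a' i : B n) = (π w)⁻¹ * a i * ζ (π w) := by
    intro a a' W
    induction W with
    | nil => exact ⟨[], by simp, fun i => by simp [π_nil]⟩
    | cons h W ih =>
      obtain ⟨w, hw, hw'⟩ := ih
      obtain ⟨s, hs, hs'⟩ := hadj _ _ h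
      obtain ⟨w1, hw1, rfl⟩ := hs.short
      refine ⟨w1 ++ w, ?_, fun i => ?_⟩
      · rw [List.length_append, SimpleGraph.Walk.length_cons]; nlinarith
      · rw [hw' i, hs' i, π_append, map_mul]; group
  obtain ⟨w, hw, hw'⟩ := key _ _ W.toPath.1
  refine ⟨w, hw.trans ?_, fun i => ?_⟩
  · refine Nat.mul_le_mul_left _ (hlen.le.trans ?_)
    rw [Fintype.card_fun, ← Nat.card_eq_fintype_card (α := Q)]
    exact Nat.pow_le_pow_left ((Nat.card_coe_set_eq Q).trans_le (ball_finite (b + 3)).2) _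
  · have := hw' i
    rw [ht N le_rfl, ht 0 (by omega)] at this
    simp only [T, hp0, hpN, ← hx i] at this
    rw [this]; simp

end BdConj

/-! ### Centralisers in free groups -/

open FreeGroup in
/-- The centralizer of a letter in a free group consists of the powers of that letter. -/
lemma FreeGroup.mem_zpowers_of_commute_of {α : Type*} (a : α) (c : FreeGroup α)
    (h : Commute c (FreeGroup.of a)) : c ∈ Subgroup.zpowers (FreeGroup.of a) := by
  classical
  obtain ⟨N, hN⟩ : ∃ N, c.toWord.length = N := ⟨_, rfl⟩
  induction N using Nat.strong_induction_on generalizing c with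
  | _ N ih =>
  rcases hw : c.toWord with _ | ⟨⟨b, e⟩, w⟩
  · rw [toWord_eq_nil_iff] at hw
    rw [hw]; exact one_mem _
  have hc : c = mk ((b, e) :: w) := by rw [← hw, mk_toWord]
  have hred : IsReduced ((b, e) :: w) := hw ▸ isReduced_toWord
  by_cases hb : b = a
  · subst hb
    have hz : (mk [(b, e)] : FreeGroup α) ∈ Subgroup.zpowers (FreeGroup.of b) := by
      cases e
      · have : (mk [(b, false)] : FreeGroup α) = (of b)⁻¹ := by simp [of, inv_mk, invRev]
        rw [this]; exact inv_mem (Subgroup.mem_zpowers _)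
      · exact Subgroup.mem_zpowers _
    have hc2 : c = mk [(b, e)] * mk w := by rw [hc, mul_mk]; rfl
    have hcom : Commute (mk [(b, e)] : FreeGroup α) (of b) := by
      obtain ⟨k, hk⟩ := hz
      rw [← hk]; exact (Commute.refl _).zpow_left k
    have hw' : mk w ∈ Subgroup.zpowers (FreeGroup.of b) := by
      apply ih (mk w).toWord.length _ _ _ rfl
      · have : IsReduced w := hred.tail
        rw [toWord_mk, this.reduce_eq, ← hN, hw]; simp
      · have : mk w = (mk [(b, e)])⁻¹ * c := by rw [hc2]; group
        rw [this]; exact hcom.inv_left.mul_left h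
    rw [hc2]; exact mul_mem hz hw'
  · exfalso
    -- `c` starts with a letter other than `a`, so `a c` and `a⁻¹ c` are reduced as written.
    have h1 : ∀ e', (mk [(a, e')] * c).toWord = (a, e') :: (b, e) :: w := by
      intro e'
      have : mk [(a, e')] * c = mk ((a, e') :: (b, e) :: w) := by rw [hc, mul_mk]; rfl
      rw [this, toWord_mk]
      apply IsReduced.reduce_eq
      rw [isReduced_cons_cons]
      exact ⟨fun h => absurd h.symm hb, hred⟩
    have h2 : ∀ e', Commute c (mk [(a, e')]) := by
      intro e'; cases e'
      · have : (mk [(a, false)] : FreeGroup α) = (of a)⁻¹ := by simp [of, inv_mk, invRev]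
        rw [this]; exact h.inv_right
      · exact h
    have h3 : ∀ e', (mk ((b, e) :: w ++ [(a, e')]) : FreeGroup α).toWord = (a, e') :: (b, e) :: w := by
      intro e'
      rw [← h1, ← (h2 e').eq]
      congr 1
      rw [hc, mul_mk]
    have h4 : ∀ e', (a, e') :: (b, e) :: w = (b, e) :: w ++ [(a, e')] := by
      intro e'
      have := h3 e'
      rw [toWord_mk] at this
      have hl := congrArg List.length this
      have hsub : List.Sublist (reduce ((b, e) :: w ++ [(a, e')])) ((b, e) :: w ++ [(a, e')]) :=
        (reduce.red (L := ((b, e) :: w ++ [(a, e')]))).sublist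
      rw [← this]
      exact hsub.eq_of_length (by rw [hl]; simp)
    have := h4 true
    simp at this
    exact hb this.1.1.symm

/-- A free group with a nontrivial central element is cyclic. -/
lemma isCyclic_of_free_center {H : Type*} [Group H] [IsFreeGroup H] (z : H) (hz : z ≠ 1)
    (hc : ∀ x, Commute z x) : IsCyclic H := by
  let e := IsFreeGroup.toFreeGroup H
  set ι := IsFreeGroup.Generators H
  have hz' : e z ≠ 1 := by simpa using hz
  have hc' : ∀ x, Commute (e z) x := fun x => by
    have := (hc (e.symm x)).map e.toMonoidHom
    simpa using this
  have hsub : Subsingleton ι := by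
    refine ⟨fun a b => by_contra fun hab => hz' ?_⟩
    obtain ⟨k, hk⟩ := FreeGroup.mem_zpowers_of_commute_of a _ (hc' _)
    obtain ⟨l, hl⟩ := FreeGroup.mem_zpowers_of_commute_of b _ (hc' _)
    classical
    let f : FreeGroup ι →* Multiplicative ℤ :=
      FreeGroup.lift fun j => Multiplicative.ofAdd (if j = a then 1 else 0)
    have h1 := congrArg f hk
    have h2 := congrArg f hl
    have hba : b ≠ a := fun h => hab h.symm
    simp only [map_zpow, f, FreeGroup.lift_apply_of, if_true, if_neg hba, ofAdd_zero, one_zpow] at h1 h2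
    rw [← h2] at h1
    have : k = 0 := by
      have := congrArg Multiplicative.toAdd h1
      simpa using this
    rw [← hk, this]; simp
  have : IsCyclic (FreeGroup ι) := by
    rcases isEmpty_or_nonempty ι with h | ⟨⟨a⟩⟩
    · infer_instance
    · have : Unique ι := ⟨⟨a⟩, fun b => Subsingleton.elim _ _⟩
      exact isCyclic_of_surjective (FreeGroup.mulEquivIntOfUnique (α := ι)).symm (MulEquiv.surjective _)
  exact isCyclic_of_surjective e.symm e.symm.surjective

/-- In a free group, elements commuting with a common `z ≠ 1` lie, together with `z`, in one
cyclic subgroup. -/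
lemma FreeGroup.common_root {α : Type*} {z : FreeGroup α} (hz : z ≠ 1) (S : Set (FreeGroup α))
    (hS : ∀ x ∈ S, Commute z x) : ∃ t, z ∈ Subgroup.zpowers t ∧ ∀ x ∈ S, x ∈ Subgroup.zpowers t := by
  let K := Subgroup.closure (insert z S)
  have hzK : z ∈ K := Subgroup.subset_closure (Set.mem_insert _ _)
  have : IsCyclic K := by
    refine isCyclic_of_free_center (⟨z, hzK⟩ : K) (fun h => hz (congrArg Subtype.val h)) ?_
    rintro ⟨x, hx⟩
    apply Subtype.ext
    change z * x = x * z
    have hle : K ≤ Subgroup.centralizer {z} := by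
      rw [Subgroup.closure_le]
      rintro y (rfl | hy)
      · simp [Subgroup.mem_centralizer_iff]
      · simpa [Subgroup.mem_centralizer_iff] using (hS y hy).eq
    have := hle hx
    simpa [Subgroup.mem_centralizer_iff] using this
  obtain ⟨⟨t, ht⟩, hg⟩ := this.exists_generator
  have key : ∀ x (hx : x ∈ K), x ∈ Subgroup.zpowers t := by
    intro x hx
    obtain ⟨k, hk⟩ := hg ⟨x, hx⟩
    exact ⟨k, congrArg Subtype.val hk⟩
  exact ⟨t, key z hzK, fun x hx => key x (Subgroup.subset_closure (Set.mem_insert_of_mem _ hx))⟩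

/-! ### The Artin action on a free group -/

/-- The free group on which braids act. -/
abbrev FN := FreeGroup ℕ

/-- The free generators. -/
abbrev xx (j : ℕ) : FN := FreeGroup.of j

/-- Artin's automorphism `x_i ↦ x_i x_{i+1} x_i⁻¹`, `x_{i+1} ↦ x_i`, as an endomorphism. -/
def artF (i : ℕ) : FN →* FN := FreeGroup.lift fun j =>
  if j = i then xx i * xx (i + 1) * (xx i)⁻¹ else if j = i + 1 then xx i else xx j

/-- The inverse of `artF i`. -/
def artG (i : ℕ) : FN →* FN := FreeGroup.lift fun j =>
  if j = i then xx (i + 1) else if j = i + 1 then (xx (i + 1))⁻¹ * xx i * xx (i + 1) else xx j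

/-- Artin's automorphism of the free group attached to the `i`-th generator. -/
def art (i : ℕ) : MulAut FN :=
  MonoidHom.toMulEquiv (artF i) (artG i)
    (by
      ext j; simp only [artF, artG, MonoidHom.comp_apply, FreeGroup.lift_apply_of]
      by_cases h1 : j = i
      · subst h1; simp; group
      · by_cases h2 : j = i + 1
        · subst h2; simp
        · simp [h1, h2])
    (by
      ext j; simp only [artF, artG, MonoidHom.comp_apply, FreeGroup.lift_apply_of]
      by_cases h1 : j = i
      · subst h1; simp
      · by_cases h2 : j = i + 1
        · subst h2; simp; group
        · simp [h1, h2])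

lemma art_x (i j : ℕ) : art i (xx j) =
    if j = i then xx i * xx (i + 1) * (xx i)⁻¹ else if j = i + 1 then xx i else xx j := by
  change artF i (xx j) = _
  simp [artF]

lemma MulAut_FN_ext {f g : MulAut FN} (h : ∀ j, f (xx j) = g (xx j)) : f = g := by
  have : f.toMonoidHom = g.toMonoidHom := FreeGroup.ext_hom _ _ h
  ext y; exact DFunLike.congr_fun this y

lemma art_far {i j : ℕ} (h : i + 1 < j) : art i * art j = art j * art i := by
  apply MulAut_FN_ext; intro k
  simp only [MulAut.mul_apply, art_x]
  have h1 : j ≠ i := by omega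
  have h2 : j ≠ i + 1 := by omega
  have h3 : j + 1 ≠ i := by omega
  have h4 : j + 1 ≠ i + 1 := by omega
  have h5 : i ≠ j := by omega
  have h6 : i + 1 ≠ j := by omega
  have h7 : i ≠ j + 1 := by omega
  by_cases a : k = i
  · subst a; simp [art_x, *]
  by_cases b : k = i + 1
  · subst b; simp [art_x, *]
  by_cases c : k = j
  · subst c; simp [art_x, *]
  by_cases d : k = j + 1
  · subst d; simp [art_x, *]
  · simp [art_x, *]

lemma art_adj (i : ℕ) : art i * art (i + 1) * art i = art (i + 1) * art i * art (i + 1) := by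
  apply MulAut_FN_ext; intro k
  have h3 : i + 1 + 1 ≠ i := by omega
  have h4 : i ≠ i + 1 + 1 := by omega
  simp only [MulAut.mul_apply]
  by_cases a : k = i
  · subst a; simp [art_x, h3, h4, mul_assoc]
  by_cases b : k = i + 1
  · subst b; simp [art_x, h3, h4]
  by_cases c : k = i + 1 + 1
  · subst c; simp [art_x, h3, h4]
  · simp [art_x, *]

/-- Artin's representation of the braid group by automorphisms of a free group. -/
def ρA (n : ℕ) : B n →* MulAut FN := BrLift (fun i => art i) (fun _ _ h => art_far h)
  (fun i j h => by rw [← h]; exact art_adj _)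

instance {n : ℕ} : MulDistribMulAction (B n) FN := MulDistribMulAction.compHom FN (ρA n)

lemma smul_def {n : ℕ} (g : B n) (y : FN) : g • y = ρA n g y := rfl

section Act
variable {n : ℕ}

lemma s_eq {i : ℕ} (h : i + 1 < n) : (σ' i : B n) = σ ⟨i, by omega⟩ := by
  have : i < n - 1 := by omega
  simp [σ', this]

lemma s_far {i j : ℕ} (h : i + 1 < j) : (σ' i : B n) * σ' j = σ' j * σ' i := by
  by_cases hj : j + 1 < n
  · rw [s_eq hj, s_eq (show i + 1 < n by omega)]; exact σ_far h
  · have : ¬ j < n - 1 := by omega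
    simp [σ', this]

lemma s_adj {i : ℕ} (h : i + 2 < n) :
    (σ' i : B n) * σ' (i + 1) * σ' i = σ' (i + 1) * σ' i * σ' (i + 1) := by
  rw [s_eq h, s_eq (show i + 1 < n by omega)]; exact σ_adj rfl

lemma s_smul {i : ℕ} (h : i + 1 < n) (y : FN) : (σ' i : B n) • y = art i y := by
  rw [s_eq h, smul_def, ρA, BrLift_σ]

lemma s_x0 {i : ℕ} (h : i + 1 < n) : (σ' i : B n) • xx i = xx i * xx (i + 1) * (xx i)⁻¹ := by
  rw [s_smul h, art_x]; simp
lemma s_x1 {i : ℕ} (h : i + 1 < n) : (σ' i : B n) • xx (i + 1) = xx i := by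
  rw [s_smul h, art_x]; simp
lemma s_x {i j : ℕ} (h : i + 1 < n) (h1 : j ≠ i) (h2 : j ≠ i + 1) : (σ' i : B n) • xx j = xx j := by
  rw [s_smul h, art_x]; simp [h1, h2]

/-- `G_m`: the braids supported on the first `m` strands. -/
def GG (n m : ℕ) : Subgroup (B n) := Subgroup.closure {g | ∃ i, i + 1 < m ∧ g = σ' i}

lemma s_mem {i m : ℕ} (h : i + 1 < m) : (σ' i : B n) ∈ GG n m :=
  Subgroup.subset_closure ⟨i, h, rfl⟩

lemma GG_mono {m k : ℕ} (h : m ≤ k) : GG n m ≤ GG n k := by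
  apply Subgroup.closure_mono; rintro _ ⟨i, hi, rfl⟩; exact ⟨i, by omega, rfl⟩

lemma GG_top : GG n n = ⊤ := by
  rw [eq_top_iff]; rintro x -
  induction x using B_ind with
  | h1 => exact one_mem _
  | hm i a ih =>
    refine mul_mem ?_ ih
    have h : (i : ℕ) + 1 < n := by omega
    have := s_mem (n := n) h
    rwa [s_eq h] at this
  | hi i a ih =>
    refine mul_mem ?_ ih
    have h : (i : ℕ) + 1 < n := by omega
    have := s_mem (n := n) h
    rw [s_eq h] at this
    exact inv_mem this

lemma GG_le_one {m : ℕ} (h : m ≤ 1) : GG n m = ⊥ := by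
  rw [GG, Subgroup.closure_eq_bot_iff]
  rintro _ ⟨i, hi, rfl⟩; omega

lemma GG_ind {m : ℕ} {p : B n → Prop} (h1 : p 1) (hm : ∀ i a, i + 1 < m → a ∈ GG n m → p a → p (σ' i * a))
    (hi : ∀ i a, i + 1 < m → a ∈ GG n m → p a → p ((σ' i)⁻¹ * a)) (g : B n) (hg : g ∈ GG n m) : p g := by
  have key : g ∈ GG n m ∧ p g := by
    induction hg using Subgroup.closure_induction_left with
    | one => exact ⟨one_mem _, h1⟩
    | mul_left x hx y hy ih =>
      obtain ⟨i, hi', rfl⟩ := hx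
      exact ⟨mul_mem (s_mem hi') ih.1, hm _ _ hi' ih.1 ih.2⟩
    | inv_mul_cancel x hx y hy ih =>
      obtain ⟨i, hi', rfl⟩ := hx
      exact ⟨mul_mem (inv_mem (s_mem hi')) ih.1, hi _ _ hi' ih.1 ih.2⟩
  exact key.2

/-- A property closed under products and inverses holds on `G_m` once it holds on generators. -/
lemma GG_ind' {m : ℕ} (K : Subgroup (B n)) (h : ∀ i, i + 1 < m → σ' i ∈ K) : GG n m ≤ K := by
  rw [GG, Subgroup.closure_le]; rintro _ ⟨i, hi, rfl⟩; exact h i hi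

/-- The equivariance subgroup of two homomorphisms of groups with operators. -/
def eqvSub {G F H : Type*} [Group G] [Group F] [Group H] [MulDistribMulAction G F]
    [MulDistribMulAction G H] (f : F →* H) : Subgroup G where
  carrier := {g | ∀ y, f (g • y) = g • f y}
  one_mem' := by simp
  mul_mem' := by
    intro a b ha hb y
    rw [mul_smul, ha, hb, mul_smul]
  inv_mem' := by
    intro a ha y
    rw [eq_inv_smul_iff, ← ha, smul_inv_smul]

lemma GG_fix {m : ℕ} (hm : m ≤ n) {g : B n} (hg : g ∈ GG n m) {j : ℕ} (hj : m ≤ j) : g • xx j = xx j := by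
  have : GG n m ≤ MulAction.stabilizer (B n) (xx j) := GG_ind' _ fun i hi => by
    rw [MulAction.mem_stabilizer_iff]
    exact s_x (by omega) (by omega) (by omega)
  exact this hg

/-- The retraction of the free group killing `x_j` for `j ≥ m`. -/
def pr (m : ℕ) : FN →* FN := FreeGroup.lift fun j => if j < m then xx j else 1

lemma pr_x {m j : ℕ} : pr m (xx j) = if j < m then xx j else 1 := by simp [pr]

lemma pr_pr (m : ℕ) (y : FN) : pr m (pr m y) = pr m y := by
  have : (pr m).comp (pr m) = pr m := by
    ext j; simp only [MonoidHom.comp_apply, pr_x]; split_ifs with h <;> simp [pr_x, h]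
  exact DFunLike.congr_fun this y

lemma hom_smul_gen (f f' : FN →* FN) (g g' : B n) (h : ∀ j, f (g • xx j) = g' • f' (xx j)) (y : FN) :
    f (g • y) = g' • f' y := by
  have : f.comp (MulDistribMulAction.toMonoidHom FN g) =
    (MulDistribMulAction.toMonoidHom FN g').comp f' := FreeGroup.ext_hom _ _ h
  exact DFunLike.congr_fun this y

lemma pr_smul {m : ℕ} (hm : m ≤ n) {g : B n} (hg : g ∈ GG n m) (y : FN) :
    pr m (g • y) = g • pr m y := by
  have : GG n m ≤ eqvSub (pr m) := GG_ind' _ fun i hi => by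
    change ∀ y, _
    have hi' : i + 1 < n := by omega
    apply hom_smul_gen
    intro j
    rw [pr_x]
    by_cases h1 : j = i
    · subst h1
      have : j < m := by omega
      rw [s_x0 hi', if_pos this, s_x0 hi']; simp [pr_x, this, hi]
    by_cases h2 : j = i + 1
    · subst h2
      have : i < m := by omega
      rw [s_x1 hi', if_pos hi, s_x1 hi']; simp [pr_x, this]
    rw [s_x hi' h1 h2, pr_x]
    split_ifs
    · rw [s_x hi' h1 h2]
    · simp
  exact this hg y

/-- The boundary word `x_0 x_1 ⋯ x_{m-1}`. -/
def Pi : ℕ → FN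
  | 0 => 1
  | m + 1 => Pi m * xx m

lemma Pi_succ (m : ℕ) : Pi (m + 1) = Pi m * xx m := rfl

lemma s_Pi_lt {i : ℕ} (hi : i + 1 < n) {m : ℕ} (h : m ≤ i) : (σ' i : B n) • Pi m = Pi m := by
  induction m with
  | zero => simp [Pi]
  | succ m ih => rw [Pi_succ, smul_mul', ih (by omega), s_x hi (by omega) (by omega)]

lemma s_Pi {i : ℕ} (hi : i + 1 < n) {m : ℕ} (h : i + 1 < m) : (σ' i : B n) • Pi m = Pi m := by
  induction m with
  | zero => omega
  | succ m ih =>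
    by_cases h' : i + 1 < m
    · rw [Pi_succ, smul_mul', ih h', s_x hi (by omega) (by omega)]
    · obtain rfl : m = i + 1 := by omega
      rw [Pi_succ, Pi_succ, smul_mul', smul_mul', s_Pi_lt hi le_rfl, s_x0 hi, s_x1 hi]; group

lemma GG_Pi {m : ℕ} (hm : m ≤ n) {g : B n} (hg : g ∈ GG n m) : g • Pi m = Pi m := by
  have : GG n m ≤ MulAction.stabilizer (B n) (Pi m) := GG_ind' _ fun i hi => s_Pi (by omega) hi
  exact this hg

lemma pr_Pi {m k : ℕ} (h : k ≤ m) : pr m (Pi k) = Pi k := by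
  induction k with
  | zero => simp [Pi]
  | succ k ih => rw [Pi_succ, map_mul, ih (by omega), pr_x, if_pos (by omega)]

/-- The exponent sum in `x_k`. -/
def ex (k : ℕ) : FN →* Multiplicative ℤ :=
  FreeGroup.lift fun j => Multiplicative.ofAdd (if j = k then 1 else 0)

lemma ex_x (k j : ℕ) : ex k (xx j) = Multiplicative.ofAdd (if j = k then 1 else 0) := by simp [ex]

end Act

/-! ### Point-pushing braids -/

section Push
variable {n : ℕ}

/-- The product `σ_j σ_{j+1} ⋯ σ_{k-1}`. -/
def seg (n j k : ℕ) : B n := ((List.range' j (k - j)).map σ').prod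

lemma seg_self (j : ℕ) : seg n j j = 1 := by simp [seg]

lemma seg_cons {j k : ℕ} (h : j < k) : seg n j k = σ' j * seg n (j + 1) k := by
  obtain ⟨d, rfl⟩ : ∃ d, k = j + 1 + d := ⟨k - (j + 1), by omega⟩
  have : j + 1 + d - j = d + 1 := by omega
  rw [seg, seg, this, List.range'_succ]; simp

lemma seg_snoc {j k : ℕ} (h : j ≤ k) : seg n j (k + 1) = seg n j k * σ' k := by
  obtain ⟨d, rfl⟩ : ∃ d, k = j + d := ⟨k - j, by omega⟩
  have h1 : j + d + 1 - j = d + 1 := by omega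
  have h2 : j + d - j = d := by omega
  rw [seg, seg, h1, h2, List.range'_concat]; simp

lemma seg_far_lt {i j k : ℕ} (h : i + 1 < j) : σ' i * seg n j k = seg n j k * σ' i := by
  have : Commute (σ' i : B n) (seg n j k) := by
    apply Commute.list_prod_right
    intro x hx
    simp only [List.mem_map, List.mem_range'_1] at hx
    obtain ⟨l, hl, rfl⟩ := hx
    exact s_far (by omega)
  exact this

lemma seg_far_gt {i j k : ℕ} (h : k < i) : σ' i * seg n j k = seg n j k * σ' i := by
  have : Commute (σ' i : B n) (seg n j k) := by
    apply Commute.list_prod_right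
    intro x hx
    simp only [List.mem_map, List.mem_range'_1] at hx
    obtain ⟨l, hl, rfl⟩ := hx
    exact (s_far (by omega)).symm
  exact this

lemma seg_mem {j k m : ℕ} (h : k < m) : seg n j k ∈ GG n m := by
  apply Subgroup.list_prod_mem
  intro x hx
  simp only [List.mem_map, List.mem_range'_1] at hx
  obtain ⟨l, hl, rfl⟩ := hx
  exact s_mem (by omega)

/-- `σ_{i+1}` passes through `σ_j ⋯ σ_{k-1}` and becomes `σ_i` when `j ≤ i`, `i + 1 < k`. -/
lemma seg_shift {i j k : ℕ} (hk : k < n) (h1 : j ≤ i) (h2 : i + 1 < k) :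
    σ' (i + 1) * seg n j k = seg n j k * σ' i := by
  obtain ⟨d, rfl⟩ : ∃ d, i = j + d := ⟨i - j, by omega⟩
  induction d generalizing j with
  | zero =>
    rw [seg_cons (show j < k by omega), seg_cons (show j + 1 < k by omega)]
    have e := s_adj (n := n) (i := j) (by omega)
    have f := seg_far_lt (n := n) (i := j) (j := j + 1 + 1) (k := k) (by omega)
    simp only [add_zero]
    calc σ' (j + 1) * (σ' j * (σ' (j + 1) * seg n (j + 1 + 1) k))
        = (σ' (j + 1) * σ' j * σ' (j + 1)) * seg n (j + 1 + 1) k := by group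
      _ = _ := by rw [← e, mul_assoc, f]; group
  | succ d ih =>
    rw [seg_cons (show j < k by omega)]
    have := ih (j := j + 1) (by omega) (by omega)
    have e : j + (d + 1) = j + 1 + d := by omega
    rw [e, ← mul_assoc, ← s_far (show j + 1 < j + 1 + d + 1 by omega), mul_assoc, this, mul_assoc]

/-- Images of the free generators under the push homomorphism. -/
def pX (r : ℕ) (a : B n) (j : ℕ) : B n := if j ≤ r then seg n j r * a * (seg n j r)⁻¹ else 1

lemma pX_last (r : ℕ) (a : B n) : pX r a r = a := by simp [pX, seg_self]

lemma pX_step {r j : ℕ} (a : B n) (h : j < r) : pX r a j = σ' j * pX r a (j + 1) * (σ' j)⁻¹ := by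
  rw [pX, pX, if_pos h.le, if_pos (by omega), seg_cons h]; group

lemma pX_big {r j : ℕ} (a : B n) (h : r < j) : pX r a j = 1 := by simp [pX, not_le.2 h]

/-- The conditions under which `x_r ↦ a` extends to a `G_{r+1}`-equivariant homomorphism. -/
structure PushOK (r : ℕ) (a : B n) : Prop where
  lt : r < n
  com : ∀ i, i + 1 < r → σ' i * a = a * σ' i
  rel : ∀ i, i + 1 = r → σ' i * a * (σ' i)⁻¹ * a = a * (σ' i)⁻¹ * a * σ' i

/-- The push homomorphism. -/
def push (r : ℕ) (a : B n) : FN →* B n := FreeGroup.lift (pX r a)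

lemma push_x (r : ℕ) (a : B n) (j : ℕ) : push r a (xx j) = pX r a j := by simp [push]

variable {r : ℕ} {a : B n}

lemma PushOK.com_gt (h : PushOK r a) {i j : ℕ} (hij : i + 1 < j) (hi : i < r) :
    Commute (σ' i) (pX r a j) := by
  by_cases hj : j ≤ r
  · rw [pX, if_pos hj]
    have h1 : Commute (σ' i) (seg n j r) := seg_far_lt hij
    have h2 : Commute (σ' i) a := h.com i (by omega)
    exact (h1.mul_right h2).mul_right h1.inv_right
  · rw [pX_big _ (by omega)]; exact Commute.one_right _

lemma PushOK.com_lt (h : PushOK r a) {i j : ℕ} (hij : j < i) (hi : i < r) :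
    Commute (σ' i) (pX r a j) := by
  have hlt := h.lt
  obtain ⟨i, rfl⟩ : ∃ i', i = i' + 1 := ⟨i - 1, by omega⟩
  rw [pX, if_pos (by omega)]
  -- `σ_{i+1}` becomes `σ_i` after the first factor and then commutes with `a`
  have h1 := seg_shift (n := n) (i := i) (j := j) (k := r) hlt (by omega) (by omega)
  have h2 : σ' i * a = a * σ' i := h.com i (by omega)
  have h3 : (seg n j r)⁻¹ * σ' (i + 1) = σ' i * (seg n j r)⁻¹ := by
    rw [inv_mul_eq_iff_eq_mul, ← mul_assoc, ← h1]; group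
  change _ = _
  rw [← mul_assoc, ← mul_assoc, h1, mul_assoc _ (σ' i) a, h2, mul_assoc _ _ (σ' (i + 1)), h3]; group

lemma PushOK.relX (h : PushOK r a) {i : ℕ} (hi : i < r) :
    σ' i * pX r a (i + 1) * (σ' i)⁻¹ * pX r a (i + 1) =
      pX r a (i + 1) * (σ' i)⁻¹ * pX r a (i + 1) * σ' i := by
  have hlt := h.lt
  obtain ⟨d, hd⟩ : ∃ d, i + 1 + d = r := ⟨r - (i + 1), by omega⟩
  induction d generalizing i with
  | zero =>
    have : i + 1 = r := by omega
    rw [this, pX_last]; exact h.rel i this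
  | succ d ih =>
    have ih' := ih (i := i + 1) (by omega) (by omega)
    have e := s_adj (n := n) (i := i) (by omega)
    have f := (h.com_gt (i := i) (j := i + 1 + 1) (by omega) (by omega)).eq
    set X := pX r a (i + 1 + 1)
    -- conjugation by `σ_{i+1} σ_i` carries `(σ_{i+1}, X_{i+2})` to `(σ_i, X_{i+1})`
    have e1 : σ' i = (σ' (i + 1) * σ' i) * σ' (i + 1) * (σ' (i + 1) * σ' i : B n)⁻¹ := by
      rw [← e]; group
    have e2 : pX r a (i + 1) = (σ' (i + 1) * σ' i) * X * (σ' (i + 1) * σ' i : B n)⁻¹ := by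
      rw [pX_step a (by omega), mul_assoc _ (σ' i) X, f]; change _ * X * _ = _; group
    rw [e2]
    generalize hg : (σ' (i + 1) * σ' i : B n) = g at *
    rw [e1]
    calc _ = g * (σ' (i + 1) * X * (σ' (i + 1))⁻¹ * X) * g⁻¹ := by group
      _ = _ := by rw [ih']; group

lemma push_s (h : PushOK r a) {i : ℕ} (hi : i < r) (y : FN) :
    push r a ((σ' i : B n) • y) = σ' i * push r a y * (σ' i)⁻¹ := by
  have hlt := h.lt
  have hin : i + 1 < n := by omega
  have : (push r a).comp (MulDistribMulAction.toMonoidHom FN (σ' i : B n)) =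
    (MulAut.conj (σ' i : B n)).toMonoidHom.comp (push r a) := by
    ext j
    change push r a ((σ' i : B n) • xx j) = σ' i * push r a (xx j) * (σ' i)⁻¹
    rw [push_x]
    by_cases h1 : j = i
    · subst h1
      rw [s_x0 hin]
      simp only [map_mul, map_inv, push_x]
      have := h.relX hi
      rw [pX_step a hi]
      set X := pX r a (j + 1)
      calc σ' j * X * (σ' j)⁻¹ * X * (σ' j * X * (σ' j)⁻¹)⁻¹
          = σ' j * (X * (σ' j)⁻¹ * X * σ' j) * (σ' j)⁻¹ * (σ' j * X * (σ' j)⁻¹)⁻¹ := by group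
        _ = _ := by rw [← this]; group
    by_cases h2 : j = i + 1
    · subst h2; rw [s_x1 hin, push_x, pX_step a hi]
    rw [s_x hin h1 h2, push_x]
    have : Commute (σ' i) (pX r a j) := by
      rcases lt_or_gt_of_ne h1 with h3 | h3
      · exact h.com_lt h3 hi
      · exact h.com_gt (by omega) hi
    rw [this.eq]; group
  exact DFunLike.congr_fun this y

lemma push_smul (h : PushOK r a) {g : B n} (hg : g ∈ GG n (r + 1)) (y : FN) :
    push r a (g • y) = g * push r a y * g⁻¹ := by
  refine GG_ind (p := fun g => ∀ y, push r a (g • y) = g * push r a y * g⁻¹) (by simp) ?_ ?_ g hg y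
  · intro i g hi _ ih y
    rw [mul_smul, push_s h (by omega), ih]; group
  · intro i g hi _ ih y
    have := push_s h (show i < r by omega) ((σ' i : B n)⁻¹ • g • y)
    rw [smul_inv_smul, ih] at this
    calc _ = (σ' i)⁻¹ * (σ' i * push r a ((σ' i : B n)⁻¹ • g • y) * (σ' i)⁻¹) * σ' i := by
          rw [mul_smul]; group
      _ = _ := by rw [← this]; group

lemma push_pr (y : FN) : push r a (pr (r + 1) y) = push r a y := by
  have : (push r a).comp (pr (r + 1)) = push r a := by
    ext j
    rw [MonoidHom.comp_apply, pr_x]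
    split_ifs with h
    · rfl
    · rw [push_x, pX_big _ (by omega)]; simp
  exact DFunLike.congr_fun this y

lemma push_mem {K : Subgroup (B n)} (hs : GG n (r + 1) ≤ K) (ha : a ∈ K) (y : FN) : push r a y ∈ K := by
  have : (push r a).range ≤ K := by
    apply FreeGroup.range_lift_le
    rintro _ ⟨j, rfl⟩
    rw [pX]
    split_ifs
    · have := hs (seg_mem (n := n) (j := j) (show r < r + 1 by omega))
      exact mul_mem (mul_mem this ha) (inv_mem this)
    · exact one_mem _
  exact this ⟨y, rfl⟩

/-- Pushing strand `r + 1` around the first `r + 1` strands. -/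
def al (n r : ℕ) : FN →* B n := push r ((σ' r : B n)⁻¹ * (σ' r)⁻¹)

lemma al_ok (hr : r + 1 < n) : PushOK r ((σ' r : B n)⁻¹ * (σ' r)⁻¹) where
  lt := by omega
  com i hi := by
    have : Commute (σ' i : B n) (σ' r) := s_far hi
    exact this.inv_right.mul_right this.inv_right
  rel i hi := by
    subst hi
    have e := s_adj (n := n) (i := i) hr
    set s := (σ' i : B n)
    set t := (σ' (i + 1) : B n)
    have e1 : s * t⁻¹ * s⁻¹ = t⁻¹ * s⁻¹ * t := by
      rw [mul_inv_eq_iff_eq_mul, mul_inv_eq_iff_eq_mul, mul_assoc, mul_assoc, mul_assoc, eq_inv_mul_iff_mul_eq, eq_inv_mul_iff_mul_eq, ← mul_assoc, ← mul_assoc, e]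
    have e2 : s⁻¹ * t⁻¹ * s = t * s⁻¹ * t⁻¹ := by
      rw [eq_mul_inv_iff_mul_eq, mul_assoc, mul_assoc, inv_mul_eq_iff_eq_mul, inv_mul_eq_iff_eq_mul, ← mul_assoc, ← mul_assoc, eq_mul_inv_iff_mul_eq, e]
    calc s * (t⁻¹ * t⁻¹) * s⁻¹ * (t⁻¹ * t⁻¹) = (s * t⁻¹ * s⁻¹) * (s * t⁻¹ * s⁻¹) * (t⁻¹ * t⁻¹) := by group
      _ = (t⁻¹ * t⁻¹) * ((s⁻¹ * t⁻¹ * s) * (s⁻¹ * t⁻¹ * s)) := by rw [e1, e2]; group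
      _ = _ := by group

end Push

/-! ### Faithfulness of the Artin action -/

section Faith
variable {n r : ℕ}

lemma seg_smul {k m : ℕ} (h : k ≤ m) (hm : m < n) : seg n k m • xx m = xx k := by
  obtain ⟨d, rfl⟩ : ∃ d, m = k + d := ⟨m - k, by omega⟩
  induction d generalizing k with
  | zero => simp [seg_self]
  | succ d ih =>
    have e : k + (d + 1) = k + 1 + d := by omega
    rw [e] at *
    rw [seg_cons (by omega), mul_smul, ih (by omega) (by omega), s_x1 (by omega)]

lemma al_smul (hr : r + 1 < n) {g : B n} (hg : g ∈ GG n (r + 1)) (y : FN) :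
    al n r (g • y) = g * al n r y * g⁻¹ := push_smul (al_ok hr) hg y

lemma al_x (j : ℕ) : al n r (xx j) = pX r ((σ' r : B n)⁻¹ * (σ' r)⁻¹) j := push_x _ _ _

lemma al_seg (hr : r + 1 < n) {j : ℕ} (hj : j ≤ r) :
    (σ' j)⁻¹ * (σ' j)⁻¹ * seg n (j + 1) (r + 1) = seg n (j + 1) (r + 1) * al n r (xx j) := by
  have key : σ' j * (seg n (j + 1) (r + 1) * seg n j r) = seg n (j + 1) (r + 1) * seg n j r * σ' r := by
    obtain ⟨d, hd⟩ : ∃ d, j + d = r := ⟨r - j, by omega⟩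
    clear hj
    induction d generalizing j with
    | zero =>
      obtain rfl : j = r := hd
      simp [seg_self]
    | succ d ih =>
      rw [seg_cons (show j + 1 < r + 1 by omega), seg_cons (show j < r by omega)]
      have f := seg_far_lt (n := n) (i := j) (j := j + 1 + 1) (k := r + 1) (by omega)
      have e := s_adj (n := n) (i := j) (by omega)
      have ih' := ih (j := j + 1) (by omega)
      generalize seg n (j + 1 + 1) (r + 1) = S at *
      generalize seg n (j + 1) r = T at *
      calc σ' j * (σ' (j + 1) * S * (σ' j * T)) = σ' j * σ' (j + 1) * (S * σ' j) * T := by group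
        _ = (σ' j * σ' (j + 1) * σ' j) * (S * T) := by rw [← f]; group
        _ = σ' (j + 1) * σ' j * (σ' (j + 1) * (S * T)) := by rw [e]; group
        _ = σ' (j + 1) * (σ' j * S) * T * σ' r := by rw [ih']; group
        _ = _ := by rw [f]; group
  rw [al_x, pX, if_pos hj]
  generalize seg n (j + 1) (r + 1) = S at *
  generalize seg n j r = T at *
  have k2 : (σ' j)⁻¹ * (S * T) = S * T * (σ' r)⁻¹ := by
    rw [inv_mul_eq_iff_eq_mul, ← mul_assoc, key]; group
  calc _ = (σ' j)⁻¹ * ((σ' j)⁻¹ * (S * T)) * T⁻¹ := by group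
    _ = ((σ' j)⁻¹ * (S * T)) * (σ' r)⁻¹ * T⁻¹ := by rw [k2, ← mul_assoc, k2]
    _ = _ := by rw [k2]; group

/-- The semidirect product `α(F) ⋊ G_{r+1}` inside the braid group. -/
def HH (hr : r + 1 < n) : Subgroup (B n) where
  carrier := {g | ∃ w, ∃ b ∈ GG n (r + 1), g = al n r w * b}
  one_mem' := ⟨1, 1, one_mem _, by simp⟩
  mul_mem' := by
    rintro _ _ ⟨w, b, hb, rfl⟩ ⟨w', b', hb', rfl⟩
    refine ⟨w * b • w', b * b', mul_mem hb hb', ?_⟩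
    rw [map_mul, al_smul hr hb]; group
  inv_mem' := by
    rintro _ ⟨w, b, hb, rfl⟩
    refine ⟨b⁻¹ • w⁻¹, b⁻¹, inv_mem hb, ?_⟩
    rw [al_smul hr (inv_mem hb), map_inv]; group

lemma GG_le_HH (hr : r + 1 < n) : GG n (r + 1) ≤ HH hr := fun b hb => ⟨1, b, hb, by simp⟩

lemma al_mem_HH (hr : r + 1 < n) (w : FN) : al n r w ∈ HH hr := ⟨w, 1, one_mem _, by simp⟩

/-- Left multiplication by generators permutes the cosets `M_k H`, `M_k = σ_k ⋯ σ_r`. -/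
lemma coset_step (hr : r + 1 < n) {i k : ℕ} (hi : i < r + 1) (hk : k ≤ r + 1) :
    (∃ k' ≤ r + 1, ∃ h ∈ HH hr, σ' i * seg n k (r + 1) = seg n k' (r + 1) * h) ∧
    (∃ k' ≤ r + 1, ∃ h ∈ HH hr, (σ' i)⁻¹ * seg n k (r + 1) = seg n k' (r + 1) * h) := by
  have comm : ∀ h ∈ HH hr, σ' i * seg n k (r + 1) = seg n k (r + 1) * h →
    (∃ k' ≤ r + 1, ∃ h ∈ HH hr, σ' i * seg n k (r + 1) = seg n k' (r + 1) * h) ∧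
    (∃ k' ≤ r + 1, ∃ h ∈ HH hr, (σ' i)⁻¹ * seg n k (r + 1) = seg n k' (r + 1) * h) := by
    intro h hh e
    refine ⟨⟨k, hk, h, hh, e⟩, k, hk, h⁻¹, inv_mem hh, ?_⟩
    rw [inv_mul_eq_iff_eq_mul, ← mul_assoc, e]; group
  rcases lt_trichotomy (i + 1) k with h | h | h
  · exact comm (σ' i) (GG_le_HH hr (s_mem (by omega))) (seg_far_lt h)
  · subst h
    refine ⟨⟨i, by omega, 1, one_mem _, by rw [seg_cons (show i < r + 1 by omega), mul_one]⟩, ?_⟩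
    refine ⟨i, by omega, al n r (xx i), al_mem_HH hr _, ?_⟩
    rw [seg_cons (show i < r + 1 by omega), mul_assoc, ← al_seg hr (by omega)]; group
  · rcases eq_or_lt_of_le (show k ≤ i by omega) with h' | h'
    · subst h'
      refine ⟨⟨k + 1, by omega, al n r (xx k)⁻¹, al_mem_HH hr _, ?_⟩,
        ⟨k + 1, by omega, 1, one_mem _, by rw [seg_cons (show k < r + 1 by omega)]; group⟩⟩
      rw [map_inv, eq_mul_inv_iff_mul_eq, seg_cons (show k < r + 1 by omega), mul_assoc, mul_assoc, ← al_seg hr (by omega)]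
      group
    · obtain ⟨i, rfl⟩ : ∃ i', i = i' + 1 := ⟨i - 1, by omega⟩
      exact comm (σ' i) (GG_le_HH hr (s_mem (by omega))) (seg_shift hr (by omega) (by omega))

/-- Every braid on `r + 2` strands is `M_k α(w) b` with `b` a braid on `r + 1` strands. -/
lemma factor (hr : r + 1 < n) {g : B n} (hg : g ∈ GG n (r + 2)) :
    ∃ k ≤ r + 1, ∃ w, ∃ b ∈ GG n (r + 1), g = seg n k (r + 1) * al n r w * b := by
  suffices ∃ k ≤ r + 1, ∃ h ∈ HH hr, g = seg n k (r + 1) * h by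
    obtain ⟨k, hk, h, ⟨w, b, hb, rfl⟩, e⟩ := this
    exact ⟨k, hk, w, b, hb, by rw [e]; group⟩
  refine GG_ind (p := fun g => ∃ k ≤ r + 1, ∃ h ∈ HH hr, g = seg n k (r + 1) * h)
    ⟨r + 1, le_rfl, 1, one_mem _, by simp [seg_self]⟩ ?_ ?_ g hg
  · rintro i a hi _ ⟨k, hk, h, hh, rfl⟩
    obtain ⟨k', hk', h', hh', e⟩ := (coset_step hr (show i < r + 1 by omega) hk).1
    exact ⟨k', hk', h' * h, mul_mem hh' hh, by rw [← mul_assoc, e, mul_assoc]⟩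
  · rintro i a hi _ ⟨k, hk, h, hh, rfl⟩
    obtain ⟨k', hk', h', hh', e⟩ := (coset_step hr (show i < r + 1 by omega) hk).2
    exact ⟨k', hk', h' * h, mul_mem hh' hh, by rw [← mul_assoc, e, mul_assoc]⟩

/-- `α(w)` acts trivially modulo `x_{r+1}, x_{r+2}, …` and conjugates `x_{r+1}` by `w⁻¹` up to
such generators. -/
def AlP (n r : ℕ) (w : FN) : Prop := (∀ y, pr (r + 1) (al n r w • y) = pr (r + 1) y) ∧
  ∃ c, al n r w • xx (r + 1) = c * xx (r + 1) * c⁻¹ ∧ pr (r + 1) c = (pr (r + 1) w)⁻¹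

lemma alP_smul (hr : r + 1 < n) {g : B n} (hg : g ∈ GG n (r + 1)) {w : FN} (h : AlP n r w) :
    AlP n r (g • w) := by
  obtain ⟨h1, c, hc, hpc⟩ := h
  have hg' := inv_mem hg
  refine ⟨fun y => ?_, g • c, ?_, ?_⟩
  · rw [al_smul hr hg, mul_smul, mul_smul, pr_smul (by omega) hg, h1, pr_smul (by omega) hg',
      smul_inv_smul]
  · rw [al_smul hr hg, mul_smul, mul_smul, GG_fix (by omega) hg' le_rfl, hc, smul_mul', smul_mul',
      GG_fix (by omega) hg le_rfl, smul_inv']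
  · rw [pr_smul (by omega) hg, hpc, pr_smul (by omega) hg, smul_inv']

lemma s_inv_x0 {i : ℕ} (h : i + 1 < n) : (σ' i : B n)⁻¹ • xx i = xx (i + 1) := by
  rw [inv_smul_eq_iff, s_x1 h]
lemma s_inv_x1 {i : ℕ} (h : i + 1 < n) :
    (σ' i : B n)⁻¹ • xx (i + 1) = (xx (i + 1))⁻¹ * xx i * xx (i + 1) := by
  rw [inv_smul_eq_iff]; simp only [smul_mul', smul_inv', s_x1 h, s_x0 h]; group
lemma s_inv_x {i j : ℕ} (h : i + 1 < n) (h1 : j ≠ i) (h2 : j ≠ i + 1) : (σ' i : B n)⁻¹ • xx j = xx j := by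
  rw [inv_smul_eq_iff, s_x h h1 h2]

lemma alP (hr : r + 1 < n) (w : FN) : AlP n r w := by
  induction w using FreeGroup.induction_on with
  | C1 => exact ⟨by simp, 1, by simp, by simp⟩
  | of j =>
    by_cases hj : j ≤ r
    · change AlP n r (xx j)
      rw [← seg_smul hj (show r < n by omega)]
      apply alP_smul hr (seg_mem (by omega))
      have e : al n r (xx r) = (σ' r : B n)⁻¹ * (σ' r)⁻¹ := by rw [al_x, pX_last]
      refine ⟨?_, (xx (r + 1))⁻¹ * (xx r)⁻¹, ?_, ?_⟩
      · have := hom_smul_gen (pr (r + 1)) (pr (r + 1)) (al n r (xx r)) (1 : B n) ?_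
        · intro y; rw [this y, one_smul]
        intro j
        rw [e, one_smul, mul_smul]
        by_cases h1 : j = r
        · subst h1; rw [s_inv_x0 hr, s_inv_x1 hr]; simp [pr_x]
        by_cases h2 : j = r + 1
        · subst h2; rw [s_inv_x1 hr]; simp only [smul_mul', smul_inv', s_inv_x0 hr, s_inv_x1 hr]; simp [pr_x]
        · rw [s_inv_x hr h1 h2, s_inv_x hr h1 h2]
      · rw [e, mul_smul, s_inv_x1 hr]; simp only [smul_mul', smul_inv', s_inv_x0 hr, s_inv_x1 hr]; group
      · simp [pr_x]
    · have e : al n r (xx j) = 1 := by rw [al_x, pX_big _ (by omega)]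
      refine ⟨?_, 1, ?_, ?_⟩
      · rw [e]; simp
      · rw [e]; simp
      · simp [pr_x, show ¬ j < r + 1 by omega]
  | inv_of j h =>
    obtain ⟨h1, c, hc, hpc⟩ := h
    have h1' : ∀ y, pr (r + 1) (al n r (xx j)⁻¹ • y) = pr (r + 1) y := by
      intro y
      rw [map_inv, ← h1, smul_inv_smul]
    refine ⟨h1', (al n r (xx j)⁻¹ • c)⁻¹, ?_, ?_⟩
    · have h2 : xx (r + 1) = al n r (xx j)⁻¹ • (c * xx (r + 1) * c⁻¹) := by
        rw [← hc, map_inv, inv_smul_smul]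
      simp only [smul_mul', smul_inv'] at h2
      set d := al n r (xx j)⁻¹ • c
      set z := al n r (xx j)⁻¹ • xx (r + 1)
      rw [h2]; group
    · rw [map_inv, h1', hpc, map_inv]
  | mul w w' hw hw' =>
    obtain ⟨h1, c, hc, hpc⟩ := hw
    obtain ⟨h1', c', hc', hpc'⟩ := hw'
    refine ⟨fun y => by rw [map_mul, mul_smul, h1, h1'], (al n r w • c') * c, ?_, ?_⟩
    · rw [map_mul, mul_smul, hc']; simp only [smul_mul', smul_inv', hc]; group
    · rw [map_mul, h1, hpc, hpc', map_mul]; group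

lemma ex_conj (k : ℕ) (c y : FN) : ex k (c * y * c⁻¹) = ex k y := by
  rw [map_mul, map_mul, map_inv]; exact mul_inv_cancel_comm _ _

/-- A conjugator fixing `x_m` involves only `x_m`. -/
lemma pr_of_conj_eq {m j : ℕ} (hj : m ≤ j) {c : FN} (h : c * xx j * c⁻¹ = xx j) : pr m c = 1 := by
  have : Commute c (xx j) := by rw [mul_inv_eq_iff_eq_mul] at h; exact h
  obtain ⟨k, rfl⟩ := FreeGroup.mem_zpowers_of_commute_of _ _ this
  change pr m (xx j ^ k) = 1
  rw [map_zpow, pr_x, if_neg (by omega), one_zpow]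

/-- Data of an element of `G_{r+2}` fixing `x_{r+1}` up to conjugacy: `k = r + 1`. -/
lemma factor_pure (hr : r + 1 < n) {g : B n} (hg : g ∈ GG n (r + 2))
    (hx : ∃ c, g • xx (r + 1) = c * xx (r + 1) * c⁻¹) :
    ∃ w, ∃ b ∈ GG n (r + 1), g = al n r w * b := by
  obtain ⟨k, hk, w, b, hb, rfl⟩ := factor hr hg
  obtain ⟨c, hc⟩ := hx
  obtain ⟨-, d, hd, -⟩ := alP hr w
  rw [mul_smul, mul_smul, GG_fix (by omega) hb le_rfl, hd] at hc
  simp only [smul_mul', smul_inv', seg_smul hk hr] at hc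
  have := congrArg (ex (r + 1)) hc
  rw [ex_conj, ex_conj, ex_x, ex_x, if_pos rfl] at this
  have hkr : k = r + 1 := by
    by_contra h
    rw [if_neg h] at this
    simpa using congrArg Multiplicative.toAdd this
  exact ⟨w, b, hb, by rw [hkr, seg_self, one_mul]⟩

lemma faithful_aux (m : ℕ) (hm : m ≤ n) (g : B n) (hg : g ∈ GG n m) (h : ∀ y : FN, g • y = y) : g = 1 := by
  rcases m with _ | r
  · rw [GG_le_one (by omega)] at hg; exact hg
  induction r generalizing g with
  | zero => rw [GG_le_one (by omega)] at hg; exact hg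
  | succ r ih =>
    obtain ⟨w, b, hb, rfl⟩ := factor_pure hm hg ⟨1, by rw [h]; group⟩
    obtain ⟨h1, c, hc, hpc⟩ := alP hm w
    have hb1 : b = 1 := by
      refine ih b ?_ (by omega) hb
      intro y
      have := hom_smul_gen (n := n) (MonoidHom.id FN) (MonoidHom.id FN) b 1 (fun j => ?_) y
      · simpa using this
      simp only [MonoidHom.id_apply, one_smul]
      by_cases hj : j < r + 1
      · have e := congrArg (pr (r + 1)) (h (xx j))
        rw [mul_smul, h1, pr_smul (by omega) hb, pr_x, if_pos hj] at e
        exact e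
      · exact GG_fix (by omega) hb (by omega)
    subst hb1
    rw [mul_one] at h ⊢
    rw [h] at hc
    have := pr_of_conj_eq le_rfl hc.symm
    rw [hpc, inv_eq_one] at this
    rw [al, ← push_pr, this, map_one]

/-- The Artin action is faithful. -/
theorem ρA_faithful (g : B n) (h : ∀ y : FN, g • y = y) : g = 1 :=
  faithful_aux n le_rfl g (by rw [GG_top]; trivial) h

theorem faithful_gen {g h : B n} (H : ∀ j, g • xx j = h • xx j) : g = h := by
  rw [← inv_mul_eq_one]
  apply ρA_faithful
  have := hom_smul_gen (n := n) (MonoidHom.id FN) (MonoidHom.id FN) g h (fun j => H j)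
  intro y
  rw [mul_smul, inv_smul_eq_iff]
  exact (this y).symm

end Faith

/-! ### Full twists and the centre -/

section Center
variable {n r : ℕ}

/-- `c_r`: strand `r` circles once around the strands `0, …, r-1`. -/
def ck (n : ℕ) : ℕ → B n
  | 0 => 1
  | r + 1 => σ' r * ck n r * σ' r

/-- `T_r`: the full twist on the strands `0, …, r`. -/
def Tk (n : ℕ) : ℕ → B n
  | 0 => 1
  | r + 1 => ck n (r + 1) * Tk n r

lemma ck_succ (r : ℕ) : ck n (r + 1) = σ' r * ck n r * σ' r := rfl
lemma Tk_succ (r : ℕ) : Tk n (r + 1) = ck n (r + 1) * Tk n r := rfl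

lemma ck_mem (r : ℕ) : ck n r ∈ GG n (r + 1) := by
  induction r with
  | zero => exact one_mem _
  | succ r ih =>
    exact mul_mem (mul_mem (s_mem (by omega)) (GG_mono (by omega) ih)) (s_mem (by omega))

lemma Tk_mem (r : ℕ) : Tk n r ∈ GG n (r + 1) := by
  induction r with
  | zero => exact one_mem _
  | succ r ih => exact mul_mem (ck_mem _) (GG_mono (by omega) ih)

/-- The conjugator `Π_r x_r Π_r⁻¹` by which `c_r` acts on the first `r` generators. -/
def uu (r : ℕ) : FN := Pi r * xx r * (Pi r)⁻¹

lemma ck_x (hr : r < n) : (∀ j < r, ck n r • xx j = uu r * xx j * (uu r)⁻¹) ∧ ck n r • xx r = uu r := by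
  induction r with
  | zero => simp [ck, uu, Pi]
  | succ r ih =>
    obtain ⟨h1, h2⟩ := ih (by omega)
    have hu : (σ' r : B n) • uu r = uu (r + 1) := by
      rw [uu, uu, Pi_succ]; simp only [smul_mul', smul_inv', s_Pi_lt hr le_rfl, s_x0 hr]; group
    have hf : ck n r • xx (r + 1) = xx (r + 1) := GG_fix (by omega) (ck_mem r) le_rfl
    refine ⟨fun j hj => ?_, ?_⟩
    · rw [ck_succ, mul_smul, mul_smul]
      rcases eq_or_lt_of_le (show j ≤ r by omega) with rfl | hj
      · rw [s_x0 hr]; simp only [smul_mul', smul_inv', h2, hf, hu, s_x1 hr]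
      · rw [s_x hr (by omega) (by omega), h1 j hj]
        simp only [smul_mul', smul_inv', hu, s_x hr (show j ≠ r by omega) (by omega)]
    · rw [ck_succ, mul_smul, mul_smul, s_x1 hr, h2, hu]

lemma FN_hom_eqOn {f g : FN →* FN} {m : ℕ} (h : ∀ j < m, f (xx j) = g (xx j)) (y : FN) :
    f (pr m y) = g (pr m y) := by
  have : f.comp (pr m) = g.comp (pr m) := by
    ext j; simp only [MonoidHom.comp_apply, pr_x]; split_ifs with hj
    · exact h j hj
    · simp
  exact DFunLike.congr_fun this y

lemma ck_smul (hr : r < n) (y : FN) : ck n r • pr r y = uu r * pr r y * (uu r)⁻¹ :=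
  FN_hom_eqOn (f := MulDistribMulAction.toMonoidHom FN (ck n r)) (g := (MulAut.conj (uu r)).toMonoidHom)
    (fun j hj => (ck_x hr).1 j hj) y

lemma Tk_x (hr : r < n) {j : ℕ} (hj : j ≤ r) : Tk n r • xx j = Pi (r + 1) * xx j * (Pi (r + 1))⁻¹ := by
  induction r with
  | zero => obtain rfl : j = 0 := by omega
            simp [Tk, Pi]
  | succ r ih =>
    rw [Tk_succ, mul_smul]
    rcases eq_or_lt_of_le hj with rfl | hj
    · rw [GG_fix (by omega) (Tk_mem r) le_rfl, (ck_x hr).2, Pi_succ (r + 1), uu]; group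
    · rw [ih (by omega) (by omega)]
      have e : Pi (r + 1) * xx j * (Pi (r + 1))⁻¹ = pr (r + 1) (Pi (r + 1) * xx j * (Pi (r + 1))⁻¹) := by
        simp only [map_mul, map_inv, pr_Pi le_rfl, pr_x, if_pos hj]
      rw [e, ck_smul hr, ← e, Pi_succ (r + 1), uu]; group

lemma Tk_smul (hr : r < n) (y : FN) : Tk n r • pr (r + 1) y = Pi (r + 1) * pr (r + 1) y * (Pi (r + 1))⁻¹ :=
  FN_hom_eqOn (f := MulDistribMulAction.toMonoidHom FN (Tk n r)) (g := (MulAut.conj (Pi (r + 1))).toMonoidHom)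
    (fun j hj => Tk_x hr (by omega)) y

lemma Tk_comm (hr : r < n) {g : B n} (hg : g ∈ GG n (r + 1)) : Commute (Tk n r) g := by
  apply faithful_gen
  intro j
  rw [mul_smul, mul_smul]
  by_cases hj : j < r + 1
  · have e : g • xx j = pr (r + 1) (g • xx j) := by rw [pr_smul hr hg, pr_x, if_pos hj]
    rw [e, Tk_smul hr, ← e, Tk_x hr (by omega)]
    simp only [smul_mul', smul_inv', GG_Pi hr hg]
  · rw [GG_fix hr hg (by omega), GG_fix hr (Tk_mem r) (by omega), GG_fix hr hg (by omega)]

lemma ck_comm (hr : r < n) {g : B n} (hg : g ∈ GG n r) : Commute (ck n r) g := by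
  rcases r with _ | r
  · exact Commute.one_left _
  · have e : ck n (r + 1) = Tk n (r + 1) * (Tk n r)⁻¹ := by rw [Tk_succ]; group
    rw [e]
    exact (Tk_comm hr (GG_mono (by omega) hg)).mul_left (Tk_comm (by omega) hg).inv_left

lemma ck_ok (hr : r < n) : PushOK r (ck n r) where
  lt := hr
  com i hi := (ck_comm hr (s_mem hi)).eq.symm
  rel i hi := by
    subst hi
    have h := (ck_comm hr (ck_mem i)).eq
    rw [ck_succ] at *
    set s := (σ' i : B n)
    set c := ck n i
    calc s * (s * c * s) * s⁻¹ * (s * c * s) = s * ((s * c * s) * c) * s := by group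
      _ = _ := by rw [h]; group

/-- The push of the point at infinity: `x_j ↦` strand `j` circles all other strands. -/
def ka (n r : ℕ) : FN →* B n := push r (ck n r)

lemma ka_smul (hr : r < n) {g : B n} (hg : g ∈ GG n (r + 1)) (y : FN) :
    ka n r (g • y) = g * ka n r y * g⁻¹ := push_smul (ck_ok hr) hg y

lemma ka_mem (y : FN) : ka n r y ∈ GG n (r + 1) := push_mem le_rfl (ck_mem r) y

lemma ka_last : ka n r (xx r) = ck n r := by rw [ka, push_x, pX_last]

lemma ka_big {j : ℕ} (h : r < j) : ka n r (xx j) = 1 := by rw [ka, push_x, pX_big _ h]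

/-- The quotient of the free group by the boundary word `Π_{r+1}`, realised as a retraction onto
the first `r` generators. -/
def qq (r : ℕ) : FN →* FN := FreeGroup.lift fun j => if j < r then xx j else if j = r then (Pi r)⁻¹ else 1

lemma qq_x (j : ℕ) : qq r (xx j) = if j < r then xx j else if j = r then (Pi r)⁻¹ else 1 := by simp [qq]

lemma qq_pr' (y : FN) : qq r (pr r y) = pr r y :=
  FN_hom_eqOn (g := MonoidHom.id FN) (fun j hj => by rw [qq_x, if_pos hj]; rfl) y

lemma qq_Pi : qq r (Pi r) = Pi r := by rw [← pr_Pi (le_refl r), qq_pr', pr_Pi le_rfl]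

lemma qq_Pi_succ : qq r (Pi (r + 1)) = 1 := by rw [Pi_succ, map_mul, qq_Pi, qq_x]; simp

lemma pr_qq (y : FN) : pr r (qq r y) = qq r y := by
  have : (pr r).comp (qq r) = qq r := by
    ext j; rw [MonoidHom.comp_apply, qq_x]
    split_ifs with h h'
    · rw [pr_x, if_pos h]
    · rw [map_inv, pr_Pi le_rfl]
    · simp
  exact DFunLike.congr_fun this y

lemma qq_qq (y : FN) : qq r (qq r y) = qq r y := by rw [← pr_qq y, qq_pr', pr_qq]

lemma qq_pr (y : FN) : qq r (pr (r + 1) y) = qq r y := by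
  have : (qq r).comp (pr (r + 1)) = qq r := by
    ext j; rw [MonoidHom.comp_apply, pr_x]
    split_ifs with h
    · rfl
    · rw [map_one, qq_x, if_neg (by omega), if_neg (by omega)]
  exact DFunLike.congr_fun this y

lemma qq_smul_qq (hr : r < n) {g : B n} (hg : g ∈ GG n (r + 1)) (y : FN) :
    qq r (g • qq r y) = qq r (g • y) := by
  have : ((qq r).comp (MulDistribMulAction.toMonoidHom FN g)).comp (qq r) =
      (qq r).comp (MulDistribMulAction.toMonoidHom FN g) := by
    ext j
    change qq r (g • qq r (xx j)) = qq r (g • xx j)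
    rw [qq_x]
    split_ifs with h h'
    · rfl
    · subst h'
      have e := congrArg (qq j) (GG_Pi hr hg)
      rw [Pi_succ, smul_mul', map_mul, ← Pi_succ, qq_Pi_succ] at e
      rw [smul_inv', map_inv, inv_eq_iff_mul_eq_one, e]
    · rw [GG_fix hr hg (by omega), qq_x, if_neg h, if_neg h']; simp
  exact DFunLike.congr_fun this y

/-- `κ(w)` acts on the quotient free group as conjugation by `w`. -/
lemma qq_ka (hr : r < n) (w y : FN) : qq r (ka n r w • y) = qq r w * qq r y * (qq r w)⁻¹ := by
  have conj : ∀ {g : B n}, g ∈ GG n (r + 1) → ∀ {w}, (∀ y, qq r (ka n r w • y) = qq r w * qq r y * (qq r w)⁻¹) →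
      ∀ y, qq r (ka n r (g • w) • y) = qq r (g • w) * qq r y * (qq r (g • w))⁻¹ := by
    intro g hg w h y
    rw [ka_smul hr hg, mul_smul, mul_smul, ← qq_smul_qq hr hg, h]
    simp only [smul_mul', smul_inv', map_mul, map_inv, qq_smul_qq hr hg, smul_inv_smul]
  induction w using FreeGroup.induction_on generalizing y with
  | C1 => simp
  | of j =>
    change qq r (ka n r (xx j) • y) = qq r (xx j) * qq r y * (qq r (xx j))⁻¹
    by_cases hj : j ≤ r
    · rw [← seg_smul hj hr]
      apply conj (seg_mem (by omega))
      have : (qq r).comp (MulDistribMulAction.toMonoidHom FN (ka n r (xx r))) =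
        (MulAut.conj (qq r (xx r))).toMonoidHom.comp (qq r) := by
        ext i
        change qq r (ka n r (xx r) • xx i) = qq r (xx r) * qq r (xx i) * (qq r (xx r))⁻¹
        have hu : qq r (uu r) = qq r (xx r) := by
          rw [uu]; simp only [map_mul, map_inv, qq_Pi, qq_x]; simp
        rw [ka_last]
        rcases lt_trichotomy i r with h | h | h
        · rw [(ck_x hr).1 i h]; simp only [map_mul, map_inv, hu]
        · subst h; rw [(ck_x hr).2, hu]; group
        · rw [GG_fix hr (ck_mem r) h, qq_x i, if_neg (by omega), if_neg (by omega)]; simp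
      intro y
      exact DFunLike.congr_fun this y
    · rw [ka_big (by omega), qq_x, if_neg (by omega), if_neg (by omega)]; simp
  | inv_of j h =>
    have := h ((ka n r (xx j))⁻¹ • y)
    rw [smul_inv_smul] at this
    rw [map_inv, map_inv, this]; group
  | mul w w' h h' =>
    simp only [map_mul] at *
    rw [mul_smul, h, h']; group

lemma Tk_qq (hr : r < n) (y : FN) : qq r (Tk n r • y) = qq r y := by
  rw [← qq_pr, pr_smul hr (Tk_mem r), Tk_smul hr]
  simp only [map_mul, map_inv, qq_Pi_succ, qq_pr]; simp

lemma kaPi_comm (hr : r < n) {g : B n} (hg : g ∈ GG n (r + 1)) : Commute (ka n r (Pi (r + 1))) g := by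
  have := ka_smul hr hg (Pi (r + 1))
  rw [GG_Pi hr hg] at this
  rw [eq_mul_inv_iff_mul_eq] at this
  exact this

/-- `κ` only depends on the class in the quotient, up to powers of the central `κ(Π)`. -/
lemma ka_qq (hr : r < n) (u : FN) : ∃ k : ℤ, ka n r u = ka n r (qq r u) * ka n r (Pi (r + 1)) ^ k := by
  induction u using FreeGroup.induction_on with
  | C1 => exact ⟨0, by simp⟩
  | of j =>
    change ∃ k : ℤ, ka n r (xx j) = ka n r (qq r (xx j)) * ka n r (Pi (r + 1)) ^ k
    rw [qq_x]
    split_ifs with h h'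
    · exact ⟨0, by simp⟩
    · subst h'; refine ⟨1, ?_⟩; rw [Pi_succ]; simp
    · exact ⟨0, by rw [ka_big (by omega)]; simp⟩
  | inv_of j h =>
    obtain ⟨k, hk⟩ := h
    refine ⟨-k, ?_⟩
    rw [map_inv, hk, mul_inv_rev, ← zpow_neg, map_inv, map_inv]
    exact ((kaPi_comm hr (inv_mem (ka_mem _))).zpow_left _)
  | mul w w' h h' =>
    obtain ⟨k, hk⟩ := h
    obtain ⟨k', hk'⟩ := h'
    refine ⟨k + k', ?_⟩
    rw [map_mul, hk, hk', map_mul, map_mul, zpow_add]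
    have := ((kaPi_comm hr (ka_mem (qq r w'))).zpow_left k).eq
    rw [mul_assoc, ← mul_assoc (_ ^ k), this]; group

lemma es_s {i : ℕ} (h : i + 1 < n) : es (σ' i : B n) = 1 := by rw [s_eq h, es_σ]

lemma es_ck (hr : r < n) : es (ck n r) = 2 * r := by
  induction r with
  | zero => simp [ck]
  | succ r ih => rw [ck_succ, es_mul, es_mul, es_s hr, ih (by omega)]; push_cast; ring

lemma es_conj (g h : B n) : es (g * h * g⁻¹) = es h := by simp

lemma es_zpow (g : B n) (k : ℤ) : es (g ^ k) = k * es g := by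
  simp [es, map_zpow]

lemma es_ka_x (hr : r < n) {j : ℕ} (hj : j ≤ r) : es (ka n r (xx j)) = 2 * r := by
  rw [ka, push_x, pX, if_pos hj, es_conj, es_ck hr]

lemma es_kaPi (hr : r < n) : es (ka n r (Pi (r + 1))) = (r + 1) * (2 * r) := by
  have : ∀ k ≤ r + 1, es (ka n r (Pi k)) = k * (2 * r) := by
    intro k hk
    induction k with
    | zero => simp [Pi]
    | succ k ih => rw [Pi_succ, map_mul, es_mul, ih (by omega), es_ka_x hr (by omega)]; push_cast; ring
  rw [this _ le_rfl]; push_cast; ring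

/-- `α(Π) = c⁻¹`. -/
lemma al_Pi (hr : r + 1 < n) : al n r (Pi (r + 1)) = (ck n (r + 1))⁻¹ := by
  induction r with
  | zero => simp [Pi, al_x, pX_last, ck]
  | succ r ih =>
    have h1 : ∀ j ≤ r, al n (r + 1) (xx j) = (σ' (r + 1))⁻¹ * al n r (xx j) * σ' (r + 1) := by
      intro j hj
      rw [al_x, al_x, pX, pX, if_pos hj, if_pos (by omega), seg_snoc hj]
      have f := seg_far_gt (n := n) (i := r + 1) (j := j) (k := r) (by omega)
      have e := s_adj (n := n) (i := r) hr
      set s := (σ' r : B n)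
      set t := (σ' (r + 1) : B n)
      set S := seg n j r
      have e1 : s * t⁻¹ * s⁻¹ = t⁻¹ * s⁻¹ * t := by
        rw [mul_inv_eq_iff_eq_mul, mul_inv_eq_iff_eq_mul, mul_assoc, mul_assoc, mul_assoc, eq_inv_mul_iff_mul_eq, eq_inv_mul_iff_mul_eq, ← mul_assoc, ← mul_assoc, e]
      have f' : t⁻¹ * S = S * t⁻¹ := by rw [inv_mul_eq_iff_eq_mul, ← mul_assoc, f]; group
      have f'' : S⁻¹ * t = t * S⁻¹ := by rw [inv_mul_eq_iff_eq_mul, ← mul_assoc, ← f]; group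
      calc S * s * (t⁻¹ * t⁻¹) * (S * s)⁻¹ = S * ((s * t⁻¹ * s⁻¹) * (s * t⁻¹ * s⁻¹)) * S⁻¹ := by group
        _ = (S * t⁻¹) * (s⁻¹ * s⁻¹) * (t * S⁻¹) := by rw [e1]; group
        _ = _ := by rw [← f', ← f'']; group
    have h2 : ∀ k ≤ r + 1, al n (r + 1) (Pi k) = (σ' (r + 1))⁻¹ * al n r (Pi k) * σ' (r + 1) := by
      intro k hk
      induction k with
      | zero => simp [Pi]
      | succ k ih => rw [Pi_succ, map_mul, ih (by omega), h1 k (by omega), map_mul]; group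
    rw [Pi_succ, map_mul, h2 _ le_rfl, ih (by omega), al_x, pX_last, ck_succ (r + 1)]; group

lemma al_inj (hr : r + 1 < n) {w : FN} (h : al n r w = 1) : pr (r + 1) w = 1 := by
  obtain ⟨-, c, hc, hpc⟩ := alP hr w
  rw [h, one_smul] at hc
  rw [← inv_inv (pr (r + 1) w), ← hpc, pr_of_conj_eq le_rfl hc.symm, inv_one]

lemma Pi_ex {m k : ℕ} (h : k < m) : ex k (Pi m) = Multiplicative.ofAdd 1 := by
  induction m with
  | zero => omega
  | succ m ih =>
    rw [Pi_succ, map_mul, ex_x]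
    rcases eq_or_lt_of_le (show k ≤ m by omega) with rfl | h'
    · have : ∀ j ≤ k, ex k (Pi j) = 1 := by
        intro j hj
        induction j with
        | zero => simp [Pi]
        | succ j ih => rw [Pi_succ, map_mul, ih (by omega), ex_x, if_neg (by omega)]; rfl
      rw [this k le_rfl]; simp
    · rw [ih h', if_neg (by omega)]; rfl

/-- The centralizer of an element with some exponent sum `1` is generated by that element. -/
lemma mem_zpowers_of_commute_ex {z w : FN} {k : ℕ} (hz : ex k z = Multiplicative.ofAdd 1) (h : Commute z w) :
    w ∈ Subgroup.zpowers z := by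
  have hz1 : z ≠ 1 := by rintro rfl; simp at hz; simpa using congrArg Multiplicative.toAdd hz
  obtain ⟨t, ⟨a, ha⟩, ht⟩ := FreeGroup.common_root hz1 {w} (by simpa using h)
  have := congrArg (ex k) ha
  simp only [map_zpow] at this
  rw [hz] at this
  have h2 : a * (ex k t).toAdd = 1 := by simpa using congrArg Multiplicative.toAdd this
  have hle : Subgroup.zpowers t ≤ Subgroup.zpowers z := by
    rw [Subgroup.zpowers_le]
    rcases Int.eq_one_or_neg_one_of_mul_eq_one h2 with rfl | rfl
    · rw [← ha]; simp
    · rw [← ha]; exact ⟨-1, by simp⟩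
  exact hle (ht w rfl)

/-- Elements of `G_{p+2}` acting trivially on the quotient free group are powers of the full twist. -/
lemma ker_lemma {p : ℕ} (hp : 1 ≤ p) (hr : p + 1 < n) {g : B n} (hg : g ∈ GG n (p + 2))
    (h : ∀ y, qq (p + 1) (g • y) = qq (p + 1) y) : g ∈ Subgroup.zpowers (Tk n (p + 1)) := by
  -- `g` commutes with `c_{p+1}`, comparing exponent sums
  have hc : Commute g (ck n (p + 1)) := by
    have e := ka_smul hr hg (xx (p + 1))
    obtain ⟨k, hk⟩ := ka_qq hr (g • xx (p + 1))
    obtain ⟨l, hl⟩ := ka_qq hr (xx (p + 1))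
    rw [h] at hk
    have e2 : ka n (p + 1) (g • xx (p + 1)) = ka n (p + 1) (xx (p + 1)) * ka n (p + 1) (Pi (p + 1 + 1)) ^ (k - l) := by
      rw [hk, hl, mul_assoc, ← zpow_add]; congr 2; ring
    have e3 := congrArg es (e.symm.trans e2)
    rw [es_conj, es_mul, es_zpow, es_kaPi hr] at e3
    have : k - l = 0 := by
      have : (k - l) * (((p + 1 : ℕ) + 1 : ℤ) * (2 * (p + 1 : ℕ))) = 0 := by linarith
      rcases mul_eq_zero.1 this with h | h
      · exact h
      · exfalso; push_cast at h; nlinarith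
    rw [e, this, zpow_zero, mul_one, mul_inv_eq_iff_eq_mul, ka_last] at e2
    exact e2
  obtain ⟨k, hk, w, b, hb, hgf⟩ := factor hr hg
  have hk' : k = p + 1 := by
    obtain ⟨-, d, hd, -⟩ := alP hr w
    have := h (xx (p + 1))
    rw [hgf, mul_smul, mul_smul, GG_fix (by omega) hb le_rfl, hd] at this
    simp only [smul_mul', smul_inv', seg_smul hk hr, map_mul, map_inv] at this
    by_contra hne
    rw [qq_x k, qq_x, if_pos (by omega), if_neg (by omega), if_pos rfl] at this
    have h0 := congrArg (ex (if k = 0 then 1 else 0)) this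
    rw [ex_conj, ex_x, map_inv, Pi_ex (by split_ifs <;> omega), if_neg (by split_ifs <;> omega)] at h0
    simpa using congrArg Multiplicative.toAdd h0
  subst hk'
  rw [seg_self, one_mul] at hgf
  have hbc : Commute b (al n p (Pi (p + 1))) := by
    have := al_smul hr hb (Pi (p + 1))
    rw [GG_Pi (by omega) hb, eq_mul_inv_iff_mul_eq] at this
    exact this.symm
  have hw : Commute (al n p w) (al n p (Pi (p + 1))) := by
    have e : al n p w = g * b⁻¹ := by rw [hgf]; group
    rw [e]
    refine Commute.mul_left ?_ hbc.inv_left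
    rw [al_Pi hr]; exact hc.inv_right
  have hw' : Commute (Pi (p + 1)) (pr (p + 1) w) := by
    have : al n p (w * Pi (p + 1) * w⁻¹ * (Pi (p + 1))⁻¹) = 1 := by
      simp only [map_mul, map_inv]; rw [hw.eq]; group
    have := al_inj hr this
    simp only [map_mul, map_inv, pr_Pi le_rfl] at this
    rw [mul_inv_eq_one, mul_inv_eq_iff_eq_mul] at this
    exact this.symm
  obtain ⟨l, hl⟩ := mem_zpowers_of_commute_ex (k := 0) (Pi_ex (by omega)) hw'
  have hal : al n p w = (ck n (p + 1)) ^ (-l) := by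
    rw [al, ← push_pr, ← hl]
    change al n p (Pi (p + 1) ^ l) = _
    rw [map_zpow, al_Pi hr, inv_zpow']
  have hTT : Commute (ck n (p + 1)) (Tk n p) := ck_comm hr (Tk_mem p)
  have hg2 : g = Tk n (p + 1) ^ (-l) * (Tk n p ^ l * b) := by
    rw [hgf, hal, Tk_succ, hTT.mul_zpow]; group
  set b' := Tk n p ^ l * b with hb'
  have hbm : b' ∈ GG n (p + 1) := mul_mem (zpow_mem (Tk_mem p) l) hb
  have hTz : ∀ (k : ℤ) y, qq (p + 1) (Tk n (p + 1) ^ k • y) = qq (p + 1) y := by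
    have hpos : ∀ (k : ℕ) y, qq (p + 1) (Tk n (p + 1) ^ k • y) = qq (p + 1) y := by
      intro k
      induction k with
      | zero => simp
      | succ k ih => intro y; rw [pow_succ, mul_smul, ih, Tk_qq hr]
    intro k y
    obtain ⟨k, rfl | rfl⟩ := k.eq_nat_or_neg
    · rw [zpow_natCast, hpos]
    · rw [← hpos k (_ • y), ← zpow_natCast, smul_smul, ← zpow_add]; simp
  have hb1 : b' = 1 := by
    apply faithful_gen
    intro j
    rw [one_smul]
    by_cases hj : j < p + 1
    · have e := h (xx j)
      rw [hg2, mul_smul, hTz] at e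
      have e2 : b' • xx j = pr (p + 1) (b' • xx j) := by rw [pr_smul (by omega) hbm, pr_x, if_pos hj]
      rw [e2, qq_pr', ← e2, qq_x, if_pos hj] at e
      exact e
    · exact GG_fix (by omega) hbm (by omega)
  rw [hg2, hb1, mul_one]
  exact ⟨-l, rfl⟩

end Center

/-! ### Commutators with a normal subgroup of a free group -/

section Commutators
open scoped commutatorElement

/-- A normal subgroup `R` of a noncyclic free group `F` with `[R, F] ≤ [R, R]` is trivial or
everything. If `x ∉ R`, then `R' = ⟨R, x⟩` is free with `[R', R'] ≤ [R, R]`; mapping a basis of `R'`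
to a wreath product over `F / R` shows that `R'` has rank at most one, so `x` centralizes `R`. -/
lemma relation_lemma {F : Type*} [Group F] [IsFreeGroup F] (R : Subgroup F) [R.Normal]
    (h : ∀ a ∈ R, ∀ b, ⁅a, b⁆ ∈ ⁅R, R⁆) (hF : ¬ IsCyclic F) : R = ⊥ ∨ R = ⊤ := by
  by_contra! hc
  obtain ⟨hbot, htop⟩ := hc
  have main : ∀ x ∉ R, ∀ a ∈ R, Commute a x := by
    intro x hx
    set R' := R ⊔ Subgroup.zpowers x with hR'
    have hRR' : R ≤ R' := le_sup_left
    have hxR' : x ∈ R' := (le_sup_right : Subgroup.zpowers x ≤ R') (Subgroup.mem_zpowers x)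
    -- `R' / [R, R]` is abelian
    have hle : ∀ (K : Subgroup F), R ≤ K → x ∈ K → R' ≤ K := fun K h1 h2 =>
      sup_le h1 (by rwa [Subgroup.zpowers_le])
    let C (b : F) : Subgroup F := (Subgroup.centralizer {QuotientGroup.mk' ⁅R, R⁆ b}).comap (QuotientGroup.mk' ⁅R, R⁆)
    have hC : ∀ a b, a ∈ C b ↔ ⁅a, b⁆ ∈ ⁅R, R⁆ := by
      intro a b
      rw [← QuotientGroup.ker_mk' ⁅R, R⁆, MonoidHom.mem_ker, map_commutatorElement,
        commutatorElement_eq_one_iff_mul_comm]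
      simp only [C, Subgroup.mem_comap, Subgroup.mem_centralizer_iff, Set.mem_singleton_iff, forall_eq]
      exact eq_comm
    have hCsymm : ∀ a b, a ∈ C b → b ∈ C a := by
      intro a b hab
      rw [hC] at *
      rw [← commutatorElement_inv]; exact inv_mem hab
    have h1 : ∀ a b, a ∈ R → a ∈ C b := fun a b ha => (hC a b).2 (h a ha b)
    have h2 : ∀ a ∈ R', a ∈ C x := fun a ha => hle (C x) (fun a ha => h1 a x ha)
      ((hC x x).2 (by rw [commutatorElement_self]; exact one_mem _)) ha
    have h3 : ∀ a ∈ R', ∀ b ∈ R', ⁅a, b⁆ ∈ ⁅R, R⁆ := by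
      intro a ha b hb
      have := hle (C a) (fun b hb => h1 b a hb) (hCsymm _ _ (h2 a ha)) hb
      exact (hC a b).1 (hCsymm _ _ this)
    let χ : R' →* F ⧸ R := (QuotientGroup.mk' R).comp R'.subtype
    have hχx : χ ⟨x, hxR'⟩ ≠ 1 := by
      intro e
      exact hx ((QuotientGroup.eq_one_iff x).1 e)
    obtain ⟨b₁, hb₁⟩ : ∃ b, χ (IsFreeGroup.of b) ≠ 1 := by
      by_contra! hb
      have : χ = 1 := IsFreeGroup.ext_hom (by simpa using hb)
      exact hχx (by rw [this]; rfl)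
    classical
    have hsub : ∀ b₂ : IsFreeGroup.Generators R', b₂ = b₁ := by
      intro b₂
      by_contra hne
      let act := mulAutArrow (G := F ⧸ R) (A := F ⧸ R) (M := Multiplicative ℤ)
      let v : F ⧸ R → Multiplicative ℤ := fun c => if c = 1 then Multiplicative.ofAdd 1 else 1
      let f : R' →* (F ⧸ R → Multiplicative ℤ) ⋊[act] (F ⧸ R) := IsFreeGroup.lift fun b =>
        ⟨if b = b₂ then v else 1, χ (IsFreeGroup.of b)⟩
      have hf : ∀ y, (f y).right = χ y := by
        have : SemidirectProduct.rightHom.comp f = χ := IsFreeGroup.ext_hom (by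
          intro b; simp [f])
        intro y; exact DFunLike.congr_fun this y
      let D := f.ker.map R'.subtype
      have hD : ⁅R, R⁆ ≤ D := by
        rw [Subgroup.commutator_le]
        intro a ha b hb
        refine ⟨⁅(⟨a, hRR' ha⟩ : R'), (⟨b, hRR' hb⟩ : R')⁆, ?_, rfl⟩
        change f _ = 1
        rw [map_commutatorElement, commutatorElement_eq_one_iff_mul_comm]
        have r1 : (f ⟨a, hRR' ha⟩).right = 1 := by rw [hf]; exact (QuotientGroup.eq_one_iff a).2 ha
        have r2 : (f ⟨b, hRR' hb⟩).right = 1 := by rw [hf]; exact (QuotientGroup.eq_one_iff b).2 hb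
        ext1
        · rw [SemidirectProduct.mul_left, SemidirectProduct.mul_left, r1, r2, map_one]
          simp [mul_comm]
        · rw [SemidirectProduct.mul_right, SemidirectProduct.mul_right, r1, r2]
      obtain ⟨y, hy, hy2⟩ := hD (h3 _ (IsFreeGroup.of b₁ : R').2 _ (IsFreeGroup.of b₂ : R').2)
      have hy3 : y = ⁅(IsFreeGroup.of b₁ : R'), IsFreeGroup.of b₂⁆ := Subtype.ext hy2
      rw [hy3] at hy
      change f _ = 1 at hy
      rw [map_commutatorElement, commutatorElement_eq_one_iff_mul_comm] at hy
      have hy4 := congrFun (congrArg SemidirectProduct.left hy) 1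
      rw [SemidirectProduct.mul_left, SemidirectProduct.mul_left] at hy4
      have hne' : b₁ ≠ b₂ := fun e => hne e.symm
      simp only [f, IsFreeGroup.lift_of, if_neg hne', if_true, Pi.mul_apply, map_one, Pi.one_apply, mul_one, one_mul] at hy4
      have hy5 : (act (χ (IsFreeGroup.of b₁)) v) 1 = v ((χ (IsFreeGroup.of b₁))⁻¹ • 1) := rfl
      rw [hy5] at hy4
      simp [v, hb₁] at hy4
      simpa using congrArg Multiplicative.toAdd hy4
    have hcyc : ∀ y : R', ∃ k : ℤ, y = IsFreeGroup.of b₁ ^ k := by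
      have : Unique (IsFreeGroup.Generators R') := ⟨⟨b₁⟩, hsub⟩
      intro y
      have hmem : IsFreeGroup.toFreeGroup R' y ∈ Subgroup.zpowers (FreeGroup.of b₁) := by
        apply FreeGroup.mem_zpowers_of_commute_of
        have e : IsMulCommutative (FreeGroup (IsFreeGroup.Generators R')) := by
          have : IsCyclic (FreeGroup (IsFreeGroup.Generators R')) :=
            isCyclic_of_surjective (FreeGroup.mulEquivIntOfUnique).symm (MulEquiv.surjective _)
          infer_instance
        exact e.is_comm.comm _ _
      obtain ⟨k, hk⟩ := hmem
      refine ⟨k, ?_⟩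
      apply (IsFreeGroup.toFreeGroup R').injective
      rw [← hk, map_zpow]; simp [IsFreeGroup.of]
    intro a ha
    obtain ⟨k, hk⟩ := hcyc ⟨a, hRR' ha⟩
    obtain ⟨l, hl⟩ := hcyc ⟨x, hxR'⟩
    have : (⟨a, hRR' ha⟩ : R') * ⟨x, hxR'⟩ = ⟨x, hxR'⟩ * ⟨a, hRR' ha⟩ := by
      rw [hk, hl, ← zpow_add, ← zpow_add, add_comm]
    exact congrArg Subtype.val this
  obtain ⟨x, hx⟩ : ∃ x, x ∉ R := by
    by_contra! hx; exact htop (eq_top_iff.2 fun x _ => hx x)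
  obtain ⟨⟨a, ha⟩, ha0⟩ := Subgroup.ne_bot_iff_exists_ne_one.1 hbot
  have ha1 : a ≠ 1 := fun e => ha0 (Subtype.ext e)
  refine hF (isCyclic_of_free_center (a : F) ha1 fun y => ?_)
  by_cases hy : y ∈ R
  · have : x * y ∉ R := fun e => hx (by simpa using mul_mem e (inv_mem hy))
    have h1 := main _ this a ha
    have h2 := main _ hx a ha
    have : y = x⁻¹ * (x * y) := by group
    rw [this]; exact h2.inv_right.mul_right h1
  · exact main y hy a ha

end Commutators

/-! ### Permutations and linking numbers -/

section Link
variable {n : ℕ}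

/-- The wreath product recording the permutation of a braid and the signed number of crossings for each
ordered pair of strand positions. -/
abbrev WrG := (ℕ × ℕ → Multiplicative ℤ) ⋊[mulAutArrow (G := Equiv.Perm ℕ) (A := ℕ × ℕ) (M := Multiplicative ℤ)]
  Equiv.Perm ℕ

/-- The image of the `k`-th generator in `WrG`. -/
def wrg (k : ℕ) : WrG :=
  ⟨fun p => Multiplicative.ofAdd (if p.1 = k ∧ p.2 = k + 1 then 1 else 0), Equiv.swap k (k + 1)⟩

lemma WrG_ext {a b : WrG} (h : ∀ i j, (a.left (i, j)).toAdd = (b.left (i, j)).toAdd) (h' : ∀ i, a.right i = b.right i) :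
    a = b := by
  ext1
  · funext ⟨i, j⟩; exact Multiplicative.toAdd.injective (h i j)
  · ext i; rw [h']

lemma WrG_mul_left (a b : WrG) (i j : ℕ) : ((a * b).left (i, j)).toAdd =
    (a.left (i, j)).toAdd + (b.left (a.right⁻¹ i, a.right⁻¹ j)).toAdd := rfl

lemma WrG_mul_right (a b : WrG) (i : ℕ) : (a * b).right i = a.right (b.right i) := rfl

lemma wrg_left (k i j : ℕ) : ((wrg k).left (i, j)).toAdd = if i = k ∧ j = k + 1 then 1 else 0 := rfl
lemma wrg_right (k : ℕ) : (wrg k).right = Equiv.swap k (k + 1) := rfl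

lemma sw_far {i x : ℕ} (h : x < i ∨ i + 1 < x) : Equiv.swap i (i + 1) x = x :=
  Equiv.swap_apply_of_ne_of_ne (by omega) (by omega)

/-- Permutation and crossing numbers of braids. -/
def PL (n : ℕ) : B n →* WrG := BrLift (fun i => wrg i)
  (by
    rintro ⟨i, hi⟩ ⟨j, hj⟩ h
    simp only at h ⊢
    apply WrG_ext
    · intro a b
      simp only [WrG_mul_left, wrg_left, wrg_right, Equiv.swap_inv, Equiv.swap_apply_eq_iff]
      rw [sw_far (i := i) (x := j) (by omega), sw_far (i := i) (x := j + 1) (by omega),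
        sw_far (i := j) (x := i) (by omega), sw_far (i := j) (x := i + 1) (by omega)]
      exact add_comm _ _
    · intro a
      simp only [WrG_mul_right, wrg_right]
      have := Equiv.Perm.Disjoint.commute (f := Equiv.swap i (i + 1)) (g := Equiv.swap j (j + 1)) (by
        intro x
        by_cases hx : x < i ∨ i + 1 < x
        · left; exact sw_far hx
        · right; exact sw_far (by omega))
      exact DFunLike.congr_fun this.eq a)
  (by
    rintro ⟨i, hi⟩ ⟨j, hj⟩ h
    simp only at h ⊢
    subst h
    have e1 : Equiv.swap i (i + 1) (i + 2) = i + 2 := sw_far (by omega)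
    have e2 : Equiv.swap (i + 1) (i + 2) i = i := sw_far (i := i + 1) (by omega)
    apply WrG_ext
    · intro a b
      simp only [WrG_mul_left, wrg_left, SemidirectProduct.mul_right, wrg_right, mul_inv_rev, Equiv.Perm.mul_apply,
        Equiv.swap_inv, Equiv.swap_apply_eq_iff, Equiv.swap_apply_left, Equiv.swap_apply_right, e1, e2, add_assoc,
        Nat.reduceAdd]
      ring
    · intro a
      simp only [WrG_mul_right, wrg_right, add_assoc, Nat.reduceAdd]
      simp only [Equiv.swap_apply_def]
      split_ifs <;> first | rfl | omega)

/-- The permutation of a braid. -/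
def pm (n : ℕ) : B n →* Equiv.Perm ℕ := SemidirectProduct.rightHom.comp (PL n)

/-- The crossing number of a braid at an ordered pair of positions. -/
def Lk (g : B n) (i j : ℕ) : ℤ := ((PL n g).left (i, j)).toAdd

lemma pm_s {k : ℕ} (h : k + 1 < n) : pm n (σ' k) = Equiv.swap k (k + 1) := by
  rw [s_eq h]; simp [pm, PL, wrg_right]

lemma Lk_s {k : ℕ} (h : k + 1 < n) (i j : ℕ) : Lk (σ' k : B n) i j = if i = k ∧ j = k + 1 then 1 else 0 := by
  rw [s_eq h, Lk, PL, BrLift_σ, wrg_left]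

lemma Lk_mul (g h : B n) (i j : ℕ) : Lk (g * h) i j = Lk g i j + Lk h ((pm n g)⁻¹ i) ((pm n g)⁻¹ j) := by
  rw [Lk, map_mul, WrG_mul_left]; rfl

lemma Lk_one (i j : ℕ) : Lk (1 : B n) i j = 0 := by rw [Lk, map_one]; rfl

lemma Lk_inv (g : B n) (i j : ℕ) : Lk g⁻¹ i j = - Lk g (pm n g i) (pm n g j) := by
  have := Lk_mul g⁻¹ g i j
  rw [inv_mul_cancel, Lk_one, map_inv, inv_inv] at this; omega

/-- Pure braids. -/
def PB (n : ℕ) : Subgroup (B n) := (pm n).ker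

lemma mem_PB {g : B n} : g ∈ PB n ↔ pm n g = 1 := Iff.rfl

lemma Lk_mul_pure {g : B n} (hg : g ∈ PB n) (h : B n) (i j : ℕ) : Lk (g * h) i j = Lk g i j + Lk h i j := by
  rw [Lk_mul, mem_PB.1 hg]; simp

lemma Lk_inv_pure {g : B n} (hg : g ∈ PB n) (i j : ℕ) : Lk g⁻¹ i j = - Lk g i j := by
  rw [Lk_inv, mem_PB.1 hg]; simp

lemma Lk_zpow {g : B n} (hg : g ∈ PB n) (k : ℤ) (i j : ℕ) : Lk (g ^ k) i j = k * Lk g i j := by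
  induction k with
  | zero => simp [Lk_one]
  | succ k ih => rw [zpow_add_one, Lk_mul_pure (zpow_mem hg _), ih]; ring
  | pred k ih => rw [zpow_sub_one, Lk_mul_pure (zpow_mem hg _), ih, Lk_inv_pure hg]; ring

lemma PB_conj (g : B n) {p : B n} (hp : p ∈ PB n) : g * p * g⁻¹ ∈ PB n := by
  rw [mem_PB] at *; simp [hp]

lemma Lk_conj (g : B n) {p : B n} (hp : p ∈ PB n) (i j : ℕ) :
    Lk (g * p * g⁻¹) i j = Lk p ((pm n g)⁻¹ i) ((pm n g)⁻¹ j) := by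
  rw [Lk_mul, Lk_mul, map_mul, mem_PB.1 hp, mul_one, Lk_inv]; simp

lemma B_ind' {p : B n → Prop} (h1 : p 1) (hm : ∀ i a, i + 1 < n → p a → p (σ' i * a))
    (hi : ∀ i a, i + 1 < n → p a → p ((σ' i)⁻¹ * a)) (g : B n) : p g :=
  GG_ind (m := n) h1 (fun i a h _ => hm i a h) (fun i a h _ => hi i a h) g (by rw [GG_top]; trivial)

lemma Lk_antisymm (g : B n) (i j : ℕ) : Lk g i j - Lk g j i =
    (if i < j then 1 else 0) - (if (pm n g)⁻¹ i < (pm n g)⁻¹ j then 1 else 0)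
     := by
  induction g using B_ind' generalizing i j with
  | h1 => simp [Lk_one]
  | hm k a hk ih =>
    have := ih (Equiv.swap k (k + 1) i) (Equiv.swap k (k + 1) j)
    rw [Lk_mul, Lk_mul, map_mul, mul_inv_rev, pm_s hk, Lk_s hk, Lk_s hk, Equiv.swap_inv, Equiv.Perm.mul_apply,
      Equiv.Perm.mul_apply]
    have e : (if i = k ∧ j = k + 1 then 1 else 0 : ℤ) - (if j = k ∧ i = k + 1 then 1 else 0)
      = (if i < j then 1 else 0) - (if Equiv.swap k (k + 1) i < Equiv.swap k (k + 1) j then 1 else 0) := by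
      simp only [Equiv.swap_apply_def]; split_ifs <;> first | rfl | omega
    linarith
  | hi k a hk ih =>
    have := ih (Equiv.swap k (k + 1) i) (Equiv.swap k (k + 1) j)
    rw [Lk_mul, Lk_mul, map_mul, mul_inv_rev, map_inv, inv_inv, pm_s hk, Lk_inv, Lk_inv, pm_s hk, Lk_s hk, Lk_s hk,
      Equiv.Perm.mul_apply, Equiv.Perm.mul_apply]
    have e : -(if Equiv.swap k (k + 1) i = k ∧ Equiv.swap k (k + 1) j = k + 1 then 1 else 0 : ℤ) + (if Equiv.swap k (k + 1) j = k ∧ Equiv.swap k (k + 1) i = k + 1 then 1 else 0)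
      = (if i < j then 1 else 0) - (if Equiv.swap k (k + 1) i < Equiv.swap k (k + 1) j then 1 else 0) := by
      simp only [Equiv.swap_apply_def]; split_ifs <;> first | rfl | omega
    linarith

lemma Lk_symm {g : B n} (hg : g ∈ PB n) (i j : ℕ) : Lk g i j = Lk g j i := by
  have := Lk_antisymm g i j
  rw [mem_PB.1 hg] at this; simp at this; omega

lemma pm_fix {m : ℕ} (hm : m ≤ n) {g : B n} (hg : g ∈ GG n m) {j : ℕ} (hj : m ≤ j) : pm n g j = j := by
  have : GG n m ≤ (MulAction.stabilizer (Equiv.Perm ℕ) j).comap (pm n) := GG_ind' _ fun i hi => by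
    rw [Subgroup.mem_comap, MulAction.mem_stabilizer_iff, pm_s (by omega)]
    exact Equiv.swap_apply_of_ne_of_ne (by omega) (by omega)
  exact this hg

lemma pm_lt {g : B n} {j : ℕ} : pm n g j < n ↔ j < n := by
  have h : ∀ (g : B n) (j : ℕ), pm n g j < n → j < n := by
    intro g j h
    by_contra hj
    rw [pm_fix (m := n) le_rfl (by rw [GG_top]; trivial) (by omega)] at h; exact hj h
  refine ⟨h g j, fun hj => h g⁻¹ _ ?_⟩
  rw [map_inv]; simpa using hj

lemma pm_inv_lt {g : B n} {j : ℕ} : (pm n g)⁻¹ j < n ↔ j < n := by rw [← map_inv]; exact pm_lt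

lemma Lk_supp {m : ℕ} (hm : m ≤ n) {g : B n} (hg : g ∈ GG n m) {i j : ℕ} (hj : m ≤ i ∨ m ≤ j) : Lk g i j = 0 := by
  let K : Subgroup (B n) :=
    { carrier := {g | g ∈ GG n m ∧ ∀ i j, m ≤ i ∨ m ≤ j → Lk g i j = 0}
      one_mem' := ⟨one_mem _, fun i j _ => Lk_one _ _⟩
      mul_mem' := by
        rintro a b ⟨h1, h2⟩ ⟨h3, h4⟩
        refine ⟨mul_mem h1 h3, fun i j h => ?_⟩
        rw [Lk_mul, h2 i j h, h4, zero_add]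
        rw [← map_inv]
        rcases h with h | h
        · left; rwa [pm_fix hm (inv_mem h1) h]
        · right; rwa [pm_fix hm (inv_mem h1) h]
      inv_mem' := by
        rintro a ⟨h1, h2⟩
        refine ⟨inv_mem h1, fun i j h => ?_⟩
        rw [Lk_inv, h2, neg_zero]
        rcases h with h | h
        · left; rwa [pm_fix hm h1 h]
        · right; rwa [pm_fix hm h1 h] }
  have : GG n m ≤ K := GG_ind' _ fun k hk => ⟨s_mem hk, fun i j h => by
    rw [Lk_s (by omega), if_neg (by omega)]⟩
  exact (this hg).2 i j hj

lemma Lk_diag (g : B n) (i : ℕ) : Lk g i i = 0 := by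
  induction g using B_ind' generalizing i with
  | h1 => exact Lk_one _ _
  | hm k a hk ih => rw [Lk_mul, ih, Lk_s hk, if_neg (by omega)]; rfl
  | hi k a hk ih => rw [Lk_mul, ih, Lk_inv, Lk_s hk, if_neg (by omega)]; rfl

lemma sum_pm (g : B n) (f : ℕ → ℤ) : ∑ i ∈ Finset.range n, f ((pm n g)⁻¹ i) = ∑ i ∈ Finset.range n, f i := by
  refine Finset.sum_nbij' (fun i => (pm n g)⁻¹ i) (fun i => pm n g i) ?_ ?_ ?_ ?_ ?_
  · intro i; simp only [Finset.mem_range]; exact pm_inv_lt.2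
  · intro i; simp only [Finset.mem_range]; exact pm_lt.2
  · intro i _; simp
  · intro i _; simp
  · intro i _; rfl

lemma Lk_sum (g : B n) : ∑ i ∈ Finset.range n, ∑ j ∈ Finset.range n, Lk g i j = es g := by
  have hmul : ∀ a b : B n, ∑ i ∈ Finset.range n, ∑ j ∈ Finset.range n, Lk (a * b) i j =
    ∑ i ∈ Finset.range n, ∑ j ∈ Finset.range n, Lk a i j + ∑ i ∈ Finset.range n, ∑ j ∈ Finset.range n, Lk b i j := by
    intro a b
    simp only [Lk_mul, Finset.sum_add_distrib]
    congr 1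
    rw [sum_pm a (fun i => ∑ j ∈ Finset.range n, Lk b i ((pm n a)⁻¹ j))]
    exact Finset.sum_congr rfl fun i _ => sum_pm a (fun j => Lk b i j)
  have hs : ∀ k, k + 1 < n → ∑ i ∈ Finset.range n, ∑ j ∈ Finset.range n, Lk (σ' k : B n) i j = 1 := by
    intro k hk
    simp only [Lk_s hk]
    rw [Finset.sum_eq_single k, Finset.sum_eq_single (k + 1)]
    · simp
    · intro j _ h; rw [if_neg]; tauto
    · intro h; simp at h; omega
    · intro i _ h; apply Finset.sum_eq_zero; intro j _; rw [if_neg]; tauto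
    · intro h; simp at h; omega
  induction g using B_ind' with
  | h1 => simp [Lk_one]
  | hm k a hk ih => rw [hmul, hs k hk, ih, es_mul, es_s hk]
  | hi k a hk ih =>
    have := hmul (σ' k) ((σ' k)⁻¹ * a)
    rw [mul_inv_cancel_left, hs k hk, ih] at this
    rw [es_mul, es_inv, es_s hk]; omega

/-- The permutation describes the action on the conjugacy classes of the free generators. -/
lemma smul_conj (g : B n) (j : ℕ) : ∃ c, g • xx j = c * xx (pm n g j) * c⁻¹ := by
  induction g using B_ind' generalizing j with
  | h1 => exact ⟨1, by simp⟩
  | hm k a hk ih =>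
    obtain ⟨c, hc⟩ := ih j
    rw [mul_smul, hc, map_mul, pm_s hk, Equiv.Perm.mul_apply]
    generalize pm n a j = l
    simp only [smul_mul', smul_inv']
    by_cases h1 : l = k
    · subst h1; rw [Equiv.swap_apply_left, s_x0 hk]; exact ⟨((σ' l : B n) • c) * xx l, by simp only [mul_inv_rev, mul_assoc]⟩
    by_cases h2 : l = k + 1
    · subst h2; rw [Equiv.swap_apply_right, s_x1 hk]; exact ⟨_, rfl⟩
    · rw [Equiv.swap_apply_of_ne_of_ne h1 h2, s_x hk h1 h2]; exact ⟨_, rfl⟩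
  | hi k a hk ih =>
    obtain ⟨c, hc⟩ := ih j
    rw [mul_smul, hc, map_mul, map_inv, pm_s hk, Equiv.Perm.mul_apply, Equiv.swap_inv]
    generalize pm n a j = l
    simp only [smul_mul', smul_inv']
    by_cases h1 : l = k
    · subst h1; rw [Equiv.swap_apply_left, s_inv_x0 hk]; exact ⟨_, rfl⟩
    by_cases h2 : l = k + 1
    · subst h2; rw [Equiv.swap_apply_right, s_inv_x1 hk]; exact ⟨((σ' k : B n)⁻¹ • c) * (xx (k + 1))⁻¹, by simp only [mul_inv_rev, mul_assoc, inv_inv]⟩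
    · rw [Equiv.swap_apply_of_ne_of_ne h1 h2, s_inv_x hk h1 h2]; exact ⟨_, rfl⟩

lemma xx_conj_inj {i j : ℕ} {c : FN} (h : xx i = c * xx j * c⁻¹) : i = j := by
  have := congrArg (ex i) h
  rw [ex_conj, ex_x, ex_x, if_pos rfl] at this
  by_contra hne
  rw [if_neg (Ne.symm hne)] at this
  simpa using Multiplicative.ofAdd.injective this

lemma pm_of_smul {g : B n} {i j : ℕ} {c : FN} (h : g • xx j = c * xx i * c⁻¹) : pm n g j = i := by
  obtain ⟨d, hd⟩ := smul_conj g j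
  rw [h] at hd
  refine (xx_conj_inj (c := c⁻¹ * d) ?_).symm
  rw [mul_assoc, mul_inv_rev, inv_inv, eq_comm]
  calc _ = c⁻¹ * (d * xx (pm n g j) * d⁻¹) * c := by group
    _ = _ := by rw [← hd]; group

variable {r : ℕ}

lemma ck_pure (hr : r < n) : ck n r ∈ PB n := by
  induction r with
  | zero => exact one_mem _
  | succ r ih => rw [mem_PB, ck_succ, map_mul, map_mul, mem_PB.1 (ih (by omega)), pm_s hr]; simp

lemma Tk_pure (hr : r < n) : Tk n r ∈ PB n := by
  induction r with
  | zero => exact one_mem _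
  | succ r ih => exact mul_mem (ck_pure hr) (ih (by omega))

lemma Lk_ck (hr : r < n) (i j : ℕ) : Lk (ck n r) i j =
    if i ≠ j ∧ i ≤ r ∧ j ≤ r ∧ (i = r ∨ j = r) then 1 else 0 := by
  induction r generalizing i j with
  | zero => rw [ck, Lk_one, if_neg (by omega)]
  | succ r ih =>
    rw [ck_succ, Lk_mul, Lk_mul, map_mul, mem_PB.1 (ck_pure (by omega)), ih (by omega), pm_s hr, Lk_s hr, Lk_s hr,
      mul_one, Equiv.swap_inv]
    simp only [Equiv.swap_apply_def]
    split_ifs <;> first | rfl | omega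

lemma Lk_Tk (hr : r < n) (i j : ℕ) : Lk (Tk n r) i j =
    if i ≠ j ∧ i ≤ r ∧ j ≤ r then 1 else 0 := by
  induction r generalizing i j with
  | zero => rw [Tk, Lk_one, if_neg (by omega)]
  | succ r ih =>
    rw [Tk_succ, Lk_mul_pure (ck_pure hr), ih (by omega), Lk_ck hr]
    split_ifs <;> first | rfl | omega

lemma ka_x_eq (hr : r < n) {k : ℕ} (hk : k ≤ r) : ka n r (xx k) = seg n k r * ck n r * (seg n k r)⁻¹ := by
  rw [← ka_last, ← ka_smul hr (seg_mem (by omega)), seg_smul hk hr]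

lemma ka_pure (hr : r < n) (w : FN) : ka n r w ∈ PB n := by
  have : (ka n r).range ≤ PB n := by
    apply FreeGroup.range_lift_le
    rintro _ ⟨k, rfl⟩
    change pX r (ck n r) k ∈ PB n
    rw [← push_x]
    change ka n r (xx k) ∈ PB n
    rcases le_or_gt k r with hk | hk
    · rw [ka_x_eq hr hk]; exact PB_conj _ (ck_pure hr)
    · rw [ka_big hk]; exact one_mem _
  exact this ⟨w, rfl⟩

/-- Linking numbers of point pushes: a combination of stars. -/
lemma Lk_ka (hr : r < n) (w : FN) (i j : ℕ) (hij : i ≠ j) (hi : i ≤ r) (hj : j ≤ r) :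
    Lk (ka n r w) i j = (ex i w).toAdd + (ex j w).toAdd := by
  have hx : ∀ k, Lk (ka n r (xx k)) i j = (ex i (xx k)).toAdd + (ex j (xx k)).toAdd := by
    intro k
    rw [ex_x, ex_x]
    simp only [toAdd_ofAdd]
    rcases le_or_gt k r with hk | hk
    · rw [ka_x_eq hr hk, Lk_conj _ (ck_pure hr), Lk_ck hr]
      have hp : pm n (seg n k r) r = k := pm_of_smul (c := 1) (by rw [seg_smul hk hr]; simp)
      have key : ∀ a ≤ r, ((pm n (seg n k r))⁻¹ a = r ↔ k = a) ∧ (pm n (seg n k r))⁻¹ a ≤ r := by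
        intro a ha
        constructor
        · rw [Equiv.Perm.inv_eq_iff_eq, hp, eq_comm]
        · by_contra h
          have e := pm_fix (m := r + 1) (by omega) (seg_mem (n := n) (j := k) (k := r) (by omega)) (show r + 1 ≤ (pm n (seg n k r))⁻¹ a by omega)
          rw [show pm n (seg n k r) ((pm n (seg n k r))⁻¹ a) = a from Equiv.apply_symm_apply _ _] at e; omega
      have k1 := key i hi
      have k2 := key j hj
      have k3 : (pm n (seg n k r))⁻¹ i ≠ (pm n (seg n k r))⁻¹ j := fun e => hij ((pm n (seg n k r))⁻¹.injective e)
      generalize (pm n (seg n k r))⁻¹ i = a at *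
      generalize (pm n (seg n k r))⁻¹ j = b at *
      split_ifs <;> omega
    · rw [ka_big hk, Lk_one, if_neg (by omega), if_neg (by omega)]; rfl
  induction w using FreeGroup.induction_on with
  | C1 => simp [Lk_one]
  | of k => exact hx k
  | inv_of k ih => rw [map_inv, Lk_inv_pure (ka_pure hr _), map_inv (ex i), map_inv (ex j)]
                   have := hx k
                   change -Lk (ka n r (xx k)) i j = -(ex i (xx k)).toAdd + -(ex j (xx k)).toAdd
                   linarith
  | mul a b h1 h2 => rw [map_mul, Lk_mul_pure (ka_pure hr _), h1, h2]; simp only [map_mul, toAdd_mul]; ring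

end Link

/-! ### The extended point-pushing subgroup -/

section TL
open scoped commutatorElement
variable {n r : ℕ}

/-- The kernel of `G_{r+1} → Aut (F_{r+1} / Π)` modulo inner automorphisms: the point pushes along the
boundary, together with the full twists. -/
def Kh (hr : r < n) : Subgroup (B n) where
  carrier := {g | ∃ w, ∃ k : ℤ, g = ka n r w * Tk n r ^ k}
  one_mem' := ⟨1, 0, by simp⟩
  mul_mem' := by
    rintro _ _ ⟨w, k, rfl⟩ ⟨v, l, rfl⟩
    refine ⟨w * v, k + l, ?_⟩
    rw [map_mul, zpow_add, mul_assoc, mul_assoc, ← mul_assoc (Tk n r ^ k),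
      ((Tk_comm hr (ka_mem v)).zpow_left k).eq]
    simp only [mul_assoc]
  inv_mem' := by
    rintro _ ⟨w, k, rfl⟩
    refine ⟨w⁻¹, -k, ?_⟩
    rw [mul_inv_rev, map_inv, zpow_neg, ((Tk_comm hr (inv_mem (ka_mem w))).zpow_left k).inv_left.eq]

lemma ka_mem_Kh (hr : r < n) (w : FN) : ka n r w ∈ Kh hr := ⟨w, 0, by simp⟩
lemma Tk_mem_Kh (hr : r < n) : Tk n r ∈ Kh hr := ⟨1, 1, by simp⟩

lemma Kh_le (hr : r < n) : Kh hr ≤ GG n (r + 1) := by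
  rintro _ ⟨w, k, rfl⟩; exact mul_mem (ka_mem w) (zpow_mem (Tk_mem r) k)

lemma Kh_pure (hr : r < n) : Kh hr ≤ PB n := by
  rintro _ ⟨w, k, rfl⟩; exact mul_mem (ka_pure hr w) (zpow_mem (Tk_pure hr) k)

lemma Kh_conj (hr : r < n) {g : B n} (hg : g ∈ GG n (r + 1)) {x : B n} (hx : x ∈ Kh hr) : g * x * g⁻¹ ∈ Kh hr := by
  obtain ⟨w, k, rfl⟩ := hx
  refine ⟨g • w, k, ?_⟩
  rw [ka_smul hr hg, mul_assoc, mul_assoc, ((Tk_comm hr (inv_mem hg)).zpow_left k).eq]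
  simp only [mul_assoc]

lemma commute_two {u : FN} {i j : ℕ} (hij : i ≠ j) (h0 : Commute u (xx i)) (h1 : Commute u (xx j)) : u = 1 := by
  obtain ⟨k, hk⟩ := FreeGroup.mem_zpowers_of_commute_of _ _ h0
  obtain ⟨l, hl⟩ := FreeGroup.mem_zpowers_of_commute_of _ _ h1
  have e : xx i ^ k = xx j ^ l := hk.trans hl.symm
  have := congrArg (ex i) e
  rw [map_zpow, map_zpow, ex_x, ex_x, if_pos rfl, if_neg hij.symm] at this
  have h := congrArg Multiplicative.toAdd this
  simp at h
  rw [← hk, h]; simp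

lemma qq_center (h2 : 2 ≤ r) {u : FN} (h : ∀ y, qq r u * qq r y * (qq r u)⁻¹ = qq r y) : qq r u = 1 := by
  have key : ∀ j < r, Commute (qq r u) (xx j) := by
    intro j hj
    have := h (xx j)
    rw [qq_x, if_pos hj, mul_inv_eq_iff_eq_mul] at this
    exact this
  exact commute_two (show 0 ≠ 1 by omega) (key 0 (by omega)) (key 1 (by omega))

lemma qq_eq_of_ka (h2 : 2 ≤ r) (hr : r < n) {u v : FN} (h : ∃ k : ℤ, ka n r u = ka n r v * Tk n r ^ k) :
    qq r u = qq r v := by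
  obtain ⟨k, hk⟩ := h
  have hT : ∀ (k : ℤ) y, qq r (Tk n r ^ k • y) = qq r y := by
    intro k
    induction k with
    | zero => simp
    | succ k ih => intro y; rw [zpow_add_one, mul_smul, ih, Tk_qq hr]
    | pred k ih => intro y; rw [zpow_sub_one, mul_smul, ih, ← Tk_qq hr, smul_inv_smul]
  have key : qq r (v⁻¹ * u) = 1 := by
    apply qq_center h2
    intro y
    have h1 := qq_ka hr u y
    rw [hk, mul_smul, qq_ka hr, hT] at h1
    rw [map_mul, map_inv]
    calc _ = (qq r v)⁻¹ * (qq r u * qq r y * (qq r u)⁻¹) * qq r v := by group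
      _ = _ := by rw [← h1]; group
  rw [map_mul, map_inv, inv_mul_eq_one] at key; exact key.symm

lemma kaPi_mem (h2 : 2 ≤ r) (hr : r < n) : ka n r (Pi (r + 1)) ∈ Subgroup.zpowers (Tk n r) := by
  obtain ⟨p, rfl⟩ : ∃ p, r = p + 1 := ⟨r - 1, by omega⟩
  refine ker_lemma (by omega) hr (ka_mem _) fun y => ?_
  rw [qq_ka hr, qq_Pi_succ]; simp

lemma ka_qq_T (h2 : 2 ≤ r) (hr : r < n) (u : FN) : ∃ k : ℤ, ka n r u = ka n r (qq r u) * Tk n r ^ k := by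
  obtain ⟨k, hk⟩ := ka_qq hr u
  obtain ⟨l, hl⟩ := kaPi_mem h2 hr
  exact ⟨l * k, by rw [hk, ← hl, zpow_mul]⟩

/-- Elements of `Kh` are pushes along words in the first `r` letters, up to full twists. -/
lemma Kh_form (h2 : 2 ≤ r) (hr : r < n) {g : B n} (hg : g ∈ Kh hr) :
    ∃ w, pr r w = w ∧ ∃ k : ℤ, g = ka n r w * Tk n r ^ k := by
  obtain ⟨w, k, rfl⟩ := hg
  obtain ⟨l, hl⟩ := ka_qq_T h2 hr w
  exact ⟨qq r w, pr_qq w, l + k, by rw [hl, zpow_add, mul_assoc]⟩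

/-- `K̂_{r+1} ∩ G_r ≤ ⟨T_r⟩`. -/
lemma Kh_inter (h2 : 2 ≤ r) (hr : r < n) {g : B n} (hg : g ∈ Kh hr) (hg' : g ∈ GG n r) :
    g ∈ Subgroup.zpowers (Tk n (r - 1)) := by
  obtain ⟨w, hw, k, e⟩ := Kh_form h2 hr hg
  have hqw : qq r w = w := by rw [← hw, qq_pr']
  have hT : ∀ (k : ℤ) y, qq r (Tk n r ^ k • y) = qq r y := by
    intro k
    induction k with
    | zero => simp
    | succ k ih => intro y; rw [zpow_add_one, mul_smul, ih, Tk_qq hr]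
    | pred k ih => intro y; rw [zpow_sub_one, mul_smul, ih, ← Tk_qq hr, smul_inv_smul]
  have hact : ∀ y, g • pr r y = w * pr r y * w⁻¹ := by
    intro y
    rw [← pr_smul hr.le hg', ← qq_pr', pr_smul hr.le hg', e, mul_smul, qq_ka hr, hT, hqw, qq_pr']
  have hPi : Commute (Pi r) w := by
    have := hact (Pi r)
    rw [pr_Pi le_rfl, GG_Pi hr.le hg', eq_mul_inv_iff_mul_eq] at this
    exact this
  obtain ⟨l, hl⟩ := mem_zpowers_of_commute_ex (Pi_ex (show 0 < r by omega)) hPi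
  obtain ⟨p, rfl⟩ : ∃ p, r = p + 1 := ⟨r - 1, by omega⟩
  refine ⟨l, ?_⟩
  simp only [Nat.add_sub_cancel]
  have hT' : ∀ (l : ℤ) y, Tk n p ^ l • pr (p + 1) y = Pi (p + 1) ^ l * pr (p + 1) y * (Pi (p + 1) ^ l)⁻¹ := by
    intro l
    have hpi : Tk n p • Pi (p + 1) = Pi (p + 1) := GG_Pi (by omega) (Tk_mem p)
    induction l with
    | zero => simp
    | succ k ih => intro y; rw [zpow_add_one, mul_smul, Tk_smul (by omega), smul_mul', smul_mul', smul_inv', ih,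
                     GG_Pi (by omega) (zpow_mem (Tk_mem p) _)]; group
    | pred k ih =>
      intro y
      have h1 : (Tk n p)⁻¹ • pr (p + 1) y = (Pi (p + 1))⁻¹ * pr (p + 1) y * Pi (p + 1) := by
        rw [inv_smul_eq_iff, smul_mul', smul_mul', smul_inv', hpi, Tk_smul (by omega)]; group
      rw [zpow_sub_one, mul_smul, h1, smul_mul', smul_mul', smul_inv', ih,
                     GG_Pi (by omega) (zpow_mem (Tk_mem p) _)]; group
  apply faithful_gen
  intro j
  by_cases hj : j < p + 1
  · have := hact (xx j)
    have h3 := hT' l (xx j)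
    rw [pr_x, if_pos hj] at this h3
    rw [this, h3]; change _ = _; rw [← hl]
  · rw [GG_fix (m := p + 1) (by omega) (zpow_mem (Tk_mem p) _) (by omega), GG_fix (by omega) hg' (by omega)]

/-- Pure braids on the strands `0, …, r`. -/
def PG (n r : ℕ) : Subgroup (B n) := GG n (r + 1) ⊓ PB n

lemma PG_mono {a b : ℕ} (h : a ≤ b) : PG n a ≤ PG n b := inf_le_inf_right _ (GG_mono (by omega))

lemma PG_conj {r m : ℕ} (hm : m ≤ r + 1) {g : B n} (hg : g ∈ GG n m) {x : B n} (hx : x ∈ PG n r) : g * x * g⁻¹ ∈ PG n r :=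
  ⟨mul_mem (mul_mem (GG_mono hm hg) hx.1) ((GG n _).inv_mem (GG_mono hm hg)), PB_conj _ hx.2⟩

/-- `P_{r+1} = P_r K̂_{r+1}`. -/
lemma PG_factor (h2 : 1 ≤ r) (hr : r < n) {g : B n} (hg : g ∈ PG n r) :
    ∃ h ∈ PG n (r - 1), ∃ k ∈ Kh hr, g = h * k := by
  obtain ⟨p, rfl⟩ : ∃ p, r = p + 1 := ⟨r - 1, by omega⟩
  simp only [Nat.add_sub_cancel]
  let S : Subgroup (B n) :=
    { carrier := {g | ∃ h ∈ PG n p, ∃ k ∈ Kh hr, g = h * k}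
      one_mem' := ⟨1, one_mem _, 1, one_mem _, by simp⟩
      mul_mem' := by
        rintro _ _ ⟨h, hh, k, hk, rfl⟩ ⟨h', hh', k', hk', rfl⟩
        refine ⟨h * h', mul_mem hh hh', (h'⁻¹ * k * h'⁻¹⁻¹) * k', mul_mem (Kh_conj hr ?_ hk) hk', by group⟩
        exact GG_mono (by omega) (inv_mem hh'.1)
      inv_mem' := by
        rintro _ ⟨h, hh, k, hk, rfl⟩
        refine ⟨h⁻¹, inv_mem hh, h * k⁻¹ * h⁻¹, Kh_conj hr (GG_mono (by omega) hh.1) (inv_mem hk), by group⟩ }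
  have hS : ∀ b ∈ GG n (p + 1), ∀ x ∈ S, b * x * b⁻¹ ∈ S := by
    rintro b hb _ ⟨h, hh, k, hk, rfl⟩
    exact ⟨b * h * b⁻¹, PG_conj le_rfl hb hh, b * k * b⁻¹, Kh_conj hr (GG_mono (by omega) hb) hk, by group⟩
  have hs : (σ' p : B n)⁻¹ * (σ' p)⁻¹ ∈ S := by
    refine ⟨ck n p, ⟨ck_mem p, ck_pure (by omega)⟩, (ka n (p + 1) (xx p))⁻¹, inv_mem (ka_mem_Kh hr _), ?_⟩
    rw [ka_x_eq hr (by omega), seg_cons (by omega), seg_self, ck_succ]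
    group
  have hal : ∀ w, al n p w ∈ S := by
    intro w
    have : (al n p).range ≤ S := by
      apply FreeGroup.range_lift_le
      rintro _ ⟨k, rfl⟩
      change pX p ((σ' p : B n)⁻¹ * (σ' p)⁻¹) k ∈ S
      rw [pX]
      split_ifs
      · exact hS _ (seg_mem (by omega)) _ hs
      · exact one_mem _
    exact this ⟨w, rfl⟩
  obtain ⟨w, b, hb, e⟩ := factor_pure hr hg.1 (by
    obtain ⟨c, hc⟩ := smul_conj g (p + 1)
    rw [mem_PB.1 hg.2] at hc; exact ⟨c, hc⟩)
  rw [e]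
  refine mul_mem (hal w) (?_ : b ∈ S)
  refine ⟨b, ⟨hb, ?_⟩, 1, one_mem _, by simp⟩
  have hb' : b = (al n p w)⁻¹ * g := by rw [e]; group
  rw [hb']
  refine mul_mem ((PB n).inv_mem ?_) hg.2
  obtain ⟨h, hh, k, hk, e'⟩ := hal w
  rw [e']; exact mul_mem hh.2 (Kh_pure hr hk)

lemma rel_step {G : Type*} [Group G] (Γ K Q R R' : Subgroup G) (hKΓ : K ≤ Γ)
    (hKn : ∀ g ∈ Γ, ∀ k ∈ K, g * k * g⁻¹ ∈ K) (hQ : Q ≤ Γ) (hQK : ∀ g ∈ Γ, ∃ q ∈ Q, ∃ k ∈ K, g = q * k)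
    (hR : R ≤ Γ) {z : G} (hz : z ∈ K) (h : ∀ ρ ∈ R, ∀ p ∈ Γ, ⁅ρ, p⁆ ∈ ⁅R, R⁆ ⊔ Subgroup.zpowers z)
    (hR' : ∀ h, h ∈ R' ↔ h ∈ Q ∧ ∃ k ∈ K, h * k ∈ R) {x p : G} (hx : x ∈ R') (hp : p ∈ Q) :
    ⁅x, p⁆ ∈ ⁅R', R'⁆ ⊔ (K ⊓ Q) := by
  have hR'Q : R' ≤ Q := fun x hx => ((hR' x).1 hx).1
  have hc : ⁅R', R'⁆ ≤ Q := by
    rw [Subgroup.commutator_le]; intro a ha b hb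
    rw [commutatorElement_def]
    exact mul_mem (mul_mem (mul_mem (hR'Q ha) (hR'Q hb)) (inv_mem (hR'Q ha))) (inv_mem (hR'Q hb))
  have hnorm : (K.subgroupOf Γ).Normal := ⟨fun k hk g => hKn g g.2 k hk⟩
  have hcong : ∀ a ∈ Γ, ∀ b ∈ Γ, ∀ k ∈ K, ∀ l ∈ K, ⁅a, b⁆⁻¹ * ⁅a * k, b * l⁆ ∈ K := by
    intro a ha b hb k hk l hl
    have e : QuotientGroup.mk' (K.subgroupOf Γ) (⁅(⟨a, ha⟩ : Γ), ⟨b, hb⟩⁆⁻¹ * ⁅(⟨a, ha⟩ : Γ) * ⟨k, hKΓ hk⟩, (⟨b, hb⟩ : Γ) * ⟨l, hKΓ hl⟩⁆) = 1 := by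
      have hk1 : QuotientGroup.mk' (K.subgroupOf Γ) ⟨k, hKΓ hk⟩ = 1 := (QuotientGroup.eq_one_iff _).2 hk
      have hl1 : QuotientGroup.mk' (K.subgroupOf Γ) ⟨l, hKΓ hl⟩ = 1 := (QuotientGroup.eq_one_iff _).2 hl
      rw [map_mul, map_inv, map_commutatorElement, map_commutatorElement, map_mul, map_mul, hk1, hl1, mul_one, mul_one,
        inv_mul_cancel]
    exact (QuotientGroup.eq_one_iff (N := K.subgroupOf Γ) _).1 e
  let D : Subgroup G :=
    { carrier := {g | ∃ c ∈ ⁅R', R'⁆, ∃ k ∈ K, g = c * k}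
      one_mem' := ⟨1, one_mem _, 1, one_mem _, by simp⟩
      mul_mem' := by
        rintro _ _ ⟨c, hc1, k, hk, rfl⟩ ⟨d, hd, l, hl, rfl⟩
        exact ⟨c * d, mul_mem hc1 hd, (d⁻¹ * k * d⁻¹⁻¹) * l, mul_mem (hKn _ (hQ (hc (inv_mem hd))) _ hk) hl, by group⟩
      inv_mem' := by
        rintro _ ⟨c, hc1, k, hk, rfl⟩
        exact ⟨c⁻¹, inv_mem hc1, c * k⁻¹ * c⁻¹, hKn _ (hQ (hc hc1)) _ (inv_mem hk), by group⟩ }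
  have hD : ⁅R, R⁆ ⊔ Subgroup.zpowers z ≤ D := by
    apply sup_le
    · rw [Subgroup.commutator_le]
      intro a ha b hb
      obtain ⟨q, hq, k, hk, rfl⟩ := hQK a (hR ha)
      obtain ⟨q', hq', l, hl, rfl⟩ := hQK b (hR hb)
      refine ⟨⁅q, q'⁆, Subgroup.commutator_mem_commutator ((hR' _).2 ⟨hq, k, hk, ha⟩) ((hR' _).2 ⟨hq', l, hl, hb⟩),
        _, hcong q (hQ hq) q' (hQ hq') k hk l hl, by group⟩
    · rw [Subgroup.zpowers_le]; exact ⟨1, one_mem _, z, hz, by simp⟩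
  obtain ⟨hxQ, k, hk, hxk⟩ := (hR' x).1 hx
  obtain ⟨c, hc1, l, hl, e⟩ := hD (h _ hxk p (hQ hp))
  have h1 := hcong x (hQ hxQ) p (hQ hp) k hk 1 (one_mem _)
  rw [mul_one, e] at h1
  have e2 : c⁻¹ * ⁅x, p⁆ = l * (⁅x, p⁆⁻¹ * (c * l))⁻¹ := by group
  have h3 : c⁻¹ * ⁅x, p⁆ ∈ K := by rw [e2]; exact mul_mem hl (inv_mem h1)
  have h4 : c⁻¹ * ⁅x, p⁆ ∈ Q := mul_mem (inv_mem (hc hc1)) (by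
    rw [commutatorElement_def]; exact mul_mem (mul_mem (mul_mem hxQ hp) (inv_mem hxQ)) (inv_mem hp))
  have e3 : ⁅x, p⁆ = c * (c⁻¹ * ⁅x, p⁆) := by group
  rw [e3]
  exact mul_mem (Subgroup.mem_sup_left hc1) (Subgroup.mem_sup_right ⟨h3, h4⟩)

end TL

/-! ### Recognising the point-pushing subgroup -/

section TL2
open scoped commutatorElement
variable {n r : ℕ}

/-- The hypotheses on a subgroup of the pure braid group used to recognise central and point-pushing
subgroups. -/
structure TLH (n r : ℕ) (R : Subgroup (B n)) : Prop where
  le : R ≤ PG n r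
  conj : ∀ p ∈ PG n r, ∀ ρ ∈ R, p * ρ * p⁻¹ ∈ R
  tw : Tk n r ∈ R
  comm : ∀ ρ ∈ R, ∀ p ∈ PG n r, ⁅ρ, p⁆ ∈ ⁅R, R⁆ ⊔ Subgroup.zpowers (Tk n r)

/-- All linking numbers equal. -/
def LC (r : ℕ) (g : B n) : Prop := ∃ c : ℤ, ∀ i j, i ≠ j → i ≤ r → j ≤ r → Lk g i j = c

/-- Linking numbers of the form `c + e i + e j`. -/
def LEf (r : ℕ) (g : B n) : Prop := ∃ (c : ℤ) (e : ℕ → ℤ), ∀ i j, i ≠ j → i ≤ r → j ≤ r → Lk g i j = c + e i + e j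

lemma LEf_mul {g h : B n} (hg : g ∈ PB n) (h1 : LEf r g) (h2 : LEf r h) : LEf r (g * h) := by
  obtain ⟨c, e, h1⟩ := h1
  obtain ⟨d, f, h2⟩ := h2
  refine ⟨c + d, e + f, fun i j hij hi hj => ?_⟩
  rw [Lk_mul_pure hg, h1 i j hij hi hj, h2 i j hij hi hj]; simp; ring

lemma LEf_inv {g : B n} (hg : g ∈ PB n) (h1 : LEf r g) : LEf r g⁻¹ := by
  obtain ⟨c, e, h1⟩ := h1
  refine ⟨-c, -e, fun i j hij hi hj => ?_⟩
  rw [Lk_inv_pure hg, h1 i j hij hi hj]; simp; ring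

lemma LEf_Kh (hr : r < n) {g : B n} (hg : g ∈ Kh hr) : LEf r g := by
  obtain ⟨w, k, rfl⟩ := hg
  refine LEf_mul (ka_pure hr w) ⟨0, fun i => (ex i w).toAdd, fun i j hij hi hj => ?_⟩
    ⟨k, 0, fun i j hij hi hj => ?_⟩
  · rw [Lk_ka hr w i j hij hi hj]; ring
  · rw [Lk_zpow (Tk_pure hr), Lk_Tk hr, if_pos ⟨hij, hi, hj⟩]; simp

lemma A_step (h2 : 2 ≤ r) (hr : r < n)
    (ih : ∀ R : Subgroup (B n), TLH n (r - 1) R → (∀ ρ ∈ R, LC (r - 1) ρ) → R ≤ Subgroup.zpowers (Tk n (r - 1)))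
    {R : Subgroup (B n)} (H : TLH n r R) (hL : ∀ ρ ∈ R, LEf r ρ) : R ≤ Kh hr := by
  have hTK : Tk n (r - 1) ∈ Kh hr := by
    obtain ⟨p, rfl⟩ : ∃ p, r = p + 1 := ⟨r - 1, by omega⟩
    have : Tk n (p + 1 - 1) = (ka n (p + 1) (xx (p + 1)))⁻¹ * Tk n (p + 1) := by
      rw [ka_last, Tk_succ]; simp
    rw [this]; exact mul_mem (inv_mem (ka_mem_Kh hr _)) (Tk_mem_Kh hr)
  have hrr : r - 1 + 1 = r := by omega
  have hGG : ∀ {x}, x ∈ PG n (r - 1) → x ∈ GG n (r + 1) := fun hx => (PG_mono (by omega) hx : _ ∈ PG n r).1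
  let R' : Subgroup (B n) :=
    { carrier := {h | h ∈ PG n (r - 1) ∧ ∃ k ∈ Kh hr, h * k ∈ R}
      one_mem' := ⟨one_mem _, 1, one_mem _, by rw [one_mul]; exact one_mem _⟩
      mul_mem' := by
        rintro a b ⟨ha, k, hk, hak⟩ ⟨hb, l, hl, hbl⟩
        refine ⟨mul_mem ha hb, (b⁻¹ * k * b⁻¹⁻¹) * l, mul_mem (Kh_conj hr (hGG (inv_mem hb)) hk) hl, ?_⟩
        have : a * b * (b⁻¹ * k * b⁻¹⁻¹ * l) = (a * k) * (b * l) := by group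
        rw [this]; exact mul_mem hak hbl
      inv_mem' := by
        rintro a ⟨ha, k, hk, hak⟩
        refine ⟨inv_mem ha, a * k⁻¹ * a⁻¹, Kh_conj hr (hGG ha) (inv_mem hk), ?_⟩
        have : a⁻¹ * (a * k⁻¹ * a⁻¹) = (a * k)⁻¹ := by group
        rw [this]; exact inv_mem hak }
  have hR' : R' ≤ Subgroup.zpowers (Tk n (r - 1)) := by
    apply ih
    · refine ⟨fun x hx => hx.1, ?_, ?_, ?_⟩
      · rintro p hp x ⟨hx, k, hk, hxk⟩
        refine ⟨mul_mem (mul_mem hp hx) (inv_mem hp), p * k * p⁻¹, Kh_conj hr (hGG hp) hk, ?_⟩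
        have : p * x * p⁻¹ * (p * k * p⁻¹) = p * (x * k) * p⁻¹ := by group
        rw [this]; exact H.conj p (PG_mono (by omega) hp) _ hxk
      · refine ⟨⟨Tk_mem _, Tk_pure (by omega)⟩, _, inv_mem hTK, ?_⟩
        rw [mul_inv_cancel]; exact one_mem _
      · intro ρ hρ p hp
        have := rel_step (PG n r) (Kh hr) (PG n (r - 1)) R R' (fun x hx => ⟨Kh_le hr hx, Kh_pure hr hx⟩)
          (fun g hg k hk => Kh_conj hr hg.1 hk) (PG_mono (by omega)) (fun g hg => PG_factor (by omega) hr hg) H.le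
          (Tk_mem_Kh hr) H.comm (fun h => Iff.rfl) hρ hp
        have hle : Kh hr ⊓ PG n (r - 1) ≤ Subgroup.zpowers (Tk n (r - 1)) := by
          rintro x ⟨hx, hx'⟩
          exact Kh_inter h2 hr hx (by have := hx'.1; rwa [hrr] at this)
        exact SetLike.le_def.1 (sup_le_sup_left hle _) this
    · rintro h ⟨hh, k, hk, hhk⟩
      have e : LEf r h := by
        have : h = (h * k) * k⁻¹ := by group
        rw [this]
        exact LEf_mul (H.le hhk).2 (hL _ hhk) (LEf_inv (Kh_pure hr hk) (LEf_Kh hr hk))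
      obtain ⟨c, e, he⟩ := e
      have hz : ∀ i < r, c + e i + e r = 0 := by
        intro i hi
        rw [← he i r (by omega) (by omega) le_rfl]
        exact Lk_supp (m := r) (by omega) (by have := hh.1; rwa [hrr] at this) (Or.inr le_rfl)
      refine ⟨-c - 2 * e r, fun i j hij hi hj => ?_⟩
      rw [he i j hij (by omega) (by omega)]
      have h1 := hz i (by omega)
      have h2 := hz j (by omega)
      linarith
  intro ρ hρ
  obtain ⟨h, hh, k, hk, rfl⟩ := PG_factor (by omega) hr (H.le hρ)
  have : h ∈ R' := ⟨hh, k, hk, hρ⟩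
  obtain ⟨l, hl⟩ := hR' this
  exact mul_mem (by rw [← hl]; exact zpow_mem hTK l) hk

lemma TL_step (h2 : 2 ≤ r) (hr : r < n) {R : Subgroup (B n)} (H : TLH n r R) (hL : ∀ ρ ∈ R, LC r ρ)
    (hK : R ≤ Kh hr) : R ≤ Subgroup.zpowers (Tk n r) := by
  let F := (pr r).range
  let f : F →* B n := (ka n r).comp F.subtype
  let Rb : Subgroup F := R.comap f
  have hfP : ∀ v : F, f v ∈ PG n r := fun v => ⟨ka_mem _, ka_pure hr _⟩
  have hnorm : Rb.Normal := ⟨fun a ha v => by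
    change f (v * a * v⁻¹) ∈ R
    rw [map_mul, map_mul, map_inv]; exact H.conj _ (hfP v) _ ha⟩
  have hF : ∀ w : F, pr r w = w := by rintro ⟨_, w, rfl⟩; exact pr_pr r w
  -- elements of `R` modulo twists
  have hRf : ∀ ρ ∈ R, ∃ w ∈ Rb, ∃ k : ℤ, ρ = f w * Tk n r ^ k := by
    intro ρ hρ
    obtain ⟨w, hw, k, e⟩ := Kh_form h2 hr (hK hρ)
    refine ⟨⟨w, w, hw⟩, ?_, k, e⟩
    change ka n r w ∈ R
    have : ka n r w = ρ * (Tk n r ^ k)⁻¹ := by rw [e]; group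
    rw [this]; exact mul_mem hρ (inv_mem (zpow_mem H.tw k))
  have hTf : ∀ (w : F) (k : ℤ), Commute (f w) (Tk n r ^ k) := fun w k => ((Tk_comm hr (ka_mem _)).zpow_left k).symm
  let D : Subgroup (B n) :=
    { carrier := {g | ∃ c ∈ ⁅Rb, Rb⁆, ∃ k : ℤ, g = f c * Tk n r ^ k}
      one_mem' := ⟨1, one_mem _, 0, by simp⟩
      mul_mem' := by
        rintro _ _ ⟨c, hc, k, rfl⟩ ⟨d, hd, l, rfl⟩
        refine ⟨c * d, mul_mem hc hd, k + l, ?_⟩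
        rw [map_mul, zpow_add, mul_assoc, mul_assoc, ← mul_assoc (Tk n r ^ k), ← (hTf d k).eq]
        simp only [mul_assoc]
      inv_mem' := by
        rintro _ ⟨c, hc, k, rfl⟩
        refine ⟨c⁻¹, inv_mem hc, -k, ?_⟩
        rw [mul_inv_rev, map_inv, zpow_neg, ((hTf c k).inv_inv).eq] }
  have hD : ⁅R, R⁆ ⊔ Subgroup.zpowers (Tk n r) ≤ D := by
    apply sup_le
    · rw [Subgroup.commutator_le]
      intro a ha b hb
      obtain ⟨w, hw, k, rfl⟩ := hRf a ha
      obtain ⟨v, hv, l, rfl⟩ := hRf b hb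
      refine ⟨⁅w, v⁆, Subgroup.commutator_mem_commutator hw hv, 0, ?_⟩
      rw [zpow_zero, mul_one, map_commutatorElement, commutatorElement_def, commutatorElement_def]
      have hc1 := hTf w l
      have hc2 := hTf v k
      have hc3 : Commute (Tk n r ^ k) (Tk n r ^ l) := Commute.zpow_zpow_self _ _ _
      calc _ = f w * (Tk n r ^ k * f v) * (Tk n r ^ l * (Tk n r ^ k)⁻¹) * (f w)⁻¹ * (Tk n r ^ l)⁻¹ * (f v)⁻¹ := by group
        _ = f w * f v * (Tk n r ^ k * (Tk n r ^ l * (Tk n r ^ k)⁻¹)) * (f w)⁻¹ * (Tk n r ^ l)⁻¹ * (f v)⁻¹ := by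
            rw [← hc2.eq]; group
        _ = f w * f v * (Tk n r ^ l * (f w)⁻¹) * (Tk n r ^ l)⁻¹ * (f v)⁻¹ := by
            rw [← mul_assoc (Tk n r ^ k), hc3.eq]; group
        _ = _ := by rw [← (hc1.inv_left).eq]; group
    · rw [Subgroup.zpowers_le]; exact ⟨1, one_mem _, 1, by simp⟩
  have hrel : Rb = ⊥ ∨ Rb = ⊤ := by
    apply relation_lemma
    · intro a ha b
      obtain ⟨c, hc, k, e⟩ := hD (H.comm _ ha _ (hfP b))
      rw [← map_commutatorElement] at e
      have := qq_eq_of_ka h2 hr ⟨k, e⟩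
      have e2 : ∀ w : F, qq r (w : FN) = w := fun w => by rw [← hF w, qq_pr']
      change qq r ((⁅a, b⁆ : F) : FN) = qq r (c : FN) at this
      rw [e2, e2] at this
      rw [Subtype.ext this]; exact hc
    · intro hcyc
      have hx : ∀ j < r, xx j ∈ F := fun j hj => ⟨xx j, by rw [pr_x, if_pos hj]⟩
      have hcm : Commute (xx 0) (xx 1) := by
        obtain ⟨g, hg⟩ := hcyc.exists_generator
        obtain ⟨k, hk⟩ := hg ⟨xx 0, hx 0 (by omega)⟩
        obtain ⟨l, hl⟩ := hg ⟨xx 1, hx 1 (by omega)⟩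
        have h1 := congrArg Subtype.val hk
        have h2 := congrArg Subtype.val hl
        simp only [Subgroup.coe_zpow] at h1 h2
        rw [← h1, ← h2]; exact Commute.zpow_zpow_self _ _ _
      have := commute_two (show 0 ≠ 1 by omega) (Commute.refl (xx 0)) hcm
      exact FreeGroup.of_ne_one _ this
  rcases hrel with h | h
  · intro ρ hρ
    obtain ⟨w, hw, k, rfl⟩ := hRf ρ hρ
    rw [h, Subgroup.mem_bot] at hw
    rw [hw, map_one, one_mul]; exact ⟨k, rfl⟩
  · exfalso
    have hx : xx 0 ∈ F := ⟨xx 0, by rw [pr_x, if_pos (by omega)]⟩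
    have : (⟨xx 0, hx⟩ : F) ∈ Rb := by rw [h]; trivial
    obtain ⟨c, hc⟩ := hL _ this
    have h1 := hc 0 1 (by omega) (by omega) (by omega)
    have h3 := hc 1 2 (by omega) (by omega) (by omega)
    change Lk (ka n r (xx 0)) _ _ = c at h1 h3
    rw [Lk_ka hr _ _ _ (by omega) (by omega) (by omega), ex_x, ex_x] at h1 h3
    simp at h1 h3; omega

/-- Under the hypotheses `TLH`, a subgroup whose elements have constant linking numbers is central: induction on the
number of strands, using `relation_lemma` for the point pushes. -/
theorem TL (h1 : 1 ≤ r) (hr : r < n) {R : Subgroup (B n)} (H : TLH n r R) (hL : ∀ ρ ∈ R, LC r ρ) :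
    R ≤ Subgroup.zpowers (Tk n r) := by
  induction r, h1 using Nat.le_induction generalizing R with
  | base =>
    intro ρ hρ
    have h1 : GG n 2 ≤ Subgroup.zpowers (σ' 0) := GG_ind' _ fun i hi => by
      obtain rfl : i = 0 := by omega
      exact Subgroup.mem_zpowers _
    obtain ⟨k, hk⟩ := h1 (H.le hρ).1
    have hp := mem_PB.1 (H.le hρ).2
    simp only at hk
    rw [← hk, map_zpow, pm_s hr] at hp
    have hT : Tk n 1 = σ' 0 ^ (2 : ℤ) := by simp [Tk, ck, zpow_ofNat, pow_two]
    rcases Int.even_or_odd' k with ⟨l, rfl | rfl⟩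
    · exact ⟨l, by simp only; rw [hT, ← hk, ← zpow_mul]⟩
    · exfalso
      rw [zpow_add_one, zpow_mul, zpow_ofNat, pow_two, Equiv.swap_mul_self, one_zpow, one_mul] at hp
      have := DFunLike.congr_fun hp 0
      simp at this
  | succ r h1 ih =>
    exact TL_step (by omega) hr H hL (A_step (by omega) hr (fun R H hL => ih (by omega) H hL) H fun ρ hρ => by
      obtain ⟨c, hc⟩ := hL ρ hρ
      exact ⟨c, 0, fun i j a b d => by rw [hc i j a b d]; simp⟩)

/-- Under the hypotheses `TLH`, a subgroup whose linking numbers are sums of stars and constants consists of point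
pushes and full twists. -/
theorem le_Kh (h2 : 2 ≤ r) (hr : r < n) {R : Subgroup (B n)} (H : TLH n r R) (hL : ∀ ρ ∈ R, LEf r ρ) : R ≤ Kh hr :=
  A_step h2 hr (fun _ H hL => TL (by omega) (by omega) H hL) H hL

end TL2

/-! ### Automorphisms preserve the point-pushing subgroup -/

section AutK
open scoped commutatorElement
variable {r : ℕ}

lemma es_Tk_pos {n : ℕ} (h : 1 ≤ r) (hr : r < n) : 0 < es (Tk n r) := by
  induction r, h using Nat.le_induction with
  | base => 
    rw [Tk_succ, es_mul, es_ck hr]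
    have : es (Tk n 0) = 0 := by simp [Tk]
    rw [this]; norm_num
  | succ k hk ih =>
    rw [Tk_succ, es_mul, es_ck hr]
    have := ih (by omega)
    push_cast; positivity

lemma mem_GG_top {n : ℕ} (g : B n) : g ∈ GG n n := by rw [GG_top]; trivial

lemma center_T (h2 : 2 ≤ r) {z : B (r + 1)} (hz : ∀ g, Commute z g) : z ∈ Subgroup.zpowers (Tk (r + 1) r) := by
  obtain ⟨p, rfl⟩ : ∃ p, r = p + 1 := ⟨r - 1, by omega⟩
  refine ker_lemma (by omega) (by omega) (mem_GG_top z) fun y => ?_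
  refine qq_eq_of_ka (n := p + 1 + 1) h2 (by omega) ⟨0, ?_⟩
  rw [ka_smul (by omega) (mem_GG_top z), (hz _).eq]; simp

lemma Tk_central (g : B (r + 1)) : Commute (Tk (r + 1) r) g := Tk_comm (by omega) (mem_GG_top g)

lemma Tk_zpow_inj (h1 : 1 ≤ r) {a b : ℤ} (h : Tk (r + 1) r ^ a = Tk (r + 1) r ^ b) : a = b := by
  have := congrArg es h
  rw [es_zpow, es_zpow] at this
  have h3 := es_Tk_pos h1 (Nat.lt_succ_self r)
  exact mul_right_cancel₀ h3.ne' this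

/-- An endomorphism multiplies the exponent sum by a constant, since all generators are conjugate. -/
lemma es_endo {n : ℕ} (φ : B n →* B n) : ∃ a : ℤ, ∀ g, es (φ g) = a * es g := by
  refine ⟨es (φ (σ' 0)), fun g => ?_⟩
  have hs : ∀ i, i + 1 < n → es (φ (σ' i)) = es (φ (σ' 0)) := by
    intro i
    induction i with
    | zero => intro _; rfl
    | succ k ih =>
      intro h
      rw [← ih (by omega)]
      have e : (σ' (k + 1) : B n) = (σ' k * σ' (k + 1)) * σ' k * (σ' k * σ' (k + 1))⁻¹ := by
        rw [s_adj (by omega)]; group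
      conv_lhs => rw [e]
      rw [map_mul, map_mul, map_inv, es_conj]
  induction g using B_ind' with
  | h1 => simp
  | hm i a h ha => rw [map_mul, es_mul, es_mul, ha, hs i h, es_s h]; ring
  | hi i a h ha => rw [map_mul, es_mul, es_mul, ha, map_inv, es_inv, es_inv, hs i h, es_s h]; ring

/-- Automorphisms act on exponent sums and on the generator of the centre by the same sign. -/
lemma aut_sign (h2 : 2 ≤ r) (φ : B (r + 1) ≃* B (r + 1)) : ∃ ε : ℤ, (ε = 1 ∨ ε = -1) ∧
    (∀ g, es (φ g) = ε * es g) ∧ φ (Tk (r + 1) r) = Tk (r + 1) r ^ ε := by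
  have key : ∀ ψ : B (r + 1) ≃* B (r + 1), ∃ k : ℤ, Tk (r + 1) r ^ k = ψ (Tk (r + 1) r) := fun ψ => by
    apply center_T h2
    intro g
    have := (Tk_central (ψ.symm g)).map ψ
    simpa using this
  obtain ⟨k, hk⟩ := key φ
  obtain ⟨l, hl⟩ := key φ.symm
  have hkl : k * l = 1 := by
    have : Tk (r + 1) r ^ (k * l) = Tk (r + 1) r ^ (1 : ℤ) := by
      rw [zpow_mul, hk, ← map_zpow, hl]; simp
    exact Tk_zpow_inj (by omega) this
  obtain ⟨a, ha⟩ := es_endo φ.toMonoidHom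
  have hak : a = k := by
    have := ha (Tk (r + 1) r)
    change es (φ _) = _ at this
    rw [← hk, es_zpow] at this
    exact (mul_right_cancel₀ (es_Tk_pos (by omega) (Nat.lt_succ_self r)).ne' this).symm
  exact ⟨k, Int.eq_one_or_neg_one_of_mul_eq_one hkl, fun g => by rw [← hak]; exact ha g, hk.symm⟩

lemma smul_comm_mem {n : ℕ} {g : B n} (hg : g ∈ PB n) (w : FN) : w * (g • w)⁻¹ ∈ commutator FN := by
  have : ∀ w : FN, Abelianization.of (g • w) = Abelianization.of w := by
    intro w
    have h : (Abelianization.of.comp (MulDistribMulAction.toMonoidHom FN g)) = (Abelianization.of : FN →* _) := by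
      apply FreeGroup.ext_hom
      intro j
      obtain ⟨c, hc⟩ := smul_conj g j
      change Abelianization.of (g • xx j) = Abelianization.of (xx j)
      rw [hc, mem_PB.1 hg, map_mul, map_mul, map_inv, mul_comm, ← mul_assoc, inv_mul_cancel, one_mul]
      rfl
    exact DFunLike.congr_fun h w
  rw [← Abelianization.ker_of, MonoidHom.mem_ker, map_mul, map_inv, this, mul_inv_cancel]

lemma Kh_comm {n : ℕ} (hr : r < n) {a p : B n} (ha : a ∈ Kh hr) (hp : p ∈ PG n r) : ⁅a, p⁆ ∈ ⁅Kh hr, Kh hr⁆ := by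
  obtain ⟨w, k, rfl⟩ := ha
  have e : ⁅ka n r w * Tk n r ^ k, p⁆ = ka n r (w * (p • w)⁻¹) := by
    have := ((Tk_comm hr hp.1).zpow_left k).eq
    rw [map_mul, map_inv, ka_smul hr hp.1, commutatorElement_def]
    have h2 : ka n r w * Tk n r ^ k * p * (ka n r w * Tk n r ^ k)⁻¹ * p⁻¹ 
      = ka n r w * (Tk n r ^ k * p) * (Tk n r ^ k)⁻¹ * (ka n r w)⁻¹ * p⁻¹ := by group
    rw [h2, this]; group
  rw [e]
  have h3 := smul_comm_mem hp.2 w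
  have h4 : (commutator FN).map (ka n r) ≤ ⁅Kh hr, Kh hr⁆ := by
    rw [commutator, Subgroup.map_commutator]
    refine Subgroup.commutator_mono ?_ ?_ <;>
    · rintro _ ⟨y, -, rfl⟩; exact ka_mem_Kh hr y
  exact h4 ⟨_, h3, rfl⟩

lemma LEf_conj {g p : B (r + 1)} (hp : p ∈ PB (r + 1)) (h : LEf r p) : LEf r (g * p * g⁻¹) := by
  obtain ⟨c, e, h⟩ := h
  refine ⟨c, fun i => e ((pm _ g)⁻¹ i), fun i j hij hi hj => ?_⟩
  have hh : ∀ i, i ≤ r → (pm _ g)⁻¹ i ≤ r := fun i hi => by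
    have := (pm_inv_lt (g := g) (j := i)).2 (by omega)
    omega
  rw [Lk_conj g hp, h _ _ (fun h => hij ((pm _ g)⁻¹.injective h)) (hh i hi) (hh j hj)]

lemma LEf_ck (φ : B (r + 1) ≃* B (r + 1)) (hφ : ∀ g, pm _ (φ g) = pm _ g) : LEf r (φ (ck (r + 1) r)) := by
  have hp : φ (ck (r + 1) r) ∈ PB (r + 1) := by
    rw [mem_PB, hφ]; exact ck_pure (by omega)
  set L := Lk (φ (ck (r + 1) r)) with hL
  have inv : ∀ k, k + 1 < r → ∀ i j, L i j = L (Equiv.swap k (k + 1) i) (Equiv.swap k (k + 1) j) := by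
    intro k hk i j
    have h1 := (ck_comm (n := r + 1) (by omega) (s_mem hk)).map φ
    have h2 : φ (σ' k) * φ (ck (r + 1) r) * (φ (σ' k))⁻¹ = φ (ck (r + 1) r) := by
      rw [← h1.eq]; group
    have h3 := Lk_conj (φ (σ' k)) hp i j
    rw [h2, hφ, pm_s (by omega)] at h3
    exact h3
  have sym : ∀ i j, L i j = L j i := Lk_symm hp
  have hr : ∀ i, i < r → L i r = L 0 r := by
    intro i
    induction i with
    | zero => intro _; rfl
    | succ k ih =>
      intro h
      rw [← ih (by omega), inv k h k r, Equiv.swap_apply_left, sw_far (by omega)]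
  have h0 : ∀ j, 1 ≤ j → j < r → L 0 j = L 0 1 := by
    intro j hj
    induction j, hj using Nat.le_induction with
    | base => intro _; rfl
    | succ k hk ih =>
      intro h
      rw [← ih (by omega), inv k h 0 k, Equiv.swap_apply_left, sw_far (by omega)]
  have hij : ∀ i j, i < j → j < r → L i j = L 0 1 := by
    intro i
    induction i with
    | zero => intro j h1 h2; exact h0 j h1 h2
    | succ k ih =>
      intro j h1 h2
      rw [← ih j (by omega) h2, inv k (by omega) k j, Equiv.swap_apply_left, sw_far (by omega)]
  refine ⟨L 0 1, fun i => if i = r then L 0 r - L 0 1 else 0, fun i j h hi hj => ?_⟩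
  have hlt : ∀ i j, i < j → j ≤ r → L i j = L 0 1 + (if i = r then L 0 r - L 0 1 else 0) + (if j = r then L 0 r - L 0 1 else 0) := by
    intro i j h hj
    rw [if_neg (by omega)]
    split_ifs with h'
    · rw [h', hr i (by omega)]; ring
    · rw [hij i j h (by omega)]; ring
  rcases lt_or_gt_of_ne h with h | h
  · exact hlt i j h hj
  · refine (sym i j).trans ?_
    rw [hlt j i h hi]; ring

/-- The image of `Kh` satisfies the hypotheses `TLH`, which are invariant under automorphisms; its linking numbers are of
the form required by `le_Kh` because `φ` preserves permutations. -/
lemma aut_Kh_le (h2 : 2 ≤ r) (φ : B (r + 1) ≃* B (r + 1)) (hφ : ∀ g, pm _ (φ g) = pm _ g) {g : B (r + 1)}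
    (hg : g ∈ Kh (Nat.lt_succ_self r)) : φ g ∈ Kh (Nat.lt_succ_self r) := by
  obtain ⟨ε, hε, -, hT⟩ := aut_sign h2 φ
  have hr := Nat.lt_succ_self r
  have hPB : ∀ x, x ∈ PB (r + 1) → φ x ∈ PB (r + 1) := fun x hx => by rw [mem_PB, hφ]; exact hx
  have hPG : ∀ x : B (r + 1), x ∈ PG (r + 1) r ↔ x ∈ PB (r + 1) := fun x => ⟨fun h => h.2, fun h => ⟨mem_GG_top x, h⟩⟩
  have hPs : ∀ p, p ∈ PB (r + 1) → φ.symm p ∈ PB (r + 1) := fun x hx => by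
    rw [mem_PB, ← hφ]; simpa using mem_PB.1 hx
  have hTinv : φ (Tk (r + 1) r ^ ε) = Tk (r + 1) r := by
    rw [map_zpow, hT, ← zpow_mul]
    rcases hε with rfl | rfl <;> simp
  refine le_Kh (R := (Kh hr).map φ.toMonoidHom) h2 hr ⟨?_, ?_, ?_, ?_⟩ ?_ ⟨g, hg, rfl⟩
  · rintro _ ⟨x, hx, rfl⟩; exact (hPG _).2 (hPB _ (Kh_pure hr hx))
  · rintro p hp _ ⟨x, hx, rfl⟩
    refine ⟨φ.symm p * x * (φ.symm p)⁻¹, Kh_conj hr (mem_GG_top _) hx, ?_⟩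
    simp
  · exact ⟨_, zpow_mem (Tk_mem_Kh hr) ε, hTinv⟩
  · rintro _ ⟨x, hx, rfl⟩ p hp
    refine Subgroup.mem_sup_left ?_
    rw [← Subgroup.map_commutator]
    refine ⟨⁅x, φ.symm p⁆, Kh_comm hr hx ((hPG _).2 (hPs p hp.2)), ?_⟩
    rw [map_commutatorElement]; simp
  · rintro _ ⟨x, ⟨w, k, rfl⟩, rfl⟩
    change LEf r (φ _)
    rw [map_mul]
    refine LEf_mul (hPB _ (ka_pure hr w)) ?_ ?_
    · have one : LEf r (1 : B (r + 1)) := ⟨0, 0, fun i j _ _ _ => by rw [Lk_one]; simp⟩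
      have hx : ∀ j, LEf r (φ (ka (r + 1) r (xx j))) := by
        intro j
        by_cases hj : j ≤ r
        · rw [ka_x_eq hr hj, map_mul, map_mul, map_inv]
          exact LEf_conj (hPB _ (ck_pure hr)) (LEf_ck φ hφ)
        · rw [ka_big (by omega), map_one]; exact one
      induction w using FreeGroup.induction_on with
      | C1 => rw [map_one, map_one]; exact one
      | of j => exact hx j
      | inv_of j h => 
        rw [map_inv, map_inv]; exact LEf_inv (hPB _ (ka_pure hr _)) h
      | mul x y h1 h2 => rw [map_mul, map_mul]; exact LEf_mul (hPB _ (ka_pure hr _)) h1 h2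
    · rw [map_zpow, hT, ← zpow_mul]
      exact LEf_Kh hr (zpow_mem (Tk_mem_Kh hr) _)

end AutK

/-! ### The induced endomorphism of the free group -/

section Theta
variable {r : ℕ}

/-- `θ` describes the action of the automorphism `φ` on the point-pushing subgroup, modulo the centre. -/
structure ThetaH (φ : B (r + 1) ≃* B (r + 1)) (θ : FN →* FN) : Prop where
  fix : ∀ w, qq r (θ w) = θ w
  ka : ∀ w, ∃ k : ℤ, φ (ka (r + 1) r w) = ka (r + 1) r (θ w) * Tk (r + 1) r ^ k

lemma T_zpow_comm (k : ℤ) (g : B (r + 1)) : Tk (r + 1) r ^ k * g = g * Tk (r + 1) r ^ k :=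
  ((Tk_central g).zpow_left k).eq

lemma theta_exists (h2 : 2 ≤ r) (φ : B (r + 1) ≃* B (r + 1)) (hφ : ∀ g, pm _ (φ g) = pm _ g) :
    ∃ θ, ThetaH φ θ := by
  have hr := Nat.lt_succ_self r
  have key : ∀ w, ∃ v, pr r v = v ∧ ∃ k : ℤ, φ (ka (r + 1) r w) = ka (r + 1) r v * Tk (r + 1) r ^ k := fun w =>
    Kh_form h2 hr (aut_Kh_le h2 φ hφ (ka_mem_Kh hr w))
  choose v hv hk using fun j => key (xx j)
  let θ : FN →* FN := FreeGroup.lift v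
  have hθ : ∀ j, θ (xx j) = v j := fun j => FreeGroup.lift_apply_of
  have h1 : (qq r).comp θ = θ := by
    apply FreeGroup.ext_hom
    intro j
    change qq r (θ (xx j)) = θ (xx j)
    rw [hθ, ← hv j, qq_pr']
  refine ⟨θ, fun w => DFunLike.congr_fun h1 w, fun w => ?_⟩
  induction w using FreeGroup.induction_on with
  | C1 => exact ⟨0, by simp⟩
  | of j => 
    change ∃ k : ℤ, φ (ka (r + 1) r (xx j)) = ka (r + 1) r (θ (xx j)) * _
    rw [hθ]; exact hk j
  | inv_of j h => 
    obtain ⟨k, hk⟩ := h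
    refine ⟨-k, ?_⟩
    rw [map_inv, map_inv, hk, mul_inv_rev, ← zpow_neg, T_zpow_comm, map_inv, map_inv]
  | mul x y h1 h2 =>
    obtain ⟨k, hk⟩ := h1
    obtain ⟨l, hl⟩ := h2
    refine ⟨k + l, ?_⟩
    rw [map_mul, map_mul, hk, hl, map_mul, map_mul, zpow_add, mul_assoc, ← mul_assoc (Tk (r + 1) r ^ k), T_zpow_comm]
    simp only [mul_assoc]

lemma theta_uniq (h2 : 2 ≤ r) {φ : B (r + 1) ≃* B (r + 1)} {θ : FN →* FN} (H : ThetaH φ θ) {w v : FN} {k : ℤ}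
    (h : φ (ka (r + 1) r w) = ka (r + 1) r v * Tk (r + 1) r ^ k) : θ w = qq r v := by
  obtain ⟨l, hl⟩ := H.ka w
  rw [← H.fix w]
  refine qq_eq_of_ka h2 (Nat.lt_succ_self r) ⟨k - l, ?_⟩
  rw [h] at hl
  rw [zpow_sub, ← mul_assoc, hl]; group

lemma theta_qq (h2 : 2 ≤ r) {φ : B (r + 1) ≃* B (r + 1)} {θ : FN →* FN} (H : ThetaH φ θ) (w : FN) :
    θ (qq r w) = θ w := by
  obtain ⟨ε, -, -, hT⟩ := aut_sign h2 φ
  obtain ⟨k, hk⟩ := ka_qq_T h2 (Nat.lt_succ_self r) w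
  obtain ⟨l, hl⟩ := H.ka w
  have h : φ (ka (r + 1) r (qq r w)) = ka (r + 1) r (θ w) * Tk (r + 1) r ^ (l - ε * k) := by
    have : ka (r + 1) r (qq r w) = ka (r + 1) r w * (Tk (r + 1) r ^ k)⁻¹ := by rw [hk]; group
    rw [this, map_mul, map_inv, map_zpow, hT, hl, zpow_sub, zpow_mul, mul_assoc]
  rw [theta_uniq h2 H h, H.fix]

lemma theta_smul (h2 : 2 ≤ r) {φ : B (r + 1) ≃* B (r + 1)} {θ : FN →* FN} (H : ThetaH φ θ) (g : B (r + 1)) (y : FN) :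
    θ (g • y) = qq r (φ g • θ y) := by
  obtain ⟨k, hk⟩ := H.ka y
  refine theta_uniq h2 H (k := k) ?_
  have hr := Nat.lt_succ_self r
  rw [ka_smul hr (mem_GG_top g), ka_smul hr (mem_GG_top _), map_mul, map_mul, map_inv, hk]
  simp only [mul_assoc, T_zpow_comm]

lemma theta_inv (h2 : 2 ≤ r) {φ : B (r + 1) ≃* B (r + 1)} {θ θ' : FN →* FN} (H : ThetaH φ θ)
    (H' : ThetaH φ.symm θ') (y : FN) : θ' (θ y) = qq r y := by
  obtain ⟨k, hk⟩ := H.ka y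
  obtain ⟨ε, -, -, hT⟩ := aut_sign h2 φ.symm
  refine theta_uniq h2 H' (k := - (ε * k)) ?_
  have : ka (r + 1) r (θ y) = φ (ka (r + 1) r y) * (Tk (r + 1) r ^ k)⁻¹ := by rw [hk]; group
  rw [this, map_mul, MulEquiv.symm_apply_apply, map_inv, map_zpow, hT, ← zpow_mul, zpow_neg]

lemma ex_smul {n : ℕ} (g : B n) (k : ℕ) (y : FN) : ex k (g • y) = ex ((pm n g)⁻¹ k) y := by
  have h : ((ex k).comp (MulDistribMulAction.toMonoidHom FN g)) = ex ((pm n g)⁻¹ k) := by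
    apply FreeGroup.ext_hom
    intro j
    obtain ⟨c, hc⟩ := smul_conj g j
    change ex k (g • xx j) = ex _ (xx j)
    rw [hc, ex_conj, ex_x, ex_x]
    congr 1
    have : (pm n g j = k) ↔ (j = (pm n g)⁻¹ k) := by
      rw [Equiv.Perm.eq_inv_iff_eq]
    simp only [this]
  exact DFunLike.congr_fun h y

lemma ex_qq {k : ℕ} (hk : k < r) (y : FN) : ex k (qq r y) = ex k y * (ex r y)⁻¹ := by
  have h : (ex k).comp (qq r) = ex k * (ex r)⁻¹ := by
    apply FreeGroup.ext_hom
    intro j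
    change ex k (qq r (xx j)) = ex k (xx j) * (ex r (xx j))⁻¹
    rw [qq_x, ex_x, ex_x]
    split_ifs with h1 h2 h3 h3 h3 h3 h3 <;> first | omega | skip
    all_goals simp_all [ex_x, Pi_ex]
  exact DFunLike.congr_fun h y

lemma ex_pr_big {k : ℕ} (hk : r ≤ k) {y : FN} (hy : pr r y = y) : ex k y = 1 := by
  have h : (ex k).comp (pr r) = 1 := by
    apply FreeGroup.ext_hom
    intro j
    change ex k (pr r (xx j)) = 1
    rw [pr_x]
    split_ifs with h
    · rw [ex_x, if_neg (by omega)]; rfl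
    · simp
  rw [← hy]; exact DFunLike.congr_fun h y

lemma ThetaH.pr {φ : B (r + 1) ≃* B (r + 1)} {θ : FN →* FN} (H : ThetaH φ θ) (w : FN) : pr r (θ w) = θ w := by
  rw [← H.fix, pr_qq]

/-- The linking invariant that decides whether `φ` preserves or reverses orientation. -/
def orient (φ : B (r + 1) ≃* B (r + 1)) : ℤ := Lk (φ (ck (r + 1) r)) 0 r - Lk (φ (ck (r + 1) r)) 0 1

/-- The abelianisation of `θ` is multiplication by the orientation, as computed from linking numbers. -/
lemma theta_ex (h3 : 3 ≤ r) {φ : B (r + 1) ≃* B (r + 1)} (hφ : ∀ g, pm _ (φ g) = pm _ g) {θ : FN →* FN} (H : ThetaH φ θ)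
    {i k : ℕ} (hi : i < r) (hk : k < r) : (ex k (θ (xx i))).toAdd = if i = k then orient φ else 0 := by
  have hr := Nat.lt_succ_self r
  obtain ⟨l, hl⟩ := H.ka (xx r)
  rw [ka_last] at hl
  set e := fun j => (ex j (θ (xx r))).toAdd with he
  have er : e r = 0 := by
    have := ex_pr_big le_rfl (H.pr (xx r))
    simp only [he, this]; rfl
  have hL : ∀ i j, i ≠ j → i ≤ r → j ≤ r → Lk (φ (ck (r + 1) r)) i j = e i + e j + l := by
    intro i j hij hi hj
    rw [hl, Lk_mul_pure (ka_pure hr _), Lk_ka hr _ _ _ hij hi hj, Lk_zpow (Tk_pure hr), Lk_Tk hr, if_pos ⟨hij, hi, hj⟩]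
    ring
  have hp : φ (ck (r + 1) r) ∈ PB (r + 1) := by
    rw [mem_PB, hφ]; exact ck_pure (by omega)
  have hsw : ∀ k, k + 1 < r → e k = e (k + 1) := by
    intro k hk
    have h1 := (ck_comm (n := r + 1) (by omega) (s_mem hk)).map φ
    have h2 : φ (σ' k) * φ (ck (r + 1) r) * (φ (σ' k))⁻¹ = φ (ck (r + 1) r) := by
      rw [← h1.eq]; group
    have h3 := Lk_conj (φ (σ' k)) hp k r
    rw [h2, hφ, pm_s (by omega), Equiv.swap_inv, Equiv.swap_apply_left, sw_far (by omega), hL _ _ (by omega) (by omega) le_rfl,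
      hL _ _ (by omega) (by omega) le_rfl] at h3
    linarith
  have hc : ∀ k, k < r → e k = e 0 := by
    intro k
    induction k with
    | zero => intro _; rfl
    | succ k ih => intro h; rw [← hsw k h, ih (by omega)]
  have ho : orient φ = - e 0 := by
    rw [orient, hL _ _ (by omega) (by omega) le_rfl, hL _ _ (by omega) (by omega) (by omega), er, hc 1 (by omega)]; ring
  have hx : θ (xx i) = qq r (φ (seg (r + 1) i r) • θ (xx r)) := by
    rw [← theta_smul (by omega) H, seg_smul (by omega) (by omega)]
  set τ := pm (r + 1) (seg (r + 1) i r) with hτ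
  have hτr : τ r = i := by
    apply pm_of_smul (c := 1)
    rw [seg_smul (by omega) (by omega)]; simp
  have hti : τ⁻¹ i = r := by rw [← hτr]; simp
  have hti' : ∀ j, j ≤ r → j ≠ i → τ⁻¹ j < r := by
    intro j hj hji
    have h1 : τ⁻¹ j < r + 1 := pm_inv_lt.2 (by omega)
    have h2 : τ⁻¹ j ≠ r := fun h => hji (by rw [← hti] at h; exact τ⁻¹.injective h)
    omega
  rw [hx, ex_qq hk, ex_smul, ex_smul, hφ, toAdd_mul, toAdd_inv]
  change e (τ⁻¹ k) + - e (τ⁻¹ r) = _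
  rw [hc _ (hti' r le_rfl (by omega)), ho]
  split_ifs with h
  · rw [← h, hti, er]; ring
  · rw [hc _ (hti' k hk.le (Ne.symm h))]; ring

lemma orient_sign (h3 : 3 ≤ r) (φ : B (r + 1) ≃* B (r + 1)) (hφ : ∀ g, pm _ (φ g) = pm _ g) :
    orient φ = 1 ∨ orient φ = -1 := by
  have hφ' : ∀ g, pm _ (φ.symm g) = pm _ g := fun g => by rw [← hφ]; simp
  obtain ⟨θ, H⟩ := theta_exists (by omega) φ hφ
  obtain ⟨θ', H'⟩ := theta_exists (by omega) φ.symm hφ'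
  have h : ∀ y, (ex 0 (θ' (pr r y))).toAdd = orient φ.symm * (ex 0 (pr r y)).toAdd := by
    intro y
    induction y using FreeGroup.induction_on with
    | C1 => simp
    | of j =>
      change (ex 0 (θ' (pr r (xx j)))).toAdd = orient φ.symm * (ex 0 (pr r (xx j))).toAdd
      rw [pr_x]
      split_ifs with hj
      · rw [theta_ex h3 hφ' H' hj (by omega), ex_x]; split_ifs <;> simp
      · simp
    | inv_of j h => simp only [map_inv, toAdd_inv] at h ⊢; rw [h]; ring
    | mul x y h1 h2 => simp only [map_mul, toAdd_mul] at h1 h2 ⊢; rw [h1, h2]; ring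
  have h1 := h (θ (xx 0))
  rw [H.pr, theta_inv (by omega) H H', qq_x, if_pos (by omega), theta_ex h3 hφ H (by omega) (by omega), ex_x] at h1
  simp only [if_true] at h1
  have : orient φ * orient φ.symm = 1 := by rw [mul_comm]; exact h1.symm
  exact Int.eq_one_or_neg_one_of_mul_eq_one this

end Theta

/-! ### Syllable counts in free products -/

section FreeProd
open Monoid (CoprodI)
open Monoid.CoprodI
open Classical
variable {ι : Type*} {G : ι → Type*} [∀ i, Group (G i)]

/-- The syllables of the normal form of an element of a free product. -/
noncomputable def wl (g : CoprodI G) : List (Σ i, G i) := (Word.equiv g).toList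

/-- The number of occurrences of a given syllable in the normal form. -/
noncomputable def cnt (s : Σ i, G i) (g : CoprodI G) : ℤ := ((wl g).count s : ℤ)

lemma cnt_pos_iff {s : Σ i, G i} {g : CoprodI G} : 0 < cnt s g ↔ s ∈ wl g := by
  rw [cnt, Nat.cast_pos, List.count_pos_iff]

lemma cnt_map {f : (Σ i, G i) → Σ i, G i} (hf : Function.Injective f) {g g' : CoprodI G}
    (h : wl g' = (wl g).map f) (s : Σ i, G i) : cnt (f s) g' = cnt s g := by
  rw [cnt, cnt, h, List.count_map_of_injective _ _ hf]

/-- The product of a list of syllables. -/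
def lprod (l : List (Σ i, G i)) : CoprodI G := (l.map fun x => (of x.2 : CoprodI G)).prod

lemma lprod_wl (g : CoprodI G) : lprod (wl g) = g := Word.equiv.left_inv g

lemma wl_ne (g : CoprodI G) : ∀ x ∈ wl g, x.2 ≠ 1 := (Word.equiv g).ne_one
lemma wl_chain (g : CoprodI G) : (wl g).IsChain fun a b => a.1 ≠ b.1 := (Word.equiv g).chain_ne

lemma wl_lprod {l : List (Σ i, G i)} (h1 : ∀ x ∈ l, x.2 ≠ 1) (h2 : l.IsChain fun a b => a.1 ≠ b.1) :
    wl (lprod l) = l := by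
  have : Word.equiv (lprod l) = ⟨l, h1, h2⟩ := Word.equiv.right_inv (⟨l, h1, h2⟩ : Word G)
  rw [wl, this]

lemma lprod_append (l l' : List (Σ i, G i)) : lprod (l ++ l') = lprod l * lprod l' := by simp [lprod]
lemma lprod_cons (x : Σ i, G i) (l : List (Σ i, G i)) : lprod (x :: l) = of x.2 * lprod l := by simp [lprod]

/-- Left multiplication by a factor changes at most the first syllable. -/
lemma wl_of_mul {i : ι} (m : G i) (g : CoprodI G) : ∃ (t : List (Σ i, G i)) (h : G i),
    wl g = (if h = 1 then t else ⟨i, h⟩ :: t) ∧ wl (of m * g) = if m * h = 1 then t else ⟨i, m * h⟩ :: t := by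
  set w := Word.equiv g
  set p := Word.equivPair i w
  have hw : w = Word.rcons p := by rw [← Word.equivPair_symm, Equiv.symm_apply_apply]
  have hm : Word.equiv (of m * g) = Word.rcons { p with head := m * p.head } := by
    have : Word.equiv (of m * g) = of m • w := by
      change (of m * g) • (Word.empty : Word G) = of m • (g • (Word.empty : Word G)); rw [mul_smul]
    rw [this, Word.of_smul_def]
  have hr : ∀ q : Word.Pair G i, (Word.rcons q).toList = if q.head = 1 then q.tail.toList else ⟨i, q.head⟩ :: q.tail.toList := by
    intro q; rw [Word.rcons]; split_ifs <;> rfl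
  refine ⟨p.tail.toList, p.head, ?_, ?_⟩
  · rw [← hr, ← hw]; rfl
  · rw [wl, hm, hr]

lemma cnt_of_mul {i : ι} (s : Σ i, G i) (m : G i) (g : CoprodI G) : |cnt s (of m * g) - cnt s g| ≤ 1 := by
  obtain ⟨t, h, h1, h2⟩ := wl_of_mul m g
  rw [cnt, cnt, h1, h2]
  have hc : ∀ x : Σ i, G i, ((x :: t).count s : ℤ) = t.count s ∨ ((x :: t).count s : ℤ) = t.count s + 1 := by
    intro x; rw [List.count_cons]; split_ifs <;> simp
  rw [abs_le]
  split_ifs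
  · constructor <;> linarith
  · rcases hc ⟨i, h⟩ with e | e <;> rw [e] <;> constructor <;> linarith
  · rcases hc ⟨i, m * h⟩ with e | e <;> rw [e] <;> constructor <;> linarith
  · rcases hc ⟨i, h⟩ with e | e <;> rcases hc ⟨i, m * h⟩ with e' | e' <;> rw [e, e'] <;> constructor <;> linarith

lemma cnt_mul_left (s : Σ i, G i) (c : CoprodI G) : ∃ K : ℤ, ∀ g, |cnt s (c * g) - cnt s g| ≤ K := by
  induction c using CoprodI.induction_on with
  | one => exact ⟨0, by simp⟩
  | of m => exact ⟨1, fun g => cnt_of_mul s _ g⟩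
  | mul x y hx hy =>
    obtain ⟨K, hK⟩ := hx
    obtain ⟨L, hL⟩ := hy
    refine ⟨K + L, fun g => ?_⟩
    have h1 := hK (y * g)
    have h2 := hL g
    rw [mul_assoc]
    calc _ = |(cnt s (x * (y * g)) - cnt s (y * g)) + (cnt s (y * g) - cnt s g)| := by ring_nf
      _ ≤ _ := (abs_add_le _ _).trans (add_le_add h1 h2)

/-- The inverse syllable. -/
def sinv (x : Σ i, G i) : Σ i, G i := ⟨x.1, x.2⁻¹⟩

lemma sinv_inj : Function.Injective (sinv : (Σ i, G i) → Σ i, G i) := by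
  have h : ∀ x : Σ i, G i, sinv (sinv x) = x := fun ⟨i, m⟩ => Sigma.ext rfl (heq_of_eq (inv_inv m))
  exact fun x y e => by rw [← h x, e, h]

lemma lprod_inv (l : List (Σ i, G i)) : (lprod l)⁻¹ = lprod (l.map sinv).reverse := by
  induction l with
  | nil => simp [lprod]
  | cons x l ih => rw [lprod_cons, mul_inv_rev, ih, List.map_cons, List.reverse_cons, lprod_append]; simp [lprod, sinv]

lemma wl_inv (g : CoprodI G) : wl g⁻¹ = ((wl g).map sinv).reverse := by
  conv_lhs => rw [← lprod_wl g, lprod_inv]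
  apply wl_lprod
  · intro x hx
    simp only [List.mem_reverse, List.mem_map] at hx
    obtain ⟨y, hy, rfl⟩ := hx
    exact inv_ne_one.2 (wl_ne g y hy)
  · rw [List.isChain_reverse, List.isChain_map]
    exact (wl_chain g).imp fun a b h => h.symm

lemma cnt_inv (s : Σ i, G i) (g : CoprodI G) : cnt (sinv s) g⁻¹ = cnt s g := by
  rw [cnt, cnt, wl_inv, List.count_reverse, List.count_map_of_injective _ _ sinv_inj]

lemma cnt_mul_right (s : Σ i, G i) (c : CoprodI G) : ∃ K : ℤ, ∀ g, |cnt s (g * c) - cnt s g| ≤ K := by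
  obtain ⟨K, hK⟩ := cnt_mul_left (sinv s) c⁻¹
  refine ⟨K, fun g => ?_⟩
  have := hK g⁻¹
  rwa [← mul_inv_rev, cnt_inv, cnt_inv] at this

/-- Cyclically reduced elements of syllable length at least two (or trivial). -/
def CR (g : CoprodI G) : Prop := (wl g ++ wl g).IsChain fun a b => a.1 ≠ b.1

lemma chain_rep {α : Type*} {R : α → α → Prop} {l : List α} (h : (l ++ l).IsChain R) (N : ℕ) :
    (List.replicate N l).flatten.IsChain R := by
  rcases l.eq_nil_or_concat with rfl | ⟨l', b, rfl⟩
  · have : (List.replicate N ([] : List α)).flatten = [] := by simp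
    rw [this]; exact List.isChain_nil
  induction N with
  | zero => simp
  | succ N ih =>
    rw [List.replicate_succ, List.flatten_cons, List.isChain_append]
    rw [List.isChain_append] at h
    refine ⟨h.1, ih, ?_⟩
    intro x hx y hy
    apply h.2.2 x hx y
    cases N with
    | zero => simp at hy
    | succ N =>
      rw [List.replicate_succ, List.flatten_cons] at hy
      rw [List.head?_append_of_ne_nil _ (by simp)] at hy
      exact hy

lemma lprod_rep (l : List (Σ i, G i)) (N : ℕ) : lprod (List.replicate N l).flatten = lprod l ^ N := by
  induction N with
  | zero => simp [lprod]
  | succ N ih => rw [List.replicate_succ, List.flatten_cons, lprod_append, ih, pow_succ']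

lemma wl_pow {g : CoprodI G} (h : CR g) (N : ℕ) : wl (g ^ N) = (List.replicate N (wl g)).flatten := by
  conv_lhs => rw [← lprod_wl g, ← lprod_rep]
  apply wl_lprod
  · intro x hx
    rw [List.mem_flatten] at hx
    obtain ⟨l, hl, hx⟩ := hx
    rw [List.eq_of_mem_replicate hl] at hx
    exact wl_ne g x hx
  · exact chain_rep h N

lemma cnt_pow {g : CoprodI G} (h : CR g) (s : Σ i, G i) (N : ℕ) : cnt s (g ^ N) = N * cnt s g := by
  rw [cnt, cnt, wl_pow h, List.count_flatten]; simp

/-- Conjugate cyclically reduced elements have the same syllables, with multiplicity: compare large powers. -/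
lemma cnt_conj {g h c : CoprodI G} (hg : CR g) (hh : CR h) (e : g = c * h * c⁻¹) (s : Σ i, G i) : cnt s g = cnt s h := by
  obtain ⟨K, hK⟩ := cnt_mul_left s c
  obtain ⟨L, hL⟩ := cnt_mul_right s c⁻¹
  have key : ∀ N : ℕ, N * |cnt s g - cnt s h| ≤ K + L := by
    intro N
    have e1 : g ^ N = c * h ^ N * c⁻¹ := by rw [e, conj_pow]
    have h1 := hK (h ^ N)
    have h2 := hL (c * h ^ N)
    rw [← e1, cnt_pow hg] at h2
    rw [cnt_pow hh] at h1
    have : (N : ℤ) * |cnt s g - cnt s h| = |N * cnt s g - N * cnt s h| := by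
      rw [← mul_sub, abs_mul, Nat.abs_cast]
    rw [this]
    calc _ = |(N * cnt s g - cnt s (c * h ^ N)) + (cnt s (c * h ^ N) - N * cnt s h)| := by ring_nf
      _ ≤ _ := (abs_add_le _ _).trans (by linarith)
  by_contra hne
  have hpos : 1 ≤ |cnt s g - cnt s h| := Int.one_le_abs (sub_ne_zero.2 hne)
  have h1 := key (K + L + 1).toNat
  have h2 : (0 : ℤ) ≤ K + L := by simpa using key 0
  rw [Int.toNat_of_nonneg (by linarith)] at h1
  nlinarith

lemma wl_lprod_le (l : List (Σ i, G i)) : (wl (lprod l)).length ≤ l.length := by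
  induction l with
  | nil => 
    have : wl (lprod ([] : List (Σ i, G i))) = [] := wl_lprod (by simp) List.isChain_nil
    rw [this]
  | cons x l ih =>
    rw [lprod_cons]
    obtain ⟨t, h, h1, h2⟩ := wl_of_mul x.2 (lprod l)
    rw [h1] at ih
    rw [h2]
    split_ifs at * <;> simp at * <;> omega

lemma exists_CR [Nonempty ι] (g : CoprodI G) : ∃ c : CoprodI G, CR (c * g * c⁻¹) ∨ ∃ (i : ι) (m : G i), c * g * c⁻¹ = of m := by
  induction hL : (wl g).length using Nat.strong_induction_on generalizing g with
  | _ L ih =>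
    match hl : wl g with
    | [] => 
      obtain ⟨i⟩ := ‹Nonempty ι›
      refine ⟨1, Or.inr ⟨i, 1, ?_⟩⟩
      have := lprod_wl g
      rw [hl] at this
      rw [← this]; simp [lprod]
    | [x] =>
      refine ⟨1, Or.inr ⟨x.1, x.2, ?_⟩⟩
      have := lprod_wl g
      rw [hl] at this
      rw [← this]; simp [lprod]
    | x :: y :: l =>
      obtain ⟨l', z, hz⟩ : ∃ l' z, y :: l = l' ++ [z] := by
        rcases (y :: l).eq_nil_or_concat with h | ⟨l', b, h⟩
        · simp at h
        · exact ⟨l', b, by rw [h]; simp⟩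
      rw [hz] at hl
      by_cases hxz : x.1 = z.1
      · obtain ⟨i, a⟩ := x
        obtain ⟨j, b⟩ := z
        dsimp only at hxz
        subst hxz
        have hg : g = of a * lprod l' * of b := by
          rw [← lprod_wl g, hl, lprod_cons, lprod_append]; simp [lprod, mul_assoc]
        have hg' : (of a)⁻¹ * g * (of a)⁻¹⁻¹ = lprod (l' ++ [⟨i, b * a⟩]) := by
          rw [hg, lprod_append]; simp [lprod, mul_assoc]
        have hlen := wl_lprod_le (l' ++ [⟨i, b * a⟩])
        rw [← hg'] at hlen
        obtain ⟨c, hc⟩ := ih _ (by rw [← hL, hl]; rw [List.length_append] at hlen; simp only [List.length_cons, List.length_append, List.length_nil] at hlen ⊢; omega) ((of a)⁻¹ * g * (of a)⁻¹⁻¹) rfl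
        refine ⟨c * (of a)⁻¹, ?_⟩
        have e : c * (of a)⁻¹ * g * (c * (of a)⁻¹)⁻¹ = c * ((of a)⁻¹ * g * (of a)⁻¹⁻¹) * c⁻¹ := by group
        rw [e]; exact hc
      · refine ⟨1, Or.inl ?_⟩
        rw [one_mul, inv_one, mul_one, CR, List.isChain_append]
        refine ⟨wl_chain g, wl_chain g, ?_⟩
        rw [hl]
        intro p hp q hq
        simp only [List.head?_cons, Option.mem_def, Option.some.injEq] at hq
        rw [← List.cons_append, List.getLast?_append] at hp
        simp at hp
        rw [← hp, ← hq]; exact Ne.symm hxz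

end FreeProd

/-! ### The Dehn twist on a splitting of the free group -/

section Twist
open Monoid (CoprodI)
open Monoid.CoprodI

/-- The family with two copies of the free group. -/
abbrev MF : Bool → Type := fun _ => FN

/-- The splitting of the free group as `⟨x₀, x₁⟩ * ⟨x₂, x₃, …⟩`. -/
def spl : FN →* CoprodI MF :=
  FreeGroup.lift fun j => if j < 2 then (of (M := MF) (i := true) (xx j)) else of (M := MF) (i := false) (xx j)

lemma spl_x (j : ℕ) : spl (xx j) = if j < 2 then (of (M := MF) (i := true) (xx j)) else of (M := MF) (i := false) (xx j) :=
  FreeGroup.lift_apply_of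

/-- The retraction killing `x₀` and `x₁`. -/
def rt2 : FN →* FN := FreeGroup.lift fun j => if j < 2 then 1 else xx j

lemma rt2_x (j : ℕ) : rt2 (xx j) = if j < 2 then 1 else xx j := FreeGroup.lift_apply_of

/-- The inverse of the splitting. -/
def uspl : CoprodI MF →* FN := lift fun b => match b with | true => pr 2 | false => rt2

lemma uspl_spl (y : FN) : uspl (spl y) = y := by
  have : uspl.comp spl = MonoidHom.id FN := by
    apply FreeGroup.ext_hom
    intro j
    change uspl (spl (xx j)) = xx j
    rw [spl_x]
    split_ifs with h
    · rw [uspl, lift_of]; change pr 2 (xx j) = _; rw [pr_x, if_pos h]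
    · rw [uspl, lift_of]; change rt2 (xx j) = _; rw [rt2_x, if_neg h]
  exact DFunLike.congr_fun this y

/-- The boundary word of the first two punctures. -/
abbrev z01 : FN := xx 0 * xx 1

/-- Conjugation by `z01` on the first factor: the effect of a full twist of the first two strands. -/
def twh : CoprodI MF →* CoprodI MF := lift fun b => match b with
  | true => (of (M := MF) (i := true)).comp (MulAut.conj z01).toMonoidHom
  | false => of (M := MF) (i := false)

lemma spl_tw {n : ℕ} (hn : 2 ≤ n) (y : FN) : spl ((σ' 0 * σ' 0 : B n) • y) = twh (spl y) := by
  have : spl.comp (MulDistribMulAction.toMonoidHom FN (σ' 0 * σ' 0 : B n)) = twh.comp spl := by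
    apply FreeGroup.ext_hom
    intro j
    change spl ((σ' 0 * σ' 0 : B n) • xx j) = twh (spl (xx j))
    have hs0 : spl (xx 0) = of (M := MF) (i := true) (xx 0) := by rw [spl_x]; rfl
    have hs1 : spl (xx 1) = of (M := MF) (i := true) (xx 1) := by rw [spl_x]; rfl
    have ht : ∀ a : FN, twh (of (M := MF) (i := true) a) = of (M := MF) (i := true) (z01 * a * z01⁻¹) := fun a => by
      rw [twh, lift_of]; rfl
    have h0 : (σ' 0 : B n) • xx 0 = xx 0 * xx 1 * (xx 0)⁻¹ := s_x0 (by omega)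
    have h1 : (σ' 0 : B n) • xx 1 = xx 0 := s_x1 (by omega)
    rw [mul_smul]
    rcases Nat.lt_or_ge j 2 with h | h
    · interval_cases j
      · rw [h0, smul_mul', smul_mul', smul_inv', h0, h1, hs0, ht, map_mul, map_mul]
        simp only [map_mul, map_inv, hs0, hs1]; group
      · rw [h1, h0, hs1, ht]
        simp only [map_mul, map_inv, hs0, hs1]; group
    · have : (σ' 0 : B n) • xx j = xx j := s_x (by omega) (by omega) (by omega)
      rw [this, this, spl_x, if_neg (by omega), twh, lift_of]
  exact DFunLike.congr_fun this y

/-- The effect of `twh` on syllables. -/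
def tws (s : Σ b, MF b) : Σ b, MF b := match s with
  | ⟨true, a⟩ => ⟨true, z01 * a * z01⁻¹⟩
  | ⟨false, a⟩ => ⟨false, a⟩

lemma tws_fst (s : Σ b, MF b) : (tws s).1 = s.1 := by rcases s with ⟨_ | _, a⟩ <;> rfl

lemma tws_ne {s : Σ b, MF b} (h : s.2 ≠ 1) : (tws s).2 ≠ 1 := by
  rcases s with ⟨_ | _, a⟩
  · exact h
  · change z01 * a * z01⁻¹ ≠ 1
    intro e; apply h; change a = 1
    have : a = z01⁻¹ * (z01 * a * z01⁻¹) * z01 := by group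
    rw [this, e]; group

lemma tws_inj : Function.Injective tws := by
  rintro ⟨_ | _, a⟩ ⟨_ | _, b⟩ h <;> simp [tws] at h <;> simp [h]

lemma twh_lprod (l : List (Σ b, MF b)) : twh (lprod l) = lprod (l.map tws) := by
  induction l with
  | nil => simp [lprod]
  | cons x l ih =>
    rw [lprod_cons, map_mul, ih, List.map_cons, lprod_cons]
    congr 1
    rcases x with ⟨_ | _, a⟩ <;> (rw [twh, lift_of]; rfl)

lemma wl_twh (g : CoprodI MF) : wl (twh g) = (wl g).map tws := by
  conv_lhs => rw [← lprod_wl g, twh_lprod]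
  apply wl_lprod
  · intro x hx
    obtain ⟨y, hy, rfl⟩ := List.mem_map.1 hx
    exact tws_ne (wl_ne g y hy)
  · rw [List.isChain_map]
    exact (wl_chain g).imp fun a b h => by rw [tws_fst, tws_fst]; exact h

lemma CR_twh {g : CoprodI MF} (h : CR g) : CR (twh g) := by
  rw [CR, wl_twh, ← List.map_append, List.isChain_map]
  exact List.IsChain.imp (fun a b h => by rw [tws_fst, tws_fst]; exact h) h

lemma cnt_twh (g : CoprodI MF) (s : Σ b, MF b) : cnt (tws s) (twh g) = cnt s g := by
  exact cnt_map tws_inj (wl_twh g) s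

lemma ex_eq_of_comm {a : FN} {M : ℕ} (hM : M ≠ 0) (h : Commute (z01 ^ M) a) : ex 0 a = ex 1 a := by
  have e0 : ex 0 z01 = Multiplicative.ofAdd 1 := by rw [map_mul, ex_x, ex_x]; rfl
  have e1 : ex 1 z01 = Multiplicative.ofAdd 1 := by rw [map_mul, ex_x, ex_x]; rfl
  have hz : z01 ^ M ≠ 1 := by
    intro h'
    have h2 : (ex 0 z01) ^ M = 1 := by rw [← MonoidHom.map_pow, h']; exact (ex 0).map_one
    rw [e0, ← ofAdd_nsmul] at h2
    have := congrArg Multiplicative.toAdd h2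
    simp at this; exact hM this
  obtain ⟨t, -, ht⟩ := FreeGroup.common_root hz {a, z01} (by
    rintro x (rfl | rfl)
    · exact h
    · exact (Commute.refl _).pow_left M)
  obtain ⟨k, hk⟩ := ht a (by simp)
  obtain ⟨l, hl⟩ := ht z01 (by simp)
  have hc : Commute z01 a := by
    rw [← hk, ← hl]; exact ((Commute.refl t).zpow_left l).zpow_right k
  obtain ⟨j, rfl⟩ := mem_zpowers_of_commute_ex e0 hc
  change ex 0 (z01 ^ j) = ex 1 (z01 ^ j)
  rw [map_zpow, map_zpow, e0, e1]

/-- An element whose conjugacy class is fixed by the full twist of the first two strands, and which links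
the first two punctures differently, is conjugate into `⟨x₀, x₁⟩`. -/
lemma twist_split {n : ℕ} (hn : 2 ≤ n) {y : FN} (h0 : ex 0 y ≠ ex 1 y)
    (ht : ∃ d, (σ' 0 * σ' 0 : B n) • y = d * y * d⁻¹) : ∃ d a, y = d * pr 2 a * d⁻¹ := by
  obtain ⟨d, hd⟩ := ht
  have hd' : twh (spl y) = spl d * spl y * (spl d)⁻¹ := by rw [← spl_tw hn, hd]; simp
  obtain ⟨c, hc | ⟨b, m, hm⟩⟩ := exists_CR (spl y)
  · exfalso
    set g := c * spl y * c⁻¹ with hg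
    have hconj : twh g = (twh c * spl d * c⁻¹) * g * (twh c * spl d * c⁻¹)⁻¹ := by
      rw [hg, map_mul, map_mul, map_inv, hd']; group
    have hcnt : ∀ s, cnt (tws s) g = cnt s g := fun s => by
      rw [← cnt_conj (CR_twh hc) hc hconj, cnt_twh]
    have hmem : ∀ s, s ∈ wl g → tws s ∈ wl g := by
      intro s hs
      rw [← cnt_pos_iff, hcnt]
      exact cnt_pos_iff.2 hs
    have hpow : ∀ a : FN, (⟨true, a⟩ : Σ b, MF b) ∈ wl g → ∀ N : ℕ, (⟨true, z01 ^ N * a * (z01 ^ N)⁻¹⟩ : Σ b, MF b) ∈ wl g := by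
      intro a ha N
      induction N with
      | zero => simpa using ha
      | succ N ih =>
        have := hmem _ ih
        have e : z01 ^ (N + 1) * a * (z01 ^ (N + 1))⁻¹ = z01 * (z01 ^ N * a * (z01 ^ N)⁻¹) * z01⁻¹ := by
          rw [pow_succ', mul_inv_rev]; simp only [mul_assoc]
        rw [e]; exact this
    have hex : ∀ a : FN, (⟨true, a⟩ : Σ b, MF b) ∈ wl g → ex 0 a = ex 1 a := by
      intro a ha
      have hfin : ∃ N N' : ℕ, N < N' ∧ z01 ^ N * a * (z01 ^ N)⁻¹ = z01 ^ N' * a * (z01 ^ N')⁻¹ := by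
        let f : ℕ → {s // s ∈ wl g} := fun N => ⟨_, hpow a ha N⟩
        have : Finite {s // s ∈ wl g} := List.finite_toSet (wl g)
        obtain ⟨N, N', hne, h⟩ := Finite.exists_ne_map_eq_of_infinite f
        have h' : z01 ^ N * a * (z01 ^ N)⁻¹ = z01 ^ N' * a * (z01 ^ N')⁻¹ := by
          have := congrArg Subtype.val h
          simpa [f] using this
        rcases lt_or_gt_of_ne hne with h1 | h1
        · exact ⟨N, N', h1, h'⟩
        · exact ⟨N', N, h1, h'.symm⟩
      obtain ⟨N, N', hlt, h⟩ := hfin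
      refine ex_eq_of_comm (M := N' - N) (by omega) ?_
      obtain ⟨k, rfl⟩ : ∃ k, N' = N + k := ⟨N' - N, by omega⟩
      rw [Nat.add_sub_cancel_left]
      rw [pow_add] at h
      have h1 : a = z01 ^ k * a * (z01 ^ k)⁻¹ := by
        have e : z01 ^ N * z01 ^ k * a * (z01 ^ N * z01 ^ k)⁻¹ = z01 ^ N * (z01 ^ k * a * (z01 ^ k)⁻¹) * (z01 ^ N)⁻¹ := by
          rw [mul_inv_rev]; simp only [mul_assoc]
        rw [e] at h
        exact mul_left_cancel (mul_right_cancel h)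
      have : a * z01 ^ k = z01 ^ k * a := by conv_lhs => rw [h1]
                                             simp
      exact this.symm
    let χ : CoprodI MF →* Multiplicative ℤ := lift fun b => match b with | true => ex 0 / ex 1 | false => 1
    have hχ : ∀ y, χ (spl y) = ex 0 y / ex 1 y := by
      intro y
      have : χ.comp spl = ex 0 / ex 1 := by
        apply FreeGroup.ext_hom
        intro j
        change χ (spl (xx j)) = ex 0 (xx j) / ex 1 (xx j)
        rw [spl_x]
        split_ifs with h
        · simp only [χ, lift_of]; rfl
        · simp only [χ, lift_of]; rw [ex_x, ex_x, if_neg (by omega), if_neg (by omega)]; rfl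
      exact DFunLike.congr_fun this y
    have hχg : χ g = 1 := by
      rw [← lprod_wl g, lprod, map_list_prod]
      apply List.prod_eq_one
      intro x hx
      simp only [List.map_map, List.mem_map] at hx
      obtain ⟨⟨b, a⟩, hs, rfl⟩ := hx
      cases b
      · simp only [Function.comp, χ, lift_of]; rfl
      · simp only [Function.comp, χ, lift_of]; change ex 0 a / ex 1 a = 1
        rw [hex a hs, div_self']
    rw [hg, map_mul, map_mul, map_inv, mul_comm, ← mul_assoc, inv_mul_cancel, one_mul, hχ, div_eq_one] at hχg
    exact h0 hχg
  · have hy : y = (uspl c)⁻¹ * uspl (of m) * (uspl c)⁻¹⁻¹ := by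
      rw [← hm]; simp only [map_mul, map_inv, uspl_spl]; group
    cases b
    · exfalso
      rw [uspl, lift_of] at hy
      apply h0
      change y = _ * rt2 m * _ at hy
      rw [hy, ex_conj, ex_conj]
      have : ∀ k < 2, ∀ m, ex k (rt2 m) = 1 := by
        intro k hk m
        have : (ex k).comp rt2 = 1 := by
          apply FreeGroup.ext_hom
          intro j
          change ex k (rt2 (xx j)) = 1
          rw [rt2_x]
          split_ifs with h
          · simp
          · rw [ex_x, if_neg (by omega)]; rfl
        exact DFunLike.congr_fun this m
      rw [this 0 (by omega), this 1 (by omega)]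
    · exact ⟨_, m, by rw [uspl, lift_of] at hy; exact hy⟩

end Twist

/-! ### Images of the free generators -/

section Peripheral
variable {r : ℕ}

lemma sq_pure {n i : ℕ} : (σ' i * σ' i : B n) ∈ PB n := by
  rw [mem_PB, map_mul]
  by_cases h : i + 1 < n
  · rw [pm_s h]; simp
  · have : (σ' i : B n) = 1 := by rw [σ', dif_neg (by omega)]
    rw [this]; simp

lemma pr_one_mem (a : FN) : pr 1 a ∈ Subgroup.zpowers (xx 0) := by
  induction a using FreeGroup.induction_on with
  | C1 => rw [map_one]; exact one_mem _
  | of j =>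
    change pr 1 (xx j) ∈ _
    rw [pr_x]
    split_ifs with h
    · obtain rfl : j = 0 := by omega
      exact Subgroup.mem_zpowers _
    · exact one_mem _
  | inv_of j h => rw [map_inv]; exact inv_mem h
  | mul a b h1 h2 => rw [map_mul]; exact mul_mem h1 h2

/-- Pure braids on the first `r` strands preserve the conjugacy class of `θ(x₀)`. -/
lemma theta_pure_conj (h2 : 2 ≤ r) {φ : B (r + 1) ≃* B (r + 1)} (hφ : ∀ g, pm _ (φ g) = pm _ g) {θ : FN →* FN}
    (H : ThetaH φ θ) {p : B (r + 1)} (hp : p ∈ PB (r + 1)) (hp' : p ∈ GG (r + 1) r) :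
    ∃ d, p • θ (xx 0) = d * θ (xx 0) * d⁻¹ := by
  obtain ⟨c, hc⟩ := smul_conj (φ.symm p) 0
  have h0 : pm (r + 1) (φ.symm p) = 1 := by rw [← hφ, MulEquiv.apply_symm_apply]; exact mem_PB.1 hp
  rw [h0, Equiv.Perm.one_apply] at hc
  have h1 := theta_smul h2 H (φ.symm p) (xx 0)
  rw [hc, MulEquiv.apply_symm_apply, ← H.pr (xx 0), ← pr_smul (by omega) hp', qq_pr', pr_smul (by omega) hp',
    H.pr (xx 0)] at h1
  exact ⟨θ c, by rw [← h1, map_mul, map_mul, map_inv]⟩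

/-- For orientation preserving `φ`, the element `θ(x₀)` is conjugate to `x₀`, its class being preserved by the pure
braids. -/
lemma theta_x0 (h3 : 3 ≤ r) {φ : B (r + 1) ≃* B (r + 1)} (hφ : ∀ g, pm _ (φ g) = pm _ g) {θ : FN →* FN}
    (H : ThetaH φ θ) (ho : orient φ = 1) : ∃ d, θ (xx 0) = d * xx 0 * d⁻¹ := by
  have hy := fun k (hk : k < r) => theta_ex h3 hφ H (i := 0) (by omega) hk
  set y := θ (xx 0) with hydef
  rw [ho] at hy
  have hn1 : ∀ k < r, k ≠ 0 → ex 0 y ≠ ex k y := fun k hk hk0 h => by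
    have h1 := hy 0 (by omega); have h2 := hy k hk
    rw [h] at h1
    rw [h1] at h2; simp [hk0.symm] at h2
  have m0 : (σ' 0 : B (r + 1)) ∈ GG (r + 1) r := s_mem (by omega)
  have m1 : (σ' 1 : B (r + 1)) ∈ GG (r + 1) r := s_mem (by omega)
  obtain ⟨d, a, hd⟩ := twist_split (n := r + 1) (by omega) (hn1 1 (by omega) (by omega))
    (theta_pure_conj (by omega) hφ H sq_pure (mul_mem m0 m0))
  obtain ⟨c, hc⟩ := theta_pure_conj (p := (σ' 1 : B (r + 1))⁻¹ * (σ' 0 * σ' 0) * σ' 1) (by omega) hφ H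
    (by
      have := PB_conj (σ' 1 : B (r + 1))⁻¹ (sq_pure (n := r + 1) (i := 0))
      rwa [inv_inv] at this) (mul_mem (mul_mem (inv_mem m1) (mul_mem m0 m0)) m1)
  have hpm : (pm (r + 1) (σ' 1 : B (r + 1))) = Equiv.swap 1 2 := pm_s (by omega)
  obtain ⟨e, b, he⟩ := twist_split (n := r + 1) (y := (σ' 1 : B (r + 1)) • y) (by omega) (by
      rw [ex_smul, ex_smul, hpm]
      have e0 : (Equiv.swap 1 2)⁻¹ 0 = 0 := by decide
      have e1 : (Equiv.swap 1 2)⁻¹ 1 = 2 := by decide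
      rw [e0, e1]
      exact hn1 2 (by omega) (by omega)) ⟨(σ' 1 : B (r + 1)) • c, by
        rw [← smul_mul', ← smul_inv', ← smul_mul', ← hc, ← mul_smul, ← mul_smul]; congr 1; group⟩
  have hp1 : ∀ b, pr 2 ((σ' 1 : B (r + 1))⁻¹ • pr 2 b) = pr 1 b := by
    intro b
    have : (pr 2).comp ((MulDistribMulAction.toMonoidHom FN ((σ' 1 : B (r + 1))⁻¹)).comp (pr 2)) = pr 1 := by
      apply FreeGroup.ext_hom
      intro j
      change pr 2 ((σ' 1 : B (r + 1))⁻¹ • pr 2 (xx j)) = pr 1 (xx j)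
      rw [pr_x, pr_x]
      rcases Nat.lt_or_ge j 2 with h | h
      · interval_cases j
        · rw [if_pos (by omega), s_inv_x (by omega) (by omega) (by omega), pr_x]; rfl
        · rw [if_pos (by omega), s_inv_x0 (by omega), pr_x]; rfl
      · rw [if_neg (by omega), if_neg (by omega)]; simp
    exact DFunLike.congr_fun this b
  -- `pr 2 y` is conjugate both to `y` and to a power of `x₀`
  have hy1 : pr 2 y = pr 2 d * pr 2 a * (pr 2 d)⁻¹ := by
    rw [hd]; simp only [map_mul, map_inv, pr_pr]
  have hy2 : pr 2 y = pr 2 ((σ' 1 : B (r + 1))⁻¹ • e) * pr 1 b * (pr 2 ((σ' 1 : B (r + 1))⁻¹ • e))⁻¹ := by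
    rw [← hp1, ← map_inv, ← map_mul, ← map_mul, ← smul_inv', ← smul_mul', ← smul_mul', ← he, inv_smul_smul]
  obtain ⟨k, hk⟩ := pr_one_mem b
  change xx 0 ^ k = _ at hk
  rw [← hk] at hy2
  have hy3 : ∃ t, y = t * xx 0 ^ k * t⁻¹ := by
    refine ⟨d * (pr 2 d)⁻¹ * pr 2 ((σ' 1 : B (r + 1))⁻¹ • e), ?_⟩
    have : pr 2 a = (pr 2 d)⁻¹ * pr 2 y * pr 2 d := by rw [hy1]; group
    rw [this, hy2] at hd
    rw [hd]
    simp only [mul_inv_rev, mul_assoc, inv_inv]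
  obtain ⟨t, ht⟩ := hy3
  have hk1 := hy 0 (by omega)
  rw [ht, ex_conj, map_zpow, ex_x] at hk1
  simp at hk1
  subst hk1
  exact ⟨t, by rw [ht, zpow_one]⟩

lemma theta_x (h3 : 3 ≤ r) {φ : B (r + 1) ≃* B (r + 1)} (hφ : ∀ g, pm _ (φ g) = pm _ g) {θ : FN →* FN}
    (H : ThetaH φ θ) (ho : orient φ = 1) {i : ℕ} (hi : i ≤ r) : ∃ d, θ (xx i) = d * qq r (xx i) * d⁻¹ := by
  obtain ⟨d, hd⟩ := theta_x0 h3 hφ H ho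
  set g : B (r + 1) := (seg (r + 1) 0 i)⁻¹
  have hg : g • xx 0 = xx i := by rw [inv_smul_eq_iff, seg_smul (by omega) (by omega)]
  have hpm : pm _ g 0 = i := pm_of_smul (c := 1) (by rw [hg]; simp)
  obtain ⟨c, hc⟩ := smul_conj (φ g) 0
  rw [hφ, hpm] at hc
  have := theta_smul (by omega) H g (xx 0)
  rw [hg, hd, smul_mul', smul_mul', hc, smul_inv'] at this
  exact ⟨qq r (φ g • d * c), by rw [this]; simp only [map_mul, map_inv, mul_inv_rev, mul_assoc]⟩

lemma theta_Pi (h3 : 3 ≤ r) {φ : B (r + 1) ≃* B (r + 1)} (hφ : ∀ g, pm _ (φ g) = pm _ g) {θ : FN →* FN}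
    (H : ThetaH φ θ) (ho : orient φ = 1) : ∃ d, θ (Pi r) = d * Pi r * d⁻¹ := by
  obtain ⟨d, hd⟩ := theta_x h3 hφ H ho le_rfl
  have e : qq r (xx r) = (Pi r)⁻¹ := by rw [qq_x]; simp
  rw [← theta_qq (by omega) H, e, map_inv] at hd
  exact ⟨d, by rw [← inv_inj, hd]; group⟩

end Peripheral

/-! ### Artin's characterisation of braid automorphisms -/

section Artin
open FreeGroup (toWord isReduced_toWord IsReduced mk mk_toWord mul_mk norm_mk_le norm_inv_eq toWord_inv invRev)

lemma toWord_mul_of_joint {a b : FN} (h : ∀ p ∈ a.toWord.getLast?, ∀ q ∈ b.toWord.head?, p.1 = q.1 → p.2 = q.2) :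
    (a * b).toWord = a.toWord ++ b.toWord := by
  rw [FreeGroup.toWord_mul]
  exact IsReduced.reduce_eq (List.isChain_append.2 ⟨isReduced_toWord, isReduced_toWord, h⟩)

lemma toWord_mul_xx {a : FN} {j : ℕ} (h : (j, false) ∉ a.toWord.getLast?) :
    (a * xx j).toWord = a.toWord ++ [(j, true)] := by
  rw [toWord_mul_of_joint, FreeGroup.toWord_of]
  intro p hp q hq hpq
  rw [FreeGroup.toWord_of] at hq
  simp at hq
  subst hq
  rcases p with ⟨p, b⟩
  cases b
  · simp at hpq; subst hpq; exact absurd hp h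
  · rfl

/-- Removing the first letter of `u` shortens `v u` if `v` does not end in the same generator. -/
lemma norm_cut {u v : FN} {p : ℕ × Bool} {l : List (ℕ × Bool)} (hu : u.toWord = p :: l)
    (hv : ∀ q ∈ v.toWord.getLast?, q.1 ≠ p.1) : FreeGroup.norm (v * (mk [p])⁻¹ * u) < FreeGroup.norm (v * u) := by
  have e : (mk [p])⁻¹ * u = mk l := by
    rw [← mk_toWord (x := u), hu, inv_mul_eq_iff_eq_mul, mul_mk]; rfl
  have h1 : FreeGroup.norm (v * (mk [p])⁻¹ * u) ≤ FreeGroup.norm v + l.length := by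
    rw [mul_assoc, e]
    exact (FreeGroup.norm_mul_le _ _).trans (Nat.add_le_add_left norm_mk_le _)
  have h2 : (v * u).toWord = v.toWord ++ u.toWord := toWord_mul_of_joint fun q hq q' hq' h => by
    rw [hu] at hq'
    simp at hq'
    subst hq'
    exact absurd h (hv q hq)
  have h3 : FreeGroup.norm (v * u) = FreeGroup.norm v + (l.length + 1) := by
    rw [FreeGroup.norm, h2, List.length_append, hu]; rfl
  omega

lemma head_exists {u : FN} {p : ℕ × Bool} (h : p ∈ u.toWord.head?) : ∃ l, u.toWord = p :: l := by
  cases hw : u.toWord with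
  | nil => rw [hw] at h; simp at h
  | cons q l => rw [hw] at h; simp at h; exact ⟨l, by rw [h]⟩

lemma toWord_inv_head {u : FN} {p : ℕ × Bool} : p ∈ u⁻¹.toWord.head? ↔ (p.1, !p.2) ∈ u.toWord.getLast? := by
  rw [toWord_inv, invRev, List.head?_reverse, List.getLast?_map]
  rcases p with ⟨a, b⟩
  simp only [Option.mem_def, Option.map_eq_some_iff, Prod.mk.injEq]
  constructor
  · rintro ⟨⟨c, d⟩, h, rfl, rfl⟩; simpa using h
  · intro h; exact ⟨_, h, rfl, by simp⟩

lemma sum_lt_swap {m i : ℕ} (hi : i + 1 < m) {f g : ℕ → ℕ} (h : ∀ j, j ≠ i → j ≠ i + 1 → f j = g j)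
    (h' : f i + f (i + 1) < g i + g (i + 1)) : ∑ j ∈ Finset.range m, f j < ∑ j ∈ Finset.range m, g j := by
  have hm1 : i ∈ Finset.range m := by simp; omega
  have hm2 : i + 1 ∈ (Finset.range m).erase i := by simp; omega
  rw [← Finset.add_sum_erase _ f hm1, ← Finset.add_sum_erase _ g hm1, ← Finset.add_sum_erase _ f hm2,
    ← Finset.add_sum_erase _ g hm2]
  have : ∑ x ∈ ((Finset.range m).erase i).erase (i + 1), f x = ∑ x ∈ ((Finset.range m).erase i).erase (i + 1), g x := by
    apply Finset.sum_congr rfl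
    intro j hj
    simp at hj
    exact h j hj.2.1 hj.1
  omega

lemma toWord_perm {m : ℕ} {e : FN →* FN} {τ : ℕ → ℕ} (he : ∀ i < m, e (xx i) = xx (τ i)) :
    (e (Pi m)).toWord = (List.range m).map fun i => (τ i, true) := by
  induction m with
  | zero => rw [Pi, map_one]; rfl
  | succ m ih =>
    rw [Pi_succ, map_mul, he m (by omega), toWord_mul_xx, ih fun i hi => he i (by omega), List.range_succ,
      List.map_append]
    · rfl
    · rw [ih fun i hi => he i (by omega)]
      intro h
      simp at h

lemma toWord_Pi (m : ℕ) : (Pi m).toWord = (List.range m).map fun i => (i, true) :=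
  toWord_perm (e := MonoidHom.id FN) (τ := id) fun _ _ => rfl

variable {n m : ℕ}

/-- The terminal case of Artin's induction: no cancellation is possible. -/
lemma artin_terminal {e : FN →* FN} {w : ℕ → FN} {τ : ℕ → ℕ}
    (he : ∀ i < m, e (xx i) = w i * xx (τ i) * (w i)⁻¹) (hP : e (Pi m) = Pi m)
    (h1 : ∀ i < m, ∀ b, (τ i, b) ∉ (w i).toWord.getLast?)
    (h2 : ∀ i, i + 1 < m → (τ i, false) ∉ ((w i)⁻¹ * w (i + 1)).toWord.head?)
    (h3 : ∀ i, i + 1 < m → (τ (i + 1), false) ∉ ((w i)⁻¹ * w (i + 1)).toWord.getLast?) :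
    ∀ i < m, e (xx i) = xx i := by
  rcases Nat.eq_zero_or_pos m with rfl | hm
  · omega
  have key : ∀ k, k < m → (τ k, false) ∉ (e (Pi k) * w k).toWord.getLast? ∧
      FreeGroup.norm (e (Pi k) * w k) = FreeGroup.norm (w 0) + k + ∑ j ∈ Finset.range k, FreeGroup.norm ((w j)⁻¹ * w (j + 1)) := by
    intro k
    induction k with
    | zero => intro h; simpa [Pi] using h1 0 h false
    | succ k ih =>
      intro hk
      obtain ⟨ih1, ih2⟩ := ih (by omega)
      have e1 : e (Pi (k + 1)) * w (k + 1) = (e (Pi k) * w k * xx (τ k)) * ((w k)⁻¹ * w (k + 1)) := by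
        rw [Pi_succ, map_mul, he k (by omega)]; simp only [mul_assoc]
      have e2 := toWord_mul_xx ih1
      have e3 : (e (Pi (k + 1)) * w (k + 1)).toWord =
          (e (Pi k) * w k * xx (τ k)).toWord ++ ((w k)⁻¹ * w (k + 1)).toWord := by
        rw [e1]
        apply toWord_mul_of_joint
        intro p hp q hq hpq
        rw [e2] at hp
        simp at hp
        subst hp
        rcases q with ⟨q, b⟩
        simp at hpq
        subst hpq
        cases b
        · exact absurd hq (h2 k hk)
        · rfl
      constructor
      · rw [e3, List.getLast?_append]
        intro h
        have h3k := h3 k hk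
        cases hu : ((w k)⁻¹ * w (k + 1)).toWord.getLast? with
        | none => rw [hu, e2] at h; simp at h
        | some q => rw [hu] at h h3k; exact h3k (by simpa using h)
      · have : FreeGroup.norm (e (Pi (k + 1)) * w (k + 1)) = FreeGroup.norm (e (Pi k) * w k) + 1 + FreeGroup.norm ((w k)⁻¹ * w (k + 1)) := by
          rw [FreeGroup.norm, e3, e2]; simp [FreeGroup.norm]; omega
        rw [this, ih2, Finset.sum_range_succ]; ring
  obtain ⟨m, rfl⟩ : ∃ m', m = m' + 1 := ⟨m - 1, by omega⟩
  obtain ⟨k1, k2⟩ := key m (by omega)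
  have e1 : e (Pi (m + 1)) = (e (Pi m) * w m * xx (τ m)) * (w m)⁻¹ := by
    rw [Pi_succ, map_mul, he m (by omega)]; simp only [mul_assoc]
  have e2 := toWord_mul_xx k1
  have e3 : (e (Pi (m + 1))).toWord = (e (Pi m) * w m * xx (τ m)).toWord ++ (w m)⁻¹.toWord := by
    rw [e1]
    apply toWord_mul_of_joint
    intro p hp q hq hpq
    rw [e2] at hp
    simp at hp
    subst hp
    rw [toWord_inv_head, ← hpq] at hq
    exact absurd hq (h1 m (by omega) _)
  have e4 : m + 1 = FreeGroup.norm (w 0) + m + ∑ j ∈ Finset.range m, FreeGroup.norm ((w j)⁻¹ * w (j + 1)) + 1 + FreeGroup.norm (w m) := by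
    have := congrArg List.length e3
    rw [hP, toWord_Pi, List.length_append, e2, List.length_append] at this
    change _ = FreeGroup.norm (e (Pi m) * w m) + 1 + FreeGroup.norm (w m)⁻¹ at this
    rw [k2, norm_inv_eq] at this
    simpa using this
  have e5 : ∀ j ∈ Finset.range m, FreeGroup.norm ((w j)⁻¹ * w (j + 1)) = 0 := by
    rw [← Finset.sum_eq_zero_iff]; omega
  have hw : ∀ j, j < m + 1 → w j = 1 := by
    intro j
    induction j with
    | zero => intro _; rw [← FreeGroup.norm_eq_zero]; omega
    | succ j ih =>
      intro hj
      have := FreeGroup.norm_eq_zero.1 (e5 j (by simp; omega))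
      rwa [ih (by omega), inv_one, one_mul] at this
  have he' : ∀ i < m + 1, e (xx i) = xx (τ i) := fun i hi => by rw [he i hi, hw i hi]; simp
  have h := toWord_perm he'
  rw [hP, toWord_Pi] at h
  intro i hi
  rw [he' i hi]
  have := List.map_inj_left.1 h i (by simpa using hi)
  simp at this
  rw [← this]

/-- **Artin's theorem**: an endomorphism sending each `x_i` (`i < m`) to a conjugate of a generator and
fixing the boundary word agrees on the first `m` generators with a braid. -/
lemma artin (hm : m ≤ n) {e : FN →* FN} {w : ℕ → FN} {τ : ℕ → ℕ}
    (he : ∀ i < m, e (xx i) = w i * xx (τ i) * (w i)⁻¹) (hP : e (Pi m) = Pi m) :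
    ∃ b ∈ GG n m, ∀ i < m, b • xx i = e (xx i) := by
  induction hN : ∑ j ∈ Finset.range m, FreeGroup.norm (w j) using Nat.strong_induction_on generalizing e w τ with
  | _ N ih =>
  subst hN
  -- it suffices to treat `e` composed with a braid generator
  have red : ∀ g ∈ GG n m, (∃ b ∈ GG n m, ∀ i < m, b • xx i = e (g • xx i)) →
      ∃ b ∈ GG n m, ∀ i < m, b • xx i = e (xx i) := by
    rintro g hg ⟨b, hb, hbe⟩
    refine ⟨b * g⁻¹, mul_mem hb (inv_mem hg), fun i hi => ?_⟩
    have h := FN_hom_eqOn (f := MulDistribMulAction.toMonoidHom FN b)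
      (g := e.comp (MulDistribMulAction.toMonoidHom FN g)) hbe (g⁻¹ • xx i)
    change b • pr m (g⁻¹ • xx i) = e (g • pr m (g⁻¹ • xx i)) at h
    rwa [pr_smul hm (inv_mem hg), pr_x, if_pos hi, smul_inv_smul, ← mul_smul] at h
  have hPg : ∀ g ∈ GG n m, e (g • Pi m) = Pi m := fun g hg => by rw [GG_Pi hm hg, hP]
  by_cases h1 : ∀ i < m, ∀ b, (τ i, b) ∉ (w i).toWord.getLast?
  swap
  · -- a conjugator ending in the generator it conjugates can be shortened
    push Not at h1
    obtain ⟨i, hi, b, hb⟩ := h1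
    obtain ⟨l, hl⟩ : ∃ l, (w i).toWord = l ++ [(τ i, b)] := by
      obtain ⟨l, hl⟩ := List.getLast?_eq_some_iff.1 hb
      exact ⟨l, hl⟩
    have hwi : w i = mk l * mk [(τ i, b)] := by rw [mul_mk, ← hl, mk_toWord]
    have hc : Commute (mk [(τ i, b)]) (xx (τ i)) := by
      cases b
      · have : (mk [(τ i, false)] : FN) = (xx (τ i))⁻¹ := rfl
        rw [this]; exact (Commute.refl _).inv_left
      · exact Commute.refl _
    refine ih _ ?_ (w := Function.update w i (mk l)) (τ := τ) (e := e) ?_ hP rfl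
    · apply Finset.sum_lt_sum
      · intro j _
        by_cases hj : j = i
        · subst hj; rw [Function.update_self]
          refine norm_mk_le.trans ?_
          rw [FreeGroup.norm, hl]; simp
        · rw [Function.update_of_ne hj]
      · refine ⟨i, by simpa using hi, ?_⟩
        rw [Function.update_self]
        refine lt_of_le_of_lt norm_mk_le ?_
        rw [FreeGroup.norm, hl]; simp
    · intro j hj
      by_cases hji : j = i
      · subst hji
        rw [Function.update_self, he j hj, hwi, mul_assoc (mk l), hc.eq]; simp only [mul_inv_rev, mul_assoc, mul_inv_cancel_left]
      · rw [Function.update_of_ne hji, he j hj]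
  by_cases h2 : ∀ i, i + 1 < m → (τ i, false) ∉ ((w i)⁻¹ * w (i + 1)).toWord.head?
  swap
  · push Not at h2
    obtain ⟨i, hi, hb⟩ := h2
    have hmem : (σ' i : B n) ∈ GG n m := s_mem hi
    have hi' : i + 1 < n := by omega
    refine red _ hmem ?_
    obtain ⟨l, hl⟩ := head_exists hb
    have hcut := norm_cut hl (v := w i) fun q hq hqp => h1 i (by omega) q.2 (by dsimp only at hqp; rwa [← hqp])
    have hmk : (mk [(τ i, false)] : FN)⁻¹ = xx (τ i) := by
      have : (mk [(τ i, false)] : FN) = (xx (τ i))⁻¹ := rfl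
      rw [this, inv_inv]
    rw [hmk, mul_inv_cancel_left] at hcut
    refine ih _ ?_ (e := e.comp (MulDistribMulAction.toMonoidHom FN (σ' i : B n)))
      (w := fun j => if j = i then w i * xx (τ i) * ((w i)⁻¹ * w (i + 1)) else if j = i + 1 then w i else w j)
      (τ := fun j => if j = i then τ (i + 1) else if j = i + 1 then τ i else τ j) ?_ (hPg _ hmem) rfl
    · apply sum_lt_swap hi
      · intro j hj hj'; simp [hj, hj']
      · simp; omega
    · intro j hj
      change e ((σ' i : B n) • xx j) = _
      by_cases hj1 : j = i
      · subst hj1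
        simp only [if_true]
        rw [s_x0 hi', map_mul, map_mul, map_inv, he j hj, he (j + 1) hi]
        simp only [mul_inv_rev, mul_assoc, inv_inv]
      by_cases hj2 : j = i + 1
      · subst hj2
        simp only [if_true, if_neg hj1]
        rw [s_x1 hi', he i (by omega)]
      · simp only [if_neg hj1, if_neg hj2]
        rw [s_x hi' hj1 hj2, he j hj]
  by_cases h3 : ∀ i, i + 1 < m → (τ (i + 1), false) ∉ ((w i)⁻¹ * w (i + 1)).toWord.getLast?
  swap
  · push Not at h3
    obtain ⟨i, hi, hb⟩ := h3
    have hmem : (σ' i : B n)⁻¹ ∈ GG n m := inv_mem (s_mem hi)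
    have hi' : i + 1 < n := by omega
    refine red _ hmem ?_
    have hb' : (τ (i + 1), true) ∈ ((w i)⁻¹ * w (i + 1))⁻¹.toWord.head? := toWord_inv_head.2 hb
    obtain ⟨l, hl⟩ := head_exists hb'
    have hcut := norm_cut hl (v := w (i + 1)) fun q hq hqp => h1 (i + 1) (by omega) q.2 (by dsimp only at hqp; rwa [← hqp])
    have hmk : (mk [(τ (i + 1), true)] : FN) = xx (τ (i + 1)) := rfl
    rw [hmk, mul_inv_rev, inv_inv, mul_inv_cancel_left] at hcut
    refine ih _ ?_ (e := e.comp (MulDistribMulAction.toMonoidHom FN (σ' i : B n)⁻¹))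
      (w := fun j => if j = i then w (i + 1) else if j = i + 1 then w (i + 1) * (xx (τ (i + 1)))⁻¹ * ((w (i + 1))⁻¹ * w i) else w j)
      (τ := fun j => if j = i then τ (i + 1) else if j = i + 1 then τ i else τ j) ?_ (hPg _ hmem) rfl
    · apply sum_lt_swap hi
      · intro j hj hj'; simp [hj, hj']
      · simp; omega
    · intro j hj
      change e ((σ' i : B n)⁻¹ • xx j) = _
      by_cases hj1 : j = i
      · subst hj1
        simp only [if_true]
        rw [s_inv_x0 hi', he (j + 1) hi]
      by_cases hj2 : j = i + 1
      · subst hj2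
        simp only [if_true, if_neg hj1]
        rw [s_inv_x1 hi', map_mul, map_mul, map_inv, he i (by omega), he (i + 1) hi]
        simp only [mul_inv_rev, mul_assoc, inv_inv]
      · simp only [if_neg hj1, if_neg hj2]
        rw [s_inv_x hi' hj1 hj2, he j hj]
  exact ⟨1, one_mem _, fun i hi => by rw [one_smul, artin_terminal he hP h1 h2 h3 i hi]⟩

end Artin

/-! ### Automorphisms preserving permutations -/

section Conclusion
variable {r : ℕ}

lemma es_Tk_gt (h3 : 3 ≤ r) : 6 < es (Tk (r + 1) r) := by
  obtain ⟨p, rfl⟩ : ∃ p, r = p + 1 := ⟨r - 1, by omega⟩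
  have h := es_Tk_pos (n := p + 1 + 1) (r := p) (by omega) (by omega)
  rw [Tk_succ, es_mul, es_ck (by omega)]
  push_cast
  omega

lemma inner_of_orient (h3 : 3 ≤ r) (φ : B (r + 1) ≃* B (r + 1)) (hφ : ∀ g, pm _ (φ g) = pm _ g)
    (ho : orient φ = 1) : ∃ c, ∀ i, φ (σ i) = c * σ i * c⁻¹ := by
  have hr := Nat.lt_succ_self r
  obtain ⟨θ, H⟩ := theta_exists (by omega) φ hφ
  obtain ⟨d', hd'⟩ := theta_Pi h3 hφ H ho
  set d := pr r d'
  have hd : θ (Pi r) = d * Pi r * d⁻¹ := by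
    rw [← H.pr, hd', map_mul, map_mul, map_inv, pr_Pi le_rfl]
  have hdd : qq r d = d := qq_pr' _
  have hex : ∀ i : ℕ, ∃ w, i < r → θ (xx i) = w * xx i * w⁻¹ := fun i => by
    by_cases hi : i < r
    · obtain ⟨w, hw⟩ := theta_x h3 hφ H ho hi.le
      rw [qq_x, if_pos hi] at hw
      exact ⟨w, fun _ => hw⟩
    · exact ⟨1, fun h => absurd h hi⟩
  choose w hw using hex
  obtain ⟨b, hb, hbe⟩ := artin (n := r + 1) (m := r) (by omega) (e := (MulAut.conj d⁻¹).toMonoidHom.comp θ)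
    (w := fun i => d⁻¹ * w i) (τ := id) (fun i hi => by
      change d⁻¹ * θ (xx i) * d⁻¹⁻¹ = _
      rw [hw i hi]; simp only [mul_inv_rev, mul_assoc, id]) (by
      change d⁻¹ * θ (Pi r) * d⁻¹⁻¹ = _
      rw [hd]; simp only [mul_assoc, inv_inv, inv_mul_cancel_left, inv_mul_cancel, mul_one])
  have hb1 : ∀ y, b • pr r y = d⁻¹ * θ (pr r y) * d := fun y => by
    have := FN_hom_eqOn (f := MulDistribMulAction.toMonoidHom FN b)
      (g := (MulAut.conj d⁻¹).toMonoidHom.comp θ) hbe y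
    change b • pr r y = d⁻¹ * θ (pr r y) * d⁻¹⁻¹ at this
    rwa [inv_inv] at this
  have hbG : b ∈ GG (r + 1) (r + 1) := mem_GG_top b
  set c := ka (r + 1) r d * b with hc
  have hcG := mem_GG_top c
  have hθ : ∀ y, θ y = qq r (c • y) := by
    intro y
    have h1 := hb1 (qq r y)
    rw [pr_qq, theta_qq (by omega) H] at h1
    have h2 : qq r (b • y) = b • qq r y := by
      have h3 : b • qq r y = pr r (b • qq r y) := by rw [pr_smul (by omega) hb, pr_qq]
      rw [← qq_smul_qq hr hbG, h3, qq_pr']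
    rw [hc, mul_smul, qq_ka hr, h2, h1, hdd]
    simp only [mul_assoc, mul_inv_cancel_left, mul_inv_cancel, mul_one]
  have hker : ∀ g, g⁻¹ * c⁻¹ * φ g * c ∈ Subgroup.zpowers (Tk (r + 1) r) := by
    intro g
    obtain ⟨p, rfl⟩ : ∃ p, r = p + 1 := ⟨r - 1, by omega⟩
    refine ker_lemma (by omega) (by omega) (mem_GG_top _) fun y => ?_
    have h1 := theta_smul (by omega) H g y
    rw [hθ, hθ, qq_smul_qq hr (mem_GG_top _), ← mul_smul, ← mul_smul] at h1
    have e : g⁻¹ * c⁻¹ * φ g * c = (c * g)⁻¹ * (φ g * c) := by rw [mul_inv_rev c g]; simp only [mul_assoc]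
    rw [e, mul_smul, ← qq_smul_qq hr (mem_GG_top _), ← h1, qq_smul_qq hr (mem_GG_top _), inv_smul_smul]
  obtain ⟨ε, hε, hεs, -⟩ := aut_sign (by omega) φ
  have hT := es_Tk_gt h3
  refine ⟨c, fun i => ?_⟩
  obtain ⟨k, hk⟩ := hker (σ i)
  change _ ^ k = _ at hk
  have hes := congrArg es hk
  rw [es_zpow] at hes
  simp only [es_mul, es_inv, es_σ, hεs] at hes
  have hk0 : k = 0 := by
    by_contra hne
    have h1 : 6 < |k * es (Tk (r + 1) r)| := by
      rw [abs_mul, abs_of_pos (by omega : 0 < es (Tk (r + 1) r))]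
      have := Int.one_le_abs hne
      nlinarith
    have h2 : |k * es (Tk (r + 1) r)| ≤ 2 := by
      rw [hes]; rcases hε with rfl | rfl <;> (rw [abs_le]; constructor <;> linarith)
    omega
  rw [hk0, zpow_zero] at hk
  have : φ (σ i) = c * σ i * ((σ i)⁻¹ * c⁻¹ * φ (σ i) * c) * c⁻¹ := by group
  rw [this, ← hk, mul_one]

lemma eps_s {n i : ℕ} : eps n (σ' i) = (σ' i)⁻¹ := by
  rw [σ']; split_ifs <;> simp

lemma eps_ck {n r : ℕ} : eps n (ck n r) = (ck n r)⁻¹ := by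
  induction r with
  | zero => simp [ck]
  | succ r ih => rw [ck_succ, map_mul, map_mul, eps_s, ih]; simp only [mul_inv_rev, mul_assoc]

lemma pm_eps {n : ℕ} (g : B n) : pm n (eps n g) = pm n g := by
  have : (pm n).comp (eps n) = pm n := Bhom_ext fun i => by
    have : σ i = (σ' i : B n) := by rw [σ', dif_pos i.2]
    rw [MonoidHom.comp_apply, eps_σ, this, map_inv, pm_s (by omega), Equiv.swap_inv]
  exact DFunLike.congr_fun this g

/-- The automorphism inverting all generators. -/
noncomputable def epsE (n : ℕ) : B n ≃* B n := MulEquiv.ofBijective (eps n) ⟨fun a b h => by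
  rw [← eps_eps a, h, eps_eps], fun a => ⟨eps n a, eps_eps a⟩⟩

lemma epsE_apply {n : ℕ} (g : B n) : epsE n g = eps n g := rfl

/-- An automorphism inducing the identity on permutations is inner up to inverting the generators. -/
lemma aut_of_perm (h3 : 3 ≤ r) (φ : B (r + 1) ≃* B (r + 1)) (hφ : ∀ g, pm _ (φ g) = pm _ g) :
    ∃ c, (∀ i, φ (σ i) = c * σ i * c⁻¹) ∨ ∀ i, φ (σ i) = c * (σ i)⁻¹ * c⁻¹ := by
  rcases orient_sign h3 φ hφ with ho | ho
  · obtain ⟨c, hc⟩ := inner_of_orient h3 φ hφ ho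
    exact ⟨c, Or.inl hc⟩
  · have hp : φ (ck (r + 1) r) ∈ PB (r + 1) := by rw [mem_PB, hφ, ← mem_PB]; exact ck_pure (by omega)
    obtain ⟨c, hc⟩ := inner_of_orient h3 ((epsE (r + 1)).trans φ)
      (fun g => by rw [MulEquiv.trans_apply, hφ, epsE_apply, pm_eps]) (by
        rw [orient] at ho ⊢
        rw [MulEquiv.trans_apply, epsE_apply, eps_ck, map_inv, Lk_inv_pure hp, Lk_inv_pure hp]
        omega)
    refine ⟨c, Or.inr fun i => ?_⟩
    have := hc i
    rw [MulEquiv.trans_apply, epsE_apply, eps_σ, map_inv, inv_eq_iff_eq_inv] at this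
    rw [this]; simp only [mul_inv_rev, inv_inv, mul_assoc]

end Conclusion

/-! ### The rotation and its permutation -/

section Rotation
variable {r n : ℕ}

/-- `σ_0 σ_1 ⋯ σ_{m-1}`. -/
def Dd (n : ℕ) : ℕ → B n
  | 0 => 1
  | m + 1 => Dd n m * σ' m

lemma Dd_succ (m : ℕ) : Dd n (m + 1) = Dd n m * σ' m := rfl

lemma Dd_comm {i m : ℕ} (h : m < i) : Commute (Dd n m) (σ' i) := by
  induction m with
  | zero => exact Commute.one_left _
  | succ m ih => rw [Dd_succ]; exact (ih (by omega)).mul_left (s_far (by omega))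

lemma Dd_s {m : ℕ} (hm : m < n) {i : ℕ} (hi : i + 1 < m) : Dd n m * σ' i = σ' (i + 1) * Dd n m := by
  induction m with
  | zero => omega
  | succ m ih =>
    rcases Nat.lt_or_ge (i + 1) m with h | h
    · rw [Dd_succ, mul_assoc, ← (s_far (n := n) h : σ' i * σ' m = _), ← mul_assoc, ih (by omega) h, mul_assoc]
    · obtain rfl : m = i + 1 := by omega
      rw [Dd_succ, Dd_succ]
      have h1 := s_adj (n := n) (i := i) (by omega)
      have h2 := (Dd_comm (n := n) (i := i + 1) (m := i) (by omega)).eq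
      calc Dd n i * σ' i * σ' (i + 1) * σ' i = Dd n i * (σ' i * σ' (i + 1) * σ' i) := by simp only [mul_assoc]
        _ = (Dd n i * σ' (i + 1)) * σ' i * σ' (i + 1) := by rw [h1]; simp only [mul_assoc]
        _ = _ := by rw [h2]; simp only [mul_assoc]

lemma Dd_pow_s {m : ℕ} (hm : m < n) (i : ℕ) (hi : i < m) : Dd n m ^ i * σ' 0 = σ' i * Dd n m ^ i := by
  induction i with
  | zero => simp
  | succ i ih =>
    rw [pow_succ', mul_assoc, ih (by omega), ← mul_assoc, Dd_s hm hi, mul_assoc]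

lemma Ed_pow {m : ℕ} (hm : m < n) (k : ℕ) (hk : k ≤ m) : (σ' 0 * Dd n m) ^ k = Dd n k * Dd n m ^ k := by
  induction k with
  | zero => simp [Dd]
  | succ k ih =>
    rw [pow_succ, ih (by omega), Dd_succ, pow_succ]
    have := Dd_pow_s hm k (by omega)
    calc Dd n k * Dd n m ^ k * (σ' 0 * Dd n m) = Dd n k * (Dd n m ^ k * σ' 0) * Dd n m := by simp only [mul_assoc]
      _ = _ := by rw [this]; simp only [mul_assoc]

lemma Ed_Dd : (σ' 0 * Dd (r + 1) r) ^ r = Dd (r + 1) r ^ (r + 1) := by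
  rw [Ed_pow (Nat.lt_succ_self r) r le_rfl, pow_succ']

lemma es_Dd {m : ℕ} (hm : m < n) : es (Dd n m) = m := by
  induction m with
  | zero => simp [Dd]
  | succ m ih => rw [Dd_succ, es_mul, ih (by omega), es_s hm]; push_cast; ring

lemma es_Tk {m : ℕ} (hm : m < n) : es (Tk n m) = m * (m + 1) := by
  induction m with
  | zero => simp [Tk]
  | succ m ih => rw [Tk_succ, es_mul, ih (by omega), es_ck hm]; push_cast; ring

/-- The element `(σ_0 ⋯ σ_{r-1})^{r+1} = (σ_0 · σ_0 ⋯ σ_{r-1})^r` commutes with both of its roots, hence is central;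
the exponent sum identifies it. -/
lemma Dd_pow (h2 : 2 ≤ r) : Dd (r + 1) r ^ (r + 1) = Tk (r + 1) r := by
  have hD : Commute (Dd (r + 1) r ^ (r + 1)) (Dd (r + 1) r) := (Commute.refl _).pow_left _
  have hE : Commute (Dd (r + 1) r ^ (r + 1)) (σ' 0 * Dd (r + 1) r) := by
    rw [← Ed_Dd]; exact (Commute.refl _).pow_left _
  have h0 : Commute (Dd (r + 1) r ^ (r + 1)) (σ' 0) := by
    have := hE.mul_right hD.inv_right
    rwa [mul_inv_cancel_right] at this
  have hs : ∀ i < r, Commute (Dd (r + 1) r ^ (r + 1)) (σ' i) := fun i hi => by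
    have e : (σ' i : B (r + 1)) = Dd (r + 1) r ^ i * σ' 0 * (Dd (r + 1) r ^ i)⁻¹ := by
      rw [Dd_pow_s (Nat.lt_succ_self r) i hi, mul_inv_cancel_right]
    rw [e]
    exact ((hD.pow_right i).mul_right h0).mul_right (hD.pow_right i).inv_right
  have hc : ∀ g, Commute (Dd (r + 1) r ^ (r + 1)) g := fun g => by
    induction g using B_ind' with
    | h1 => exact Commute.one_right _
    | hm i a hi ha => exact (hs i (by omega)).mul_right ha
    | hi i a hi ha => exact (hs i (by omega)).inv_right.mul_right ha
  obtain ⟨k, hk⟩ := center_T h2 hc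
  have hk : Tk (r + 1) r ^ k = Dd (r + 1) r ^ (r + 1) := hk
  have he := congrArg es hk
  rw [es_zpow, es_pow, es_Dd (Nat.lt_succ_self r), es_Tk (Nat.lt_succ_self r)] at he
  have : k = 1 := by
    have : (r * (r + 1) : ℤ) ≠ 0 := by positivity
    apply mul_right_cancel₀ this
    push_cast at he; linarith
  rw [← hk, this, zpow_one]

end Rotation

section PermFin
variable {r n : ℕ}

/-- The permutation of a braid, on `Fin n`. -/
def pf (n : ℕ) : B n →* Equiv.Perm (Fin n) where
  toFun g := ⟨fun i => ⟨pm n g i, pm_lt.2 i.2⟩, fun i => ⟨(pm n g)⁻¹ i, pm_inv_lt.2 i.2⟩,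
    fun i => by simp, fun i => by simp⟩
  map_one' := by ext i; simp
  map_mul' a b := by ext i; simp

@[simp] lemma pf_val (g : B n) (i : Fin n) : ((pf n g i : Fin n) : ℕ) = pm n g i := rfl

lemma pf_inj {g h : B n} (e : pf n g = pf n h) : pm n g = pm n h := by
  ext i
  by_cases hi : i < n
  · exact congrArg Fin.val (DFunLike.congr_fun e ⟨i, hi⟩)
  · rw [pm_fix le_rfl (mem_GG_top g) (by omega), pm_fix le_rfl (mem_GG_top h) (by omega)]

lemma pf_s {k : ℕ} (h : k < r) : pf (r + 1) (σ' k) = Equiv.swap (Fin.castSucc ⟨k, h⟩) (Fin.succ ⟨k, h⟩) := by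
  ext i
  rw [pf_val, pm_s (by omega)]
  simp only [Equiv.swap_apply_def, Fin.ext_iff]
  split_ifs <;> simp_all

lemma pf_surj (w : Equiv.Perm (Fin (r + 1))) : ∃ g, pf (r + 1) g = w := by
  have : w ∈ Submonoid.closure (Set.range fun i : Fin r => Equiv.swap i.castSucc i.succ) := by
    rw [Equiv.Perm.mclosure_swap_castSucc_succ]; trivial
  have h2 : Submonoid.closure (Set.range fun i : Fin r => Equiv.swap i.castSucc i.succ) ≤ MonoidHom.mrange (pf (r + 1)) := by
    rw [Submonoid.closure_le]
    rintro _ ⟨i, rfl⟩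
    exact ⟨σ' i, pf_s i.2⟩
  exact h2 this

lemma Lk_pow_fix {h : B n} {i j : ℕ} (hi : pm n h i = i) (hj : pm n h j = j) (e : ℕ) : Lk (h ^ e) i j = e * Lk h i j := by
  have hi' : (pm n h)⁻¹ i = i := by rw [Equiv.Perm.inv_eq_iff_eq, hi]
  have hj' : (pm n h)⁻¹ j = j := by rw [Equiv.Perm.inv_eq_iff_eq, hj]
  induction e with
  | zero => simp [Lk_one]
  | succ e ih => rw [pow_succ', Lk_mul, hi', hj', ih]; push_cast; ring

/-- A proper root of the full twist or its inverse has a permutation with at most one fixed point, since all linking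
numbers of the full twist are `1`. -/
lemma root_fix {h : B (r + 1)} {e : ℕ} (he : 2 ≤ e) {ε : ℤ} (hε : ε = 1 ∨ ε = -1) (H : h ^ e = Tk (r + 1) r ^ ε)
    {i j : Fin (r + 1)} (hi : pf _ h i = i) (hj : pf _ h j = j) : i = j := by
  by_contra hne
  have h1 := Lk_pow_fix (congrArg Fin.val hi) (congrArg Fin.val hj) e
  have hne' : (i : ℕ) ≠ j := fun h => hne (Fin.ext h)
  rw [H, Lk_zpow (Tk_pure (by omega)), Lk_Tk (by omega), if_pos (by have := i.2; have := j.2; omega)] at h1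
  have : (e : ℤ) ∣ 1 := by
    rcases hε with rfl | rfl
    · exact ⟨_, by linarith⟩
    · exact ⟨- Lk h i j, by linarith⟩
  have := Int.le_of_dvd one_pos this
  omega

lemma root_period {h : B (r + 1)} {N : ℕ} (hN : 0 < N) {ε : ℤ} (hε : ε = 1 ∨ ε = -1) (H : h ^ N = Tk (r + 1) r ^ ε)
    {i : Fin (r + 1)} (hi : pf _ h i ≠ i) : Function.minimalPeriod (pf _ h) i = N := by
  have hd : Function.minimalPeriod (pf _ h) i ∣ N := by
    apply Function.IsPeriodicPt.minimalPeriod_dvd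
    rw [Function.IsPeriodicPt, Function.IsFixedPt, Equiv.Perm.iterate_eq_pow, ← map_pow, H]
    apply Fin.ext
    have : Tk (r + 1) r ^ ε ∈ PB (r + 1) := (PB _).zpow_mem (Tk_pure (by omega)) _
    rw [pf_val, mem_PB.1 this]; rfl
  obtain ⟨e, he⟩ := hd
  set d := Function.minimalPeriod (pf _ h) i
  by_contra hne
  have he2 : 2 ≤ e := by
    rcases e with _ | _ | e
    · omega
    · omega
    · omega
  apply hi
  have hfix : pf _ (h ^ d) i = i := by
    rw [map_pow, ← Equiv.Perm.iterate_eq_pow]; exact Function.iterate_minimalPeriod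
  refine root_fix (h := h ^ d) he2 hε (by rw [← pow_mul, ← he, H]) ?_ hfix
  have := congrArg (pf _ h) hfix
  rw [← Equiv.Perm.mul_apply, ← map_mul, ← pow_succ', pow_succ, map_mul, Equiv.Perm.mul_apply] at this
  exact this

end PermFin

/-! ### Normalising the permutation of the rotation -/

section Normalise
variable {r : ℕ}

lemma orb_inj {α : Type*} {f : α → α} {a : α} {N : ℕ} (h : Function.minimalPeriod f a = N) {i j : ℕ} (hi : i < N)
    (hj : j < N) (e : f^[i] a = f^[j] a) : i = j := by
  subst h
  exact Function.iterate_injOn_Iio_minimalPeriod hi hj e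

lemma orb_ret {α : Type*} {f : α → α} {a : α} {N : ℕ} (h : Function.minimalPeriod f a = N) : f^[N] a = a := by
  subst h
  exact Function.iterate_minimalPeriod

/-- After an inner automorphism, the permutation of the image of the rotation `δ` is the standard cycle, and that of the
image of `σ_0 δ` has the single fixed point `0`. -/
lemma norm_rot (h3 : 3 ≤ r) (φ : B (r + 1) ≃* B (r + 1)) : ∃ c,
    (∀ y, pf _ (c⁻¹ * φ (Dd (r + 1) r) * c) y = y + 1) ∧
    ∀ y, pf _ (c⁻¹ * φ (σ' 0 * Dd (r + 1) r) * c) y = y ↔ y = 0 := by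
  obtain ⟨ε, hε, -, hT⟩ := aut_sign (by omega) φ
  have HD : φ (Dd (r + 1) r) ^ (r + 1) = Tk (r + 1) r ^ ε := by rw [← map_pow, Dd_pow (by omega), hT]
  have HE : φ (σ' 0 * Dd (r + 1) r) ^ r = Tk (r + 1) r ^ ε := by
    rw [← map_pow, Ed_Dd, Dd_pow (by omega), hT]
  set t := pf _ (φ (Dd (r + 1) r)) with ht
  set e := pf _ (φ (σ' 0 * Dd (r + 1) r)) with he
  obtain ⟨p, hp⟩ : ∃ p, e p = p := by
    by_contra! hno
    have hper : Function.minimalPeriod e 0 = r := root_period (by omega) hε HE (hno 0)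
    set O : Finset (Fin (r + 1)) := (Finset.range r).image fun k => e^[k] 0 with hO
    have hcard : O.card = r := by
      rw [hO, Finset.card_image_of_injOn, Finset.card_range]
      intro i hi j hj hij
      exact orb_inj hper (by simpa using hi) (by simpa using hj) hij
    have hc : Oᶜ.card = 1 := by rw [Finset.card_compl, hcard, Fintype.card_fin]; omega
    obtain ⟨b, hb⟩ := Finset.card_eq_one.1 hc
    have hbO : b ∉ O := by rw [← Finset.mem_compl, hb]; simp
    apply hno b
    have : e b ∈ Oᶜ := by
      rw [Finset.mem_compl]
      intro hm
      apply hbO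
      rw [hO, Finset.mem_image] at hm ⊢
      obtain ⟨k, hk, hk'⟩ := hm
      rw [Finset.mem_range] at hk
      rcases k with _ | k
      · refine ⟨r - 1, by rw [Finset.mem_range]; omega, e.injective ?_⟩
        rw [← Function.iterate_succ_apply' (⇑e), ← hk', Nat.succ_eq_add_one, Nat.sub_add_cancel (by omega)]
        exact orb_ret hper
      · refine ⟨k, by rw [Finset.mem_range]; omega, e.injective ?_⟩
        rw [← Function.iterate_succ_apply' (⇑e), hk']
    rw [hb] at this
    simpa using this
  have hsurj : ∀ {q}, Function.minimalPeriod t q = r + 1 → Function.Bijective fun y : Fin (r + 1) => t^[(y : ℕ)] q := by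
    intro q hq
    rw [← Finite.injective_iff_bijective]
    intro i j hij
    exact Fin.ext (orb_inj hq i.2 j.2 hij)
  have htp : t p ≠ p := by
    intro htp
    have : Nontrivial (Fin (r + 1)) := Fin.nontrivial_iff_two_le.2 (by omega)
    obtain ⟨q, hq⟩ : ∃ q, q ≠ p := exists_ne p
    have hqq : t q ≠ q := fun h => hq (root_fix (e := r + 1) (by omega) hε HD h htp)
    obtain ⟨k, hk⟩ := (hsurj (root_period (by omega) hε HD hqq)).2 p
    apply hq
    have hk : t^[(k : ℕ)] q = p := hk
    have : t^[(k : ℕ)] q = t^[(k : ℕ)] p := by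
      rw [hk]; exact (Function.iterate_fixed htp _).symm
    exact t.injective.iterate _ this
  have hper := root_period (by omega) hε HD htp
  obtain ⟨c, hc⟩ := pf_surj (Equiv.ofBijective _ (hsurj hper))
  have hcy : ∀ y, pf _ c y = t^[(y : ℕ)] p := fun y => by rw [hc]; rfl
  refine ⟨c, fun y => ?_, fun y => ?_⟩
  · rw [map_mul, map_mul, map_inv, Equiv.Perm.mul_apply, Equiv.Perm.mul_apply, Equiv.Perm.inv_eq_iff_eq, hcy, hcy,
      ← ht, ← Function.iterate_succ_apply' (⇑t)]
    rcases Nat.lt_or_ge y r with hy | hy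
    · rw [Fin.val_add_one_of_lt (by rw [Fin.lt_def]; exact hy)]
    · obtain rfl : y = Fin.last r := Fin.ext (by have := y.2; simp; omega)
      rw [Fin.last_add_one]
      simp only [Fin.val_last, Fin.val_zero, Nat.succ_eq_add_one]
      exact orb_ret hper
  · rw [map_mul, map_mul, map_inv, Equiv.Perm.mul_apply, Equiv.Perm.mul_apply, Equiv.Perm.inv_eq_iff_eq, ← he]
    have h0 : pf _ c 0 = p := by rw [hcy]; rfl
    constructor
    · intro h
      apply (pf _ c).injective
      rw [h0]
      exact root_fix (e := r) (by omega) hε HE h hp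
    · rintro rfl
      rw [h0, hp]

end Normalise

/-! ### Braid sequences of permutations -/

section BraidSeq
variable {G : Type*} [Group G] {k : ℕ} {s : ℕ → G}

/-- The first `k` terms of the sequence satisfy the braid relations. -/
structure BS (k : ℕ) (s : ℕ → G) : Prop where
  far : ∀ i j, i + 1 < j → j < k → Commute (s i) (s j)
  adj : ∀ i, i + 1 < k → s i * s (i + 1) * s i = s (i + 1) * s i * s (i + 1)

lemma eq_of_comm_braid {a b : G} (h : Commute a b) (h' : a * b * a = b * a * b) : a = b := by
  rw [h.eq, mul_assoc, mul_assoc] at h'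
  have := mul_left_cancel h'
  exact mul_left_cancel this

lemma BS.all_eq (h : BS k s) {i : ℕ} (hi : i + 1 < k) (e : s i = s (i + 1)) : ∀ j < k, s j = s 0 := by
  have up : ∀ j, i ≤ j → j + 1 < k → s j = s (j + 1) := by
    intro j hj
    induction j, hj using Nat.le_induction with
    | base => intro _; exact e
    | succ j hj ih =>
      intro hk
      have h1 := h.far j (j + 2) (by omega) (by omega)
      rw [ih (by omega)] at h1
      exact eq_of_comm_braid h1 (h.adj _ hk)
  have down : ∀ d j, j + d = i → s j = s (j + 1) := by
    intro d
    induction d with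
    | zero => rintro j rfl; exact e
    | succ d ih =>
      intro j hj
      have h1 := h.far j (j + 2) (by omega) (by omega)
      rw [← ih (j + 1) (by omega)] at h1
      exact eq_of_comm_braid h1 (h.adj _ (by omega))
  intro j
  induction j with
  | zero => intro _; rfl
  | succ j ih =>
    intro hj
    rw [← ih (by omega)]
    rcases le_total i j with h' | h'
    · exact (up j h' hj).symm
    · exact (down (i - j) j (by omega)).symm

lemma BS.all_eq_of_one (h : BS k s) {i : ℕ} (hi : i + 1 < k) (e : s i = 1) : ∀ j < k, s j = s 0 := by
  refine h.all_eq hi ?_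
  exact eq_of_comm_braid (by rw [e]; exact Commute.one_left _) (h.adj i hi)

lemma BS.shift (h : BS k s) (d : ℕ) : BS (k - d) fun i => s (d + i) :=
  ⟨fun i j h1 h2 => h.far _ _ (by omega) (by omega), fun i h1 => h.adj _ (by omega)⟩

lemma BS.map {H : Type*} [Group H] (h : BS k s) (f : G →* H) : BS k fun i => f (s i) :=
  ⟨fun i j h1 h2 => (h.far i j h1 h2).map f, fun i h1 => by
    simp only [← map_mul]; rw [h.adj i h1]⟩

lemma BS.all_eq_of_ratio (h : BS k s) (hk : 4 ≤ k) (hc : Commute (s 1 * (s 0)⁻¹) (s 3 * (s 0)⁻¹)) :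
    ∀ j < k, s j = s 0 := by
  refine h.all_eq (i := 0) (by omega) ?_
  have h03 := h.far 0 3 (by omega) (by omega)
  have h13 := h.far 1 3 (by omega) (by omega)
  refine eq_of_comm_braid ?_ (h.adj 0 (by omega))
  -- `s 3 * (s 0)⁻¹` commutes with `s 1 * (s 0)⁻¹` and `s 0`, hence with `s 1`, hence `s 0` does
  have h1 : Commute (s 1) (s 3 * (s 0)⁻¹) := by
    have h0 : Commute (s 0) (s 3 * (s 0)⁻¹) := h03.mul_right (Commute.refl _).inv_right
    have := hc.mul_left h0
    rwa [inv_mul_cancel_right] at this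
  have h2 := (h13.inv_right.mul_right h1).inv_right
  simpa using h2.symm

end BraidSeq

section Cycles
variable {X : Type}

/-- The cycles of a permutation, fixed points included. -/
abbrev Cyc (f : Equiv.Perm X) := Quotient (Equiv.Perm.SameCycle.setoid f)

lemma sc_map {f s : Equiv.Perm X} (h : Commute s f) {x y : X} (hxy : f.SameCycle x y) : f.SameCycle (s x) (s y) := by
  obtain ⟨i, rfl⟩ := hxy
  refine ⟨i, ?_⟩
  rw [← Equiv.Perm.mul_apply, ← Equiv.Perm.mul_apply, (h.zpow_right i).eq]

/-- The centraliser of `f` permutes the cycles of `f`. -/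
def cycHom (f : Equiv.Perm X) : Subgroup.centralizer {f} →* Equiv.Perm (Cyc f) where
  toFun s := ⟨Quotient.map s.1 fun _ _ => sc_map (Subgroup.mem_centralizer_singleton_iff.1 s.2),
    Quotient.map (s⁻¹).1 fun _ _ => sc_map (Subgroup.mem_centralizer_singleton_iff.1 (s⁻¹).2),
    fun q => by induction q using Quotient.inductionOn; simp, fun q => by induction q using Quotient.inductionOn; simp⟩
  map_one' := by ext q; induction q using Quotient.inductionOn; rfl
  map_mul' a b := by ext q; induction q using Quotient.inductionOn; rfl

lemma cycHom_mk (f : Equiv.Perm X) (s) (x : X) : cycHom f s (Quotient.mk _ x) = Quotient.mk _ (s.1 x) := rfl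

lemma comm_of_cyc {f a b : Equiv.Perm X} (ha : Commute a f) (hb : Commute b f) (ha' : ∀ x, f.SameCycle x (a x))
    (hb' : ∀ x, f.SameCycle x (b x)) : Commute a b := by
  ext x
  obtain ⟨i, hi⟩ := ha' x
  obtain ⟨j, hj⟩ := hb' x
  have e1 : a ((f ^ j) x) = (f ^ j) (a x) := DFunLike.congr_fun (ha.zpow_right j).eq x
  have e2 : b ((f ^ i) x) = (f ^ i) (b x) := DFunLike.congr_fun (hb.zpow_right i).eq x
  rw [Equiv.Perm.mul_apply, Equiv.Perm.mul_apply, ← hj, e1, ← hi, e2, ← hj, ← Equiv.Perm.mul_apply,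
    ← Equiv.Perm.mul_apply, ← zpow_add, ← zpow_add, add_comm]

/-- Braid sequences of length at least four centralising `f` are constant if they are so on the cycles of `f`. -/
lemma BS.lift_cyc {f : Equiv.Perm X} {k : ℕ} (hk : 4 ≤ k) {s : ℕ → Equiv.Perm X} (h : BS k s)
    (hs : ∀ i < k, Commute (s i) f)
    (H : ∀ S : ℕ → Equiv.Perm (Cyc f), BS k S → ∀ j < k, S j = S 0) : ∀ j < k, s j = s 0 := by
  set s' : ℕ → Subgroup.centralizer {f} := fun i => if hi : i < k then
    ⟨s i, Subgroup.mem_centralizer_singleton_iff.2 (hs i hi)⟩ else 1 with hs'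
  have e : ∀ i < k, (s' i).1 = s i := fun i hi => by simp only [hs', dif_pos hi]
  have h' : BS k s' := ⟨fun i j h1 h2 => by
      apply Subtype.ext
      rw [Subgroup.coe_mul, Subgroup.coe_mul, e i (by omega), e j h2]; exact h.far i j h1 h2,
    fun i h1 => by
      apply Subtype.ext
      simp only [Subgroup.coe_mul]
      rw [e i (by omega), e _ h1]; exact h.adj i h1⟩
  have hq := H _ (h'.map (cycHom f))
  have hsc : ∀ j < k, ∀ x, f.SameCycle x ((s j * (s 0)⁻¹) x) := fun j hj x => by
    have := hq j hj
    rw [← mul_inv_eq_one, ← map_inv, ← map_mul] at this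
    have := DFunLike.congr_fun this (Quotient.mk _ x)
    rw [cycHom_mk] at this
    have h2 : f.SameCycle ((s' j * (s' 0)⁻¹).1 x) x := Quotient.exact this
    rw [Subgroup.coe_mul, Subgroup.coe_inv, e j hj, e 0 (by omega)] at h2
    exact h2.symm
  exact h.all_eq_of_ratio hk (comm_of_cyc ((hs 1 (by omega)).mul_left (hs 0 (by omega)).inv_left)
    ((hs 3 (by omega)).mul_left (hs 0 (by omega)).inv_left) (hsc 1 (by omega)) (hsc 3 (by omega)))

set_option maxRecDepth 100000 in
/-- Distinct permutations of four points satisfying the braid relation have no common nontrivial commuting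
permutation. -/
lemma perm4 : ∀ c d : Equiv.Perm (Fin 4), c * d * c = d * c * d → c = d ∨ ∀ a, a * c = c * a → a * d = d * a → a = 1 := by
  decide +kernel

lemma BS.small [Fintype X] (hX : Fintype.card X ≤ 4) {k : ℕ} (hk : 4 ≤ k) {s : ℕ → Equiv.Perm X} (h : BS k s) :
    ∀ j < k, s j = s 0 := by
  classical
  obtain ⟨e⟩ : Nonempty (X ↪ Fin 4) := Function.Embedding.nonempty_of_card_le (by simpa using hX)
  let F : Equiv.Perm X →* Equiv.Perm (Fin 4) := Equiv.Perm.viaEmbeddingHom e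
  have hF : Function.Injective F := Equiv.Perm.viaEmbeddingHom_injective e
  have h' := h.map F
  rcases perm4 _ _ (h'.adj 0 (by omega)) with h1 | h1
  · exact h.all_eq (i := 0) (by omega) (hF h1)
  · have h3 := h1 (F (s 3)) (h'.far 0 3 (by omega) (by omega)).symm.eq (h'.far 1 3 (by omega) (by omega)).symm.eq
    have h3' : s 3 = 1 := hF (by rw [h3, map_one])
    refine h.all_eq (i := 2) (by omega) ?_
    exact eq_of_comm_braid (by rw [h3']; exact Commute.one_right _) (h.adj 2 (by omega))

lemma Cyc_card_lt [Fintype X] {f : Equiv.Perm X} (hf : f ≠ 1) [Fintype (Cyc f)] : Fintype.card (Cyc f) < Fintype.card X := by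
  refine Fintype.card_lt_of_surjective_not_injective (Quotient.mk _) Quotient.mk_surjective ?_
  intro hinj
  apply hf
  ext x
  exact hinj (Quotient.sound (show f.SameCycle (f x) x from ⟨-1, by simp⟩))

lemma Cyc_card_le [Fintype X] {f : Equiv.Perm X} (hf : ∀ x, f x ≠ x) [Fintype (Cyc f)] :
    2 * Fintype.card (Cyc f) ≤ Fintype.card X := by
  classical
  have := Finset.card_eq_sum_card_fiberwise (f := (Quotient.mk (Equiv.Perm.SameCycle.setoid f))) (s := Finset.univ)
    (t := Finset.univ) (by simp)
  rw [← Finset.card_univ (α := X), this, mul_comm, ← Finset.card_univ, ← smul_eq_mul, ← Finset.sum_const]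
  refine Finset.sum_le_sum fun q _ => ?_
  induction q using Quotient.inductionOn with
  | h x =>
    rw [Nat.succ_le_iff, Finset.one_lt_card]
    refine ⟨x, by simp, f x, ?_, (hf x).symm⟩
    simp only [Finset.mem_filter, Finset.mem_univ, true_and]
    exact Quotient.sound (show f.SameCycle (f x) x from ⟨-1, by simp⟩)

/-- Braid sequences of length `k ≥ 4` permuting few points are constant. -/
lemma BS.const_of_card (k : ℕ) : ∀ (X : Type) [Fintype X], Fintype.card X ≤ max 4 ((k + 3) / 2) → 4 ≤ k →
    ∀ s : ℕ → Equiv.Perm X, BS k s → ∀ j < k, s j = s 0 := by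
  induction k using Nat.strong_induction_on with
  | _ k ih =>
  intro X _ hX hk s h
  classical
  by_cases h4 : Fintype.card X ≤ 4
  · exact h.small h4 hk
  · have hX' : Fintype.card X ≤ (k + 3) / 2 := by omega
    by_cases h0 : s 0 = 1
    · exact h.all_eq_of_one (i := 0) (by omega) h0
    · have h2 := h.shift 2
      have key := h2.lift_cyc (f := s 0) (by omega) (fun i hi => (h.far 0 (2 + i) (by omega) (by omega)).symm) (by
        intro S hS
        refine ih (k - 2) (by omega) (Cyc (s 0)) ?_ (by omega) S hS
        have := Cyc_card_lt h0
        omega)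
      exact h.all_eq (i := 2) (by omega) (key 1 (by omega)).symm

end Cycles

/-! ### Permutation representations extending the rotation -/

section Comb
open scoped Fin.CommRing
variable {r : ℕ}

set_option synthInstance.maxHeartbeats 400000 in
set_option synthInstance.maxSize 100000 in
/-- Exhaustive search for `r = 4`: the values of a fixed point free image of `σ_0`, which cannot commute with its
conjugate by the square of the cycle. -/
lemma perm5 : ∀ a0 : Fin 5, a0 ≠ 0 → a0 ≠ 4 → ∀ a2 : Fin 5, a2 ≠ 0 → a2 ≠ 2 → a2 ≠ 1 → a2 ≠ a0 →
    ∀ a3 : Fin 5, a3 ≠ 0 → a3 ≠ 3 → a3 ≠ 2 → a3 ≠ a0 → a3 ≠ a2 →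
    ∀ a4 : Fin 5, a4 ≠ 0 → a4 ≠ 4 → a4 ≠ 3 → a4 ≠ a0 → a4 ≠ a2 → a4 ≠ a3 →
    ¬ ∀ y : Fin 5, ![a0, 0, a2, a3, a4] (![a0, 0, a2, a3, a4] (y - 2) + 2) =
      ![a0, 0, a2, a3, a4] (![a0, 0, a2, a3, a4] y - 2) + 2 := by
  decide +kernel

set_option synthInstance.maxHeartbeats 400000 in
set_option synthInstance.maxSize 100000 in
/-- Exhaustive search for `r = 5`: the values of a fixed point free image of `σ_0`, which cannot commute with its
conjugates by both the square and the cube of the cycle. -/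
lemma perm6 : ∀ a0 : Fin 6, a0 ≠ 0 → a0 ≠ 5 → ∀ a2 : Fin 6, a2 ≠ 0 → a2 ≠ 2 → a2 ≠ 1 → a2 ≠ a0 →
    ∀ a3 : Fin 6, a3 ≠ 0 → a3 ≠ 3 → a3 ≠ 2 → a3 ≠ a0 → a3 ≠ a2 →
    ∀ a4 : Fin 6, a4 ≠ 0 → a4 ≠ 4 → a4 ≠ 3 → a4 ≠ a0 → a4 ≠ a2 → a4 ≠ a3 →
    ∀ a5 : Fin 6, a5 ≠ 0 → a5 ≠ 5 → a5 ≠ 4 → a5 ≠ a0 → a5 ≠ a2 → a5 ≠ a3 → a5 ≠ a4 →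
    (∀ y : Fin 6, ![a0, 0, a2, a3, a4, a5] (![a0, 0, a2, a3, a4, a5] (y - 2) + 2) =
      ![a0, 0, a2, a3, a4, a5] (![a0, 0, a2, a3, a4, a5] y - 2) + 2) →
    ¬ ∀ y : Fin 6, ![a0, 0, a2, a3, a4, a5] (![a0, 0, a2, a3, a4, a5] (y - 3) + 3) =
      ![a0, 0, a2, a3, a4, a5] (![a0, 0, a2, a3, a4, a5] y - 3) + 3 := by
  decide +kernel

/-- For `r = 3`, there is just one fixed point free candidate for the image of `σ_0`. -/
lemma perm4' : ∀ a0 : Fin 4, a0 ≠ 0 → a0 ≠ 3 → ∀ a2 : Fin 4, a2 ≠ 0 → a2 ≠ 2 → a2 ≠ 1 → a2 ≠ a0 →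
    ∀ a3 : Fin 4, a3 ≠ 0 → a3 ≠ 3 → a3 ≠ 2 → a3 ≠ a0 → a3 ≠ a2 → a0 = 2 ∧ a2 = 3 ∧ a3 = 1 := by
  decide +kernel

/-- The situation after normalisation: a permutation representation sending `δ` to the standard cycle and `σ_0 δ` to
a permutation fixing only `0`. -/
structure RotRep (r : ℕ) (Ψ : B (r + 1) →* Equiv.Perm (Fin (r + 1))) : Prop where
  rot : ∀ y, Ψ (Dd (r + 1) r) y = y + 1
  fix : ∀ y, Ψ (σ' 0 * Dd (r + 1) r) y = y ↔ y = 0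

variable {Ψ : B (r + 1) →* Equiv.Perm (Fin (r + 1))}

lemma RotRep.rot_pow (h : RotRep r Ψ) (j : ℕ) (y : Fin (r + 1)) : (Ψ (Dd (r + 1) r) ^ j) y = y + ((j : ℕ) : Fin (r + 1)) := by
  induction j with
  | zero => simp
  | succ j ih => rw [pow_succ', Equiv.Perm.mul_apply, ih, h.rot]; push_cast; ring

lemma RotRep.s_apply (h : RotRep r Ψ) {j : ℕ} (hj : j < r) (y : Fin (r + 1)) :
    Ψ (σ' j) y = Ψ (σ' 0) (y - ((j : ℕ) : Fin (r + 1))) + ((j : ℕ) : Fin (r + 1)) := by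
  have e := congrArg Ψ (Dd_pow_s (n := r + 1) (Nat.lt_succ_self r) j hj)
  rw [map_mul, map_mul, map_pow] at e
  have := DFunLike.congr_fun e (y - ((j : ℕ) : Fin (r + 1)))
  rw [Equiv.Perm.mul_apply, Equiv.Perm.mul_apply, h.rot_pow, h.rot_pow, sub_add_cancel] at this
  exact this.symm

lemma RotRep.fix' (h : RotRep r Ψ) (y : Fin (r + 1)) : Ψ (σ' 0) y = y - 1 ↔ y = 1 := by
  have := h.fix (y - 1)
  rw [map_mul, Equiv.Perm.mul_apply, h.rot, sub_add_cancel, sub_eq_zero] at this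
  exact this

lemma RotRep.one (h : RotRep r Ψ) : Ψ (σ' 0) 1 = 0 := by
  rw [(h.fix' 1).2 rfl, sub_self]

lemma RotRep.comm (h : RotRep r Ψ) {j : ℕ} (h2 : 2 ≤ j) (hj : j < r) (y : Fin (r + 1)) :
    Ψ (σ' 0) (Ψ (σ' 0) (y - ((j : ℕ) : Fin (r + 1))) + ((j : ℕ) : Fin (r + 1))) = Ψ (σ' 0) (Ψ (σ' 0) y - ((j : ℕ) : Fin (r + 1))) + ((j : ℕ) : Fin (r + 1)) := by
  have e := congrArg Ψ (s_far (n := r + 1) (i := 0) (j := j) (by omega))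
  rw [map_mul, map_mul] at e
  have := DFunLike.congr_fun e y
  rw [Equiv.Perm.mul_apply, Equiv.Perm.mul_apply, h.s_apply hj, h.s_apply hj] at this
  exact this

lemma RotRep.chain (h : RotRep r Ψ) {j : ℕ} (h2 : 2 ≤ j) (hj : j < r) :
    Ψ (σ' 0) ((j : ℕ) : Fin (r + 1)) = ((j : ℕ) : Fin (r + 1)) ↔ Ψ (σ' 0) (((j : ℕ) : Fin (r + 1)) + 1) = ((j : ℕ) : Fin (r + 1)) + 1 := by
  have e := h.comm h2 hj (((j : ℕ) : Fin (r + 1)) + 1)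
  rw [add_sub_cancel_left, h.one, zero_add] at e
  rw [e]
  constructor
  · intro h'
    have : Ψ (σ' 0) (Ψ (σ' 0) (((j : ℕ) : Fin (r + 1)) + 1) - ((j : ℕ) : Fin (r + 1))) = Ψ (σ' 0) 1 := by
      rw [h.one]; simpa using h'
    have := (Ψ (σ' 0)).injective this
    rw [sub_eq_iff_eq_add] at this
    rw [this]; exact add_comm _ _
  · intro h'
    rw [h', add_sub_cancel_left, h.one, zero_add]

lemma RotRep.bs : BS r fun i => Ψ (σ' i) where
  far i j h1 _ := (show Commute (σ' i : B (r + 1)) (σ' j) from s_far h1).map Ψ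
  adj i h1 := by simp only [← map_mul]; rw [s_adj (by omega)]

/-- Either `σ_0` maps to the standard transposition, or it acts without fixed points, and the latter is only possible
on four points. -/
lemma RotRep.main (h : RotRep r Ψ) (h3 : 3 ≤ r) : Ψ (σ' 0) = Equiv.swap 0 1 ∨ ((∀ x, Ψ (σ' 0) x ≠ x) ∧ r = 3) := by
  have hnt : Nontrivial (Fin (r + 1)) := Fin.nontrivial_iff_two_le.2 (by omega)
  have h0 : Ψ (σ' 0) 0 ≠ 0 := fun e => by
    have := (Ψ (σ' 0)).injective (e.trans h.one.symm)
    exact zero_ne_one this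
  by_cases hf : ∀ x, Ψ (σ' 0) x ≠ x
  · right
    refine ⟨hf, ?_⟩
    by_contra hne
    have hd : ∀ x y, x ≠ y → Ψ (σ' 0) x ≠ Ψ (σ' 0) y := fun x y hxy e => hxy ((Ψ (σ' 0)).injective e)
    have hm : ∀ x, x ≠ 1 → Ψ (σ' 0) x ≠ x - 1 := fun x hx e => hx ((h.fix' x).1 e)
    rcases Nat.lt_or_ge r 6 with h6 | h6
    · obtain rfl | rfl : r = 4 ∨ r = 5 := by omega
      · have e : ⇑(Ψ (σ' 0)) = ![Ψ (σ' 0) 0, 0, Ψ (σ' 0) 2, Ψ (σ' 0) 3, Ψ (σ' 0) 4] := by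
          funext x; fin_cases x <;> first | rfl | exact h.one
        have hc := h.comm (j := 2) le_rfl (by omega)
        have h1 := h.one
        generalize Ψ (σ' 0) = f at *
        rw [e] at hc
        refine perm5 (f 0) h0 (hm 0 (by decide)) (f 2) ?_ (hf 2) (hm 2 (by decide)) (hd _ _ (by decide))
          (f 3) ?_ (hf 3) (hm 3 (by decide)) (hd _ _ (by decide)) (hd _ _ (by decide))
          (f 4) ?_ (hf 4) (hm 4 (by decide)) (hd _ _ (by decide)) (hd _ _ (by decide)) (hd _ _ (by decide)) hc
        all_goals rw [← h1]; exact hd _ _ (by decide)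
      · have e : ⇑(Ψ (σ' 0)) = ![Ψ (σ' 0) 0, 0, Ψ (σ' 0) 2, Ψ (σ' 0) 3, Ψ (σ' 0) 4, Ψ (σ' 0) 5] := by
          funext x; fin_cases x <;> first | rfl | exact h.one
        have hc := h.comm (j := 2) le_rfl (by omega)
        have hc' := h.comm (j := 3) (by omega) (by omega)
        have h1 := h.one
        generalize Ψ (σ' 0) = f at *
        rw [e] at hc hc'
        refine perm6 (f 0) h0 (hm 0 (by decide)) (f 2) ?_ (hf 2) (hm 2 (by decide)) (hd _ _ (by decide))
          (f 3) ?_ (hf 3) (hm 3 (by decide)) (hd _ _ (by decide)) (hd _ _ (by decide))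
          (f 4) ?_ (hf 4) (hm 4 (by decide)) (hd _ _ (by decide)) (hd _ _ (by decide)) (hd _ _ (by decide))
          (f 5) ?_ (hf 5) (hm 5 (by decide)) (hd _ _ (by decide)) (hd _ _ (by decide)) (hd _ _ (by decide))
          (hd _ _ (by decide)) hc hc'
        all_goals rw [← h1]; exact hd _ _ (by decide)
    · classical
      have hbs : BS r fun i => Ψ (σ' i) := RotRep.bs
      have key := (hbs.shift 2).lift_cyc (f := Ψ (σ' 0)) (by omega)
        (fun i hi => (hbs.far 0 (2 + i) (by omega) (by omega)).symm) (by
          intro S hS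
          refine BS.const_of_card (r - 2) (Cyc (Ψ (σ' 0))) ?_ (by omega) S hS
          have := Cyc_card_le hf
          rw [Fintype.card_fin] at this
          omega)
      have h10 := hbs.all_eq (i := 2) (by omega) (key 1 (by omega)).symm 1 (by omega)
      have := h.s_apply (j := 1) (by omega) 2
      have h10 : Ψ (σ' 1) = Ψ (σ' 0) := h10
      have e2 : (2 : Fin (r + 1)) - 1 = 1 := by rw [sub_eq_iff_eq_add]; norm_num
      rw [h10, Nat.cast_one, e2, h.one, zero_add] at this
      have h21 := (h.fix' 2).1 (by rw [this, e2])
      rw [h21, sub_self] at e2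
      exact zero_ne_one e2
  · left
    push Not at hf
    obtain ⟨x, hx⟩ := hf
    have hx0 : (x : ℕ) ≠ 0 := fun e => by
      have : x = 0 := Fin.ext e
      exact h0 (this ▸ hx)
    have hx1 : (x : ℕ) ≠ 1 := fun e => by
      have : x = 1 := Fin.ext (by rw [e, Fin.val_one', Nat.mod_eq_of_lt (by omega)])
      rw [this, h.one] at hx
      exact zero_ne_one hx
    have cast : ∀ y : Fin (r + 1), ((y : ℕ) : Fin (r + 1)) = y := fun y => Fin.cast_val_eq_self y
    have all : ∀ j : ℕ, 2 ≤ j → j ≤ r → (Ψ (σ' 0) ((j : ℕ) : Fin (r + 1)) = ((j : ℕ) : Fin (r + 1)) ↔ Ψ (σ' 0) ((2 : ℕ) : Fin (r + 1)) = ((2 : ℕ) : Fin (r + 1))) := by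
      intro j hj
      induction j, hj using Nat.le_induction with
      | base => simp
      | succ j hj ih =>
        intro hjr
        rw [← ih (by omega), h.chain hj (by omega)]; push_cast; rfl
    have hxx : Ψ (σ' 0) ((x : ℕ) : Fin (r + 1)) = ((x : ℕ) : Fin (r + 1)) := by rw [cast]; exact hx
    have h2 := (all x (by omega) (by have := x.2; omega)).1 hxx
    have hfix : ∀ y : Fin (r + 1), 2 ≤ (y : ℕ) → Ψ (σ' 0) y = y := fun y hy => by
      have := (all y hy (by have := y.2; omega)).2 h2
      rwa [cast] at this
    have v1 : ((1 : Fin (r + 1)) : ℕ) = 1 := by rw [Fin.val_one', Nat.mod_eq_of_lt (by omega)]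
    ext y
    congr 1
    rcases Nat.lt_or_ge y 2 with hy | hy
    · obtain hy | hy : (y : ℕ) = 0 ∨ (y : ℕ) = 1 := by omega
      · obtain rfl : y = 0 := Fin.ext hy
        rw [Equiv.swap_apply_left]
        have hlt : ((Ψ (σ' 0) 0 : Fin (r + 1)) : ℕ) < 2 := by
          by_contra hge
          have := hfix _ (not_lt.1 hge)
          exact h0 ((Ψ (σ' 0)).injective this)
        have hn0 : ((Ψ (σ' 0) 0 : Fin (r + 1)) : ℕ) ≠ 0 := fun e => h0 (Fin.ext e)
        exact Fin.ext (by rw [v1]; omega)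
      · obtain rfl : y = 1 := Fin.ext (by rw [hy, v1])
        rw [Equiv.swap_apply_right, h.one]
    · rw [hfix y hy, Equiv.swap_apply_of_ne_of_ne]
      · rintro rfl; simp at hy
      · rintro rfl; omega

end Comb

/-! ### Automorphisms for at least four strands -/

section Ge4
open scoped Fin.CommRing
variable {r : ℕ}

lemma RotRep.four {Ψ : B (3 + 1) →* Equiv.Perm (Fin (3 + 1))} (h : RotRep 3 Ψ) (hf : ∀ x, Ψ (σ' 0) x ≠ x) :
    Ψ (σ' 0) 0 = 2 ∧ Ψ (σ' 0) 1 = 0 ∧ Ψ (σ' 0) 2 = 3 ∧ Ψ (σ' 0) 3 = 1 := by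
  have hd : ∀ x y, x ≠ y → Ψ (σ' 0) x ≠ Ψ (σ' 0) y := fun x y hxy e => hxy ((Ψ (σ' 0)).injective e)
  have hm : ∀ x, x ≠ 1 → Ψ (σ' 0) x ≠ x - 1 := fun x hx e => hx ((h.fix' x).1 e)
  have h1 := h.one
  have hz : ∀ x, x ≠ 1 → Ψ (σ' 0) x ≠ 0 := fun x hx => by rw [← h1]; exact hd _ _ hx
  obtain ⟨a, b, c⟩ := perm4' (Ψ (σ' 0) 0) (hf 0) (hm 0 (by decide)) (Ψ (σ' 0) 2) (hz 2 (by decide)) (hf 2)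
    (hm 2 (by decide)) (hd _ _ (by decide)) (Ψ (σ' 0) 3) (hz 3 (by decide)) (hf 3)
    (hm 3 (by decide)) (hd _ _ (by decide)) (hd _ _ (by decide))
  exact ⟨a, h1, b, c⟩

/-- The exceptional permutation representation of the braid group on four strands is not induced by an automorphism: the
image of `σ_0 σ_2` would be a pure braid whose linking numbers are invariant under a 4-cycle, so that its exponent sum
would be divisible by four. -/
lemma no_four (φ : B (3 + 1) ≃* B (3 + 1)) (h : RotRep 3 ((pf _).comp φ.toMonoidHom))
    (hf : ∀ x, pf _ (φ (σ' 0)) x ≠ x) : False := by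
  obtain ⟨h0, h1, h2, h3⟩ := h.four hf
  have hs := h.s_apply (j := 2) (by omega)
  have hpure : φ (σ' 0 * σ' 2) ∈ PB (3 + 1) := by
    rw [mem_PB]
    have : pf _ (φ (σ' 0 * σ' 2)) = pf (3 + 1) 1 := by
      rw [map_one, map_mul, map_mul]
      ext y
      rw [Equiv.Perm.mul_apply]
      have := hs y
      change pf _ (φ (σ' 2)) y = pf _ (φ (σ' 0)) _ + _ at this
      rw [this]
      change pf _ (φ (σ' 0)) _ = _ at h0 h1 h2 h3
      generalize pf _ (φ (σ' 0)) = f at *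
      have q0 : (0 : Fin (3 + 1)) - ((2 : ℕ) : Fin (3 + 1)) = 2 := rfl
      have q1 : (1 : Fin (3 + 1)) - ((2 : ℕ) : Fin (3 + 1)) = 3 := rfl
      have q2 : (2 : Fin (3 + 1)) - ((2 : ℕ) : Fin (3 + 1)) = 0 := rfl
      have q3 : (3 : Fin (3 + 1)) - ((2 : ℕ) : Fin (3 + 1)) = 1 := rfl
      have p0 : (0 : Fin (3 + 1)) + ((2 : ℕ) : Fin (3 + 1)) = 2 := rfl
      have p1 : (1 : Fin (3 + 1)) + ((2 : ℕ) : Fin (3 + 1)) = 3 := rfl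
      have p2 : (2 : Fin (3 + 1)) + ((2 : ℕ) : Fin (3 + 1)) = 0 := rfl
      have p3 : (3 : Fin (3 + 1)) + ((2 : ℕ) : Fin (3 + 1)) = 1 := rfl
      obtain rfl | rfl | rfl | rfl : y = 0 ∨ y = 1 ∨ y = 2 ∨ y = 3 := by clear this; revert y; decide
      · rw [q0, h2, p3, h1]; rfl
      · rw [q1, h3, p1, h3]; rfl
      · rw [q2, h0, p2, h0]; rfl
      · rw [q3, h1, p0, h2]; rfl
    have := pf_inj this
    rwa [map_one] at this
  set p := φ (σ' 0 * σ' 2) with hp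
  have hcomm : φ (σ' 0) * p * (φ (σ' 0))⁻¹ = p := by
    have e : (σ' 0 : B (3 + 1)) * σ' 2 = σ' 2 * σ' 0 := s_far (by omega)
    rw [hp, ← map_inv, ← map_mul, ← map_mul, ← mul_assoc]
    congr 1
    rw [mul_inv_eq_iff_eq_mul, mul_assoc, mul_assoc, ← e]
  have key : ∀ i j, Lk p (pm _ (φ (σ' 0)) i) (pm _ (φ (σ' 0)) j) = Lk p i j := fun i j => by
    conv_lhs => rw [← hcomm]
    rw [Lk_conj _ hpure]; simp
  have m0 : pm _ (φ (σ' 0)) 0 = 2 := congrArg Fin.val h0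
  have m1 : pm _ (φ (σ' 0)) 1 = 0 := congrArg Fin.val h1
  have m2 : pm _ (φ (σ' 0)) 2 = 3 := congrArg Fin.val h2
  have m3 : pm _ (φ (σ' 0)) 3 = 1 := congrArg Fin.val h3
  have hsum := Lk_sum p
  simp only [Finset.sum_range_succ, Finset.sum_range_zero, Lk_diag] at hsum
  obtain ⟨ε, hε, hes, -⟩ := aut_sign (r := 3) (by omega) φ
  rw [hp, hes, es_mul, es_s (by omega), es_s (by omega)] at hsum
  rw [← hp] at hsum
  have a1 := key 0 2; have a2 := key 2 3; have a3 := key 3 1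
  have b1 := key 0 3; have b2 := key 2 1; have b3 := key 3 0
  have c1 := key 0 1; have c2 := key 2 0; have c3 := key 3 2
  simp only [m0, m1, m2, m3] at a1 a2 a3 b1 b2 b3 c1 c2 c3
  omega

/-- The automorphisms of the braid group on at least four strands. -/
lemma aut_ge4 (h3 : 3 ≤ r) (φ : B (r + 1) ≃* B (r + 1)) :
    ∃ c, (∀ i, φ (σ i) = c * σ i * c⁻¹) ∨ ∀ i, φ (σ i) = c * (σ i)⁻¹ * c⁻¹ := by
  obtain ⟨c, hc1, hc2⟩ := norm_rot h3 φ
  set φ' : B (r + 1) ≃* B (r + 1) := φ.trans (MulAut.conj c⁻¹) with hφ'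
  have e : ∀ g, φ' g = c⁻¹ * φ g * c := fun g => by simp [hφ']
  have hrep : RotRep r ((pf _).comp φ'.toMonoidHom) :=
    ⟨fun y => by rw [← hc1 y, ← e]; rfl, fun y => by rw [← hc2 y, ← e]; rfl⟩
  have hpf : pf _ (φ' (σ' 0)) = Equiv.swap 0 1 := by
    rcases hrep.main h3 with h | ⟨h, rfl⟩
    · exact h
    · exact (no_four φ' hrep h).elim
  have hs : ∀ j < r, pf _ (φ' (σ' j)) = pf _ (σ' j) := fun j hj => by
    have h1 := congrArg ((pf _).comp φ'.toMonoidHom) (Dd_pow_s (n := r + 1) (Nat.lt_succ_self r) j hj)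
    rw [map_mul, map_mul, ← mul_inv_eq_iff_eq_mul] at h1
    have h2 : pf _ (φ' (σ' j)) = _ := h1.symm
    rw [h2, pf_s hj]
    change _ * pf _ (φ' (σ' 0)) * _ = _
    rw [hpf, ← Equiv.swap_apply_apply, map_pow, hrep.rot_pow, hrep.rot_pow, zero_add]
    congr 1
    · apply Fin.ext
      simp [Fin.val_natCast, Nat.mod_eq_of_lt (by omega : j < r + 1)]
    · apply Fin.ext
      simp [Fin.val_natCast, Fin.val_add, add_comm, hj]
  have hall : ∀ g, pm _ (φ' g) = pm _ g := fun g => by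
    induction g using B_ind' with
    | h1 => simp
    | hm i a hi ha => rw [map_mul, map_mul, map_mul, ha, pf_inj (hs i (by omega))]
    | hi i a hi ha =>
      rw [map_mul, map_mul, map_mul, map_inv, map_inv, map_inv, ha, pf_inj (hs i (by omega))]
  obtain ⟨d, hd⟩ := aut_of_perm h3 φ' hall
  have e' : ∀ g, φ g = c * φ' g * c⁻¹ := fun g => by rw [e]; group
  refine ⟨c * d, hd.imp (fun h i => ?_) (fun h i => ?_)⟩ <;>
  · rw [e', h i]; simp only [mul_inv_rev, mul_assoc]

end Ge4

/-! ### Three strands: the quotient by the centre -/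

section Three
open Monoid (CoprodI)
open Monoid.CoprodI

lemma wl_mul {ι : Type*} {G : ι → Type*} [∀ i, Group (G i)] {a b : CoprodI G}
    (h : (wl a ++ wl b).IsChain fun x y => x.1 ≠ y.1) : wl (a * b) = wl a ++ wl b := by
  conv_lhs => rw [← lprod_wl a, ← lprod_wl b, ← lprod_append]
  refine wl_lprod (fun x hx => ?_) h
  rcases List.mem_append.1 hx with h | h
  · exact wl_ne _ _ h
  · exact wl_ne _ _ h

lemma wl_one {ι : Type*} {G : ι → Type*} [∀ i, Group (G i)] : wl (1 : CoprodI G) = [] :=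
  wl_lprod (l := []) (by simp) List.isChain_nil

lemma wl_of {ι : Type*} {G : ι → Type*} [∀ i, Group (G i)] {i : ι} {m : G i} (hm : m ≠ 1) :
    wl (of m : CoprodI G) = [⟨i, m⟩] := by
  have := wl_lprod (l := [(⟨i, m⟩ : Σ i, G i)]) (by simpa using hm) (List.isChain_singleton _)
  simpa [lprod] using this

lemma eq_one_of_wl {ι : Type*} {G : ι → Type*} [∀ i, Group (G i)] {a : CoprodI G} (h : wl a = []) : a = 1 := by
  rw [← lprod_wl a, h]; rfl

/-- Torsion elements of a free product are conjugate into the factors. -/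
lemma torsion_conj {ι : Type*} [Nonempty ι] {G : ι → Type*} [∀ i, Group (G i)] {g : CoprodI G} {N : ℕ} (hN : N ≠ 0)
    (h : g ^ N = 1) : ∃ (c : CoprodI G) (i : ι) (m : G i), g = c * of m * c⁻¹ := by
  obtain ⟨c, hc | ⟨i, m, hm⟩⟩ := exists_CR g
  · have h1 : (c * g * c⁻¹) ^ N = 1 := by rw [conj_pow, h]; simp
    have h2 := wl_pow hc N
    rw [h1, wl_one] at h2
    have h3 : wl (c * g * c⁻¹) = [] := by
      have := List.flatten_eq_nil_iff.1 h2.symm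
      exact this _ (List.mem_replicate.2 ⟨hN, rfl⟩)
    have h4 := eq_one_of_wl h3
    have h5 : g = 1 := by simpa using h4
    exact ⟨1, Classical.arbitrary ι, 1, by simp [h5]⟩
  · exact ⟨c⁻¹, i, m, by rw [← hm]; group⟩

/-- The braid group on three strands modulo its centre. -/
abbrev Q3 := B (2 + 1) ⧸ Subgroup.center (B (2 + 1))

/-- The half twist on three strands, a square root of the full twist. -/
def p3 : B (2 + 1) := σ' 0 * σ' 1 * σ' 0
/-- The rotation on three strands, a cube root of the full twist. -/
def q3 : B (2 + 1) := σ' 0 * σ' 1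

lemma q3_pow : q3 ^ 3 = Tk (2 + 1) 2 := by
  rw [← Dd_pow le_rfl]; simp [Dd, q3]

lemma p3_sq : p3 ^ 2 = Tk (2 + 1) 2 := by
  rw [← q3_pow, p3, q3]
  have := s_adj (n := 2 + 1) (i := 0) (by omega)
  rw [zero_add] at this
  calc (σ' 0 * σ' 1 * σ' 0 : B (2 + 1)) ^ 2 = (σ' 0 * σ' 1 * σ' 0) * (σ' 0 * σ' 1 * σ' 0) := sq _
    _ = (σ' 0 * σ' 1 * σ' 0) * (σ' 1 * σ' 0 * σ' 1) := by rw [← this]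
    _ = _ := by simp only [pow_succ, pow_zero, one_mul, mul_assoc]

lemma s0_eq : (σ' 0 : B (2 + 1)) = q3⁻¹ * p3 := by rw [p3, q3]; group
lemma s1_eq : (σ' 1 : B (2 + 1)) = p3 * q3⁻¹ := by
  have := s_adj (n := 2 + 1) (i := 0) (by omega)
  rw [zero_add] at this
  rw [p3, q3, this]; group

lemma T_mem_center : Tk (2 + 1) 2 ∈ Subgroup.center (B (2 + 1)) := by
  rw [Subgroup.mem_center_iff]; intro g; exact (Tk_central g).eq.symm

lemma center_eq {g : B (2 + 1)} : g ∈ Subgroup.center (B (2 + 1)) ↔ ∃ k : ℤ, Tk (2 + 1) 2 ^ k = g := by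
  constructor
  · intro h
    rw [Subgroup.mem_center_iff] at h
    exact center_T le_rfl fun x => (h x).symm
  · rintro ⟨k, rfl⟩
    exact Subgroup.zpow_mem _ T_mem_center k

lemma es_T3 : es (Tk (2 + 1) 2) = 6 := by rw [es_Tk (by omega)]; norm_num
lemma es_p3 : es p3 = 3 := by rw [p3, es_mul, es_mul, es_s (by omega), es_s (by omega)]; norm_num
lemma es_q3 : es q3 = 2 := by rw [q3, es_mul, es_s (by omega), es_s (by omega)]; norm_num

/-- The factors: the images of `⟨Δ⟩` and `⟨σ_0 σ_1⟩` modulo the centre. -/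
abbrev G3 (b : Bool) : Subgroup Q3 := Subgroup.zpowers (QuotientGroup.mk (cond b q3 p3) : Q3)

/-- The free product of the two factors. -/
abbrev F3 := CoprodI fun b => G3 b

/-- The generator of the factor of order two. -/
def pg : G3 false := ⟨QuotientGroup.mk p3, Subgroup.mem_zpowers _⟩
/-- The generator of the factor of order three. -/
def qg : G3 true := ⟨QuotientGroup.mk q3, Subgroup.mem_zpowers _⟩

lemma pg_sq : pg ^ 2 = 1 := by
  apply Subtype.ext
  rw [Subgroup.coe_pow]
  change (QuotientGroup.mk p3 : Q3) ^ 2 = 1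
  rw [← QuotientGroup.mk_pow, p3_sq, QuotientGroup.eq_one_iff]; exact T_mem_center

lemma qg_cub : qg ^ 3 = 1 := by
  apply Subtype.ext
  rw [Subgroup.coe_pow]
  change (QuotientGroup.mk q3 : Q3) ^ 3 = 1
  rw [← QuotientGroup.mk_pow, q3_pow, QuotientGroup.eq_one_iff]; exact T_mem_center

lemma pg_zpow (m : G3 false) : ∃ k : ℤ, m = pg ^ k := by
  obtain ⟨x, k, hk⟩ := m
  exact ⟨k, Subtype.ext (by rw [Subgroup.coe_zpow]; exact hk.symm)⟩

lemma qg_zpow (m : G3 true) : ∃ k : ℤ, m = qg ^ k := by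
  obtain ⟨x, k, hk⟩ := m
  exact ⟨k, Subtype.ext (by rw [Subgroup.coe_zpow]; exact hk.symm)⟩

lemma pg_cases (m : G3 false) : m = 1 ∨ m = pg := by
  obtain ⟨k, rfl⟩ := pg_zpow m
  rcases Int.even_or_odd' k with ⟨c, rfl | rfl⟩
  · left; rw [zpow_mul, zpow_ofNat, pg_sq, one_zpow]
  · right; rw [zpow_add, zpow_mul, zpow_ofNat, pg_sq, one_zpow, one_mul, zpow_one]

lemma qg_cases (m : G3 true) : m = 1 ∨ m = qg ∨ m = qg⁻¹ := by
  obtain ⟨k, rfl⟩ := qg_zpow m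
  obtain ⟨c, rfl | rfl | rfl⟩ : ∃ c, k = 3 * c ∨ k = 3 * c + 1 ∨ k = 3 * c + -1 :=
    ⟨(k + 1) / 3, by omega⟩
  · left; rw [zpow_mul, zpow_ofNat, qg_cub, one_zpow]
  · right; left; rw [zpow_add, zpow_mul, zpow_ofNat, qg_cub, one_zpow, one_mul, zpow_one]
  · right; right; rw [zpow_add, zpow_mul, zpow_ofNat, qg_cub, one_zpow, one_mul, zpow_neg_one]

lemma pg_ne : pg ≠ 1 := by
  intro h
  have h1 : (QuotientGroup.mk p3 : Q3) = 1 := congrArg Subtype.val h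
  rw [QuotientGroup.eq_one_iff, center_eq] at h1
  obtain ⟨k, hk⟩ := h1
  have := congrArg es hk
  rw [es_zpow, es_T3, es_p3] at this
  omega

lemma qg_ne : qg ≠ 1 := by
  intro h
  have h1 : (QuotientGroup.mk q3 : Q3) = 1 := congrArg Subtype.val h
  rw [QuotientGroup.eq_one_iff, center_eq] at h1
  obtain ⟨k, hk⟩ := h1
  have := congrArg es hk
  rw [es_zpow, es_T3, es_q3] at this
  omega

/-- `Δ` in the free product. -/
def Pf : F3 := of pg
/-- `σ_0 σ_1` in the free product. -/
def Qf : F3 := of qg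

lemma Pf_sq : Pf * Pf = 1 := by rw [Pf, ← map_mul, ← sq, pg_sq, map_one]
lemma Qf_cub : Qf * Qf * Qf = 1 := by
  rw [Qf, ← map_mul, ← map_mul, ← pow_two, ← pow_succ, qg_cub, map_one]

/-- The projection of the braid group on three strands to the free product `ℤ/2 * ℤ/3`. -/
def th3 : B (2 + 1) →* F3 := BrLift (fun i => if (i : ℕ) = 0 then Qf⁻¹ * Pf else Pf * Qf⁻¹)
  (by
    intro i j h
    have := j.2
    omega)
  (by
    intro i j h
    have hi : (i : ℕ) = 0 := by have := j.2; omega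
    have hj : (j : ℕ) ≠ 0 := by omega
    rw [if_pos hi, if_neg hj]
    have e1 : Qf⁻¹ * Pf * (Pf * Qf⁻¹) * (Qf⁻¹ * Pf) = Qf⁻¹ * (Pf * Pf) * Qf⁻¹ * Qf⁻¹ * Pf := by group
    have e2 : Pf * Qf⁻¹ * (Qf⁻¹ * Pf) * (Pf * Qf⁻¹) = Pf * Qf⁻¹ * Qf⁻¹ * (Pf * Pf) * Qf⁻¹ := by group
    have e3 : Qf⁻¹ * Qf⁻¹ * Qf⁻¹ = 1 := by
      rw [← mul_inv_rev, ← mul_inv_rev, ← mul_assoc, Qf_cub, inv_one]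
    rw [e1, e2, Pf_sq, mul_one, mul_one, e3, one_mul, mul_assoc, mul_assoc, ← mul_assoc Qf⁻¹, e3, mul_one])

end Three

/-! ### Automorphisms for two and three strands -/

section ThreeB
open Monoid (CoprodI)
open Monoid.CoprodI

lemma th3_s0 : th3 (σ' 0) = Qf⁻¹ * Pf := by rw [s_eq (by omega), th3, BrLift_σ]; rfl
lemma th3_s1 : th3 (σ' 1) = Pf * Qf⁻¹ := by rw [s_eq (by omega), th3, BrLift_σ]; rfl

lemma Pf_inv : Pf⁻¹ = Pf := inv_eq_of_mul_eq_one_left Pf_sq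

lemma Qf_inv : Qf⁻¹ = Qf * Qf := inv_eq_of_mul_eq_one_left Qf_cub

lemma th3_q3 : th3 q3 = Qf := by
  rw [q3, map_mul, th3_s0, th3_s1, mul_assoc, ← mul_assoc Pf, Pf_sq, one_mul, ← mul_inv_rev, ← Qf_inv, inv_inv]

lemma th3_p3 : th3 p3 = Pf := by
  have h := th3_s0
  rw [s0_eq, map_mul, map_inv, th3_q3] at h
  exact mul_left_cancel h

lemma th3_T : th3 (Tk (2 + 1) 2) = 1 := by rw [← p3_sq, map_pow, th3_p3, sq, Pf_sq]

/-- The natural map from the free product onto the central quotient. -/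
def Xi : F3 →* Q3 := CoprodI.lift fun b => (G3 b).subtype

lemma Xi_th3 (g : B (2 + 1)) : Xi (th3 g) = QuotientGroup.mk g := by
  have hp : Xi (th3 p3) = QuotientGroup.mk p3 := by rw [th3_p3, Xi, Pf, CoprodI.lift_of]; rfl
  have hq : Xi (th3 q3) = QuotientGroup.mk q3 := by rw [th3_q3, Xi, Qf, CoprodI.lift_of]; rfl
  have h0 : Xi (th3 (σ' 0)) = QuotientGroup.mk (σ' 0) := by
    rw [s0_eq, map_mul, map_inv, map_mul, map_inv, hp, hq]; rfl
  have h1 : Xi (th3 (σ' 1)) = QuotientGroup.mk (σ' 1) := by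
    rw [s1_eq, map_mul, map_inv, map_mul, map_inv, hp, hq]; rfl
  have : Xi.comp th3 = QuotientGroup.mk' (Subgroup.center (B (2 + 1))) := by
    apply Bhom_ext
    intro i
    have h2 := i.2
    have hi : (i : ℕ) = 0 ∨ (i : ℕ) = 1 := by omega
    have hs : σ i = (σ' (i : ℕ) : B (2 + 1)) := (s_eq (by omega)).symm
    rw [hs]
    rcases hi with h | h <;> rw [h]
    · exact h0
    · exact h1
  exact DFunLike.congr_fun this g

lemma th3_ker {g : B (2 + 1)} (h : th3 g = 1) : ∃ k : ℤ, g = Tk (2 + 1) 2 ^ k := by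
  have h1 := Xi_th3 g
  rw [h, map_one, eq_comm, QuotientGroup.eq_one_iff, center_eq] at h1
  obtain ⟨k, hk⟩ := h1
  exact ⟨k, hk.symm⟩

lemma th3_eq {g h : B (2 + 1)} (e : th3 g = th3 h) : ∃ k : ℤ, g = h * Tk (2 + 1) 2 ^ k := by
  obtain ⟨k, hk⟩ := th3_ker (g := h⁻¹ * g) (by rw [map_mul, map_inv, e]; simp)
  exact ⟨k, by rw [← hk]; group⟩

lemma th3_surj (w : F3) : ∃ g, th3 g = w := by
  induction w using CoprodI.induction_on with
  | one => exact ⟨1, map_one _⟩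
  | of b m =>
    cases b with
    | false =>
      rcases pg_cases m with rfl | rfl
      · exact ⟨1, by rw [map_one, map_one]⟩
      · exact ⟨p3, th3_p3⟩
    | true =>
      rcases qg_cases m with rfl | rfl | rfl
      · exact ⟨1, by rw [map_one, map_one]⟩
      · exact ⟨q3, th3_q3⟩
      · exact ⟨q3⁻¹, by rw [map_inv, map_inv, th3_q3]; rfl⟩
  | mul x y hx hy =>
    obtain ⟨a, rfl⟩ := hx
    obtain ⟨b, rfl⟩ := hy
    exact ⟨a * b, map_mul _ _ _⟩

/-- Elements of the subgroup generated by `Pf` and an element `u` of order three, written as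
alternating products; the flag tells whether the leading factor is a power of `u`. -/
inductive Nf (u : F3) : Bool → F3 → Prop
  | one : Nf u false 1
  | Pone : Nf u false Pf
  | P (h : F3) : Nf u true h → Nf u false (Pf * h)
  | U (h : F3) : Nf u false h → Nf u true (u * h)
  | V (h : F3) : Nf u false h → Nf u true (u⁻¹ * h)

lemma Nf_P {u h : F3} {b : Bool} (H : Nf u b h) : ∃ b, Nf u b (Pf * h) := by
  cases H with
  | one => exact ⟨_, by rw [mul_one]; exact .Pone⟩
  | Pone => exact ⟨_, by rw [Pf_sq]; exact .one⟩
  | P h hh => exact ⟨_, by rw [← mul_assoc, Pf_sq, one_mul]; exact hh⟩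
  | U h hh => exact ⟨_, .P _ (.U _ hh)⟩
  | V h hh => exact ⟨_, .P _ (.V _ hh)⟩

lemma Nf_U {u h : F3} {b : Bool} (hu : u * u * u = 1) (H : Nf u b h) : ∃ b, Nf u b (u * h) := by
  have hi : u⁻¹ = u * u := inv_eq_of_mul_eq_one_left hu
  cases H with
  | one => exact ⟨_, .U _ .one⟩
  | Pone => exact ⟨_, .U _ .Pone⟩
  | P h hh => exact ⟨_, .U _ (.P _ hh)⟩
  | U h hh => exact ⟨_, by rw [← mul_assoc, ← hi]; exact .V _ hh⟩
  | V h hh => exact ⟨_, by rw [mul_inv_cancel_left]; exact hh⟩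

lemma Nf_V {u h : F3} {b : Bool} (hu : u * u * u = 1) (H : Nf u b h) : ∃ b, Nf u b (u⁻¹ * h) := by
  have hi : u⁻¹ = u * u := inv_eq_of_mul_eq_one_left hu
  obtain ⟨_, h1⟩ := Nf_U hu H
  obtain ⟨_, h2⟩ := Nf_U hu h1
  rw [hi, mul_assoc]
  exact ⟨_, h2⟩

lemma wl_Pf : wl Pf = [⟨false, pg⟩] := wl_of pg_ne
lemma wl_Qf : wl Qf = [⟨true, qg⟩] := wl_of qg_ne

/-- A word of length at least two beginning and ending in the factor of order three. -/
def TT (u : F3) : Prop := 2 ≤ (wl u).length ∧ (∀ x ∈ (wl u).head?, x.1 = true) ∧ ∀ x ∈ (wl u).getLast?, x.1 = true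

lemma TT_mul {u h : F3} (hu : TT u) (hh : ∀ x ∈ (wl h).head?, x.1 = false) :
    2 ≤ (wl (u * h)).length ∧ ∀ x ∈ (wl (u * h)).head?, x.1 = true := by
  have e : wl (u * h) = wl u ++ wl h := by
    apply wl_mul
    rw [List.isChain_append]
    refine ⟨wl_chain _, wl_chain _, fun x hx y hy => ?_⟩
    rw [hu.2.2 x hx, hh y hy]; simp
  rw [e]
  have hne : wl u ≠ [] := by intro h; have := hu.1; rw [h] at this; simp at this
  refine ⟨by have := hu.1; simp; omega, fun x hx => hu.2.1 x ?_⟩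
  rwa [List.head?_append_of_ne_nil _ hne] at hx

lemma Nf_wl {u h : F3} {b : Bool} (hu : TT u) (hv : TT u⁻¹) (H : Nf u b h) :
    (b = false → ∀ x ∈ (wl h).head?, x.1 = false) ∧
    (b = true → 2 ≤ (wl h).length ∧ ∀ x ∈ (wl h).head?, x.1 = true) := by
  induction H with
  | one => simp [wl_one]
  | Pone => simp [wl_Pf]
  | P h _ ih =>
    refine ⟨fun _ => ?_, by simp⟩
    obtain ⟨_, h2⟩ := ih.2 rfl
    rw [wl_mul, wl_Pf]
    · simp
    · rw [wl_Pf, List.isChain_append]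
      refine ⟨List.isChain_singleton _, wl_chain _, fun x hx y hy => ?_⟩
      rw [h2 y hy]
      simp at hx
      rw [← hx]; simp
  | U h _ ih => exact ⟨by simp, fun _ => TT_mul hu (ih.1 rfl)⟩
  | V h _ ih => exact ⟨by simp, fun _ => TT_mul hv (ih.1 rfl)⟩

lemma not_Nf_Qf {u : F3} (hu : TT u) (hv : TT u⁻¹) {b : Bool} : ¬ Nf u b Qf := by
  intro H
  obtain ⟨h1, h2⟩ := Nf_wl hu hv H
  cases b with
  | false => have := h1 rfl ⟨true, qg⟩ (by rw [wl_Qf]; rfl); simp at this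
  | true => have := (h2 rfl).1; rw [wl_Qf] at this; simp at this

/-- The inclusion of a factor. -/
abbrev ofF (b : Bool) : G3 b →* F3 := CoprodI.of (M := fun b => G3 b) (i := b)

lemma split_last (w : F3) : ∃ (w' : F3) (m : G3 true), w = w' * ofF true m ∧
    (∀ x ∈ (wl w').getLast?, x.1 = false) ∧ ∀ x ∈ (wl w').head?, x ∈ (wl w).head? := by
  rcases List.eq_nil_or_concat' (wl w) with h | ⟨l, ⟨b, m⟩, h⟩
  · exact ⟨w, 1, by simp, by simp [h], fun x hx => hx⟩
  cases b with
  | false => exact ⟨w, 1, by simp, by simp [h], fun x hx => hx⟩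
  | true =>
    have hc := wl_chain w
    have hne := wl_ne w
    rw [h] at hc hne
    have hl := List.isChain_append.1 hc
    have e : wl (lprod l) = l := wl_lprod (fun x hx => hne x (by simp [hx])) hl.1
    refine ⟨lprod l, m, ?_, ?_, ?_⟩
    · conv_lhs => rw [← lprod_wl w, h, lprod_append]
      congr 1
    · rw [e]
      intro x hx
      have := hl.2.2 x hx ⟨true, m⟩ (by simp)
      simpa using this
    · rw [e, h]
      intro x hx
      cases l with
      | nil => simp at hx
      | cons a l => simpa using hx

lemma split_first (w : F3) : ∃ (k : ℤ), ∀ x ∈ (wl (Pf ^ k * w)).head?, x.1 = true := by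
  cases h : wl w with
  | nil => exact ⟨0, by simp [h]⟩
  | cons a l =>
    obtain ⟨b, m⟩ := a
    cases b with
    | true => exact ⟨0, by simp [h]⟩
    | false =>
      have hc := wl_chain w
      have hne := wl_ne w
      rw [h] at hc hne
      have hc' := (List.isChain_append (l₁ := [_]) (l₂ := l)).1 hc
      have e : wl (lprod l) = l := wl_lprod (fun x hx => hne x (by simp [hx])) hc'.2.1
      have hm : m = pg := (pg_cases m).resolve_left (hne ⟨false, m⟩ (by simp))
      have ew : w = Pf * lprod l := by rw [← lprod_wl w, h, lprod_cons, hm]; rfl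
      refine ⟨1, ?_⟩
      rw [zpow_one, ew, ← mul_assoc, Pf_sq, one_mul, e]
      intro x hx
      have := hc'.2.2 ⟨false, m⟩ (by simp) x hx
      simpa using this.symm

lemma TT_conj {w : F3} (hw : wl w ≠ []) (h1 : ∀ x ∈ (wl w).head?, x.1 = true)
    (h2 : ∀ x ∈ (wl w).getLast?, x.1 = false) {m : G3 true} (hm : m ≠ 1) : TT (w * ofF true m * w⁻¹) := by
  have e1 : wl (w * ofF true m) = wl w ++ [⟨true, m⟩] := by
    rw [← wl_of hm]
    apply wl_mul
    rw [wl_of hm, List.isChain_append]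
    refine ⟨wl_chain _, List.isChain_singleton _, fun x hx y hy => ?_⟩
    rw [h2 x hx]; simp at hy; rw [← hy]; simp
  have e2 : wl (w * ofF true m * w⁻¹) = wl w ++ [⟨true, m⟩] ++ ((wl w).map sinv).reverse := by
    rw [← e1, ← wl_inv]
    apply wl_mul
    rw [List.isChain_append]
    refine ⟨wl_chain _, wl_chain _, fun x hx y hy => ?_⟩
    rw [e1] at hx
    rw [wl_inv, List.head?_reverse, List.getLast?_map] at hy
    simp at hx
    obtain ⟨z, hz, rfl⟩ := Option.mem_map.1 hy
    rw [← hx]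
    change true ≠ z.1
    rw [h2 z hz]; simp
  have hl := List.length_pos_iff.2 hw
  refine ⟨?_, ?_, ?_⟩
  · rw [e2]; simp; omega
  · rw [e2, List.append_assoc, List.head?_append_of_ne_nil _ hw]; exact h1
  · rw [e2, List.getLast?_append_of_ne_nil _ (by simpa using hw), List.getLast?_reverse, List.head?_map]
    intro x hx
    obtain ⟨z, hz, rfl⟩ := Option.mem_map.1 hx
    exact h1 z hz

lemma B3_cases {i : ℕ} (h : i + 1 < 2 + 1) : i = 0 ∨ i = 1 := by omega

lemma fix_q3 (φ : B (2 + 1) ≃* B (2 + 1)) (hp : φ p3 = p3) {W : B (2 + 1)} (hq : φ q3 = W * q3 * W⁻¹)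
    (hW : ∀ x ∈ (wl (th3 W)).head?, x.1 = true) : φ q3 = q3 := by
  obtain ⟨w, m, hw, hl, hh⟩ := split_last (th3 W)
  have e : th3 (φ q3) = w * Qf * w⁻¹ := by
    have : ofF true m * Qf * (ofF true m)⁻¹ = Qf := by
      obtain ⟨k, rfl⟩ := qg_zpow m
      rw [map_zpow, ← Qf]; group
    rw [hq, map_mul, map_mul, map_inv, th3_q3, hw]
    calc w * ofF true m * Qf * (w * ofF true m)⁻¹ = w * (ofF true m * Qf * (ofF true m)⁻¹) * w⁻¹ := by group
      _ = _ := by rw [this]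
  by_cases hn : wl w = []
  · have := eq_one_of_wl hn
    subst this
    rw [one_mul, inv_one, mul_one, ← th3_q3] at e
    obtain ⟨k, hk⟩ := th3_eq e
    have h1 := congrArg es hk
    rw [hq, es_conj, es_mul, es_zpow, es_T3] at h1
    have : k = 0 := by omega
    rw [hk, this, zpow_zero, mul_one]
  · exfalso
    have ht := TT_conj hn (fun x hx => hW x (hh x hx)) hl qg_ne
    rw [show ofF true qg = Qf from rfl] at ht
    have ht' := TT_conj hn (fun x hx => hW x (hh x hx)) hl (inv_ne_one.2 qg_ne)
    set u := w * Qf * w⁻¹ with hu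
    have hv : w * ofF true qg⁻¹ * w⁻¹ = u⁻¹ := by rw [hu, map_inv, ← Qf]; group
    rw [hv] at ht'
    have hu3 : u * u * u = 1 := by
      calc u * u * u = w * (Qf * Qf * Qf) * w⁻¹ := by rw [hu]; group
        _ = 1 := by rw [Qf_cub]; group
    have hp' : th3 (φ p3) = Pf := by rw [hp, th3_p3]
    have key : ∀ x, ∃ b, Nf u b (th3 (φ x)) := by
      intro x
      induction x using B_ind' with
      | h1 => exact ⟨_, by rw [map_one, map_one]; exact .one⟩
      | hm i a hi ih =>
        obtain ⟨_, ih⟩ := ih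
        rcases B3_cases hi with rfl | rfl
        · obtain ⟨_, h1⟩ := Nf_P ih
          obtain ⟨_, h2⟩ := Nf_V hu3 h1
          exact ⟨_, by
            rw [s0_eq]; simp only [map_mul, map_inv, hp', e, mul_assoc]; exact h2⟩
        · obtain ⟨_, h1⟩ := Nf_V hu3 ih
          obtain ⟨_, h2⟩ := Nf_P h1
          exact ⟨_, by
            rw [s1_eq]; simp only [map_mul, map_inv, hp', e, mul_assoc]; exact h2⟩
      | hi i a hi ih =>
        obtain ⟨_, ih⟩ := ih
        rcases B3_cases hi with rfl | rfl
        · obtain ⟨_, h1⟩ := Nf_U hu3 ih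
          obtain ⟨_, h2⟩ := Nf_P h1
          exact ⟨_, by
            rw [s0_eq]; simp only [mul_inv_rev, inv_inv, map_mul, map_inv, hp', e, Pf_inv, mul_assoc]; exact h2⟩
        · obtain ⟨_, h1⟩ := Nf_P ih
          obtain ⟨_, h2⟩ := Nf_U hu3 h1
          exact ⟨_, by
            rw [s1_eq]; simp only [mul_inv_rev, inv_inv, map_mul, map_inv, hp', e, Pf_inv, mul_assoc]; exact h2⟩
    obtain ⟨b, hb⟩ := key (φ.symm q3)
    rw [MulEquiv.apply_symm_apply, th3_q3] at hb
    exact not_Nf_Qf ht ht' hb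

/-- An automorphism of the braid group on three strands preserving exponent sums is inner. -/
lemma inner3 (φ : B (2 + 1) ≃* B (2 + 1)) (hes : ∀ g, es (φ g) = es g)
    (hT : φ (Tk (2 + 1) 2) = Tk (2 + 1) 2) : ∃ c, ∀ g, φ g = c * g * c⁻¹ := by
  have hp2 : th3 (φ p3) ^ 2 = 1 := by rw [← map_pow, ← map_pow, p3_sq, hT, th3_T]
  have hq2 : th3 (φ q3) ^ 3 = 1 := by rw [← map_pow, ← map_pow, q3_pow, hT, th3_T]
  -- the image of `p3` is conjugate to `p3`
  obtain ⟨c, hc⟩ : ∃ c, φ p3 = c * p3 * c⁻¹ := by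
    obtain ⟨c, b, m, h⟩ := torsion_conj (by norm_num) hp2
    obtain ⟨C, rfl⟩ := th3_surj c
    have h1 : ∃ s : B (2 + 1), th3 s = ofF b m ∧ (s = p3 ∨ es s = 0 ∨ es s = 2 ∨ es s = -2) := by
      cases b with
      | false =>
        rcases pg_cases m with rfl | rfl
        · exact ⟨1, by rw [map_one, map_one], by simp⟩
        · exact ⟨p3, th3_p3, by simp⟩
      | true =>
        rcases qg_cases m with rfl | rfl | rfl
        · exact ⟨1, by rw [map_one, map_one], by simp⟩
        · exact ⟨q3, th3_q3, by simp [es_q3]⟩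
        · exact ⟨q3⁻¹, by rw [map_inv, map_inv, th3_q3]; rfl, by simp [es_q3]⟩
    obtain ⟨s, hs, hse⟩ := h1
    rw [← hs, ← map_inv, ← map_mul, ← map_mul] at h
    obtain ⟨k, hk⟩ := th3_eq h
    have h2 := congrArg es hk
    rw [hes, es_mul, es_conj, es_zpow, es_T3, es_p3] at h2
    rcases hse with rfl | hse
    · rw [es_p3] at h2
      have : k = 0 := by omega
      exact ⟨C, by rw [hk, this, zpow_zero, mul_one]⟩
    · omega
  obtain ⟨d, hd⟩ : ∃ d, φ q3 = d * q3 * d⁻¹ := by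
    obtain ⟨c, b, m, h⟩ := torsion_conj (by norm_num) hq2
    obtain ⟨C, rfl⟩ := th3_surj c
    have h1 : ∃ s : B (2 + 1), th3 s = ofF b m ∧ (s = q3 ∨ es s = 0 ∨ es s = 3 ∨ es s = -2) := by
      cases b with
      | false =>
        rcases pg_cases m with rfl | rfl
        · exact ⟨1, by rw [map_one, map_one], by simp⟩
        · exact ⟨p3, th3_p3, by simp [es_p3]⟩
      | true =>
        rcases qg_cases m with rfl | rfl | rfl
        · exact ⟨1, by rw [map_one, map_one], by simp⟩
        · exact ⟨q3, th3_q3, by simp⟩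
        · exact ⟨q3⁻¹, by rw [map_inv, map_inv, th3_q3]; rfl, by simp [es_q3]⟩
    obtain ⟨s, hs, hse⟩ := h1
    rw [← hs, ← map_inv, ← map_mul, ← map_mul] at h
    obtain ⟨k, hk⟩ := th3_eq h
    have h2 := congrArg es hk
    rw [hes, es_mul, es_conj, es_zpow, es_T3, es_q3] at h2
    rcases hse with rfl | hse
    · rw [es_q3] at h2
      have : k = 0 := by omega
      exact ⟨C, by rw [hk, this, zpow_zero, mul_one]⟩
    · omega
  obtain ⟨k, hk⟩ := split_first (th3 (c⁻¹ * d))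
  set e := p3 ^ k * c⁻¹ with he
  set ψ : B (2 + 1) ≃* B (2 + 1) := φ.trans (MulAut.conj e) with hψ
  have hψa : ∀ g, ψ g = e * φ g * e⁻¹ := fun g => rfl
  have ep : ψ p3 = p3 := by rw [hψa, hc, he]; group
  have eq : ψ q3 = (e * d) * q3 * (e * d)⁻¹ := by rw [hψa, hd]; group
  have eq' := fix_q3 ψ ep eq (by
    have : e * d = p3 ^ k * (c⁻¹ * d) := by rw [he]; group
    rw [this, map_mul, map_zpow, th3_p3]; exact hk)
  have hid : ψ.toMonoidHom = MonoidHom.id _ := by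
    apply Bhom_ext
    intro i
    have hs : σ i = (σ' (i : ℕ) : B (2 + 1)) := (s_eq (by omega)).symm
    rw [hs]
    rcases B3_cases (i := i) (by omega) with h | h <;> rw [h]
    · rw [s0_eq]; change ψ _ = _; rw [map_mul, map_inv, ep, eq']; rfl
    · rw [s1_eq]; change ψ _ = _; rw [map_mul, map_inv, ep, eq']; rfl
  refine ⟨e⁻¹, fun g => ?_⟩
  have h1 : ψ g = g := DFunLike.congr_fun hid g
  rw [hψa] at h1
  nth_rw 2 [← h1]
  group

lemma aut_3 (φ : B (2 + 1) ≃* B (2 + 1)) : ∃ c, (∀ i, φ (σ i) = c * σ i * c⁻¹) ∨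
    ∀ i, φ (σ i) = c * (σ i)⁻¹ * c⁻¹ := by
  obtain ⟨ε, rfl | rfl, he, hT⟩ := aut_sign le_rfl φ
  · obtain ⟨c, hc⟩ := inner3 φ (by simpa using he) (by simpa using hT)
    exact ⟨c, Or.inl fun i => hc _⟩
  · set ψ : B (2 + 1) ≃* B (2 + 1) := φ.trans (epsE (2 + 1)) with hψ
    have hψa : ∀ g, ψ g = eps _ (φ g) := fun g => by rw [hψ, MulEquiv.trans_apply, epsE_apply]
    obtain ⟨δ, hδ, hde, hdT⟩ := aut_sign le_rfl ψ
    have hes : ∀ g : B (2 + 1), es (eps _ g) = - es g := by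
      intro g
      induction g using B_ind with
      | h1 => simp
      | hm i a ih => rw [map_mul, eps_σ, es_mul, es_mul, ih, es_inv]; ring
      | hi i a ih => rw [map_mul, map_inv, eps_σ, es_mul, es_mul, ih, es_inv, es_inv]; ring
    have h1 : δ = 1 := by
      have := hde p3
      rw [hψa, hes, he, es_p3] at this
      omega
    subst h1
    obtain ⟨c, hc⟩ := inner3 ψ (by simpa using hde) (by simpa using hdT)
    refine ⟨eps _ c, Or.inr fun i => ?_⟩
    have h2 := congrArg (eps _) (hc (σ i))
    rw [hψa, eps_eps, map_mul, map_mul, map_inv, eps_σ] at h2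
    exact h2

lemma aut_2 (φ : B 2 ≃* B 2) : ∃ c, (∀ i, φ (σ i) = c * σ i * c⁻¹) ∨ ∀ i, φ (σ i) = c * (σ i)⁻¹ * c⁻¹ := by
  have hg : ∀ g : B 2, g = σ' 0 ^ es g := by
    intro g
    have e : es (σ' 0 : B 2) = 1 := es_s (by omega)
    induction g using B_ind' with
    | h1 => simp
    | hm i a hi ih =>
      obtain rfl : i = 0 := by omega
      rw [es_mul, e, zpow_add, zpow_one, ← ih]
    | hi i a hi ih =>
      obtain rfl : i = 0 := by omega
      rw [es_mul, es_inv, e, zpow_add, zpow_neg_one, ← ih]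
  obtain ⟨a, ha⟩ := es_endo φ.toMonoidHom
  have h1 := ha (φ.symm (σ' 0))
  have e : es (σ' 0 : B 2) = 1 := es_s (by omega)
  change es (φ (φ.symm (σ' 0))) = _ at h1
  rw [MulEquiv.apply_symm_apply, e] at h1
  have h2 := Int.isUnit_iff.1 (IsUnit.of_mul_eq_one _ h1.symm)
  have hs : ∀ i : Fin (2 - 1), σ i = (σ' 0 : B 2) := fun i => by
    have : (i : ℕ) = 0 := by omega
    rw [s_eq (by omega)]; congr 1; exact Fin.ext this
  have h3 := hg (φ (σ' 0))
  have h4 : es (φ (σ' 0)) = a := by have := ha (σ' 0); rw [e, mul_one] at this; exact this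
  rw [h4] at h3
  refine ⟨1, h2.imp ?_ ?_⟩ <;> rintro rfl i <;> rw [hs, h3] <;> simp

/-- Every automorphism of a braid group is, up to the inversion of all generators, inner. -/
theorem aut_all {n : ℕ} (hn : 2 ≤ n) (φ : B n ≃* B n) : ∃ c, (∀ i, φ (σ i) = c * σ i * c⁻¹) ∨
    ∀ i, φ (σ i) = c * (σ i)⁻¹ * c⁻¹ := by
  obtain rfl | rfl | ⟨r, rfl, hr⟩ : n = 2 ∨ n = 2 + 1 ∨ ∃ r, n = r + 1 ∧ 3 ≤ r := by
    by_cases h : n = 2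
    · exact Or.inl h
    by_cases h' : n = 2 + 1
    · exact Or.inr (Or.inl h')
    exact Or.inr (Or.inr ⟨n - 1, by omega, by omega⟩)
  · exact aut_2 φ
  · exact aut_3 φ
  · exact aut_ge4 hr φ

end ThreeB

/-! ### The decision procedure -/

section Decide
variable {n : ℕ}

lemma fix_high {j : ℕ} (hj : n ≤ j) (g : B n) : g • xx j = xx j := by
  induction g using B_ind' with
  | h1 => exact one_smul _ _
  | hm i a hi ih => rw [mul_smul, ih, s_x hi (by omega) (by omega)]
  | hi i a hi ih => rw [mul_smul, ih, s_inv_x hi (by omega) (by omega)]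

/-- The inclusion of the free group on the first `n` generators. -/
def inc (n : ℕ) : FreeGroup (Fin n) →* FN := FreeGroup.map Fin.val

lemma inc_inj : Function.Injective (inc n) := FreeGroup.map_injective Fin.val_injective

lemma inc_of (j : Fin n) : inc n (FreeGroup.of j) = xx j := FreeGroup.map.of

lemma xx_range {j : ℕ} (hj : j < n) : xx j ∈ (inc n).range := ⟨FreeGroup.of ⟨j, hj⟩, inc_of _⟩

lemma smul_range_of {g : B n} (H : ∀ j < n, g • xx j ∈ (inc n).range) (y : FreeGroup (Fin n)) :
    g • inc n y ∈ (inc n).range := by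
  induction y using FreeGroup.induction_on with
  | C1 => rw [map_one, smul_one]; exact one_mem _
  | of j => rw [inc_of]; exact H j j.2
  | inv_of j _ =>
    rw [map_inv, inc_of, smul_inv']; exact (inc n).range.inv_mem (H j j.2)
  | mul x y hx hy => rw [map_mul, smul_mul']; exact mul_mem hx hy

lemma smul_range (g : B n) (y : FreeGroup (Fin n)) : ∃ z, g • inc n y = inc n z := by
  induction g using B_ind' generalizing y with
  | h1 => exact ⟨y, one_smul _ _⟩
  | hm i a hi ih =>
    obtain ⟨z, hz⟩ := ih y
    rw [mul_smul, hz]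
    obtain ⟨t, ht⟩ := smul_range_of (g := (σ' i : B n)) (fun j hj => by
      by_cases h0 : j = i
      · subst h0; rw [s_x0 hi]
        exact mul_mem (mul_mem (xx_range hj) (xx_range hi)) ((inc n).range.inv_mem (xx_range hj))
      by_cases h1 : j = i + 1
      · subst h1; rw [s_x1 hi]; exact xx_range (by omega)
      rw [s_x hi h0 h1]; exact xx_range hj) z
    exact ⟨t, ht.symm⟩
  | hi i a hi ih =>
    obtain ⟨z, hz⟩ := ih y
    rw [mul_smul, hz]
    obtain ⟨t, ht⟩ := smul_range_of (g := (σ' i : B n)⁻¹) (fun j hj => by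
      by_cases h0 : j = i
      · subst h0; rw [s_inv_x0 hi]; exact xx_range hi
      by_cases h1 : j = i + 1
      · subst h1; rw [s_inv_x1 hi]
        exact mul_mem (mul_mem ((inc n).range.inv_mem (xx_range hj)) (xx_range (by omega))) (xx_range hj)
      rw [s_inv_x hi h0 h1]; exact xx_range hj) z
    exact ⟨t, ht.symm⟩

/-- The free group element represented by a signed word. -/
def ev (L : List (Fin n × Bool)) : FN := inc n (FreeGroup.mk L)

lemma ev_append (L L' : List (Fin n × Bool)) : ev (L ++ L') = ev L * ev L' := by
  rw [ev, ← FreeGroup.mul_mk, map_mul]; rfl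

lemma im_exists (p : Fin (n - 1) × Bool) (q : Fin n × Bool) :
    ∃ L : List (Fin n × Bool), ev L = π [p] • ev [q] := by
  obtain ⟨z, hz⟩ := smul_range (π [p]) (FreeGroup.mk [q])
  exact ⟨z.toWord, by rw [ev, FreeGroup.mk_toWord, ← hz]; rfl⟩

/-- A word representing the image of a letter under an Artin generator or its inverse.  Its domain
is finite, so it is primitive recursive although it is obtained by choice. -/
noncomputable def im (p : Fin (n - 1) × Bool) (q : Fin n × Bool) : List (Fin n × Bool) :=
  (im_exists p q).choose

lemma ev_im (p : Fin (n - 1) × Bool) (q : Fin n × Bool) : ev (im p q) = π [p] • ev [q] :=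
  (im_exists p q).choose_spec

/-- The Artin action at the level of words. -/
noncomputable def actL (w : SW n) (L : List (Fin n × Bool)) : List (Fin n × Bool) :=
  w.foldr (fun p L => L.flatMap (im p)) L

lemma ev_flatMap (p : Fin (n - 1) × Bool) (L : List (Fin n × Bool)) :
    ev (L.flatMap (im p)) = π [p] • ev L := by
  induction L with
  | nil =>
    have : ev ([] : List (Fin n × Bool)) = 1 := by rw [ev, ← FreeGroup.one_eq_mk, map_one]
    rw [List.flatMap_nil, this, smul_one]
  | cons q L ih =>
    rw [List.flatMap_cons, ev_append, ih, ev_im, ← smul_mul', ← ev_append]; rfl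

lemma ev_actL (w : SW n) (L : List (Fin n × Bool)) : ev (actL w L) = π w • ev L := by
  induction w with
  | nil => rw [π_nil, one_smul]; rfl
  | cons p w ih =>
    have : actL (p :: w) L = (actL w L).flatMap (im p) := rfl
    rw [this, ev_flatMap, ih, ← mul_smul, ← π_append]; rfl

/-- The word problem: a braid is trivial iff it fixes all free generators. -/
lemma triv_iff (w : SW n) : π w = 1 ↔
    ∀ j ∈ List.finRange n, FreeGroup.reduce (actL w [(j, true)]) = [(j, true)] := by
  have key : ∀ j : Fin n, FreeGroup.reduce (actL w [(j, true)]) = [(j, true)] ↔ π w • xx (j : ℕ) = xx j := by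
    intro j
    have h1 : ev [(j, true)] = xx j := inc_of j
    rw [← h1, ← ev_actL]
    constructor
    · intro h
      rw [ev, ev, ← FreeGroup.reduce.self (L := actL w [(j, true)]), h]
    · intro h
      have h2 := congrArg FreeGroup.toWord (inc_inj h)
      rw [FreeGroup.toWord_mk, FreeGroup.toWord_mk] at h2
      exact h2
  constructor
  · intro h j _
    rw [key, h, one_smul]
  · intro h
    apply faithful_gen
    intro j
    rw [one_smul]
    by_cases hj : j < n
    · exact (key ⟨j, hj⟩).1 (h _ (List.mem_finRange _))
    · exact fix_high (by omega) _

lemma primrec_reduce {α : Type*} [Primcodable α] [DecidableEq α] :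
    Primrec (FreeGroup.reduce : List (α × Bool) → List (α × Bool)) := by
  have hstep : Primrec₂ fun (_ : List (α × Bool)) (x : (α × Bool) × List (α × Bool)) =>
      (List.casesOn x.2 [x.1] fun hd2 tl2 =>
        if x.1.1 = hd2.1 ∧ x.1.2 = not hd2.2 then tl2 else x.1 :: hd2 :: tl2 : List (α × Bool)) := by
    have hx : Primrec fun a : List (α × Bool) × ((α × Bool) × List (α × Bool)) => a.2 := Primrec.snd
    refine Primrec.list_casesOn (f := fun a : List (α × Bool) × ((α × Bool) × List (α × Bool)) => a.2.2)
      (g := fun a => [a.2.1]) (h := fun a y => if a.2.1.1 = y.1.1 ∧ a.2.1.2 = not y.1.2 then y.2 else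
        a.2.1 :: y.1 :: y.2) (Primrec.snd.comp hx)
      (Primrec.list_cons.comp (Primrec.fst.comp hx) (Primrec.const [])) ?_
    have h1 : Primrec fun z : (List (α × Bool) × ((α × Bool) × List (α × Bool))) ×
        ((α × Bool) × List (α × Bool)) => z.1.2.1 := Primrec.fst.comp (Primrec.snd.comp Primrec.fst)
    have h2 : Primrec fun z : (List (α × Bool) × ((α × Bool) × List (α × Bool))) ×
        ((α × Bool) × List (α × Bool)) => z.2.1 := Primrec.fst.comp Primrec.snd
    have h3 : Primrec fun z : (List (α × Bool) × ((α × Bool) × List (α × Bool))) ×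
        ((α × Bool) × List (α × Bool)) => z.2.2 := Primrec.snd.comp Primrec.snd
    refine Primrec.ite (PrimrecPred.and ?_ ?_) h3 (Primrec.list_cons.comp h1 (Primrec.list_cons.comp h2 h3))
    · exact Primrec.eq.comp (Primrec.fst.comp h1) (Primrec.fst.comp h2)
    · exact Primrec.eq.comp (Primrec.snd.comp h1) (Primrec.not.comp (Primrec.snd.comp h2))
  refine (Primrec.list_foldr Primrec.id (Primrec.const []) hstep).of_eq fun L => ?_
  induction L with
  | nil => rfl
  | cons a L ih =>
    rw [FreeGroup.reduce.cons, ← ih]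
    rfl

lemma primrec_im : Primrec₂ (im (n := n)) := Primrec.dom_finite _

lemma primrec_actL : Primrec₂ (actL (n := n)) := by
  have h1 : Primrec₂ fun (_ : SW n × List (Fin n × Bool)) (x : (Fin (n - 1) × Bool) × List (Fin n × Bool)) =>
      x.2.flatMap (im x.1) := by
    have h2 : Primrec₂ fun (y : (SW n × List (Fin n × Bool)) × ((Fin (n - 1) × Bool) × List (Fin n × Bool)))
        (q : Fin n × Bool) => im y.2.1 q :=
      primrec_im.comp ((Primrec.fst.comp Primrec.snd).comp Primrec.fst) Primrec.snd
    exact Primrec.list_flatMap (Primrec.snd.comp Primrec.snd) h2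
  exact Primrec.list_foldr Primrec.fst Primrec.snd h1

/-- The word problem of the braid group is primitive recursive. -/
lemma primrec_triv : PrimrecPred fun w : SW n => π w = 1 := by
  have h : PrimrecRel fun (j : Fin n) (w : SW n) =>
      FreeGroup.reduce (actL w [(j, true)]) = [(j, true)] := by
    have hj : Primrec fun a : Fin n × SW n => [(a.1, true)] :=
      Primrec.list_cons.comp (Primrec.fst.pair (Primrec.const true)) (Primrec.const [])
    exact Primrec.eq.comp (primrec_reduce.comp (primrec_actL.comp Primrec.snd hj)) hj
  exact (h.forall_mem_list.comp (Primrec.const (List.finRange n)) Primrec.id).of_eq fun w =>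
    (triv_iff w).symm

lemma primrec_winv : Primrec (winv (n := n)) :=
  Primrec.list_reverse.comp (Primrec.list_map Primrec.id
    (((Primrec.dom_finite fun p : Fin (n - 1) × Bool => (p.1, !p.2)).comp Primrec.snd)).to₂)

/-- All signed words of length at most `k`. -/
def allW (n : ℕ) (k : ℕ) : List (SW n) :=
  Nat.rec [[]] (fun _ L => L ++ L.flatMap fun w =>
    ((List.finRange (n - 1)).flatMap fun i => [(i, true), (i, false)]).map fun p => p :: w) k

lemma mem_allW {k : ℕ} {w : SW n} (h : w.length ≤ k) : w ∈ allW n k := by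
  induction k generalizing w with
  | zero =>
    have : w = [] := List.length_eq_zero_iff.1 (by omega)
    subst this; exact List.mem_singleton.2 rfl
  | succ k ih =>
    change w ∈ allW n k ++ (allW n k).flatMap _
    cases w with
    | nil => exact List.mem_append_left _ (ih (by simp))
    | cons p w =>
      refine List.mem_append_right _ (List.mem_flatMap.2 ⟨w, ih (by simpa using h), ?_⟩)
      obtain ⟨i, b⟩ := p
      cases b <;> simp

lemma primrec_allW : Primrec (allW n) := by
  refine Primrec.nat_rec₁ _ ?_
  refine Primrec.list_append.comp Primrec.snd (Primrec.list_flatMap Primrec.snd ?_)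
  exact Primrec.list_map (Primrec.const _) (Primrec.list_cons.comp Primrec.snd (Primrec.snd.comp Primrec.fst)).to₂

lemma primrec_pow_const (m : ℕ) : Primrec fun k : ℕ => m ^ k :=
  (Primrec.nat_rec₁ (f := fun _ y => y * m) 1 (Primrec.nat_mul.comp Primrec.snd (Primrec.const m))).of_eq
    fun k => by
      induction k with
      | zero => rfl
      | succ k ih => rw [pow_succ, ← ih]

lemma primrec_const_pow (c : ℕ) : Primrec fun x : ℕ => x ^ c := by
  induction c with
  | zero => exact (Primrec.const 1).of_eq fun x => (pow_zero x).symm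
  | succ c ih => exact (Primrec.nat_mul.comp ih Primrec.id).of_eq fun x => (pow_succ x c).symm

lemma primrec_cbound (c : ℕ) : Primrec fun b => cbound n c b :=
  Primrec.nat_mul.comp (Primrec.const _) ((primrec_const_pow c).comp ((primrec_pow_const n).comp
    (Primrec.nat_mul.comp (Primrec.nat_mul.comp (Primrec.const 2)
      (Primrec.nat_add.comp Primrec.id (Primrec.const 3))) (Primrec.const _))))

/-- The identity or the automorphism inverting all generators. -/
noncomputable def zt (n : ℕ) (s : Bool) : B n ≃* B n := cond s (MulEquiv.refl _) (epsE n)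

lemma zt_σ (s : Bool) (i : Fin (n - 1)) : zt n s (σ i) = π [(i, s)] := by
  cases s
  · exact (eps_σ i).trans (by simp [π])
  · change σ i = _; simp [π]

lemma zt_bd (s : Bool) (x y : B n) : bd (zt n s x) (zt n s y) = bd x y := by
  cases s
  · exact bd_eps x y
  · rfl

/-- The effect of `zt` on words. -/
def zw (s : Bool) (w : SW n) : SW n := w.map fun p => (p.1, cond s p.2 (!p.2))

lemma π_zw (s : Bool) (w : SW n) : π (zw s w) = zt n s (π w) := by
  induction w with
  | nil => rw [π_nil, map_one]; rfl
  | cons p w ih =>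
    obtain ⟨i, b⟩ := p
    have e : zw s ((i, b) :: w) = (i, cond s b (!b)) :: zw s w := rfl
    rw [e, π_cons, π_cons, map_mul, ih]
    congr 1
    cases s <;> cases b <;> simp [zt_σ, π]

lemma primrec_zw (s : Bool) : Primrec (zw (n := n) s) :=
  Primrec.list_map Primrec.id
    (((Primrec.dom_finite fun p : Fin (n - 1) × Bool => (p.1, cond s p.2 (!p.2))).comp Primrec.snd)).to₂

/-- The input: images of the generators, and two words. -/
abbrev Inp (n : ℕ) := List (SW n) × SW n × SW n

/-- The bound on the length of an element conjugating the generators to their given images. -/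
def N1 (a : Inp n) : ℕ := cbound n (n - 1) (a.1.flatten.length + 1)

/-- The bound on the length of a solution of the twisted conjugacy equation. -/
def N2 (a : Inp n) : ℕ := cbound n 1 (a.2.1.length + a.2.2.length + N1 a)

lemma primrec_N1 : Primrec (N1 (n := n)) :=
  (primrec_cbound _).comp (Primrec.nat_add.comp
    (Primrec.list_length.comp (Primrec.list_flatten.comp Primrec.fst)) (Primrec.const 1))

lemma primrec_N2 : Primrec (N2 (n := n)) :=
  (primrec_cbound 1).comp (Primrec.nat_add.comp (Primrec.nat_add.comp
    (Primrec.list_length.comp (Primrec.fst.comp Primrec.snd))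
    (Primrec.list_length.comp (Primrec.snd.comp Primrec.snd))) primrec_N1)

/-- The search: a short `c` through which the given automorphism is conjugation composed with
`zt n s`, and a short solution `x`. -/
def Accepts (s : Bool) (a : Inp n) : Prop := ∃ c ∈ allW n (N1 a),
  (∀ i ∈ List.finRange (n - 1), π (winv (a.1.getD (i : ℕ) []) ++ (c ++ ([(i, s)] ++ winv c))) = 1) ∧
  ∃ x ∈ allW n (N2 a), π (winv a.2.2 ++ (c ++ (winv (zw s x) ++ (winv c ++ (a.2.1 ++ x))))) = 1

lemma primrec_Accepts (s : Bool) : PrimrecPred (Accepts (n := n) s) := by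
  have hA : PrimrecRel fun (i : Fin (n - 1)) (y : SW n × Inp n) =>
      π (winv (y.2.1.getD (i : ℕ) []) ++ (y.1 ++ ([(i, s)] ++ winv y.1))) = 1 := by
    refine PrimrecPred.comp primrec_triv ?_
    have hc : Primrec fun z : Fin (n - 1) × (SW n × Inp n) => z.2.1 := Primrec.fst.comp Primrec.snd
    have hT : Primrec fun z : Fin (n - 1) × (SW n × Inp n) => z.2.2.1 :=
      Primrec.fst.comp (Primrec.snd.comp Primrec.snd)
    exact Primrec.list_append.comp (primrec_winv.comp ((Primrec.list_getD []).comp hT (Primrec.fin_val.comp Primrec.fst)))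
      (Primrec.list_append.comp hc (Primrec.list_append.comp
        (Primrec.list_cons.comp (Primrec.fst.pair (Primrec.const s)) (Primrec.const [])) (primrec_winv.comp hc)))
  have hB : PrimrecRel fun (x : SW n) (y : SW n × Inp n) =>
      π (winv y.2.2.2 ++ (y.1 ++ (winv (zw s x) ++ (winv y.1 ++ (y.2.2.1 ++ x))))) = 1 := by
    refine PrimrecPred.comp primrec_triv ?_
    have hc : Primrec fun z : SW n × (SW n × Inp n) => z.2.1 := Primrec.fst.comp Primrec.snd
    have hu : Primrec fun z : SW n × (SW n × Inp n) => z.2.2.2.1 :=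
      Primrec.fst.comp (Primrec.snd.comp (Primrec.snd.comp Primrec.snd))
    have hv : Primrec fun z : SW n × (SW n × Inp n) => z.2.2.2.2 :=
      Primrec.snd.comp (Primrec.snd.comp (Primrec.snd.comp Primrec.snd))
    exact Primrec.list_append.comp (primrec_winv.comp hv) (Primrec.list_append.comp hc
      (Primrec.list_append.comp (primrec_winv.comp ((primrec_zw s).comp Primrec.fst))
        (Primrec.list_append.comp (primrec_winv.comp hc) (Primrec.list_append.comp hu Primrec.fst))))
  have hA' := hA.forall_mem_list.comp (Primrec.const (List.finRange (n - 1))) Primrec.id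
  have hB' := hB.exists_mem_list.comp (primrec_allW.comp (primrec_N2.comp Primrec.snd)) Primrec.id
  have hC : PrimrecRel fun (c : SW n) (a : Inp n) =>
      (∀ i ∈ List.finRange (n - 1), π (winv (a.1.getD (i : ℕ) []) ++ (c ++ ([(i, s)] ++ winv c))) = 1) ∧
      ∃ x ∈ allW n (N2 a), π (winv a.2.2 ++ (c ++ (winv (zw s x) ++ (winv c ++ (a.2.1 ++ x))))) = 1 :=
    PrimrecPred.and hA' hB'
  exact hC.exists_mem_list.comp (primrec_allW.comp primrec_N1) Primrec.id

lemma conj_words (s : Bool) (c t : SW n) (i : Fin (n - 1)) :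
    π (winv t ++ (c ++ ([(i, s)] ++ winv c))) = 1 ↔ π t = π c * zt n s (σ i) * (π c)⁻¹ := by
  simp only [π_append, π_winv, zt_σ]
  rw [inv_mul_eq_one, mul_assoc]

lemma twist_words (s : Bool) (c u v x : SW n) :
    π (winv v ++ (c ++ (winv (zw s x) ++ (winv c ++ (u ++ x))))) = 1 ↔
      π v = (π c * zt n s (π x) * (π c)⁻¹)⁻¹ * π u * π x := by
  simp only [π_append, π_winv, π_zw]
  rw [inv_mul_eq_one]
  simp only [mul_inv_rev, inv_inv, mul_assoc]

lemma length_getD (T : List (SW n)) (i : ℕ) : (T.getD i []).length ≤ T.flatten.length := by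
  induction T generalizing i with
  | nil => simp
  | cons t T ih =>
    cases i with
    | zero => simp
    | succ i =>
      have := ih i
      simp only [List.getD_cons_succ, List.flatten_cons, List.length_append]
      omega

lemma Accepts_sound {s : Bool} {T : List (SW n)} {u v : SW n} {φ : B n ≃* B n}
    (hφ : ∀ i : Fin (n - 1), φ (σ i) = π (T.getD (i : ℕ) [])) (h : Accepts s (T, u, v)) :
    ∃ x : B n, π v = (φ x)⁻¹ * π u * x := by
  obtain ⟨c, -, h1, x, -, h2⟩ := h
  have hc : φ.toMonoidHom = (MulAut.conj (π c)).toMonoidHom.comp (zt n s).toMonoidHom := by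
    apply Bhom_ext
    intro i
    exact (hφ i).trans ((conj_words s c _ i).1 (h1 i (List.mem_finRange i)))
  have hcx : φ (π x) = π c * zt n s (π x) * (π c)⁻¹ := DFunLike.congr_fun hc (π x)
  exact ⟨π x, by rw [hcx]; exact (twist_words s c u v x).1 h2⟩

lemma Accepts_complete {s : Bool} {T : List (SW n)} {u v : SW n} {φ : B n ≃* B n}
    (hφ : ∀ i : Fin (n - 1), φ (σ i) = π (T.getD (i : ℕ) [])) {d : B n}
    (hd : ∀ i, φ (σ i) = d * zt n s (σ i) * d⁻¹) {x : B n} (hx : π v = (φ x)⁻¹ * π u * x) :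
    Accepts s (T, u, v) := by
  -- a short conjugator for the images of the generators
  obtain ⟨c, hcl, hc⟩ := bounded_conj (MulEquiv.refl (B n)) (fun _ _ => rfl)
    (fun i : Fin (n - 1) => π (T.getD (i : ℕ) [])) (fun i => zt n s (σ i)) (T.flatten.length + 1)
    (fun i => (bd_one_π _).trans ((length_getD T i).trans (Nat.le_succ _)))
    (fun i => by rw [zt_σ]; exact (bd_one_π _).trans (by simp)) d
    (fun i => by rw [← hφ, hd]; change _ = d⁻¹ * _ * d; group)
  rw [Fintype.card_fin] at hcl
  have hc' : ∀ i : Fin (n - 1), π (T.getD (i : ℕ) []) = π c * zt n s (σ i) * (π c)⁻¹ := fun i => by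
    have := hc i
    change _ = (π c)⁻¹ * _ * π c at this
    rw [this]; group
  have hcφ : φ.toMonoidHom = (MulAut.conj (π c)).toMonoidHom.comp (zt n s).toMonoidHom := by
    apply Bhom_ext
    intro i
    exact (hφ i).trans (hc' i)
  have hcx : φ x = π c * zt n s x * (π c)⁻¹ := DFunLike.congr_fun hcφ x
  -- a short solution of the equation `v⁻¹ c = x⁻¹ (u⁻¹ c) ζ(x)`
  obtain ⟨y, hyl, hy⟩ := bounded_conj (zt n s) (zt_bd s)
    (fun _ : Unit => π (winv u ++ c)) (fun _ => π (winv v ++ c)) (u.length + v.length + N1 (T, u, v))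
    (fun _ => (bd_one_π _).trans (by
      rw [List.length_append, winv_length]
      have : c.length ≤ N1 (T, u, v) := hcl
      omega))
    (fun _ => (bd_one_π _).trans (by
      rw [List.length_append, winv_length]
      have : c.length ≤ N1 (T, u, v) := hcl
      omega)) x
    (fun _ => by rw [π_append, π_append, π_winv, π_winv, hx, hcx]; group)
  refine ⟨c, mem_allW hcl, fun i _ => (conj_words s c _ i).2 (hc' i), y, mem_allW hyl, ?_⟩
  rw [twist_words]
  have h := hy ()
  rw [π_append, π_append, π_winv, π_winv] at h
  have h' : (π v)⁻¹ = (π y)⁻¹ * ((π u)⁻¹ * π c) * zt n s (π y) * (π c)⁻¹ := by rw [← h]; group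
  rw [← inv_inv (π v), h']
  group

end Decide

/-- the twisted conjugacy problem is solvable in `B n`. -/
theorem twisted_conjugacy_problem_solvable (n : ℕ) (hn : 2 ≤ n) :
    ∃ f : List (List (Fin (n - 1) × Bool)) ×
          List (Fin (n - 1) × Bool) × List (Fin (n - 1) × Bool) → Bool,
      Computable f ∧
      ∀ (T : List (List (Fin (n - 1) × Bool))) (u v : List (Fin (n - 1) × Bool))
        (φ : B n ≃* B n),
        (∀ i : Fin (n - 1), φ (σ i) = π (T.getD (i : ℕ) [])) →
        (f (T, u, v) = true ↔ ∃ x : B n, π v = (φ x)⁻¹ * π u * x) := by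
  classical
  refine ⟨fun a => decide (Accepts true a ∨ Accepts false a),
    ((primrec_Accepts true).or (primrec_Accepts false)).decide.to_comp, fun T u v φ hφ => ?_⟩
  rw [decide_eq_true_iff]
  constructor
  · rintro (h | h)
    · exact Accepts_sound hφ h
    · exact Accepts_sound hφ h
  · rintro ⟨x, hx⟩
    obtain ⟨d, hd | hd⟩ := aut_all hn φ
    · exact Or.inl (Accepts_complete hφ (d := d) hd hx)
    · exact Or.inr (Accepts_complete hφ (d := d) (fun i => by rw [hd]; congr 2) hx)
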